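/- Let S be a connected topological 2-manifold without boundary (a Hausdorff, second-countable topological space locally homeomorphic to ℝ²). Let c₀, c₁ : S¹ → S be continuous injective maps with disjoint images, which are freely homotopic (there exists a continuous homotopy H : S¹ × [0,1] → S with H(·,0) = c₀ and H(·,1) = c₁), and assume c₀ is not null-homotopic. Then c₀ ∪ c₁ bounds an embedded annulus: there exists a topological embedding F : S¹ × [0,1] → S such that the image of F(·,0) equals range(c₀) and the image of F(·,1) equals range(c₁). (Lemma A.2: two disjoint freely homotopic essential simple closed curves in a surface bound an embedded annulus.) -/

import Mathlib

/-!
Two disjoint homotopic essential Jordan curves `C₀`, `C₁` in a surface bound an annulus.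

All separation arguments rest on continuous square roots. For compact `Y` in the plane, points `p`
and `q` of the complement lie in the same component exactly when `(z - p) / (z - q)` has a
continuous square root on `Y` (`sqrt_sep_core`, `sqrt_of_jn`). Following such roots along an arc
shows that an arc has locally two sides and that its complement is locally connected at its end
points. The sign picked up by a root around a small grid square is the mod 2 winding number, and
summing these signs over the squares of a grid gives a degree.

*The region.* Unroll the homotopy to a map `H` on a strip. Its mod 2 degree is a function on the
complement of `C₀ ∪ C₁` which vanishes off the compact range of `H` and changes exactly when either
curve is crossed (`exists_deg`). Hence there is a component `U` of the set of odd degree whose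
frontier is `C₀` or `C₀ ∪ C₁` (`exists_region`). Given a Jordan curve in the closure of `U`, weight
each grid square with a local side function of that curve; the weighted degree is then a global side
function on `U`, so Jordan curves separate `U` locally (the property `JS`).

*Cells.* A relatively compact region bounded by one Jordan curve in which `JS` holds is a `Cell`. A
crosscut splits a cell into two cells (`Cell.split`). Cutting along arcs of circles in charts, every
cell has subdivisions into pieces as small as desired (`subdivide`). Given a homeomorphism between
the boundaries of two cells, subdivide both alternately and copy each crosscut in the other cell; in
the limit, the boundary homeomorphism extends to the closed cells (`cell_extend`). In particular
closed cells are closed discs (`disc_param`), and quadrilaterals are squares with prescribed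
boundary values (`quad_param`).

*Conclusion.* If the frontier of `U` is `C₀` alone, then `C₀` bounds a closed disc and is
null-homotopic (`null_of_disc`), which is excluded. Otherwise two disjoint crosscuts between the
curves split `U` into two quadrilaterals (`annulus_cells`), and their parametrisations by the unit
square glue to an embedded annulus (`glue_annulus`).
-/

open Set Filter Topology Metric

noncomputable section

namespace Annulus

/-! ### Square roots and grid parity -/

/-- A fixed (discontinuous) choice of complex square roots. -/
def csq (w : ℂ) : ℂ := Classical.choose (IsAlgClosed.exists_pow_nat_eq w (n := 2) (by norm_num))

lemma csq_sq (w : ℂ) : csq w ^ 2 = w :=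
  Classical.choose_spec (IsAlgClosed.exists_pow_nat_eq w (n := 2) (by norm_num))

open Classical in
/-- The sign of `z` relative to the chosen square root of `z ^ 2`. -/
def sg (z : ℂ) : ZMod 2 := if z = csq (z ^ 2) then 0 else 1

lemma z2add (a : ZMod 2) : a + a = 0 := CharTwo.add_self_eq_zero a

lemma z2cases (a : ZMod 2) : a = 0 ∨ a = 1 := by revert a; decide

lemma sg_csq (w : ℂ) : sg (csq w) = 0 := by simp [sg, csq_sq]

lemma sg_neg {z : ℂ} (hz : z ≠ 0) : sg (-z) = sg z + 1 := by
  have h1 : z ^ 2 = csq (z ^ 2) ^ 2 := (csq_sq _).symm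
  have hne : z ≠ -z := fun h => hz (by
    have : (2 : ℂ) * z = 0 := by linear_combination h
    simpa using this)
  have h11 : (1 : ZMod 2) + 1 = 0 := by decide
  rcases sq_eq_sq_iff_eq_or_eq_neg.mp h1 with h | h
  · have h2 : ¬ (-z = csq (z ^ 2)) := fun h' => hne (h.trans h'.symm)
    simp only [sg, neg_sq, if_neg h2, if_pos h]; simp
  · have h2 : ¬ (z = csq (z ^ 2)) := fun h' => hne (h'.trans (by rw [eq_neg_iff_add_eq_zero] at h; linear_combination h))
    have h3 : -z = csq (z ^ 2) := by rw [h]; simp [csq_sq]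
    simp only [sg, neg_sq, if_neg h2, if_pos h3, h11]

/-- `s` is a continuous square root of `g` on `A`. -/
def SqrtOn {X : Type*} [TopologicalSpace X] (s g : X → ℂ) (A : Set X) : Prop :=
  ContinuousOn s A ∧ ∀ z ∈ A, s z ^ 2 = g z

section sqrt
variable {X Y : Type*} [TopologicalSpace X] [TopologicalSpace Y] {s s' g g' : X → ℂ} {A B : Set X}

lemma SqrtOn.mono (h : SqrtOn s g A) (hB : B ⊆ A) : SqrtOn s g B :=
  ⟨h.1.mono hB, fun z hz => h.2 z (hB hz)⟩

lemma SqrtOn.congr (h : SqrtOn s g A) (hg : ∀ z ∈ A, g z = g' z) : SqrtOn s g' A :=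
  ⟨h.1, fun z hz => (h.2 z hz).trans (hg z hz)⟩

lemma SqrtOn.mul (h : SqrtOn s g A) (h' : SqrtOn s' g' A) :
    SqrtOn (fun z => s z * s' z) (fun z => g z * g' z) A :=
  ⟨h.1.mul h'.1, fun z hz => by rw [mul_pow, h.2 z hz, h'.2 z hz]⟩

lemma SqrtOn.neg (h : SqrtOn s g A) : SqrtOn (fun z => - s z) g A :=
  ⟨h.1.neg, fun z hz => by rw [neg_sq, h.2 z hz]⟩

lemma SqrtOn.ne (h : SqrtOn s g A) {z : X} (hz : z ∈ A) (hg : g z ≠ 0) : s z ≠ 0 := by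
  intro h0; apply hg; rw [← h.2 z hz, h0]; simp

lemma SqrtOn.inv (h : SqrtOn s g A) (hg : ∀ z ∈ A, g z ≠ 0) :
    SqrtOn (fun z => (s z)⁻¹) (fun z => (g z)⁻¹) A :=
  ⟨h.1.inv₀ fun z hz => h.ne hz (hg z hz), fun z hz => by rw [inv_pow, h.2 z hz]⟩

lemma SqrtOn.div (h : SqrtOn s g A) (h' : SqrtOn s' g' A) (hg : ∀ z ∈ A, g' z ≠ 0) :
    SqrtOn (fun z => s z / s' z) (fun z => g z / g' z) A := by
  simpa only [div_eq_mul_inv] using h.mul (h'.inv hg)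

lemma SqrtOn.comp {f : Y → X} {C : Set Y} (h : SqrtOn s g A) (hf : ContinuousOn f C)
    (hm : MapsTo f C A) : SqrtOn (fun z => s (f z)) (fun z => g (f z)) C :=
  ⟨h.1.comp hf hm, fun _ hz => h.2 _ (hm hz)⟩

/-- Two continuous square roots of a nonvanishing function on a preconnected set agree up to a
global sign. -/
lemma SqrtOn.eq_or_neg (hA : IsPreconnected A) (h : SqrtOn s g A) (h' : SqrtOn s' g A)
    (hg : ∀ z ∈ A, g z ≠ 0) : (∀ z ∈ A, s' z = s z) ∨ (∀ z ∈ A, s' z = - s z) := by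
  have := hA.eq_or_eq_neg_of_sq_eq h'.1 h.1 (fun z hz => by
    simp only [Pi.pow_apply]; rw [h.2 z hz, h'.2 z hz]) (fun {_} hz => h.ne hz (hg _ hz))
  exact this

/-- A square root is determined by its value at one point. -/
lemma SqrtOn.eq_of_eq (hA : IsPreconnected A) (h : SqrtOn s g A) (h' : SqrtOn s' g A)
    (hg : ∀ z ∈ A, g z ≠ 0) {a : X} (ha : a ∈ A) (he : s' a = s a) : ∀ z ∈ A, s' z = s z := by
  rcases h.eq_or_neg hA h' hg with h1 | h1
  · exact h1
  · exfalso
    have h2 := h1 a ha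
    have h3 := h.ne ha (hg a ha)
    rw [he] at h2
    exact h3 (by have : (2 : ℂ) * s a = 0 := by linear_combination h2
                 simpa using this)

end sqrt

lemma sg_mul_add (w z t : ℂ) (hz : z ^ 2 = w) (hw : w ≠ 0) (ht : t ≠ 0) :
    sg (z * t) + sg z = sg (csq w * t) := by
  have h1 : z ^ 2 = csq w ^ 2 := by rw [hz, csq_sq]
  have hc : csq w ≠ 0 := fun h => hw (by rw [← csq_sq w, h]; simp)
  rcases sq_eq_sq_iff_eq_or_eq_neg.mp h1 with h | h
  · rw [h, sg_csq, add_zero]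
  · rw [h, neg_mul, sg_neg (mul_ne_zero hc ht), sg_neg hc, sg_csq]
    generalize sg (csq w * t) = a; revert a; decide

/-- Continuous square roots exist for nonvanishing functions on rectangles. -/
lemma exists_sqrt_rect {ψ : ℝ × ℝ → ℂ} {u v : ℝ × ℝ} (huv : u ≤ v)
    (hc : ContinuousOn ψ (Icc u v)) (h0 : ∀ z ∈ Icc u v, ψ z ≠ 0) :
    ∃ σ, SqrtOn σ ψ (Icc u v) := by
  let cl : ℝ × ℝ → ℝ × ℝ := fun z => u ⊔ (v ⊓ z)
  have hcl : Continuous cl := by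
    have : cl = fun z => (max u.1 (min v.1 z.1), max u.2 (min v.2 z.2)) := rfl
    rw [this]; fun_prop
  have hm : ∀ z, cl z ∈ Icc u v := fun z => ⟨le_sup_left, sup_le huv inf_le_left⟩
  have hfix : ∀ z ∈ Icc u v, cl z = z := fun z hz => by simp [cl, hz.1, hz.2]
  have hcov : IsCoveringMap (fun z : ℂ => (⟨Complex.exp z, Complex.exp_ne_zero z⟩ : {z : ℂ // z ≠ 0})) :=
    Complex.isCoveringMap_exp
  let f : C(ℝ × ℝ, {z : ℂ // z ≠ 0}) :=
    ⟨fun z => ⟨ψ (cl z), h0 _ (hm z)⟩, by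
      apply Continuous.subtype_mk
      exact hc.comp_continuous hcl hm⟩
  obtain ⟨e₀, he₀⟩ : ∃ e₀, Complex.exp e₀ = ψ (cl u) := ⟨_, Complex.exp_log (h0 _ (hm u))⟩
  obtain ⟨F, hF, -⟩ := hcov.existsUnique_continuousMap_lifts f u e₀ (Subtype.ext he₀)
  refine ⟨fun z => Complex.exp (F z / 2), ?_, fun z hz => ?_⟩
  · fun_prop
  · rw [← Complex.exp_nat_mul]
    have := congrArg Subtype.val (congrFun hF.2 z)
    simp only [Function.comp] at this
    rw [show ((2 : ℕ) : ℂ) * (F z / 2) = F z by push_cast; ring, this]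
    simp [f, hfix z hz]

open Classical in
/-- The parity (mod 2 change of the half-argument relative to the chosen square roots) of `ψ`
along the rectangle (in practice: segment) `Icc u v`. -/
def par (ψ : ℝ × ℝ → ℂ) (u v : ℝ × ℝ) : ZMod 2 :=
  if ∃ σ, SqrtOn σ ψ (Icc u v) ∧ sg (σ u) + sg (σ v) = 1 then 1 else 0

lemma preconn_rect (u v : ℝ × ℝ) : IsPreconnected (Icc u v) :=
  (convex_Icc u v).isPreconnected

lemma par_eq {ψ σ : ℝ × ℝ → ℂ} {u v : ℝ × ℝ} (huv : u ≤ v) (h : SqrtOn σ ψ (Icc u v))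
    (h0 : ∀ z ∈ Icc u v, ψ z ≠ 0) : par ψ u v = sg (σ u) + sg (σ v) := by
  have hu : u ∈ Icc u v := ⟨le_rfl, huv⟩
  have hv : v ∈ Icc u v := ⟨huv, le_rfl⟩
  have key : ∀ σ', SqrtOn σ' ψ (Icc u v) → sg (σ' u) + sg (σ' v) = sg (σ u) + sg (σ v) := by
    intro σ' h'
    rcases h.eq_or_neg (preconn_rect u v) h' h0 with h1 | h1
    · rw [h1 u hu, h1 v hv]
    · rw [h1 u hu, h1 v hv, sg_neg (h.ne hu (h0 u hu)), sg_neg (h.ne hv (h0 v hv))]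
      generalize sg (σ u) = a; generalize sg (σ v) = b; revert a b; decide
  unfold par
  split_ifs with hh
  · obtain ⟨σ', h', e⟩ := hh
    rw [← key σ' h', e]
  · rcases z2cases (sg (σ u) + sg (σ v)) with e | e
    · exact e.symm
    · exact absurd ⟨σ, h, e⟩ hh

/-- Multiplying by a square changes the parity by a coboundary. -/
lemma par_mul_sq {ψ ψ' τ : ℝ × ℝ → ℂ} {u v : ℝ × ℝ} (huv : u ≤ v)
    (hψ : ContinuousOn ψ (Icc u v)) (h0 : ∀ z ∈ Icc u v, ψ z ≠ 0)
    (hτ : ContinuousOn τ (Icc u v)) (hτ0 : ∀ z ∈ Icc u v, τ z ≠ 0)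
    (h : ∀ z ∈ Icc u v, ψ' z = ψ z * τ z ^ 2) :
    par ψ' u v = par ψ u v + (sg (csq (ψ u) * τ u) + sg (csq (ψ v) * τ v)) := by
  obtain ⟨σ, hσ⟩ := exists_sqrt_rect huv hψ h0
  have hu : u ∈ Icc u v := ⟨le_rfl, huv⟩
  have hv : v ∈ Icc u v := ⟨huv, le_rfl⟩
  have hσ' : SqrtOn (fun z => σ z * τ z) ψ' (Icc u v) :=
    ⟨hσ.1.mul hτ, fun z hz => by rw [mul_pow, hσ.2 z hz, h z hz]⟩
  rw [par_eq huv hσ h0, par_eq huv hσ' fun z hz => by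
    rw [h z hz]; exact mul_ne_zero (h0 z hz) (pow_ne_zero 2 (hτ0 z hz)),
    ← sg_mul_add _ _ _ (hσ.2 u hu) (h0 u hu) (hτ0 u hu),
    ← sg_mul_add _ _ _ (hσ.2 v hv) (h0 v hv) (hτ0 v hv)]
  generalize sg (σ u) = a; generalize sg (σ v) = b
  generalize sg (σ u * τ u) = c; generalize sg (σ v * τ v) = d
  revert a b c d; decide

/-- Grid vertex. -/
def V (n j k : ℕ) : ℝ × ℝ := ((j : ℝ) / n, (k : ℝ) / n)

/-- Grid square. -/
def Q (n j k : ℕ) : Set (ℝ × ℝ) := Icc (V n j k) (V n (j + 1) (k + 1))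

/-- The coboundary, on the grid square `(j, k)`, of the edge cochain with value `h j k` on the
horizontal and `v j k` on the vertical edge starting at the vertex `(j, k)`. -/
def bd (h v : ℕ → ℕ → ZMod 2) (j k : ℕ) : ZMod 2 := h j k + h j (k + 1) + v j k + v (j + 1) k

/-- Weighted sum of boundary values over the grid squares. -/
def Dg (n : ℕ) (p h v : ℕ → ℕ → ZMod 2) : ZMod 2 :=
  ∑ j ∈ Finset.range n, ∑ k ∈ Finset.range n, p j k * bd h v j k

lemma sum_adj (x : ℕ → ZMod 2) (n : ℕ) : ∑ k ∈ Finset.range n, (x k + x (k + 1)) = x 0 + x n := by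
  induction n with
  | zero => simp [z2add]
  | succ n ih =>
    rw [Finset.sum_range_succ, ih]
    generalize x 0 = a; generalize x n = b; generalize x (n+1) = c
    revert a b c; decide

/-- Summation by parts along a row: only boundary terms and odd edges contribute. -/
lemma sum_parts (n : ℕ) (p y : ℕ → ZMod 2) (h : ∀ k, k + 1 < n → y (k + 1) ≠ 0 → p k = p (k + 1)) :
    ∑ k ∈ Finset.range n, p k * (y k + y (k + 1)) = p 0 * y 0 + p (n - 1) * y n := by
  rcases n with _ | n
  · simp [z2add]
  rw [Finset.sum_range_succ, Finset.sum_congr rfl (g := fun k => p k * y k + p (k+1) * y (k+1)),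
    sum_adj (fun k => p k * y k)]
  · simp only [Nat.add_sub_cancel]
    generalize p 0 * y 0 = a; generalize p n = b; generalize y n = c; generalize y (n+1) = d
    revert a b c d; decide
  · intro k hk
    rw [Finset.mem_range] at hk
    by_cases h0 : y (k+1) = 0
    · simp [h0]
    · rw [mul_add, h k (by omega) h0]

/-- If the weights agree across every interior edge on which the cochain is nonzero, the weighted
sum reduces to the two boundary rows. -/
lemma Dg_bdry {n : ℕ} {p h v : ℕ → ℕ → ZMod 2}
    (hp : ∀ k < n, p n k = p 0 k)
    (hvp : ∀ k < n, v n k = v 0 k)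
    (hv : ∀ j < n, ∀ k < n, v (j + 1) k ≠ 0 → p j k = p (j + 1) k)
    (hh : ∀ j < n, ∀ k, k + 1 < n → h j (k + 1) ≠ 0 → p j k = p j (k + 1)) :
    Dg n p h v = ∑ j ∈ Finset.range n, (p j 0 * h j 0 + p j (n - 1) * h j n) := by
  have e : Dg n p h v = ∑ j ∈ Finset.range n, ∑ k ∈ Finset.range n, p j k * (h j k + h j (k+1))
      + ∑ k ∈ Finset.range n, ∑ j ∈ Finset.range n, p j k * (v j k + v (j+1) k) := by
    rw [Finset.sum_comm (s := Finset.range n) (t := Finset.range n)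
      (f := fun k j => p j k * (v j k + v (j+1) k)), ← Finset.sum_add_distrib]
    unfold Dg bd
    refine Finset.sum_congr rfl fun j _ => ?_
    rw [← Finset.sum_add_distrib]
    exact Finset.sum_congr rfl fun k _ => by ring
  rw [e, Finset.sum_eq_zero (f := fun k => ∑ j ∈ Finset.range n, p j k * (v j k + v (j+1) k)),
    add_zero]
  · refine Finset.sum_congr rfl fun j hj => ?_
    rw [Finset.mem_range] at hj
    rw [sum_parts n (p j) (h j) (hh j hj)]
  · intro k hk
    rw [Finset.mem_range] at hk
    rcases Nat.eq_zero_or_pos n with rfl | hn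
    · simp
    rw [sum_parts n (fun j => p j k) (fun j => v j k) fun j hj => hv j (by omega) k hk]
    have h1 := hv (n - 1) (by omega) k hk
    rw [Nat.sub_add_cancel hn, hvp k hk, hp k hk] at h1
    rw [hvp k hk]
    by_cases h0 : v 0 k = 0
    · simp [h0]
    · rw [h1 h0]; exact z2add _

lemma Dg_add (n : ℕ) (p h v h' v' : ℕ → ℕ → ZMod 2) :
    Dg n p (fun j k => h j k + h' j k) (fun j k => v j k + v' j k) = Dg n p h v + Dg n p h' v' := by
  unfold Dg
  rw [← Finset.sum_add_distrib]
  refine Finset.sum_congr rfl fun j _ => ?_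
  rw [← Finset.sum_add_distrib]
  exact Finset.sum_congr rfl fun k _ => by unfold bd; ring

/-- If two cochains differ by the coboundary of a periodic `μ` on every interior edge across which
the weights change, their weighted sums differ by terms on the boundary rows. -/
lemma Dg_congr {n : ℕ} {p h v h' v' : ℕ → ℕ → ZMod 2} (μ : ℕ → ℕ → ZMod 2)
    (hp : ∀ k < n, p n k = p 0 k)
    (hvp : ∀ k < n, v n k = v 0 k) (hvp' : ∀ k < n, v' n k = v' 0 k)
    (hμ : ∀ k ≤ n, μ n k = μ 0 k)
    (hv : ∀ j < n, ∀ k < n, p j k ≠ p (j + 1) k → v' (j + 1) k = v (j + 1) k + (μ (j+1) k + μ (j+1) (k+1)))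
    (hh : ∀ j < n, ∀ k, k + 1 < n → p j k ≠ p j (k + 1) →
      h' j (k + 1) = h j (k + 1) + (μ j (k+1) + μ (j+1) (k+1))) :
    Dg n p h' v' + Dg n p h v =
      ∑ j ∈ Finset.range n, (p j 0 * (h' j 0 + (h j 0 + (μ j 0 + μ (j + 1) 0))) +
        p j (n - 1) * (h' j n + (h j n + (μ j n + μ (j + 1) n)))) := by
  have hδ : Dg n p (fun j k => μ j k + μ (j+1) k) (fun j k => μ j k + μ j (k+1)) = 0 := by
    unfold Dg
    refine Finset.sum_eq_zero fun j _ => Finset.sum_eq_zero fun k _ => ?_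
    simp only [bd]
    generalize μ j k = a; generalize μ (j+1) k = b; generalize μ j (k+1) = c
    generalize μ (j+1) (k+1) = d; generalize p j k = e
    revert a b c d e; decide
  have hs : ∀ a b c : ZMod 2, a = b + c → a + (b + c) = 0 := by decide
  have h0 := Dg_bdry (n := n) (p := p) (h := fun j k => h' j k + (h j k + (μ j k + μ (j+1) k)))
      (v := fun j k => v' j k + (v j k + (μ j k + μ j (k+1)))) hp
      (fun k hk => by simp only [hvp k hk, hvp' k hk, hμ k hk.le, hμ (k+1) hk])
      (fun j hj k hk => by contrapose!; intro hne; exact hs _ _ _ (hv j hj k hk hne))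
      (fun j hj k hk => by contrapose!; intro hne; exact hs _ _ _ (hh j hj k hk hne))
  rw [Dg_add, Dg_add, hδ, add_zero] at h0
  exact h0

/-- Horizontal edge cochain of `ψ`. -/
def hE (n : ℕ) (ψ : ℝ × ℝ → ℂ) (j k : ℕ) : ZMod 2 := par ψ (V n j k) (V n (j + 1) k)
/-- Vertical edge cochain of `ψ`. -/
def vE (n : ℕ) (ψ : ℝ × ℝ → ℂ) (j k : ℕ) : ZMod 2 := par ψ (V n j k) (V n j (k + 1))

lemma V_mono (n : ℕ) {j k j' k' : ℕ} (hj : j ≤ j') (hk : k ≤ k') : V n j k ≤ V n j' k' := by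
  constructor <;> (simp only [V]; gcongr)

/-- The boundary parity of a square on which `ψ` is continuous and nonvanishing is zero. -/
lemma bd_eq_zero {n j k : ℕ} {ψ : ℝ × ℝ → ℂ} (hc : ContinuousOn ψ (Q n j k))
    (h0 : ∀ z ∈ Q n j k, ψ z ≠ 0) : bd (hE n ψ) (vE n ψ) j k = 0 := by
  obtain ⟨σ, hσ⟩ := exists_sqrt_rect (V_mono n (Nat.le_succ j) (Nat.le_succ k)) hc h0
  have key : ∀ j₁ k₁ j₂ k₂, j ≤ j₁ → j₁ ≤ j₂ → j₂ ≤ j + 1 → k ≤ k₁ → k₁ ≤ k₂ → k₂ ≤ k + 1 →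
      par ψ (V n j₁ k₁) (V n j₂ k₂) = sg (σ (V n j₁ k₁)) + sg (σ (V n j₂ k₂)) := by
    intro j₁ k₁ j₂ k₂ a b c d e f
    have hsub : Icc (V n j₁ k₁) (V n j₂ k₂) ⊆ Q n j k :=
      Icc_subset_Icc (V_mono n a d) (V_mono n c f)
    exact par_eq (V_mono n b e) (hσ.mono hsub) fun z hz => h0 z (hsub hz)
  unfold bd hE vE
  rw [key, key, key, key] <;> try omega
  generalize sg (σ (V n j k)) = a; generalize sg (σ (V n (j+1) k)) = b
  generalize sg (σ (V n j (k+1))) = c; generalize sg (σ (V n (j+1) (k+1))) = d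
  revert a b c d; decide

lemma V_per {n : ℕ} (hn : 0 < n) (j k : ℕ) : V n (j + n) k = V n j k + (1, 0) := by
  have : (n : ℝ) ≠ 0 := by positivity
  simp [V, add_div, this]

lemma par_per {ψ : ℝ × ℝ → ℂ} (hψ : ∀ z, ψ (z + (1, 0)) = ψ z) (u v : ℝ × ℝ) :
    par ψ (u + (1, 0)) (v + (1, 0)) = par ψ u v := by
  have hm : ∀ w : ℝ × ℝ, ∀ z, z ∈ Icc u v ↔ z + w ∈ Icc (u + w) (v + w) := fun w z => by simp
  unfold par
  congr 1
  apply propext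
  constructor
  · rintro ⟨σ, h1, h2⟩
    refine ⟨fun z => σ (z + (1, 0)), ?_, h2⟩
    exact (h1.comp (f := fun z : ℝ × ℝ => z + (1, 0)) (C := Icc u v)
      (by fun_prop) (fun z hz => (hm _ z).mp hz)).congr fun z _ => hψ z
  · rintro ⟨σ, h1, h2⟩
    refine ⟨fun z => σ (z - (1, 0)), ?_, by simpa using h2⟩
    refine (h1.comp (f := fun z : ℝ × ℝ => z - (1, 0)) (C := Icc (u + (1, 0)) (v + (1, 0)))
      (by fun_prop) (fun z hz => (hm (1, 0) _).mpr (by simpa using hz))).congr fun z _ => ?_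
    rw [← hψ, sub_add_cancel]

lemma Q_per {n : ℕ} (hn : 0 < n) (k : ℕ) (z : ℝ × ℝ) : z ∈ Q n 0 k ↔ z + (1, 0) ∈ Q n n k := by
  have h1 := V_per hn 0 k
  have h2 := V_per hn 1 (k + 1)
  rw [Nat.zero_add] at h1
  rw [Nat.add_comm] at h2
  simp only [Q, h1, h2]
  simp

/-- `ψ' = ψ * τ ^ 2` on `A`, everything continuous and nonvanishing. -/
structure Cmp (ψ ψ' τ : ℝ × ℝ → ℂ) (A : Set (ℝ × ℝ)) : Prop where
  c : ContinuousOn ψ A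
  ne : ∀ z ∈ A, ψ z ≠ 0
  ct : ContinuousOn τ A
  nt : ∀ z ∈ A, τ z ≠ 0
  eq : ∀ z ∈ A, ψ' z = ψ z * τ z ^ 2

lemma Cmp.mono {ψ ψ' τ : ℝ × ℝ → ℂ} {A B : Set (ℝ × ℝ)} (h : Cmp ψ ψ' τ A) (hB : B ⊆ A) :
    Cmp ψ ψ' τ B :=
  ⟨h.c.mono hB, fun z hz => h.ne z (hB hz), h.ct.mono hB, fun z hz => h.nt z (hB hz),
    fun z hz => h.eq z (hB hz)⟩

lemma Cmp.par {ψ ψ' τ : ℝ × ℝ → ℂ} {u v : ℝ × ℝ} (h : Cmp ψ ψ' τ (Icc u v)) (huv : u ≤ v) :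
    par ψ' u v = par ψ u v + (sg (csq (ψ u) * τ u) + sg (csq (ψ v) * τ v)) :=
  par_mul_sq huv h.c h.ne h.ct h.nt h.eq

/-- Vertex cochain relating the parities of `ψ` and `ψ * τ ^ 2`. -/
def muV (n : ℕ) (ψ τ : ℝ × ℝ → ℂ) (j k : ℕ) : ZMod 2 := sg (csq (ψ (V n j k)) * τ (V n j k))

/-- Replacing `ψ` by `ψ * τ ^ 2` off a set `Z` changes the weighted sum only by terms on the
boundary rows, provided the weights agree on adjacent squares with a common point in `Z`. -/
lemma Dg_cmp {n : ℕ} (hn : 0 < n) {Z : Set (ℝ × ℝ)}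
    {p : ℕ → ℕ → ZMod 2}
    (hp : ∀ k < n, p n k = p 0 k)
    {ψ ψ' τ : ℝ × ℝ → ℂ}
    (hψ : ∀ z, ψ (z + (1, 0)) = ψ z) (hψ' : ∀ z, ψ' (z + (1, 0)) = ψ' z)
    (hτ : ∀ z, τ (z + (1, 0)) = τ z)
    (hfv : ∀ j < n, ∀ k < n, ∀ z ∈ Q n j k, z ∈ Q n (j + 1) k → z ∈ Z → p j k = p (j + 1) k)
    (hfh : ∀ j < n, ∀ k, k + 1 < n → ∀ z ∈ Q n j k, z ∈ Q n j (k + 1) → z ∈ Z → p j k = p j (k + 1))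
    (hc : ∀ j ≤ n, ∀ k < n, p j k ≠ 0 → Cmp ψ ψ' τ (Q n j k \ Z)) :
    Dg n p (hE n ψ') (vE n ψ') + Dg n p (hE n ψ) (vE n ψ) =
      ∑ j ∈ Finset.range n,
        (p j 0 * (hE n ψ' j 0 + (hE n ψ j 0 + (muV n ψ τ j 0 + muV n ψ τ (j + 1) 0))) +
        p j (n - 1) * (hE n ψ' j n + (hE n ψ j n + (muV n ψ τ j n + muV n ψ τ (j + 1) n)))) := by
  have hvE : ∀ χ : ℝ × ℝ → ℂ, (∀ z, χ (z + (1, 0)) = χ z) → ∀ k, vE n χ n k = vE n χ 0 k := by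
    intro χ hχ k
    have h1 := V_per hn 0 k
    have h2 := V_per hn 0 (k + 1)
    rw [Nat.zero_add] at h1 h2
    simp only [vE, h1, h2]
    exact par_per hχ _ _
  apply Dg_congr _ hp (fun k _ => hvE ψ hψ k) (fun k _ => hvE ψ' hψ' k)
  · intro k _
    have h1 := V_per hn 0 k
    rw [Nat.zero_add] at h1
    simp only [muV, h1, hψ, hτ]
  · intro j hj k hk hne
    have hs1 : Icc (V n (j+1) k) (V n (j+1) (k+1)) ⊆ Q n j k :=
      Icc_subset_Icc (V_mono n (by omega) le_rfl) le_rfl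
    have hs2 : Icc (V n (j+1) k) (V n (j+1) (k+1)) ⊆ Q n (j+1) k :=
      Icc_subset_Icc le_rfl (V_mono n (by omega) le_rfl)
    have hnz : ∀ z ∈ Icc (V n (j+1) k) (V n (j+1) (k+1)), z ∉ Z := fun z hz hzZ =>
      hne (hfv j hj k hk z (hs1 hz) (hs2 hz) hzZ)
    have : p j k ≠ 0 ∨ p (j+1) k ≠ 0 := by
      by_contra! h; exact hne (h.1.trans h.2.symm)
    rcases this with h | h
    · exact ((hc j hj.le k hk h).mono fun z hz => ⟨hs1 hz, hnz z hz⟩).par (V_mono n le_rfl (by omega))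
    · exact ((hc (j+1) hj k hk h).mono fun z hz => ⟨hs2 hz, hnz z hz⟩).par (V_mono n le_rfl (by omega))
  · intro j hj k hk hne
    have hs1 : Icc (V n j (k+1)) (V n (j+1) (k+1)) ⊆ Q n j k :=
      Icc_subset_Icc (V_mono n le_rfl (by omega)) le_rfl
    have hs2 : Icc (V n j (k+1)) (V n (j+1) (k+1)) ⊆ Q n j (k+1) :=
      Icc_subset_Icc le_rfl (V_mono n le_rfl (by omega))
    have hnz : ∀ z ∈ Icc (V n j (k+1)) (V n (j+1) (k+1)), z ∉ Z := fun z hz hzZ =>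
      hne (hfh j hj k hk z (hs1 hz) (hs2 hz) hzZ)
    have : p j k ≠ 0 ∨ p j (k+1) ≠ 0 := by
      by_contra! h; exact hne (h.1.trans h.2.symm)
    rcases this with h | h
    · exact ((hc j hj.le k (by omega) h).mono fun z hz => ⟨hs1 hz, hnz z hz⟩).par (V_mono n (by omega) le_rfl)
    · exact ((hc j hj.le (k+1) (by omega) h).mono fun z hz => ⟨hs2 hz, hnz z hz⟩).par (V_mono n (by omega) le_rfl)

/-- Version of the comparison when `Z` avoids the boundary rows. -/
lemma Dg_cmp_int {n : ℕ} (hn : 0 < n) {Z : Set (ℝ × ℝ)}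
    {p : ℕ → ℕ → ZMod 2}
    (hp : ∀ k < n, p n k = p 0 k)
    {ψ ψ' τ : ℝ × ℝ → ℂ}
    (hψ : ∀ z, ψ (z + (1, 0)) = ψ z) (hψ' : ∀ z, ψ' (z + (1, 0)) = ψ' z)
    (hτ : ∀ z, τ (z + (1, 0)) = τ z)
    (hfv : ∀ j < n, ∀ k < n, ∀ z ∈ Q n j k, z ∈ Q n (j + 1) k → z ∈ Z → p j k = p (j + 1) k)
    (hfh : ∀ j < n, ∀ k, k + 1 < n → ∀ z ∈ Q n j k, z ∈ Q n j (k + 1) → z ∈ Z → p j k = p j (k + 1))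
    (hc : ∀ j ≤ n, ∀ k < n, p j k ≠ 0 → Cmp ψ ψ' τ (Q n j k \ Z))
    (hb : ∀ z ∈ Z, z.2 ≠ 0 ∧ z.2 ≠ 1) :
    Dg n p (hE n ψ') (vE n ψ') = Dg n p (hE n ψ) (vE n ψ) := by
  have h := Dg_cmp hn hp hψ hψ' hτ hfv hfh hc
  have hs : ∀ a b c : ZMod 2, a = b + c → a + (b + c) = 0 := by decide
  rw [Finset.sum_eq_zero] at h
  · exact CharTwo.add_eq_zero.mp h
  · intro j hj; rw [Finset.mem_range] at hj
    have hn0 : (n : ℝ) ≠ 0 := by positivity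
    have e1 : p j 0 * (hE n ψ' j 0 + (hE n ψ j 0 + (muV n ψ τ j 0 + muV n ψ τ (j + 1) 0))) = 0 := by
      by_cases h0 : p j 0 = 0
      · rw [h0, zero_mul]
      rw [hs, mul_zero]
      refine ((hc j hj.le 0 hn h0).mono fun z hz => ⟨Icc_subset_Icc le_rfl (V_mono n le_rfl (by omega)) hz, fun hzZ => ?_⟩).par
        (V_mono n (by omega) le_rfl)
      have a1 := hz.1.2; have a2 := hz.2.2
      simp only [V] at a1 a2
      exact (hb z hzZ).1 (by simpa using le_antisymm a2 a1)
    have e2 : p j (n - 1) * (hE n ψ' j n + (hE n ψ j n + (muV n ψ τ j n + muV n ψ τ (j + 1) n))) = 0 := by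
      by_cases h0 : p j (n-1) = 0
      · rw [h0, zero_mul]
      rw [hs, mul_zero]
      have hnn : n - 1 + 1 = n := by omega
      refine ((hc j hj.le (n-1) (by omega) h0).mono fun z hz => ⟨?_, fun hzZ => ?_⟩).par (V_mono n (by omega) le_rfl)
      · simp only [Q, hnn]
        exact Icc_subset_Icc (V_mono n le_rfl (by omega)) le_rfl hz
      have a1 := hz.1.2; have a2 := hz.2.2
      simp only [V, div_self hn0] at a1 a2
      exact (hb z hzZ).2 (le_antisymm a2 a1)
    rw [e1, e2, add_zero]

/-! ### Joining points inside a set -/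

/-- `p` and `q` lie in a common connected subset of `A`. -/
def Jn {X : Type*} [TopologicalSpace X] (A : Set X) (p q : X) : Prop :=
  ∃ M, IsPreconnected M ∧ M ⊆ A ∧ p ∈ M ∧ q ∈ M

section Jn
variable {X Y : Type*} [TopologicalSpace X] [TopologicalSpace Y] {A B : Set X} {p q r : X}

lemma Jn.refl (h : p ∈ A) : Jn A p p := ⟨{p}, isPreconnected_singleton, by simpa, rfl, rfl⟩
lemma Jn.symm (h : Jn A p q) : Jn A q p := by
  obtain ⟨M, a, b, c, d⟩ := h; exact ⟨M, a, b, d, c⟩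
lemma Jn.trans (h : Jn A p q) (h' : Jn A q r) : Jn A p r := by
  obtain ⟨M, a, b, c, d⟩ := h
  obtain ⟨M', a', b', c', d'⟩ := h'
  exact ⟨M ∪ M', a.union q d c' a', union_subset b b', .inl c, .inr d'⟩
lemma Jn.mono (h : Jn A p q) (hB : A ⊆ B) : Jn B p q := by
  obtain ⟨M, a, b, c, d⟩ := h; exact ⟨M, a, b.trans hB, c, d⟩
lemma Jn.left (h : Jn A p q) : p ∈ A := by obtain ⟨M, a, b, c, d⟩ := h; exact b c
lemma Jn.right (h : Jn A p q) : q ∈ A := h.symm.left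
lemma Jn.image {f : X → Y} {C : Set Y} (h : Jn A p q) (hf : ContinuousOn f A) (hm : MapsTo f A C) :
    Jn C (f p) (f q) := by
  obtain ⟨M, a, b, c, d⟩ := h
  exact ⟨f '' M, a.image f (hf.mono b), by rintro _ ⟨z, hz, rfl⟩; exact hm (b hz),
    mem_image_of_mem f c, mem_image_of_mem f d⟩
lemma jn_of_pre (h : IsPreconnected A) (hp : p ∈ A) (hq : q ∈ A) : Jn A p q :=
  ⟨A, h, Subset.rfl, hp, hq⟩
lemma Jn.mem_of_clopen {U : Set X} (h : Jn A p q) (hU : IsOpen U) (hcl : ∀ z ∈ A, z ∈ closure U → z ∈ U)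
    (hp : p ∈ U) : q ∈ U := by
  obtain ⟨M, a, b, c, d⟩ := h
  exact (a.subset_of_closure_inter_subset hU ⟨p, c, hp⟩ fun z hz => hcl z (b hz.2) hz.1) d
/-- The component of a point, as the set of points joined to it. -/
lemma jn_iff_mem (hp : p ∈ A) : Jn A p q ↔ q ∈ connectedComponentIn A p := by
  constructor
  · rintro ⟨M, a, b, c, d⟩
    exact a.subset_connectedComponentIn c b d
  · intro h
    exact ⟨_, isPreconnected_connectedComponentIn, connectedComponentIn_subset _ _,
      mem_connectedComponentIn hp, h⟩
lemma isOpen_jn [LocallyConnectedSpace X] (hA : IsOpen A) (p : X) : IsOpen {q | Jn A p q} := by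
  by_cases hp : p ∈ A
  · have : {q | Jn A p q} = connectedComponentIn A p := by ext q; exact jn_iff_mem hp
    rw [this]; exact hA.connectedComponentIn
  · have : {q | Jn A p q} = ∅ := by ext q; simp; exact fun h => hp h.left
    rw [this]; exact isOpen_empty
lemma isPreconnected_jn (p : X) : IsPreconnected {q | Jn A p q} := by
  by_cases hp : p ∈ A
  · have : {q | Jn A p q} = connectedComponentIn A p := by ext q; exact jn_iff_mem hp
    rw [this]; exact isPreconnected_connectedComponentIn
  · have : {q | Jn A p q} = ∅ := by ext q; simp; exact fun h => hp h.left
    rw [this]; exact isPreconnected_empty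
/-- Points of `A` adherent to a component belong to it. -/
lemma jn_of_closure [LocallyConnectedSpace X] (hA : IsOpen A) (hq : q ∈ A)
    (h : q ∈ closure {q | Jn A p q}) : Jn A p q := by
  obtain ⟨z, hz1, hz2⟩ := mem_closure_iff.mp h _ (isOpen_jn hA q) (Jn.refl hq)
  exact Jn.trans hz2 (Jn.symm hz1)
end Jn

/-- Principal square root. -/
def psq (z : ℂ) : ℂ := Complex.exp (Complex.log z / 2)

lemma psq_sq {z : ℂ} (h : z ≠ 0) : psq z ^ 2 = z := by
  rw [psq, ← Complex.exp_nat_mul, show ((2 : ℕ) : ℂ) * (Complex.log z / 2) = Complex.log z by push_cast; ring,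
    Complex.exp_log h]

lemma psq_one : psq 1 = 1 := by simp [psq]

lemma psq_ne (z : ℂ) : psq z ≠ 0 := Complex.exp_ne_zero _

lemma psq_sqrtOn : SqrtOn psq (fun z => z) Complex.slitPlane := by
  refine ⟨fun z hz => ?_, fun z hz => psq_sq (Complex.slitPlane_ne_zero hz)⟩
  exact (Complex.continuous_exp.continuousAt.comp
    ((continuousAt_clog hz).div_const 2)).continuousWithinAt

/-- Fineness of grids. -/
lemma grid_fine {X : Type*} [PseudoMetricSpace X] {Ψ : ℝ × ℝ → X} (hΨ : Continuous Ψ) {ε : ℝ} (hε : 0 < ε) :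
    ∃ N : ℕ, ∀ n ≥ N, 0 < n → ∀ j ≤ n, ∀ k < n, ∀ z ∈ Q n j k, ∀ z' ∈ Q n j k,
      dist (Ψ z) (Ψ z') < ε := by
  have hK : IsCompact (Icc ((0, 0) : ℝ × ℝ) (2, 2)) := isCompact_Icc
  obtain ⟨δ, hδ, h⟩ := Metric.uniformContinuousOn_iff.mp
    (hK.uniformContinuousOn_of_continuous hΨ.continuousOn) ε hε
  obtain ⟨N, hN⟩ := exists_nat_gt (1 / δ)
  refine ⟨N, fun n hn hn0 j hj k hk z hz z' hz' => ?_⟩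
  have hn0' : (0 : ℝ) < n := by exact_mod_cast hn0
  have hsub : Q n j k ⊆ Icc ((0, 0) : ℝ × ℝ) (2, 2) := by
    intro w hw
    obtain ⟨⟨h1, h2⟩, h3, h4⟩ := hw
    simp only [V] at h1 h2 h3 h4
    have hj' : (j : ℝ) ≤ n := by exact_mod_cast hj
    have hk' : (k : ℝ) ≤ n := by exact_mod_cast hk.le
    have h1n : (1 : ℝ) ≤ n := by exact_mod_cast hn0
    refine ⟨⟨le_trans (by positivity) h1, le_trans (by positivity) h2⟩, ⟨h3.trans ?_, h4.trans ?_⟩⟩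
    · rw [div_le_iff₀ hn0']; push_cast; linarith
    · rw [div_le_iff₀ hn0']; push_cast; linarith
  apply h z (hsub hz) z' (hsub hz')
  have hlt : 1 / (n : ℝ) < δ := by
    rw [div_lt_iff₀ hn0']; rw [div_lt_iff₀ hδ] at hN
    have : (N : ℝ) ≤ n := by exact_mod_cast hn
    nlinarith
  refine lt_of_le_of_lt ?_ hlt
  obtain ⟨⟨h1, h2⟩, h3, h4⟩ := hz
  obtain ⟨⟨h1', h2'⟩, h3', h4'⟩ := hz'
  simp only [V] at h1 h2 h3 h4 h1' h2' h3' h4'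
  rw [Prod.dist_eq]
  refine max_le ((Real.dist_le_of_mem_Icc ⟨h1, h3⟩ ⟨h1', h3'⟩).trans ?_)
    ((Real.dist_le_of_mem_Icc ⟨h2, h4⟩ ⟨h2', h4'⟩).trans ?_)
  · apply le_of_eq; push_cast; ring
  · apply le_of_eq; push_cast; ring

/-! ### Square roots and separation in the plane -/

lemma preconn_ext (c : ℂ) {R : ℝ} (hR : 0 < R) : IsPreconnected {z : ℂ | R < ‖z - c‖} := by
  have h1 : IsPreconnected {w : ℂ | Real.log R < w.re} :=
    (convex_halfSpace_re_gt _).isPreconnected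
  have h2 : {z : ℂ | R < ‖z - c‖} = (fun w => c + Complex.exp w) '' {w : ℂ | Real.log R < w.re} := by
    ext z
    constructor
    · intro hz
      have hz' : R < ‖z - c‖ := hz
      have hne : z - c ≠ 0 := by
        intro h; rw [h, norm_zero] at hz'; linarith
      refine ⟨Complex.log (z - c), ?_, ?_⟩
      · show Real.log R < (Complex.log (z - c)).re
        rw [Complex.log_re]; exact Real.log_lt_log hR hz'
      · simp [Complex.exp_log hne]
    · rintro ⟨w, hw, rfl⟩
      have hw' : Real.log R < w.re := hw
      show R < ‖c + Complex.exp w - c‖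
      rw [add_sub_cancel_left, Complex.norm_exp]
      exact (Real.log_lt_iff_lt_exp hR).mp hw'
  rw [h2]
  exact h1.image _ (by fun_prop)

/-- A bounded open set `P` with frontier in `Y` separates `p ∈ P` from `q ∉ P`: otherwise let `ψ` be
`z - p` off `P` and `s ^ 2 * (z - q)` on `P`. Count parities on a fine polar grid on a large disc:
`ψ` has winding number one on the boundary circle, but all its zeros lie in `P`, where it
contributes as much as `z - q`, namely nothing. -/
lemma sqrt_sep_core {Y P : Set ℂ} (hY : IsCompact Y) (hPo : IsOpen P) (hPb : Bornology.IsBounded P)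
    (hfr : frontier P ⊆ Y) {p q : ℂ} (hp : p ∈ P) (hPY : Disjoint P Y) (hq : q ∉ P) (hqY : q ∉ Y) {s : ℂ → ℂ}
    (hs : SqrtOn s (fun z => (z - p) / (z - q)) Y) : False := by
  classical
  obtain ⟨S, hS⟩ := ContinuousMap.exists_restrict_eq hY.isClosed ⟨Y.domRestrict s, hs.1.domRestrict⟩
  have hSY : ∀ z ∈ Y, S z = s z := fun z hz => congrArg (fun f => f ⟨z, hz⟩) hS
  have hpY : p ∉ Y := fun h => disjoint_left.mp hPY hp h
  obtain ⟨c, hc⟩ : Y.Nonempty := by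
    by_contra hne
    rw [not_nonempty_iff_eq_empty] at hne
    rw [hne, subset_empty_iff, ← isClopen_iff_frontier_eq_empty] at hfr
    have := hfr.eq_univ ⟨p, hp⟩
    exact hq (this ▸ mem_univ q)
  have hcP : c ∉ P := fun h => disjoint_left.mp hPY h hc
  let ψ : ℂ → ℂ := fun z => if z ∈ P then S z ^ 2 * (z - q) else z - p
  have hψc : Continuous ψ := by
    apply Continuous.if
    · intro z hz
      have hzY : z ∈ Y := hfr hz
      have : z - q ≠ 0 := fun h => hqY (by rwa [sub_eq_zero.mp h] at hzY)
      rw [hSY z hzY, hs.2 z hzY, div_mul_cancel₀ _ this]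
    · fun_prop
    · fun_prop
  have hψP : ∀ z ∈ P, ψ z = S z ^ 2 * (z - q) := fun z hz => if_pos hz
  have hψP' : ∀ z ∉ P, ψ z = z - p := fun z hz => if_neg hz
  let Z : Set ℂ := {z | ψ z = 0}
  have hZP : Z ⊆ P := by
    intro z hz
    by_contra h
    have h1 : ψ z = 0 := hz
    rw [hψP' z h] at h1
    exact h (by rwa [sub_eq_zero.mp h1])
  have hZc : IsCompact Z :=
    isCompact_of_isClosed_isBounded (isClosed_eq hψc continuous_const) (hPb.subset hZP)
  obtain ⟨δ, hδ, hth⟩ := hZc.exists_thickening_subset_open hPo hZP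
  obtain ⟨R, hR0, hR⟩ := (hPb.insert p).subset_ball_lt 0 c
  let Ψ : ℝ × ℝ → ℂ := fun z => c + R * z.2 * Complex.exp (2 * Real.pi * Complex.I * z.1)
  have hΨ : Continuous Ψ := by fun_prop
  have hΨper : ∀ z, Ψ (z + (1, 0)) = Ψ z := by
    intro z
    simp only [Ψ, Prod.fst_add, Prod.snd_add, add_zero]
    congr 2
    rw [show (2 * Real.pi * Complex.I * ((z.1 + 1 : ℝ) : ℂ) : ℂ) = 2 * Real.pi * Complex.I * z.1 + 2 * Real.pi * Complex.I by
      push_cast; ring, Complex.exp_add, Complex.exp_two_pi_mul_I, mul_one]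
  obtain ⟨N, hN⟩ := grid_fine hΨ hδ
  let n := N + 1
  have hn : 0 < n := Nat.succ_pos N
  have hn0 : (n : ℝ) ≠ 0 := by positivity
  have hfine := hN n (by omega) hn
  let w : ℕ → ℕ → ZMod 2 := fun j k => if ∃ z ∈ Q n j k, Ψ z ∈ Z then 1 else 0
  have hw1 : ∀ j k z, z ∈ Q n j k → Ψ z ∈ Z → w j k = 1 := fun j k z h h' => if_pos ⟨z, h, h'⟩
  have hQP : ∀ j ≤ n, ∀ k < n, w j k ≠ 0 → ∀ z ∈ Q n j k, Ψ z ∈ P := by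
    intro j hj k hk h z hz
    have : ∃ z ∈ Q n j k, Ψ z ∈ Z := by by_contra h'; exact h (if_neg h')
    obtain ⟨z', h1, h2⟩ := this
    exact hth (mem_thickening_iff.mpr ⟨Ψ z', h2, hfine j hj k hk z hz z' h1⟩)
  -- squares without zeros do not contribute
  have e1 : Dg n w (hE n (ψ ∘ Ψ)) (vE n (ψ ∘ Ψ)) = Dg n (fun _ _ => 1) (hE n (ψ ∘ Ψ)) (vE n (ψ ∘ Ψ)) := by
    unfold Dg
    refine Finset.sum_congr rfl fun j _ => Finset.sum_congr rfl fun k _ => ?_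
    by_cases h : ∃ z ∈ Q n j k, Ψ z ∈ Z
    · simp only [w, if_pos h]
    · rw [bd_eq_zero (hψc.comp hΨ).continuousOn, mul_zero, mul_zero]
      intro z hz h0
      exact h ⟨z, hz, h0⟩
  -- the winding number around the outer circle
  have e2 : Dg n (fun _ _ => 1) (hE n (ψ ∘ Ψ)) (vE n (ψ ∘ Ψ)) = 1 := by
    rw [Dg_bdry (n := n) (p := fun _ _ => 1) (fun _ _ => rfl) _ (fun _ _ _ _ _ => rfl) (fun _ _ _ _ _ => rfl)]
    · let T : ℝ × ℝ → ℂ := fun z => Complex.exp (Real.pi * Complex.I * z.1) *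
        psq (R + (c - p) * Complex.exp (-(2 * Real.pi * Complex.I * z.1)))
      have hT : Continuous T := by
        refine Continuous.mul (by fun_prop) ?_
        refine psq_sqrtOn.1.comp_continuous (by fun_prop) fun z => ?_
        left
        have h1 : ‖(c - p) * Complex.exp (-(2 * Real.pi * Complex.I * z.1))‖ < R := by
          rw [norm_mul, Complex.norm_exp]
          have h2 := hR (mem_insert p P)
          rw [mem_ball, dist_comm, dist_eq_norm] at h2
          simpa using h2
        have h2 := Complex.abs_re_le_norm ((c - p) * Complex.exp (-(2 * Real.pi * Complex.I * z.1)))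
        have h3 := (abs_le.mp h2).1
        rw [Complex.add_re, Complex.ofReal_re]
        linarith
      have hT2 : ∀ z : ℝ × ℝ, z.2 = 1 → T z ^ 2 = ψ (Ψ z) ∧ ψ (Ψ z) ≠ 0 := by
        intro z hz
        have hnP : Ψ z ∉ P := by
          intro h
          have := hR (mem_insert_of_mem p h)
          rw [mem_ball, dist_eq_norm] at this
          simp only [Ψ, hz] at this
          rw [add_sub_cancel_left, norm_mul, Complex.norm_exp] at this
          simp [abs_of_pos hR0] at this
        have hnp : Ψ z - p ≠ 0 := fun h => hnP (by rwa [sub_eq_zero.mp h])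
        rw [hψP' _ hnP]
        refine ⟨?_, hnp⟩
        have e3 : (R + (c - p) * Complex.exp (-(2 * Real.pi * Complex.I * z.1)) : ℂ)
            = (Ψ z - p) * Complex.exp (-(2 * Real.pi * Complex.I * z.1)) := by
          simp only [Ψ, hz]
          have : Complex.exp (2 * Real.pi * Complex.I * z.1) * Complex.exp (-(2 * Real.pi * Complex.I * z.1)) = 1 := by
            rw [← Complex.exp_add]; simp
          push_cast
          linear_combination (-(R : ℂ)) * this
        rw [mul_pow, psq_sq, e3, ← Complex.exp_nat_mul, mul_comm, mul_assoc, ← Complex.exp_add]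
        · rw [show (-(2 * Real.pi * Complex.I * z.1) + ((2 : ℕ) : ℂ) * (Real.pi * Complex.I * z.1) : ℂ) = 0 by
            push_cast; ring]
          simp
        · rw [e3]; exact mul_ne_zero hnp (Complex.exp_ne_zero _)
      have hT1 : T (1, 1) = - T (0, 1) := by
        simp only [T]
        rw [show (-(2 * Real.pi * Complex.I * ((1 : ℝ) : ℂ)) : ℂ) = -(2 * Real.pi * Complex.I) by push_cast; ring,
          Complex.exp_neg, Complex.exp_two_pi_mul_I]
        simp [Complex.exp_pi_mul_I]
      have h0 : ∀ j, hE n (ψ ∘ Ψ) j 0 = 0 := by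
        intro j
        have h1 : ∀ z ∈ Icc (V n j 0) (V n (j+1) 0), (ψ ∘ Ψ) z = c - p := by
          intro z hz
          have a1 := hz.1.2; have a2 := hz.2.2
          simp only [V] at a1 a2
          have : z.2 = 0 := by simpa using le_antisymm a2 a1
          simp only [Function.comp, Ψ, this]
          simp [hψP' c hcP]
        have hcp : c - p ≠ 0 := fun h => hcP (by rwa [sub_eq_zero.mp h])
        unfold hE
        rw [par_eq (σ := fun _ => csq (c - p)) (V_mono n (by omega) le_rfl), z2add]
        · exact ⟨continuousOn_const, fun z hz => by rw [csq_sq, h1 z hz]⟩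
        · intro z hz; rw [h1 z hz]; exact hcp
      have htop : ∀ j, hE n (ψ ∘ Ψ) j n = sg (T (V n j n)) + sg (T (V n (j + 1) n)) := by
        intro j
        have h1 : ∀ z ∈ Icc (V n j n) (V n (j+1) n), z.2 = 1 := by
          intro z hz
          have a1 := hz.1.2; have a2 := hz.2.2
          simp only [V, div_self hn0] at a1 a2
          exact le_antisymm a2 a1
        exact par_eq (V_mono n (by omega) le_rfl)
          ⟨hT.continuousOn, fun z hz => (hT2 z (h1 z hz)).1⟩ fun z hz => (hT2 z (h1 z hz)).2
      simp only [h0, htop, mul_zero, zero_add, one_mul]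
      rw [sum_adj (fun j => sg (T (V n j n)))]
      have hT0 : T (0, 1) ≠ 0 := mul_ne_zero (Complex.exp_ne_zero _) (psq_ne _)
      have v0 : V n 0 n = (0, 1) := by simp [V, hn0]
      have v1 : V n n n = (1, 1) := by simp [V, hn0]
      rw [v0, v1, hT1, sg_neg hT0]
      generalize sg (T (0, 1)) = a; revert a; decide
    · intro k _
      have h1 := V_per hn 0 k
      have h2 := V_per hn 0 (k + 1)
      rw [Nat.zero_add] at h1 h2
      simp only [vE, h1, h2]
      exact par_per (fun z => by simp only [Function.comp, hΨper]) _ _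
  -- on the squares that count, `ψ` is a square times `z - q`
  have e3 : Dg n w (hE n (ψ ∘ Ψ)) (vE n (ψ ∘ Ψ)) = Dg n w (hE n (fun z => Ψ z - q)) (vE n (fun z => Ψ z - q)) := by
    refine Dg_cmp_int (Z := Ψ ⁻¹' Z) hn ?_ (τ := fun z => S (Ψ z)) (fun z => by simp only [hΨper])
      (fun z => by simp only [Function.comp, hΨper]) (fun z => by simp only [hΨper]) ?_ ?_ ?_ ?_
    · intro k hk
      simp only [w]
      congr 1
      apply propext
      constructor
      · rintro ⟨z, h1, h2⟩
        refine ⟨z - (1, 0), (Q_per hn k _).mpr (by simpa using h1), ?_⟩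
        rw [← hΨper, sub_add_cancel]; exact h2
      · rintro ⟨z, h1, h2⟩
        exact ⟨z + (1, 0), (Q_per hn k _).mp h1, by rwa [hΨper]⟩
    · intro j _ k _ z h1 h2 h3
      rw [hw1 _ _ z h1 h3, hw1 _ _ z h2 h3]
    · intro j _ k _ z h1 h2 h3
      rw [hw1 _ _ z h1 h3, hw1 _ _ z h2 h3]
    · intro j hj k hk h
      have hP := hQP j hj k hk h
      have hne : ∀ z ∈ Q n j k \ Ψ ⁻¹' Z, S (Ψ z) ^ 2 * (Ψ z - q) ≠ 0 := by
        intro z hz h0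
        exact hz.2 (show ψ (Ψ z) = 0 by rw [hψP _ (hP z hz.1), h0])
      refine ⟨by fun_prop, fun z hz => right_ne_zero_of_mul (hne z hz), by fun_prop,
        fun z hz h0 => hne z hz ?_, fun z hz => ?_⟩
      · rw [h0]; simp
      · simp only [Function.comp]; rw [hψP _ (hP z hz.1)]; ring
    · intro z hz
      have hzP : Ψ z ∈ P := hZP hz
      constructor
      · intro h; apply hcP
        have : Ψ z = c := by simp [Ψ, h]
        rwa [this] at hzP
      · intro h
        have := hR (mem_insert_of_mem p hzP)
        rw [mem_ball, dist_eq_norm] at this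
        simp only [Ψ, h] at this
        rw [add_sub_cancel_left, norm_mul, Complex.norm_exp] at this
        simp [abs_of_pos hR0] at this
  have e4 : Dg n w (hE n (fun z => Ψ z - q)) (vE n (fun z => Ψ z - q)) = 0 := by
    unfold Dg
    refine Finset.sum_eq_zero fun j hj => Finset.sum_eq_zero fun k hk => ?_
    rw [Finset.mem_range] at hj hk
    by_cases h : w j k = 0
    · rw [h, zero_mul]
    · rw [bd_eq_zero (by fun_prop), mul_zero]
      intro z hz h0
      exact hq (by rw [← sub_eq_zero.mp h0]; exact hQP j hj.le k hk h z hz)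
  rw [← e1, e3, e4] at e2
  exact absurd e2 (by decide)

/-- If `(z - p) / (z - q)` has a continuous square root on the compact set `Y`, then `Y` does not
separate `p` from `q`. -/
lemma jn_of_sqrt {Y : Set ℂ} (hY : IsCompact Y) {p q : ℂ} (hp : p ∉ Y) (hq : q ∉ Y) {s : ℂ → ℂ}
    (hs : SqrtOn s (fun z => (z - p) / (z - q)) Y) : Jn Yᶜ p q := by
  have hYo : IsOpen Yᶜ := hY.isClosed.isOpen_compl
  have main : ∀ p q : ℂ, p ∉ Y → q ∉ Y → ∀ s, SqrtOn s (fun z => (z - p) / (z - q)) Y →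
      Bornology.IsBounded {z | Jn Yᶜ p z} → Jn Yᶜ p q := by
    intro p q hp hq s hs hb
    by_contra hn
    refine sqrt_sep_core hY (isOpen_jn hYo p) hb ?_ (Jn.refl hp) ?_ hn hq hs
    · intro z hz
      by_contra hzY
      have h1 : Jn Yᶜ p z := jn_of_closure hYo hzY (frontier_subset_closure hz)
      rw [(isOpen_jn hYo p).frontier_eq] at hz
      exact hz.2 h1
    · rw [disjoint_left]; intro z hz; exact hz.right
  by_cases hb : Bornology.IsBounded {z | Jn Yᶜ p z}
  · exact main p q hp hq s hs hb
  by_cases hb' : Bornology.IsBounded {z | Jn Yᶜ q z}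
  · have : SqrtOn (fun z => (s z)⁻¹) (fun z => (z - q) / (z - p)) Y := by
      refine (hs.inv fun z hz => div_ne_zero ?_ ?_).congr fun z _ => by rw [inv_div]
      · exact fun h => hp (by rwa [← sub_eq_zero.mp h])
      · exact fun h => hq (by rwa [← sub_eq_zero.mp h])
    exact (main q p hq hp _ this hb').symm
  obtain ⟨R, hR0, hR⟩ := hY.isBounded.subset_ball_lt 0 0
  have hex : {z : ℂ | R < ‖z - 0‖} ⊆ Yᶜ := by
    intro z hz hzY
    have := hR hzY
    have hz' : R < ‖z - 0‖ := hz
    rw [mem_ball, dist_eq_norm] at this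
    linarith
  have key : ∀ p, ¬ Bornology.IsBounded {z | Jn Yᶜ p z} → ∃ z ∈ {z : ℂ | R < ‖z - 0‖}, Jn Yᶜ p z := by
    intro p h
    by_contra! hh
    apply h
    refine (isBounded_closedBall (x := (0 : ℂ)) (r := R)).subset fun z hz => ?_
    rw [mem_closedBall, dist_eq_norm]
    by_contra! h'
    exact hh z h' hz
  obtain ⟨z, hz, h1⟩ := key p hb
  obtain ⟨z', hz', h2⟩ := key q hb'
  exact (h1.trans ((jn_of_pre (preconn_ext 0 hR0) hz hz').mono hex)).trans h2.symm

/-! ### Transporting square roots along arcs -/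

lemma re_pos_ratio {p q z : ℂ} (h : ‖p - q‖ < ‖z - q‖) : 0 < ((z - p) / (z - q)).re := by
  have hz : z - q ≠ 0 := by
    intro h0; rw [h0, norm_zero] at h; exact absurd h (not_lt.mpr (norm_nonneg _))
  have e : (z - p) / (z - q) = 1 - (p - q) / (z - q) := by field_simp; ring
  have h1 : ‖(p - q) / (z - q)‖ < 1 := by
    rw [norm_div, div_lt_one (norm_pos_iff.mpr hz)]; exact h
  have h2 := (abs_le.mp (Complex.abs_re_le_norm ((p - q) / (z - q)))).2
  rw [e, Complex.sub_re, Complex.one_re]; linarith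

lemma psq_mul {A B : ℂ} (hA : 0 < A.re) (hB : 0 < B.re) : psq (A * B) = psq A * psq B := by
  have hA0 : A ≠ 0 := by rintro rfl; simp at hA
  have hB0 : B ≠ 0 := by rintro rfl; simp at hB
  have h1 := Complex.abs_arg_lt_pi_div_two_iff.mpr (.inl hA)
  have h2 := Complex.abs_arg_lt_pi_div_two_iff.mpr (.inl hB)
  rw [abs_lt] at h1 h2
  rw [psq, Complex.log_mul hA0 hB0 ⟨by linarith [h1.1, h2.1], by linarith [h1.2, h2.2]⟩, add_div,
    Complex.exp_add]; rfl

/-- Principal square root of `(z - p) / (z - q)` is compatible with composition of ratios. -/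
lemma psq_ratio_mul {p q x z : ℂ} (h1 : ‖p - q‖ < ‖z - q‖) (h2 : ‖q - x‖ < ‖z - x‖) :
    psq ((z - p) / (z - x)) = psq ((z - p) / (z - q)) * psq ((z - q) / (z - x)) := by
  rw [← psq_mul (re_pos_ratio h1) (re_pos_ratio h2)]
  have hz : z - q ≠ 0 := by
    intro h0; rw [h0, norm_zero] at h1; exact absurd h1 (not_lt.mpr (norm_nonneg _))
  rw [div_mul_div_cancel₀ hz]

/-- A continuous function of two variables version: the principal root of the ratio is continuous
where the ratio has positive real part. -/
lemma psq_cont {X : Type*} [TopologicalSpace X] {A : Set X} {g : X → ℂ} (hg : ContinuousOn g A)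
    (h : ∀ z ∈ A, 0 < (g z).re) : SqrtOn (fun z => psq (g z)) g A := by
  refine ⟨psq_sqrtOn.1.comp hg fun z hz => .inl (h z hz), fun z hz => psq_sq ?_⟩
  intro h0; have := h z hz; rw [h0] at this; simp at this

lemma sq_cases {a b : ℂ} (h : a ^ 2 = b ^ 2) : a = b ∨ a = -b := sq_eq_sq_iff_eq_or_eq_neg.mp h

lemma ne_neg {a : ℂ} (h : a ≠ 0) : a ≠ -a := fun h' => h (by
  have : (2 : ℂ) * a = 0 := by linear_combination h'
  simpa using this)

/-- Square roots along paths. -/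
lemma exists_sqrt_path {g : ℝ → ℂ} {a b : ℝ} (hab : a ≤ b) (hg : ContinuousOn g (Icc a b))
    (h0 : ∀ t ∈ Icc a b, g t ≠ 0) {c : ℝ} (hc : c ∈ Icc a b) {w : ℂ} (hw : w ^ 2 = g c) :
    ∃ σ, SqrtOn σ g (Icc a b) ∧ σ c = w := by
  have hm : ∀ z ∈ Icc ((a, 0) : ℝ × ℝ) (b, 0), z.1 ∈ Icc a b := fun z hz => ⟨hz.1.1, hz.2.1⟩
  obtain ⟨σ, hσ⟩ := exists_sqrt_rect (ψ := fun z => g z.1) (u := (a, 0)) (v := (b, 0)) ⟨hab, le_rfl⟩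
    (hg.comp continuous_fst.continuousOn hm) fun z hz => h0 _ (hm z hz)
  have hσ' : SqrtOn (fun t => σ (t, 0)) g (Icc a b) :=
    hσ.comp (f := fun t : ℝ => (t, (0 : ℝ))) (by fun_prop) fun t ht => ⟨⟨ht.1, le_rfl⟩, ht.2, le_rfl⟩
  rcases sq_cases ((hσ'.2 c hc).trans hw.symm) with h | h
  · exact ⟨_, hσ', h⟩
  · have h' : σ (c, 0) = -w := h
    refine ⟨_, hσ'.neg, ?_⟩
    show -σ (c, 0) = w
    rw [h', neg_neg]

/-- Square roots of `f t - p` continued along the path `f` depend continuously on `p`. -/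
lemma transport {f : ℝ → ℂ} {a b : ℝ} (hab : a ≤ b) (hf : ContinuousOn f (Icc a b)) {D : Set ℂ}
    (hD : IsOpen D) (hDE : ∀ p ∈ D, ∀ t ∈ Icc a b, f t ≠ p) {ν : ℂ → ℂ} {a' b' : ℝ} (ha' : a' ∈ Icc a b)
    (hb' : b' ∈ Icc a b)
    (hν : SqrtOn ν (fun p => f a' - p) D) :
    ∃ s : ℂ → ℂ, ContinuousOn s D ∧ ∀ p ∈ D, ∃ κ, SqrtOn κ (fun t => f t - p) (Icc a b) ∧
      κ a' = ν p ∧ κ b' = s p := by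
  have h0 : ∀ p ∈ D, ∀ t ∈ Icc a b, f t - p ≠ 0 := fun p hp t ht => sub_ne_zero.mpr (hDE p hp t ht)
  have hex : ∀ p, ∃ κ : ℝ → ℂ, p ∈ D → SqrtOn κ (fun t => f t - p) (Icc a b) ∧ κ a' = ν p := by
    intro p
    by_cases hp : p ∈ D
    · obtain ⟨κ, h1, h2⟩ := exists_sqrt_path hab (hf.sub continuousOn_const) (h0 p hp) ha' (hν.2 p hp)
      exact ⟨κ, fun _ => ⟨h1, h2⟩⟩
    · exact ⟨fun _ => 0, fun h => absurd h hp⟩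
  choose κ hκ using hex
  refine ⟨fun p => κ p b', fun p₀ hp₀ => ?_, fun p hp => ⟨κ p, (hκ p hp).1, (hκ p hp).2, rfl⟩⟩
  apply ContinuousAt.continuousWithinAt
  have hE : IsCompact (f '' Icc a b) := isCompact_Icc.image_of_continuousOn hf
  have hp₀E : p₀ ∈ D ∩ (f '' Icc a b)ᶜ := ⟨hp₀, by rintro ⟨t, ht, h⟩; exact hDE p₀ hp₀ t ht h⟩
  obtain ⟨r, hr, hball⟩ := Metric.isOpen_iff.mp (hD.inter hE.isClosed.isOpen_compl) p₀ hp₀E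
  have hre : ∀ p ∈ ball p₀ r, ∀ t ∈ Icc a b, 0 < ((f t - p) / (f t - p₀)).re := by
    intro p hp t ht
    apply re_pos_ratio
    rw [mem_ball, dist_eq_norm] at hp
    refine hp.trans_le ?_
    by_contra! h
    exact (hball (show f t ∈ ball p₀ r by rwa [mem_ball, dist_eq_norm])).2 ⟨t, ht, rfl⟩
  have hpre : IsPreconnected (ball p₀ r) := (convex_ball p₀ r).isPreconnected
  have hcp : ∀ t ∈ Icc a b, SqrtOn (fun p => κ p₀ t * psq ((f t - p) / (f t - p₀)))
      (fun p => f t - p) (ball p₀ r) := by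
    intro t ht
    have h1 := psq_cont (A := ball p₀ r) (g := fun p => (f t - p) / (f t - p₀)) (by fun_prop)
      (fun p hp => hre p hp t ht)
    refine ⟨continuousOn_const.mul h1.1, fun p hp => ?_⟩
    rw [mul_pow, h1.2 p hp, (hκ p₀ hp₀).1.2 t ht, mul_div_cancel₀ _ (h0 p₀ hp₀ t ht)]
  have hp₀b : p₀ ∈ ball p₀ r := mem_ball_self hr
  have key : ∀ p ∈ ball p₀ r, κ p b' = κ p₀ b' * psq ((f b' - p) / (f b' - p₀)) := by
    intro p hp
    have hpD : p ∈ D := (hball hp).1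
    have e1 : ν p = κ p₀ a' * psq ((f a' - p) / (f a' - p₀)) := by
      refine SqrtOn.eq_of_eq hpre (hcp a' ha') (hν.mono fun z hz => (hball hz).1)
        (fun z hz => h0 z (hball hz).1 a' ha') hp₀b ?_ p hp
      rw [div_self (h0 p₀ hp₀ a' ha'), psq_one, mul_one, (hκ p₀ hp₀).2]
    have h2 := psq_cont (A := Icc a b) (g := fun t => (f t - p) / (f t - p₀))
      ((hf.sub continuousOn_const).div (hf.sub continuousOn_const) (h0 p₀ hp₀))
      (fun t ht => hre p hp t ht)
    have h3 : SqrtOn (fun t => κ p₀ t * psq ((f t - p) / (f t - p₀))) (fun t => f t - p) (Icc a b) :=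
      ⟨(hκ p₀ hp₀).1.1.mul h2.1, fun t ht => (hcp t ht).2 p hp⟩
    exact SqrtOn.eq_of_eq isPreconnected_Icc h3 (hκ p hpD).1 (h0 p hpD) ha'
      (by rw [(hκ p hpD).2, e1]) b' hb'
  refine ContinuousAt.congr ((hcp b' hb').1.continuousAt (ball_mem_nhds p₀ hr)) ?_
  filter_upwards [ball_mem_nhds p₀ hr] with p hp
  exact (key p hp).symm

/-- There is no continuous square root of `a - p` on a punctured disc. -/
lemma no_sqrt {a : ℂ} {r : ℝ} (hr : 0 < r) {s : ℂ → ℂ} (h : SqrtOn s (fun p => a - p) (ball a r \ {a})) :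
    False := by
  let γ : ℝ → ℂ := fun θ => a + (r / 2 : ℝ) * Complex.exp (θ * Complex.I)
  have hγ : Continuous γ := by fun_prop
  have hr2 : ((r / 2 : ℝ) : ℂ) ≠ 0 := by exact_mod_cast (by positivity)
  have hm : MapsTo γ univ (ball a r \ {a}) := by
    intro θ _
    constructor
    · simp only [γ]
      rw [mem_ball, dist_eq_norm, add_sub_cancel_left, norm_mul, Complex.norm_exp_ofReal_mul_I,
        Complex.norm_real, Real.norm_of_nonneg (by positivity)]
      linarith
    · intro h0
      have : ((r / 2 : ℝ) : ℂ) * Complex.exp (θ * Complex.I) = 0 := by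
        simpa [γ] using h0
      exact mul_ne_zero hr2 (Complex.exp_ne_zero _) this
  have h1 := h.comp (f := γ) hγ.continuousOn hm
  have h2 : SqrtOn (fun θ : ℝ => csq (-(r / 2 : ℝ)) * Complex.exp ((θ / 2 : ℝ) * Complex.I))
      (fun θ => a - γ θ) univ := by
    refine ⟨by fun_prop, fun θ _ => ?_⟩
    rw [mul_pow, csq_sq, ← Complex.exp_nat_mul]
    rw [show ((2 : ℕ) : ℂ) * ((θ / 2 : ℝ) * Complex.I) = θ * Complex.I by push_cast; ring]
    simp only [γ]; ring
  have hne : ∀ θ ∈ univ, a - γ θ ≠ 0 := fun θ hθ h0 => (hm hθ).2 (sub_eq_zero.mp h0).symm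
  have hper : γ (2 * Real.pi) = γ 0 := by
    simp [γ, Complex.exp_two_pi_mul_I]
  have hc : csq (-((r / 2 : ℝ) : ℂ)) ≠ 0 := by
    intro h0; have := csq_sq (-((r / 2 : ℝ) : ℂ)); rw [h0] at this
    apply hr2; simpa using this.symm
  have hE0 : csq (-((r / 2 : ℝ) : ℂ)) * Complex.exp (((0 : ℝ) / 2 : ℝ) * Complex.I) = csq (-((r / 2 : ℝ) : ℂ)) := by
    simp
  have hE1 : csq (-((r / 2 : ℝ) : ℂ)) * Complex.exp (((2 * Real.pi : ℝ) / 2 : ℝ) * Complex.I) = - csq (-((r / 2 : ℝ) : ℂ)) := by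
    rw [show ((2 * Real.pi : ℝ) / 2 : ℝ) = Real.pi by ring, Complex.exp_pi_mul_I]; ring
  rcases h2.eq_or_neg isPreconnected_univ h1 hne with h3 | h3
  · have a1 := h3 0 trivial; have a2 := h3 (2 * Real.pi) trivial
    rw [hE0] at a1; rw [hE1, hper, a1] at a2
    exact ne_neg hc a2
  · have a1 := h3 0 trivial; have a2 := h3 (2 * Real.pi) trivial
    rw [hE0] at a1; rw [hE1, hper, a1, neg_neg] at a2
    exact ne_neg hc a2.symm

/-- Inverse of an arc. -/
lemma arc_inv {S : Type*} [TopologicalSpace S] [T2Space S] {f : ℝ → S} {a b : ℝ}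
    (hf : ContinuousOn f (Icc a b)) (hi : InjOn f (Icc a b)) :
    ∃ g : S → ℝ, ContinuousOn g (f '' Icc a b) ∧ ∀ t ∈ Icc a b, g (f t) = t := by
  refine ⟨Function.invFunOn f (Icc a b), ?_, fun t ht => hi.leftInvOn_invFunOn ht⟩
  rw [continuousOn_iff_isClosed]
  intro C hC
  refine ⟨f '' (Icc a b ∩ C), ?_, ?_⟩
  · exact ((isCompact_Icc.inter_right hC).image_of_continuousOn (hf.mono inter_subset_left)).isClosed
  · ext y; constructor
    · rintro ⟨hy, t, ht, rfl⟩
      rw [mem_preimage, hi.leftInvOn_invFunOn ht] at hy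
      exact ⟨⟨t, ⟨ht, hy⟩, rfl⟩, t, ht, rfl⟩
    · rintro ⟨⟨t, ⟨ht, hC'⟩, rfl⟩, -⟩
      refine ⟨?_, t, ht, rfl⟩
      rw [mem_preimage, hi.leftInvOn_invFunOn ht]; exact hC'

/-- Gluing square roots along an arc `K` and a compact set `L`. -/
lemma jn_glue {f : ℝ → ℂ} {a b : ℝ} (hf : ContinuousOn f (Icc a b)) (hi : InjOn f (Icc a b))
    {L : Set ℂ} (hL : IsCompact L) {p q : ℂ} (hpK : p ∉ f '' Icc a b) (hqK : q ∉ f '' Icc a b)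
    (hpL : p ∉ L) (hqL : q ∉ L)
    {sK : ℝ → ℂ} {sL : ℂ → ℂ} (hsK : SqrtOn sK (fun t => (f t - p) / (f t - q)) (Icc a b))
    (hsL : SqrtOn sL (fun z => (z - p) / (z - q)) L)
    (hm : ∀ t ∈ Icc a b, f t ∈ L → sK t = sL (f t)) : Jn (f '' Icc a b ∪ L)ᶜ p q := by
  classical
  obtain ⟨g, hg, hgf⟩ := arc_inv hf hi
  have hK : IsCompact (f '' Icc a b) := isCompact_Icc.image_of_continuousOn hf
  have hmg : MapsTo g (f '' Icc a b) (Icc a b) := by rintro _ ⟨t, ht, rfl⟩; rwa [hgf t ht]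
  let s : ℂ → ℂ := fun z => if z ∈ L then sL z else sK (g z)
  have h1 : ∀ z ∈ L, s z = sL z := fun z hz => if_pos hz
  have h2 : ∀ z ∈ f '' Icc a b, s z = sK (g z) := by
    rintro _ ⟨t, ht, rfl⟩
    by_cases h : f t ∈ L
    · rw [h1 _ h, hgf t ht, hm t ht h]
    · exact if_neg h
  refine jn_of_sqrt (hK.union hL) (by simp only [mem_union, not_or]; exact ⟨hpK, hpL⟩)
    (by simp only [mem_union, not_or]; exact ⟨hqK, hqL⟩) (s := s) ⟨?_, ?_⟩
  · refine ContinuousOn.union_of_isClosed ?_ ?_ hK.isClosed hL.isClosed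
    · exact (hsK.1.comp hg hmg).congr h2
    · exact hsL.1.congr h1
  · rintro z (hz | hz)
    · rw [h2 z hz]
      obtain ⟨t, ht, rfl⟩ := hz
      rw [hgf t ht, hsK.2 t ht]
    · rw [h1 z hz, hsL.2 z hz]

/-- First exit from a ball. -/
lemma first_exit {f : ℝ → ℂ} {t₀ b : ℝ} (hb : t₀ ≤ b) (hf : ContinuousOn f (Icc t₀ b)) {x : ℂ} {R : ℝ}
    (h0 : ‖f t₀ - x‖ < R) (h1 : R ≤ ‖f b - x‖) :
    ∃ t, t₀ < t ∧ t ≤ b ∧ ‖f t - x‖ = R ∧ ∀ s ∈ Ico t₀ t, ‖f s - x‖ < R := by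
  have hg : ContinuousOn (fun t => ‖f t - x‖) (Icc t₀ b) := (hf.sub continuousOn_const).norm
  have hcl : IsCompact (Icc t₀ b ∩ (fun t => ‖f t - x‖) ⁻¹' Ici R) :=
    isCompact_Icc.of_isClosed_subset (hg.preimage_isClosed_of_isClosed isClosed_Icc isClosed_Ici)
      inter_subset_left
  obtain ⟨t, ⟨ht, htR⟩, hmin⟩ := hcl.exists_isLeast ⟨b, ⟨hb, le_rfl⟩, h1⟩
  have hlt : ∀ s ∈ Ico t₀ t, ‖f s - x‖ < R := by
    intro s hs
    by_contra! h
    exact absurd (hmin ⟨⟨hs.1, hs.2.le.trans ht.2⟩, h⟩) (not_le.mpr hs.2)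
  have htt : t₀ < t := lt_of_le_of_ne ht.1 (by rintro rfl; exact absurd h0 (not_lt.mpr htR))
  refine ⟨t, htt, ht.2, le_antisymm ?_ htR, hlt⟩
  have hcw : ContinuousWithinAt (fun t => ‖f t - x‖) (Ico t₀ t) t :=
    (hg t ht).mono fun s hs => ⟨hs.1, hs.2.le.trans ht.2⟩
  have hne : (𝓝[Ico t₀ t] t).NeBot := by
    rw [← mem_closure_iff_nhdsWithin_neBot, closure_Ico htt.ne]; exact ⟨htt.le, le_rfl⟩
  exact le_of_tendsto hcw (eventually_mem_nhdsWithin.mono fun s hs => (hlt s hs).le)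

/-! ### The two sides of a planar arc -/

/-- Sign attached to a class modulo 2. -/
def eps (v : ZMod 2) : ℂ := if v = 0 then 1 else -1

lemma eps_ne (v : ZMod 2) : eps v ≠ 0 := by unfold eps; split_ifs <;> simp

/-- An arc crossing a disc from boundary point to boundary point. -/
structure Cross (f : ℝ → ℂ) (a b : ℝ) (x : ℂ) (R : ℝ) : Prop where
  hab : a < b
  cf : ContinuousOn f (Icc a b)
  inj : InjOn f (Icc a b)
  hR : 0 < R
  ea : ‖f a - x‖ = R
  eb : ‖f b - x‖ = R
  int : ∀ t ∈ Ioo a b, ‖f t - x‖ < R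

/-- A continuous root of `z - p` for `p` in the disc of radius `‖z - x‖` about `x`. -/
def nuf (x z p : ℂ) : ℂ := csq (z - x) * psq ((z - p) / (z - x))

lemma nuf_sqrt {x z : ℂ} {R : ℝ} (hR : 0 < R) (hz : R ≤ ‖z - x‖) :
    SqrtOn (nuf x z) (fun p => z - p) (ball x R) := by
  have hzx : z - x ≠ 0 := by rw [← norm_pos_iff]; linarith
  have h1 := psq_cont (A := ball x R) (g := fun p => (z - p) / (z - x)) (by fun_prop)
    (fun p hp => re_pos_ratio (by rw [mem_ball, dist_eq_norm] at hp; linarith))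
  refine ⟨continuousOn_const.mul h1.1, fun p hp => ?_⟩
  rw [nuf, mul_pow, csq_sq, h1.2 p hp, mul_div_cancel₀ _ hzx]

lemma nuf_div {x z : ℂ} (hz : z ≠ x) (p q : ℂ) :
    nuf x z p / nuf x z q = psq ((z - p) / (z - x)) / psq ((z - q) / (z - x)) := by
  have h : csq (z - x) ≠ 0 := by
    intro h0; have := csq_sq (z - x); rw [h0] at this
    apply hz; apply sub_eq_zero.mp; simpa using this.symm
  rw [nuf, nuf, mul_div_mul_left _ _ h]

open Classical in
/-- The side function of a crossing arc: whether `f t - p` has a continuous root along the arc which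
agrees with `nuf` at both ends. -/
def sideF (f : ℝ → ℂ) (a b : ℝ) (x p : ℂ) : ZMod 2 :=
  if ∃ κ, SqrtOn κ (fun t => f t - p) (Icc a b) ∧ κ a = nuf x (f a) p ∧ κ b = nuf x (f b) p then 0 else 1

section Cross
variable {f : ℝ → ℂ} {a b R : ℝ} {x : ℂ}

lemma Cross.ha (h : Cross f a b x R) : a ∈ Icc a b := ⟨le_rfl, h.hab.le⟩
lemma Cross.hb (h : Cross f a b x R) : b ∈ Icc a b := ⟨h.hab.le, le_rfl⟩

lemma Cross.cpt (h : Cross f a b x R) : IsCompact (f '' Icc a b) := isCompact_Icc.image_of_continuousOn h.cf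

/-- The root of `f t - p` that starts as `nuf` ends as `± nuf`, with the sign given by `sideF`. -/
lemma Cross.spec (h : Cross f a b x R) {p : ℂ} (hp : p ∈ ball x R) (hpK : p ∉ f '' Icc a b) :
    ∃ κ, SqrtOn κ (fun t => f t - p) (Icc a b) ∧ κ a = nuf x (f a) p ∧
      κ b = eps (sideF f a b x p) * nuf x (f b) p := by
  have h0 : ∀ t ∈ Icc a b, f t - p ≠ 0 := fun t ht h0 => hpK ⟨t, ht, sub_eq_zero.mp h0⟩
  by_cases hc : ∃ κ, SqrtOn κ (fun t => f t - p) (Icc a b) ∧ κ a = nuf x (f a) p ∧ κ b = nuf x (f b) p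
  · obtain ⟨κ, h1, h2, h3⟩ := hc
    refine ⟨κ, h1, h2, ?_⟩
    rw [sideF, if_pos ⟨κ, h1, h2, h3⟩, h3]; simp [eps]
  · obtain ⟨κ, h1, h2⟩ := exists_sqrt_path h.hab.le (h.cf.sub continuousOn_const) h0 h.ha
      ((nuf_sqrt h.hR h.ea.ge).2 p hp)
    refine ⟨κ, h1, h2, ?_⟩
    rw [sideF, if_neg hc]
    rcases sq_cases ((h1.2 b h.hb).trans ((nuf_sqrt h.hR h.eb.ge).2 p hp).symm) with h3 | h3
    · exact absurd ⟨κ, h1, h2, h3⟩ hc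
    · rw [h3]; simp [eps]

lemma Cross.unique (h : Cross f a b x R) {p : ℂ} (hp : p ∈ ball x R) (hpK : p ∉ f '' Icc a b) {κ : ℝ → ℂ}
    (hκ : SqrtOn κ (fun t => f t - p) (Icc a b)) (ha : κ a = nuf x (f a) p) :
    κ b = eps (sideF f a b x p) * nuf x (f b) p := by
  have h0 : ∀ t ∈ Icc a b, f t - p ≠ 0 := fun t ht h0 => hpK ⟨t, ht, sub_eq_zero.mp h0⟩
  obtain ⟨κ', h1, h2, h3⟩ := h.spec hp hpK
  rw [← h3]
  exact SqrtOn.eq_of_eq isPreconnected_Icc h1 hκ h0 h.ha (ha.trans h2.symm) b h.hb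

lemma Cross.loc (h : Cross f a b x R) {p : ℂ} (hp : p ∈ ball x R) (hpK : p ∉ f '' Icc a b) :
    ∀ᶠ q in 𝓝 p, sideF f a b x q = sideF f a b x p := by
  have hDo : IsOpen (ball x R \ f '' Icc a b) := isOpen_ball.sdiff h.cpt.isClosed
  obtain ⟨s, hs, hs'⟩ := transport h.hab.le h.cf hDo (fun p hp t ht e => hp.2 ⟨t, ht, e⟩) h.ha h.hb
    ((nuf_sqrt h.hR h.ea.ge).mono sdiff_subset)
  have hsq := nuf_sqrt h.hR h.eb.ge
  have hn : ∀ q ∈ ball x R \ f '' Icc a b, nuf x (f b) q ≠ 0 := fun q hq =>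
    hsq.ne hq.1 fun h0 => hq.2 ⟨b, h.hb, sub_eq_zero.mp h0⟩
  have hval : ∀ q ∈ ball x R \ f '' Icc a b, s q / nuf x (f b) q = eps (sideF f a b x q) := by
    intro q hq
    obtain ⟨κ, h1, h2, h3⟩ := hs' q hq
    rw [← h3, h.unique hq.1 hq.2 h1 h2, mul_div_cancel_right₀ _ (hn q hq)]
  have hcont : ContinuousAt (fun q => s q / nuf x (f b) q) p :=
    (hs.div (hsq.1.mono sdiff_subset) hn).continuousAt (hDo.mem_nhds ⟨hp, hpK⟩)
  have h1 : ∀ᶠ q in 𝓝 p, s q / nuf x (f b) q ≠ - eps (sideF f a b x p) := by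
    apply hcont.eventually_ne
    rw [hval p ⟨hp, hpK⟩]; exact ne_neg (eps_ne _)
  filter_upwards [h1, hDo.mem_nhds ⟨hp, hpK⟩] with q hq1 hq2
  rw [hval q hq2] at hq1
  rcases z2cases (sideF f a b x q) with e1 | e1 <;> rcases z2cases (sideF f a b x p) with e2 | e2 <;>
    rw [e1, e2] at hq1 ⊢ <;> simp [eps] at hq1

/-- Both sides accumulate at every inner point of the arc; otherwise `z - f τ` would have a
continuous root around `f τ`. -/
lemma Cross.both (h : Cross f a b x R) {τ : ℝ} (hτ : τ ∈ Ioo a b) {O : Set ℂ} (hO : O ∈ 𝓝 (f τ)) (v : ZMod 2) :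
    ∃ q ∈ O, q ∈ ball x R ∧ q ∉ f '' Icc a b ∧ sideF f a b x q = v := by
  by_contra! hcon
  have hcon' : ∀ q ∈ O, q ∈ ball x R → q ∉ f '' Icc a b → sideF f a b x q = v + 1 := by
    intro q h1 h2 h3
    have := hcon q h1 h2 h3
    revert this; generalize sideF f a b x q = w; clear hcon; revert v w; decide
  have hτ' : τ ∈ Icc a b := ⟨hτ.1.le, hτ.2.le⟩
  have hτR : f τ ∈ ball x R := by rw [mem_ball, dist_eq_norm]; exact h.int τ hτ
  obtain ⟨r, hr, hrO⟩ := Metric.mem_nhds_iff.mp (inter_mem hO (isOpen_ball.mem_nhds hτR))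
  have hsm : Icc a τ ⊆ Icc a b := Icc_subset_Icc le_rfl hτ.2.le
  have hsp : Icc τ b ⊆ Icc a b := Icc_subset_Icc hτ.1.le le_rfl
  have oM : IsOpen (ball (f τ) r \ f '' Icc a τ) :=
    isOpen_ball.sdiff (isCompact_Icc.image_of_continuousOn (h.cf.mono hsm)).isClosed
  have oP : IsOpen (ball (f τ) r \ f '' Icc τ b) :=
    isOpen_ball.sdiff (isCompact_Icc.image_of_continuousOn (h.cf.mono hsp)).isClosed
  obtain ⟨s, hs, hs'⟩ := transport hτ.1.le (h.cf.mono hsm) oM (fun p hp t ht e => hp.2 ⟨t, ht, e⟩)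
    (left_mem_Icc.mpr hτ.1.le) (right_mem_Icc.mpr hτ.1.le)
    ((nuf_sqrt h.hR h.ea.ge).mono fun z hz => (hrO hz.1).2)
  obtain ⟨s', hs2, hs2'⟩ := transport hτ.2.le (h.cf.mono hsp) oP (fun p hp t ht e => hp.2 ⟨t, ht, e⟩)
    (right_mem_Icc.mpr hτ.2.le) (left_mem_Icc.mpr hτ.2.le)
    ((nuf_sqrt h.hR h.eb.ge).mono fun z hz => (hrO hz.1).2)
  have hun : ball (f τ) r \ {f τ} = (ball (f τ) r \ f '' Icc a τ) ∪ (ball (f τ) r \ f '' Icc τ b) := by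
    ext z; constructor
    · rintro ⟨h1, h2⟩
      by_cases h3 : z ∈ f '' Icc a τ
      · right; refine ⟨h1, ?_⟩
        rintro ⟨t', ht', rfl⟩
        obtain ⟨t, ht, e⟩ := h3
        have := h.inj (hsm ht) (hsp ht') e
        subst this
        exact h2 (by rw [le_antisymm ht.2 ht'.1]; rfl)
      · exact .inl ⟨h1, h3⟩
    · rintro (⟨h1, h2⟩ | ⟨h1, h2⟩)
      · exact ⟨h1, fun e => h2 ⟨τ, right_mem_Icc.mpr hτ.1.le, e.symm⟩⟩
      · exact ⟨h1, fun e => h2 ⟨τ, left_mem_Icc.mpr hτ.2.le, e.symm⟩⟩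
  have agree : ∀ z ∈ ball (f τ) r \ f '' Icc a τ, z ∈ ball (f τ) r \ f '' Icc τ b →
      s z = eps (v + 1) * s' z := by
    intro z hz hz'
    have hzK : z ∉ f '' Icc a b := by
      rw [← Icc_union_Icc_eq_Icc hτ.1.le hτ.2.le, image_union]
      rintro (h1 | h1); exacts [hz.2 h1, hz'.2 h1]
    have hzR := (hrO hz.1).2
    have h0 : ∀ t ∈ Icc a b, f t - z ≠ 0 := fun t ht h0 => hzK ⟨t, ht, sub_eq_zero.mp h0⟩
    obtain ⟨κ, k1, k2, k3⟩ := h.spec hzR hzK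
    rw [hcon' z (hrO hz.1).1 hzR hzK] at k3
    obtain ⟨κ₁, l1, l2, l3⟩ := hs' z hz
    obtain ⟨κ₂, m1, m2, m3⟩ := hs2' z hz'
    have e1 := SqrtOn.eq_of_eq isPreconnected_Icc (k1.mono hsm) l1 (fun t ht => h0 t (hsm ht))
      (left_mem_Icc.mpr hτ.1.le) (l2.trans k2.symm) τ (right_mem_Icc.mpr hτ.1.le)
    have m1' : SqrtOn (fun t => eps (v + 1) * κ₂ t) (fun t => f t - z) (Icc τ b) := by
      refine ⟨continuousOn_const.mul m1.1, fun t ht => ?_⟩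
      rw [mul_pow, m1.2 t ht]; unfold eps; split_ifs <;> simp
    have e2 := SqrtOn.eq_of_eq isPreconnected_Icc (k1.mono hsp) m1' (fun t ht => h0 t (hsp ht))
      (right_mem_Icc.mpr hτ.2.le) (by rw [m2, k3]) τ (left_mem_Icc.mpr hτ.2.le)
    rw [← l3, ← m3, e1, e2]
  classical
  let S : ℂ → ℂ := fun z => if z ∈ ball (f τ) r \ f '' Icc a τ then s z else eps (v + 1) * s' z
  have S1 : ∀ z ∈ ball (f τ) r \ f '' Icc a τ, S z = s z := fun z hz => if_pos hz
  have S2 : ∀ z ∈ ball (f τ) r \ f '' Icc τ b, S z = eps (v + 1) * s' z := by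
    intro z hz
    by_cases hc : z ∈ ball (f τ) r \ f '' Icc a τ
    · rw [S1 z hc, agree z hc hz]
    · exact if_neg hc
  refine no_sqrt hr (s := S) (a := f τ) ⟨?_, ?_⟩
  · rw [hun]
    refine ContinuousOn.union_of_isOpen (hs.congr S1) ((continuousOn_const.mul hs2).congr S2) oM oP
  · rw [hun]
    rintro z (hz | hz)
    · rw [S1 z hz]
      obtain ⟨κ, k1, k2, k3⟩ := hs' z hz
      rw [← k3, k1.2 τ (right_mem_Icc.mpr hτ.1.le)]
    · rw [S2 z hz]
      obtain ⟨κ, k1, k2, k3⟩ := hs2' z hz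
      rw [← k3, mul_pow, k1.2 τ (left_mem_Icc.mpr hτ.2.le)]
      unfold eps; split_ifs <;> simp

/-- Points on the same side are joined off the arc, even avoiding a compact set away from the disc.
-/
lemma Cross.jn (h : Cross f a b x R) {L : Set ℂ} (hL : IsCompact L) {ρ : ℝ} (hρR : ρ ≤ R)
    (hLρ : ∀ z ∈ L, ρ ≤ ‖z - x‖) (hLK : ∀ t ∈ Ioo a b, f t ∉ L) {p q : ℂ} (hp : p ∈ ball x ρ)
    (hq : q ∈ ball x ρ) (hpK : p ∉ f '' Icc a b) (hqK : q ∉ f '' Icc a b)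
    (hu : sideF f a b x p = sideF f a b x q) : Jn (f '' Icc a b ∪ L)ᶜ p q := by
  have hpR : p ∈ ball x R := ball_subset_ball hρR hp
  have hqR : q ∈ ball x R := ball_subset_ball hρR hq
  obtain ⟨κ, k1, k2, k3⟩ := h.spec hpR hpK
  obtain ⟨μ, m1, m2, m3⟩ := h.spec hqR hqK
  have hnL : ∀ p ∈ ball x ρ, p ∉ L := fun p hp hl => by
    have := hLρ p hl; rw [mem_ball, dist_eq_norm] at hp; linarith
  have hre : ∀ p ∈ ball x ρ, ∀ z ∈ L, 0 < ((z - p) / (z - x)).re := fun p hp z hz =>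
    re_pos_ratio (by rw [mem_ball, dist_eq_norm] at hp; linarith [hLρ z hz])
  have hρ : 0 < ρ := lt_of_le_of_lt dist_nonneg (mem_ball.mp hp)
  have hzx : ∀ z ∈ L, z - x ≠ 0 := fun z hz => by rw [← norm_pos_iff]; linarith [hLρ z hz]
  have hc : ∀ p ∈ ball x ρ, SqrtOn (fun z => psq ((z - p) / (z - x))) (fun z => (z - p) / (z - x)) L :=
    fun p hp => psq_cont ((continuousOn_id.sub continuousOn_const).div
      (continuousOn_id.sub continuousOn_const) hzx) (hre p hp)
  have hne : ∀ p ∈ ball x ρ, ∀ z ∈ L, (z - p) / (z - x) ≠ 0 := by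
    intro p hp z hz h0; have := hre p hp z hz; rw [h0] at this; simp at this
  refine jn_glue h.cf h.inj hL hpK hqK (hnL p hp) (hnL q hq)
    (k1.div m1 fun t ht h0 => hqK ⟨t, ht, sub_eq_zero.mp h0⟩)
    (((hc p hp).div (hc q hq) (hne q hq)).congr fun z hz => ?_) fun t ht htL => ?_
  · rw [div_div_div_cancel_right₀ (hzx z hz)]
  · have hta : t = a ∨ t = b := by
      by_contra! hcc
      exact hLK t ⟨lt_of_le_of_ne ht.1 hcc.1.symm, lt_of_le_of_ne ht.2 hcc.2⟩ htL
    have hfx : f t ≠ x := fun e => hzx _ htL (by rw [e, sub_self])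
    show κ t / μ t = _
    rw [← nuf_div hfx]
    rcases hta with rfl | rfl
    · rw [k2, m2]
    · rw [k3, m3, hu, mul_div_mul_left _ _ (eps_ne _)]

/-- Sides are compared through any continuous root of the quotient `(f t - p) / (f t - q)`. -/
lemma Cross.C (h : Cross f a b x R) {ρ : ℝ} (hρR : 3 * ρ ≤ R) {p q : ℂ} (hp : p ∈ ball x ρ)
    (hq : q ∈ ball x ρ) (hpK : p ∉ f '' Icc a b) (hqK : q ∉ f '' Icc a b) {S : ℝ → ℂ}
    (hS : SqrtOn S (fun t => (f t - p) / (f t - q)) (Icc a b)) :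
    sideF f a b x p = sideF f a b x q ↔
      (S a = psq ((f a - p) / (f a - q)) ↔ S b = psq ((f b - p) / (f b - q))) := by
  have hρ : 0 < ρ := lt_of_le_of_lt dist_nonneg (mem_ball.mp hp)
  have hpR : p ∈ ball x R := ball_subset_ball (by linarith) hp
  have hqR : q ∈ ball x R := ball_subset_ball (by linarith) hq
  obtain ⟨κ, k1, k2, k3⟩ := h.spec hpR hpK
  obtain ⟨μ, m1, m2, m3⟩ := h.spec hqR hqK
  rw [mem_ball, dist_eq_norm] at hp hq
  have hpq : ‖p - q‖ < 2 * ρ := by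
    have := norm_sub_le (p - x) (q - x); rw [sub_sub_sub_cancel_right] at this; linarith
  have key : ∀ z, ‖z - x‖ = R → nuf x z p / nuf x z q = psq ((z - p) / (z - q)) := by
    intro z hz
    have hzx : z ≠ x := by rintro rfl; simp at hz; linarith
    have h1 : ‖p - q‖ < ‖z - q‖ := by
      have := norm_sub_le (z - q) (x - q); rw [sub_sub_sub_cancel_right, norm_sub_rev x q] at this; linarith
    rw [nuf_div hzx, psq_ratio_mul h1 (by linarith), mul_div_cancel_right₀ _ (psq_ne _)]
  have h0q : ∀ t ∈ Icc a b, f t - q ≠ 0 := fun t ht h0 => hqK ⟨t, ht, sub_eq_zero.mp h0⟩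
  have h0p : ∀ t ∈ Icc a b, f t - p ≠ 0 := fun t ht h0 => hpK ⟨t, ht, sub_eq_zero.mp h0⟩
  have hT := k1.div m1 h0q
  have eA : κ a / μ a = psq ((f a - p) / (f a - q)) := by rw [k2, m2, key _ h.ea]
  have eB : κ b / μ b = eps (sideF f a b x p) / eps (sideF f a b x q) * psq ((f b - p) / (f b - q)) := by
    rw [k3, m3, mul_div_mul_comm, key _ h.eb]
  have n1 := ne_neg (psq_ne ((f a - p) / (f a - q)))
  have n2 := ne_neg (psq_ne ((f b - p) / (f b - q)))
  rcases hT.eq_or_neg isPreconnected_Icc hS (fun t ht => div_ne_zero (h0p t ht) (h0q t ht)) with e | e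
  all_goals
    rw [e a h.ha, e b h.hb, eA, eB]
    rcases z2cases (sideF f a b x p) with e1 | e1 <;> rcases z2cases (sideF f a b x q) with e2 | e2 <;>
      rw [e1, e2] <;> simp [eps, n1.symm, n2.symm]

end Cross

lemma jn_in_ball {x p q : ℂ} {R : ℝ} {A : Set ℂ} (h : Jn A p q) (hA : ∀ z ∈ A, ‖z - x‖ ≠ R)
    (hp : p ∈ ball x R) : Jn (A ∩ ball x R) p q := by
  obtain ⟨M, h1, h2, h3, h4⟩ := h
  refine ⟨M, h1, subset_inter h2 ?_, h3, h4⟩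
  refine h1.subset_of_closure_inter_subset isOpen_ball ⟨p, h3, hp⟩ ?_
  rintro z ⟨hz1, hz2⟩
  have := closure_ball_subset_closedBall hz1
  rw [mem_closedBall, dist_eq_norm] at this
  rw [mem_ball, dist_eq_norm]
  exact lt_of_le_of_ne this (hA z (h2 hz2))

/-- Local two-sidedness of a planar set which is an arc near an interior point `f t₀` of the arc. -/
theorem plane_side {f : ℝ → ℂ} {a t₀ b : ℝ} (ha : a < t₀) (hb : t₀ < b) (hf : ContinuousOn f (Icc a b))
    (hi : InjOn f (Icc a b)) {X O : Set ℂ} (hX : f '' Icc a b ⊆ X)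
    (hX' : ∀ᶠ y in 𝓝 (f t₀), y ∈ X → y ∈ f '' Icc a b) (hO : O ∈ 𝓝 (f t₀)) :
    ∃ ρ > 0, ∃ u : ℂ → ZMod 2, ball (f t₀) ρ ⊆ O ∧
      (∀ p ∈ ball (f t₀) ρ \ X, ∀ᶠ q in 𝓝 p, u q = u p) ∧
      (∀ z ∈ X ∩ ball (f t₀) ρ, ∀ O' ∈ 𝓝 z, ∀ v, ∃ q ∈ O' \ X, u q = v) ∧
      (∀ p ∈ ball (f t₀) ρ \ X, ∀ q ∈ ball (f t₀) ρ \ X, u p = u q → Jn (O \ X) p q) ∧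
      (∀ p ∈ ball (f t₀) ρ \ X, ∀ q ∈ ball (f t₀) ρ \ X, ∀ S,
        SqrtOn S (fun t => (f t - p) / (f t - q)) (Icc a b) → (u p = u q ↔
          (S a = psq ((f a - p) / (f a - q)) ↔ S b = psq ((f b - p) / (f b - q))))) := by
  set x := f t₀ with hx
  have ht₀ : t₀ ∈ Icc a b := ⟨ha.le, hb.le⟩
  have haI : a ∈ Icc a b := ⟨le_rfl, (ha.trans hb).le⟩
  have hbI : b ∈ Icc a b := ⟨(ha.trans hb).le, le_rfl⟩
  have hna : 0 < ‖f a - x‖ := norm_pos_iff.mpr (sub_ne_zero.mpr fun e => ha.ne (hi haI ht₀ e))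
  have hnb : 0 < ‖f b - x‖ := norm_pos_iff.mpr (sub_ne_zero.mpr fun e => hb.ne' (hi hbI ht₀ e))
  obtain ⟨R₁, hR₁, hball⟩ := Metric.mem_nhds_iff.mp (inter_mem hO hX')
  set R := min R₁ (min ‖f a - x‖ ‖f b - x‖) with hRdef
  have hR : 0 < R := lt_min hR₁ (lt_min hna hnb)
  have hRa : R ≤ ‖f a - x‖ := (min_le_right _ _).trans (min_le_left _ _)
  have hRb : R ≤ ‖f b - x‖ := (min_le_right _ _).trans (min_le_right _ _)
  have hx0 : ‖f t₀ - x‖ < R := by rw [← hx, sub_self, norm_zero]; exact hR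
  obtain ⟨tp, hp1, hp2, hp3, hp4⟩ := first_exit hb.le (hf.mono (Icc_subset_Icc ha.le le_rfl)) hx0 hRb
  obtain ⟨tm', hm1, hm2, hm3, hm4⟩ := first_exit (f := fun t => f (-t)) (t₀ := -t₀) (b := -a) (R := R)
    (x := x) (by linarith)
    ((hf.mono (Icc_subset_Icc le_rfl hb.le)).comp continuous_neg.continuousOn
      fun t ht => ⟨by linarith [ht.2], by linarith [ht.1]⟩) (by simpa using hx0) (by simpa using hRa)
  set tm := -tm' with htm
  have hsub : Icc tm tp ⊆ Icc a b := Icc_subset_Icc (by linarith) hp2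
  have hC : Cross f tm tp x R := by
    refine ⟨by linarith, hf.mono hsub, hi.mono hsub, hR, hm3, hp3, fun t ht => ?_⟩
    rcases le_total t₀ t with h | h
    · exact hp4 t ⟨h, ht.2⟩
    · have := hm4 (-t) ⟨by linarith, by linarith [ht.1]⟩
      rwa [neg_neg] at this
  set P := f '' (Icc a tm ∪ Icc tp b) with hP
  have hIsub : Icc a tm ∪ Icc tp b ⊆ Icc a b :=
    union_subset (Icc_subset_Icc le_rfl (by linarith)) (Icc_subset_Icc (by linarith) le_rfl)
  have hPc : IsCompact P :=
    (isCompact_Icc.union isCompact_Icc).image_of_continuousOn (hf.mono hIsub)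
  have hdec : f '' Icc a b = f '' Icc tm tp ∪ P := by
    rw [hP, ← image_union]; congr 1; ext t
    simp only [mem_union, mem_Icc]
    constructor
    · rintro ⟨h1, h2⟩
      rcases le_total tm t with h3 | h3 <;> rcases le_total t tp with h4 | h4 <;> simp_all
    · rintro (h | h | h) <;> constructor <;> linarith [h.1, h.2]
  have hxP : x ∉ P := by
    rintro ⟨t, ht, e⟩
    have : t = t₀ := hi (hIsub ht) ht₀ e
    subst this
    rcases ht with h | h
    · linarith [h.2]
    · linarith [h.1]
  obtain ⟨r, hr, hrP⟩ := Metric.isOpen_iff.mp hPc.isClosed.isOpen_compl x hxP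
  set ρ := min r R / 3 with hρdef
  have hρ : 0 < ρ := by have := lt_min hr hR; positivity
  have hρr : 3 * ρ ≤ r := by have := min_le_left r R; rw [hρdef]; linarith
  have hρR : 3 * ρ ≤ R := by have := min_le_right r R; rw [hρdef]; linarith
  have hρR' : ρ ≤ R := by linarith
  have hPρ : ∀ z ∈ P, 3 * ρ ≤ ‖z - x‖ := by
    intro z hz; by_contra! hc
    exact hrP (show z ∈ ball x r by rw [mem_ball, dist_eq_norm]; linarith) hz
  have hbR : ball x ρ ⊆ ball x R := ball_subset_ball hρR'
  have hRball : ball x R ⊆ O ∩ {y | y ∈ X → y ∈ f '' Icc a b} :=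
    (ball_subset_ball (min_le_left _ _)).trans hball
  have hKX : f '' Icc tm tp ⊆ X := (image_mono hsub).trans hX
  have hXK : ∀ z ∈ ball x ρ, z ∈ X → z ∈ f '' Icc tm tp := by
    intro z hz hzX
    have h1 := (hRball (hbR hz)).2 hzX
    rw [hdec] at h1
    rcases h1 with h1 | h1
    · exact h1
    · have := hPρ z h1; rw [mem_ball, dist_eq_norm] at hz; linarith
  refine ⟨ρ, hρ, sideF f tm tp x, fun z hz => (hRball (hbR hz)).1, ?_, ?_, ?_, ?_⟩
  · rintro p ⟨hp, hpX⟩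
    exact hC.loc (hbR hp) fun h => hpX (hKX h)
  · rintro z ⟨hzX, hz⟩ O' hO' v
    obtain ⟨τ, hτ, rfl⟩ := hXK z hz hzX
    have hn : ‖f τ - x‖ < R := by have := hbR hz; rwa [mem_ball, dist_eq_norm] at this
    have hτ' : τ ∈ Ioo tm tp := by
      refine ⟨lt_of_le_of_ne hτ.1 ?_, lt_of_le_of_ne hτ.2 ?_⟩ <;> rintro rfl
      · exact absurd hC.ea hn.ne
      · exact absurd hC.eb hn.ne
    obtain ⟨q, h1, h2, h3, h4⟩ := hC.both hτ' (inter_mem hO' (isOpen_ball.mem_nhds hz)) v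
    exact ⟨q, ⟨h1.1, fun h => h3 (hXK q h1.2 h)⟩, h4⟩
  · rintro p ⟨hp, hpX⟩ q ⟨hq, hqX⟩ hu
    have h1 := hC.jn (L := sphere x R ∪ P) ((isCompact_sphere x R).union hPc) hρR' (by
        rintro z (hz | hz)
        · rw [mem_sphere, dist_eq_norm] at hz; linarith
        · linarith [hPρ z hz]) (by
        rintro t ht (h1 | h1)
        · rw [mem_sphere, dist_eq_norm] at h1; exact absurd h1 (hC.int t ht).ne
        · obtain ⟨t', ht', e⟩ := h1
          have := hi (hIsub ht') (hsub ⟨ht.1.le, ht.2.le⟩) e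
          subst this
          rcases ht' with h | h
          · linarith [h.2, ht.1]
          · linarith [h.1, ht.2]) hp hq (fun h => hpX (hKX h)) (fun h => hqX (hKX h)) hu
    refine (jn_in_ball h1 (x := x) (R := R) (fun z hz e => hz (.inr (.inl ?_))) (hbR hp)).mono ?_
    · rw [mem_sphere, dist_eq_norm, e]
    · rintro z ⟨h1, h2⟩
      refine ⟨(hRball h2).1, fun hzX => h1 ?_⟩
      have := (hRball h2).2 hzX
      rw [hdec] at this
      rcases this with h | h
      · exact .inl h
      · exact .inr (.inr h)
  · rintro p ⟨hp, hpX⟩ q ⟨hq, hqX⟩ S hS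
    rw [hC.C hρR hp hq (fun h => hpX (hKX h)) (fun h => hqX (hKX h)) (hS.mono hsub)]
    have hpq : ‖p - q‖ < 2 * ρ := by
      rw [mem_ball, dist_eq_norm] at hp hq
      have := norm_sub_le (p - x) (q - x); rw [sub_sub_sub_cancel_right] at this; linarith
    have key : ∀ c d : ℝ, c ≤ d → Icc c d ⊆ Icc a tm ∪ Icc tp b →
        (S c = psq ((f c - p) / (f c - q)) ↔ S d = psq ((f d - p) / (f d - q))) := by
      intro c d hcd hsub'
      have hIab : Icc c d ⊆ Icc a b := hsub'.trans hIsub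
      have hbd : ∀ t ∈ Icc c d, ‖p - q‖ < ‖f t - q‖ := by
        intro t ht
        have h1 := hPρ (f t) ⟨t, hsub' ht, rfl⟩
        rw [mem_ball, dist_eq_norm] at hq
        have := norm_sub_le (f t - q) (x - q); rw [sub_sub_sub_cancel_right, norm_sub_rev x q] at this
        linarith
      have hq0 : ∀ t ∈ Icc c d, f t - q ≠ 0 := fun t ht h0 => by
        have := hbd t ht; rw [h0, norm_zero] at this; exact absurd this (not_lt.mpr (norm_nonneg _))
      have h1 := psq_cont (A := Icc c d) (g := fun t => (f t - p) / (f t - q))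
        (((hf.mono hIab).sub continuousOn_const).div ((hf.mono hIab).sub continuousOn_const) hq0)
        fun t ht => re_pos_ratio (hbd t ht)
      have hc : c ∈ Icc c d := ⟨le_rfl, hcd⟩
      have hd : d ∈ Icc c d := ⟨hcd, le_rfl⟩
      rcases h1.eq_or_neg isPreconnected_Icc (hS.mono hIab) (fun t ht h0 => by
        have := re_pos_ratio (hbd t ht); rw [h0] at this; simp at this) with e | e
      · rw [e c hc, e d hd]; simp
      · rw [e c hc, e d hd]; simp [(ne_neg (psq_ne _)).symm]
    rw [key a tm (by linarith) subset_union_left, key tp b hp2 subset_union_right]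

/-- Complements of an arc are locally connected at an end point of the arc. -/
theorem plane_end {f : ℝ → ℂ} {a b : ℝ} (hb : a < b) (hf : ContinuousOn f (Icc a b))
    (hi : InjOn f (Icc a b)) {X O : Set ℂ} (hX : f '' Icc a b ⊆ X)
    (hX' : ∀ᶠ y in 𝓝 (f a), y ∈ X → y ∈ f '' Icc a b) (hO : O ∈ 𝓝 (f a)) :
    ∃ ρ > 0, ball (f a) ρ ⊆ O ∧
      (∀ p ∈ ball (f a) ρ \ X, ∀ q ∈ ball (f a) ρ \ X, Jn (O \ X) p q) := by
  set x := f a with hx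
  have haI : a ∈ Icc a b := ⟨le_rfl, hb.le⟩
  have hbI : b ∈ Icc a b := ⟨hb.le, le_rfl⟩
  have hnb : 0 < ‖f b - x‖ := norm_pos_iff.mpr (sub_ne_zero.mpr fun e => hb.ne' (hi hbI haI e))
  obtain ⟨R₁, hR₁, hball⟩ := Metric.mem_nhds_iff.mp (inter_mem hO hX')
  set R := min R₁ ‖f b - x‖ with hRdef
  have hR : 0 < R := lt_min hR₁ hnb
  have hRb : R ≤ ‖f b - x‖ := min_le_right _ _
  have hx0 : ‖f a - x‖ < R := by rw [← hx, sub_self, norm_zero]; exact hR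
  obtain ⟨tp, hp1, hp2, hp3, hp4⟩ := first_exit hb.le hf hx0 hRb
  have hsub : Icc a tp ⊆ Icc a b := Icc_subset_Icc le_rfl hp2
  have hsubP : Icc tp b ⊆ Icc a b := Icc_subset_Icc hp1.le le_rfl
  set P := f '' Icc tp b with hP
  have hPc : IsCompact P := isCompact_Icc.image_of_continuousOn (hf.mono hsubP)
  have hdec : f '' Icc a b = f '' Icc a tp ∪ P := by
    rw [hP, ← image_union, Icc_union_Icc_eq_Icc hp1.le hp2]
  have hxP : x ∉ P := by
    rintro ⟨t, ht, e⟩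
    have : t = a := hi (hsubP ht) haI e
    linarith [ht.1]
  obtain ⟨r, hr, hrP⟩ := Metric.isOpen_iff.mp hPc.isClosed.isOpen_compl x hxP
  set ρ := min r R with hρdef
  have hρ : 0 < ρ := lt_min hr hR
  have hρR : ρ ≤ R := min_le_right _ _
  set L := sphere x R ∪ P with hL
  have hLc : IsCompact L := (isCompact_sphere x R).union hPc
  have hLρ : ∀ z ∈ L, ρ ≤ ‖z - x‖ := by
    rintro z (hz | hz)
    · rw [mem_sphere, dist_eq_norm] at hz; linarith
    · by_contra! hc
      exact hrP (show z ∈ ball x r by rw [mem_ball, dist_eq_norm]; linarith [min_le_left r R]) hz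
  have hbR : ball x ρ ⊆ ball x R := ball_subset_ball hρR
  have hRball : ball x R ⊆ O ∩ {y | y ∈ X → y ∈ f '' Icc a b} :=
    (ball_subset_ball (min_le_left _ _)).trans hball
  have hKX : f '' Icc a tp ⊆ X := (image_mono hsub).trans hX
  refine ⟨ρ, hρ, fun z hz => (hRball (hbR hz)).1, ?_⟩
  rintro p ⟨hp, hpX⟩ q ⟨hq, hqX⟩
  have hpK : p ∉ f '' Icc a tp := fun h => hpX (hKX h)
  have hqK : q ∉ f '' Icc a tp := fun h => hqX (hKX h)
  have hnL : ∀ p ∈ ball x ρ, p ∉ L := fun p hp hl => by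
    have := hLρ p hl; rw [mem_ball, dist_eq_norm] at hp; linarith
  have hre : ∀ p ∈ ball x ρ, ∀ z ∈ L, 0 < ((z - p) / (z - x)).re := fun p hp z hz =>
    re_pos_ratio (by rw [mem_ball, dist_eq_norm] at hp; linarith [hLρ z hz])
  have hzx : ∀ z ∈ L, z - x ≠ 0 := fun z hz => by rw [← norm_pos_iff]; linarith [hLρ z hz]
  have hc : ∀ p ∈ ball x ρ, SqrtOn (fun z => psq ((z - p) / (z - x))) (fun z => (z - p) / (z - x)) L :=
    fun p hp => psq_cont ((continuousOn_id.sub continuousOn_const).div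
      (continuousOn_id.sub continuousOn_const) hzx) (hre p hp)
  have hne : ∀ p ∈ ball x ρ, ∀ z ∈ L, (z - p) / (z - x) ≠ 0 := by
    intro p hp z hz h0; have := hre p hp z hz; rw [h0] at this; simp at this
  have hsL : SqrtOn _ (fun z => (z - p) / (z - q)) L := ((hc p hp).div (hc q hq) (hne q hq)).congr
    fun z hz => by rw [div_div_div_cancel_right₀ (hzx z hz)]
  have hq0 : ∀ t ∈ Icc a tp, f t - q ≠ 0 := fun t ht h0 => hqK ⟨t, ht, sub_eq_zero.mp h0⟩
  have hp0 : ∀ t ∈ Icc a tp, f t - p ≠ 0 := fun t ht h0 => hpK ⟨t, ht, sub_eq_zero.mp h0⟩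
  have htpI : tp ∈ Icc a tp := ⟨hp1.le, le_rfl⟩
  obtain ⟨sK, hsK, hsKe⟩ := exists_sqrt_path (g := fun t => (f t - p) / (f t - q)) hp1.le
    (((hf.mono hsub).sub continuousOn_const).div ((hf.mono hsub).sub continuousOn_const) hq0)
    (fun t ht => div_ne_zero (hp0 t ht) (hq0 t ht)) htpI
    (hsL.2 (f tp) (.inr ⟨tp, ⟨le_rfl, hp2⟩, rfl⟩))
  have h1 := jn_glue (hf.mono hsub) (hi.mono hsub) hLc hpK hqK (hnL p hp) (hnL q hq) hsK hsL (by
    intro t ht htL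
    have : t = tp := by
      rcases htL with h | ⟨t', ht', e⟩
      · by_contra hc
        rw [mem_sphere, dist_eq_norm] at h
        exact absurd h (hp4 t ⟨ht.1, lt_of_le_of_ne ht.2 hc⟩).ne
      · have := hi (hsubP ht') (hsub ht) e
        subst this
        exact le_antisymm ht.2 ht'.1
    rw [this, hsKe])
  refine (jn_in_ball h1 (x := x) (R := R) (fun z hz e => hz (.inr (.inl ?_))) (hbR hp)).mono ?_
  · rw [mem_sphere, dist_eq_norm, e]
  · rintro z ⟨h1, h2⟩
    refine ⟨(hRball h2).1, fun hzX => h1 ?_⟩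
    have := (hRball h2).2 hzX
    rw [hdec] at this
    rcases this with h | h
    · exact .inl h
    · exact .inr (.inr h)

/-! ### Arcs in surfaces, locally -/

/-- Every point has a neighbourhood homeomorphic to the plane. -/
def Surf (S : Type*) [TopologicalSpace S] : Prop := ∀ x : S, ∃ φ : ℂ → S, IsOpenEmbedding φ ∧ φ 0 = x

section
variable {S : Type*} [TopologicalSpace S]

/-- Near `x`, the set `X` is an arc with `x` in its interior. -/
def ArcAt (X : Set S) (x : S) : Prop := ∃ (f : ℝ → S) (a t₀ b : ℝ), a < t₀ ∧ t₀ < b ∧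
  ContinuousOn f (Icc a b) ∧ InjOn f (Icc a b) ∧ f t₀ = x ∧ f '' Icc a b ⊆ X ∧
  ∀ᶠ y in 𝓝 x, y ∈ X → y ∈ f '' Icc a b

/-- Near `x`, the set `X` is an arc with `x` as an end point. -/
def EndAt (X : Set S) (x : S) : Prop := ∃ (f : ℝ → S) (a b : ℝ), a < b ∧
  ContinuousOn f (Icc a b) ∧ InjOn f (Icc a b) ∧ f a = x ∧ f '' Icc a b ⊆ X ∧
  ∀ᶠ y in 𝓝 x, y ∈ X → y ∈ f '' Icc a b

/-- `u` is a side function of `X` on `N`: locally constant off `X`, and taking both values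
arbitrarily close to each point of `X`. -/
def SideAt (X N : Set S) (u : S → ZMod 2) : Prop :=
  (∀ p ∈ N \ X, ∀ᶠ q in 𝓝 p, u q = u p) ∧
  (∀ z ∈ X ∩ N, ∀ O ∈ 𝓝 z, ∀ v, ∃ q ∈ O \ X, u q = v)

lemma jn_const {β : Type*} {u : S → β} {A : Set S} (h : ∀ p ∈ A, ∀ᶠ q in 𝓝 p, u q = u p) {p q : S}
    (hpq : Jn A p q) : u p = u q := by
  obtain ⟨M, h1, h2, h3, h4⟩ := hpq
  let _ : TopologicalSpace β := ⊥
  have : DiscreteTopology β := ⟨rfl⟩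
  refine h1.constant (f := u) (fun z hz => ?_) h3 h4
  apply ContinuousAt.continuousWithinAt
  rw [ContinuousAt, nhds_discrete β, tendsto_pure]
  exact h z (h2 hz)

lemma Surf.chart (hS : Surf S) (x : S) : ∃ φ : ℂ → S, IsOpenEmbedding φ ∧ φ 0 = x := hS x

lemma Surf.locConn (hS : Surf S) : LocallyConnectedSpace S := by
  rw [locallyConnectedSpace_iff_subsets_isOpen_isConnected]
  intro x U hU
  obtain ⟨φ, hφ, rfl⟩ := hS x
  have h1 : φ ⁻¹' U ∈ 𝓝 (0 : ℂ) := hφ.continuous.continuousAt hU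
  obtain ⟨r, hr, hb⟩ := Metric.mem_nhds_iff.mp h1
  refine ⟨φ '' ball 0 r, by rintro _ ⟨z, hz, rfl⟩; exact hb hz, hφ.isOpenMap _ isOpen_ball,
    ⟨0, mem_ball_self hr, rfl⟩, ?_⟩
  exact ((convex_ball (0 : ℂ) r).isConnected ⟨0, mem_ball_self hr⟩).image φ hφ.continuous.continuousOn

/-- Transfer of an arc through `x` into a chart. -/
lemma ArcAt.shrink [T2Space S] {X : Set S} {x : S} (h : ArcAt X x) {O : Set S} (hO : O ∈ 𝓝 x) :
    ∃ (f : ℝ → S) (a t₀ b : ℝ), a < t₀ ∧ t₀ < b ∧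
  ContinuousOn f (Icc a b) ∧ InjOn f (Icc a b) ∧ f t₀ = x ∧ f '' Icc a b ⊆ X ∧ f '' Icc a b ⊆ O ∧
  ∀ᶠ y in 𝓝 x, y ∈ X → y ∈ f '' Icc a b := by
  obtain ⟨f, a, t₀, b, ha, hb, hf, hi, rfl, hX, hX'⟩ := h
  have h1 : f ⁻¹' O ∈ 𝓝 t₀ := (hf.continuousAt (Icc_mem_nhds ha hb)) hO
  obtain ⟨δ, hδ, hball⟩ := Metric.mem_nhds_iff.mp h1
  set a' := max a (t₀ - δ / 2)
  set b' := min b (t₀ + δ / 2)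
  have ha' : a' < t₀ := max_lt ha (by linarith)
  have hb' : t₀ < b' := lt_min hb (by linarith)
  have haa : a ≤ a' := le_max_left _ _
  have hbb : b' ≤ b := min_le_left _ _
  have hsub : Icc a' b' ⊆ Icc a b := Icc_subset_Icc haa hbb
  have hO' : f '' Icc a' b' ⊆ O := by
    rintro _ ⟨t, ht, rfl⟩
    apply hball
    have h2 := (le_max_right _ _).trans ht.1
    have h3 := ht.2.trans (min_le_right _ _)
    rw [Real.ball_eq_Ioo]; constructor <;> linarith
  refine ⟨f, a', t₀, b', ha', hb', hf.mono hsub, hi.mono hsub, rfl, (image_mono hsub).trans hX, hO', ?_⟩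
  have hsub2 : Icc a a' ∪ Icc b' b ⊆ Icc a b :=
    union_subset (Icc_subset_Icc le_rfl (by linarith)) (Icc_subset_Icc (by linarith) le_rfl)
  have hc : IsClosed (f '' (Icc a a' ∪ Icc b' b)) :=
    ((isCompact_Icc.union isCompact_Icc).image_of_continuousOn (hf.mono hsub2)).isClosed
  have hn : f t₀ ∉ f '' (Icc a a' ∪ Icc b' b) := by
    rintro ⟨t, ht, e⟩
    have := hi (hsub2 ht) ⟨ha.le, hb.le⟩ e
    subst this
    rcases ht with h | h
    · linarith [h.2]
    · linarith [h.1]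
  filter_upwards [hX', hc.isOpen_compl.mem_nhds hn] with y h1 h2 h3
  obtain ⟨t, ht, rfl⟩ := h1 h3
  refine ⟨t, ⟨?_, ?_⟩, rfl⟩
  · by_contra! hc; exact h2 ⟨t, .inl ⟨ht.1, hc.le⟩, rfl⟩
  · by_contra! hc; exact h2 ⟨t, .inr ⟨hc.le, ht.2⟩, rfl⟩

lemma EndAt.shrink [T2Space S] {X : Set S} {x : S} (h : EndAt X x) {O : Set S} (hO : O ∈ 𝓝 x) :
    ∃ (f : ℝ → S) (a b : ℝ), a < b ∧
  ContinuousOn f (Icc a b) ∧ InjOn f (Icc a b) ∧ f a = x ∧ f '' Icc a b ⊆ X ∧ f '' Icc a b ⊆ O ∧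
  ∀ᶠ y in 𝓝 x, y ∈ X → y ∈ f '' Icc a b := by
  obtain ⟨f, a, b, hb, hf, hi, rfl, hX, hX'⟩ := h
  have h1 : f ⁻¹' O ∈ 𝓝[Icc a b] a := (hf a ⟨le_rfl, hb.le⟩) hO
  obtain ⟨δ, hδ, hball⟩ := Metric.mem_nhdsWithin_iff.mp h1
  set b' := min b (a + δ / 2)
  have hb' : a < b' := lt_min hb (by linarith)
  have hbb : b' ≤ b := min_le_left _ _
  have hsub : Icc a b' ⊆ Icc a b := Icc_subset_Icc le_rfl hbb
  have hO' : f '' Icc a b' ⊆ O := by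
    rintro _ ⟨t, ht, rfl⟩
    apply hball
    refine ⟨?_, hsub ht⟩
    have h3 := ht.2.trans (min_le_right _ _)
    rw [Real.ball_eq_Ioo]; constructor <;> linarith [ht.1]
  refine ⟨f, a, b', hb', hf.mono hsub, hi.mono hsub, rfl, (image_mono hsub).trans hX, hO', ?_⟩
  have hsub2 : Icc b' b ⊆ Icc a b := Icc_subset_Icc hb'.le le_rfl
  have hc : IsClosed (f '' Icc b' b) :=
    (isCompact_Icc.image_of_continuousOn (hf.mono hsub2)).isClosed
  have hn : f a ∉ f '' Icc b' b := by
    rintro ⟨t, ht, e⟩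
    have := hi (hsub2 ht) ⟨le_rfl, hb.le⟩ e
    linarith [ht.1]
  filter_upwards [hX', hc.isOpen_compl.mem_nhds hn] with y h1 h2 h3
  obtain ⟨t, ht, rfl⟩ := h1 h3
  refine ⟨t, ⟨ht.1, ?_⟩, rfl⟩
  by_contra! hc; exact h2 ⟨t, ⟨hc.le, ht.2⟩, rfl⟩

/-- Reading a path inside the range of a chart. -/
lemma chart_arc {φ : ℂ → S} (hφ : IsOpenEmbedding φ) {f : ℝ → S} {A : Set ℝ} (hf : ContinuousOn f A)
    (hA : f '' A ⊆ range φ) : ∃ g : ℝ → ℂ, ContinuousOn g A ∧ ∀ t ∈ A, φ (g t) = f t := by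
  refine ⟨fun t => Function.invFun φ (f t), ?_, fun t ht => Function.invFun_eq (hA ⟨t, ht, rfl⟩)⟩
  rw [hφ.isInducing.continuousOn_iff]
  exact hf.congr fun t ht => Function.invFun_eq (hA ⟨t, ht, rfl⟩)

lemma chart_event {φ : ℂ → S} (hφ : IsOpenEmbedding φ) {P : S → Prop} {z : ℂ} :
    (∀ᶠ y in 𝓝 (φ z), P y) ↔ ∀ᶠ w in 𝓝 z, P (φ w) := by
  rw [← hφ.map_nhds_eq, eventually_map]

/-- Local side functions along arcs in a surface. -/
theorem exists_side [T2Space S] (hS : Surf S) {X : Set S} {x : S} (h : ArcAt X x) {O : Set S}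
    (hO : O ∈ 𝓝 x) : ∃ N, IsOpen N ∧ x ∈ N ∧ N ⊆ O ∧ ∃ u, SideAt X N u ∧
      ∀ p ∈ N \ X, ∀ q ∈ N \ X, u p = u q → Jn (O \ X) p q := by
  obtain ⟨φ, hφ, hφx⟩ := hS x
  obtain ⟨f, a, t₀, b, ha, hb, hf, hi, hfx, hX, hXr, hX'⟩ :=
    h.shrink (hφ.isOpen_range.mem_nhds ⟨0, hφx⟩)
  obtain ⟨g, hg, hgf⟩ := chart_arc hφ hf hXr
  have him : f '' Icc a b = φ '' (g '' Icc a b) := by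
    rw [image_image]; exact image_congr fun t ht => (hgf t ht).symm
  have hgx : φ (g t₀) = x := by rw [hgf t₀ ⟨ha.le, hb.le⟩, hfx]
  have hgi : InjOn g (Icc a b) := fun s hs t ht e => hi hs ht (by rw [← hgf s hs, ← hgf t ht, e])
  obtain ⟨ρ, hρ, u, h1, h2, h3, h4, -⟩ := plane_side ha hb hg hgi (X := φ ⁻¹' X) (O := φ ⁻¹' O)
    (by rw [him] at hX; exact image_subset_iff.mp hX)
    (by
      rw [← hgx, chart_event hφ] at hX'
      filter_upwards [hX'] with w hw hwX
      have := hw hwX; rw [him] at this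
      exact (hφ.injective.mem_set_image).mp this)
    (hφ.continuous.continuousAt (by rwa [hgx]))
  obtain ⟨w, hinv⟩ : ∃ w : S → ZMod 2, ∀ z, w (φ z) = u z := ⟨fun y => u (Function.invFun φ y),
    fun z => congrArg u (Function.leftInverse_invFun hφ.injective z)⟩
  refine ⟨φ '' ball (g t₀) ρ, hφ.isOpenMap _ isOpen_ball, ⟨g t₀, mem_ball_self hρ, hgx⟩,
    by rintro _ ⟨z, hz, rfl⟩; exact h1 hz, w, ⟨?_, ?_⟩, ?_⟩
  · rintro _ ⟨⟨z, hz, rfl⟩, hzX⟩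
    rw [chart_event hφ, hinv]
    filter_upwards [h2 z ⟨hz, hzX⟩] with w hw
    rw [hinv, hw]
  · rintro _ ⟨hzX, z, hz, rfl⟩ O' hO' v
    obtain ⟨q, hq, e⟩ := h3 z ⟨hzX, hz⟩ (φ ⁻¹' O') (hφ.continuous.continuousAt hO') v
    exact ⟨φ q, hq, by rw [hinv, e]⟩
  · rintro _ ⟨⟨p, hp, rfl⟩, hpX⟩ _ ⟨⟨q, hq, rfl⟩, hqX⟩ he
    rw [hinv, hinv] at he
    exact (h4 p ⟨hp, hpX⟩ q ⟨hq, hqX⟩ he).image hφ.continuous.continuousOn fun z hz => hz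

/-- The complement of an arc is locally connected at an end point of the arc. -/
theorem end_local [T2Space S] (hS : Surf S) {X : Set S} {x : S} (h : EndAt X x) {O : Set S}
    (hO : O ∈ 𝓝 x) : ∃ N, IsOpen N ∧ x ∈ N ∧ N ⊆ O ∧ ∀ p ∈ N \ X, ∀ q ∈ N \ X, Jn (O \ X) p q := by
  obtain ⟨φ, hφ, hφx⟩ := hS x
  obtain ⟨f, a, b, hb, hf, hi, hfx, hX, hXr, hX'⟩ :=
    h.shrink (hφ.isOpen_range.mem_nhds ⟨0, hφx⟩)
  obtain ⟨g, hg, hgf⟩ := chart_arc hφ hf hXr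
  have him : f '' Icc a b = φ '' (g '' Icc a b) := by
    rw [image_image]; exact image_congr fun t ht => (hgf t ht).symm
  have hgx : φ (g a) = x := by rw [hgf a ⟨le_rfl, hb.le⟩, hfx]
  have hgi : InjOn g (Icc a b) := fun s hs t ht e => hi hs ht (by rw [← hgf s hs, ← hgf t ht, e])
  obtain ⟨ρ, hρ, h1, h4⟩ := plane_end hb hg hgi (X := φ ⁻¹' X) (O := φ ⁻¹' O)
    (by rw [him] at hX; exact image_subset_iff.mp hX)
    (by
      rw [← hgx, chart_event hφ] at hX'
      filter_upwards [hX'] with w hw hwX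
      have := hw hwX; rw [him] at this
      exact (hφ.injective.mem_set_image).mp this)
    (hφ.continuous.continuousAt (by rwa [hgx]))
  refine ⟨φ '' ball (g a) ρ, hφ.isOpenMap _ isOpen_ball, ⟨g a, mem_ball_self hρ, hgx⟩,
    by rintro _ ⟨z, hz, rfl⟩; exact h1 hz, ?_⟩
  rintro _ ⟨⟨p, hp, rfl⟩, hpX⟩ _ ⟨⟨q, hq, rfl⟩, hqX⟩
  exact (h4 p ⟨hp, hpX⟩ q ⟨hq, hqX⟩).image hφ.continuous.continuousOn fun z hz => hz

/-- Among three points close to an interior point of an arc, two are joined off the arc. -/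
theorem three_local [T2Space S] (hS : Surf S) {X : Set S} {x : S} (h : ArcAt X x) {O : Set S}
    (hO : O ∈ 𝓝 x) : ∃ N, IsOpen N ∧ x ∈ N ∧ N ⊆ O ∧ ∀ p ∈ N \ X, ∀ q ∈ N \ X, ∀ r ∈ N \ X,
      Jn (O \ X) p q ∨ Jn (O \ X) q r ∨ Jn (O \ X) p r := by
  obtain ⟨N, h1, h2, h3, u, h4, h5⟩ := exists_side hS h hO
  refine ⟨N, h1, h2, h3, fun p hp q hq r hr => ?_⟩
  have : u p = u q ∨ u q = u r ∨ u p = u r := by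
    generalize u p = a; generalize u q = b; generalize u r = c
    clear h4 h5; revert a b c; decide
  rcases this with e | e | e
  · exact .inl (h5 p hp q hq e)
  · exact .inr (.inl (h5 q hq r hr e))
  · exact .inr (.inr (h5 p hp r hr e))

/-- A relatively clopen set which accumulates at an interior point of an arc accumulates at all
nearby points of the arc. -/
theorem merge_local [T2Space S] (hS : Surf S) {X : Set S} {x : S} (h : ArcAt X x) {O : Set S}
    (hO : O ∈ 𝓝 x) : ∃ N, IsOpen N ∧ x ∈ N ∧ N ⊆ O ∧ ∀ G, IsOpen G →
      (∀ z ∈ O \ X, z ∈ closure G → z ∈ G) → (G ∩ (N \ X)).Nonempty → X ∩ N ⊆ closure G := by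
  obtain ⟨N, h1, h2, h3, u, h4, h5⟩ := exists_side hS h hO
  refine ⟨N, h1, h2, h3, fun G hG hcl ⟨p, hpG, hp⟩ y hy => ?_⟩
  rw [mem_closure_iff_nhds]
  intro t ht
  obtain ⟨q, hq, e⟩ := h4.2 y hy (t ∩ N) (inter_mem ht (h1.mem_nhds hy.2)) (u p)
  exact ⟨q, hq.1.1, (h5 p hp q ⟨hq.1.2, hq.2⟩ e.symm).mem_of_clopen hG hcl hpG⟩

/-- Two side functions differ by a constant near each point. -/
theorem side_diff [T2Space S] (hS : Surf S) {X : Set S} {x : S} (h : ArcAt X x) {N N' : Set S}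
    (hN : N ∈ 𝓝 x) (hN' : N' ∈ 𝓝 x) {u u' : S → ZMod 2} (hu : SideAt X N u) (hu' : SideAt X N' u') :
    ∃ c, ∀ᶠ y in 𝓝 x, y ∉ X → u y + u' y = c := by
  obtain ⟨M, h1, h2, h3, v, h4, h5⟩ := exists_side hS h (inter_mem hN hN')
  have hxX : x ∈ X := by
    obtain ⟨f, a, t₀, b, ha, hb, hf, hi, rfl, hX, hX'⟩ := h
    exact hX ⟨t₀, ⟨ha.le, hb.le⟩, rfl⟩
  have ex : ∀ w : S → ZMod 2, (∀ p ∈ (N ∩ N') \ X, ∀ᶠ q in 𝓝 p, w q = w p) →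
      (∀ O ∈ 𝓝 x, ∀ v, ∃ q ∈ O \ X, w q = v) → ∃ c, ∀ y ∈ M \ X, w y = v y + c := by
    intro w hw hw'
    have same : ∀ p ∈ M \ X, ∀ q ∈ M \ X, v p = v q → w p = w q := fun p hp q hq e =>
      jn_const hw (h5 p hp q hq e)
    obtain ⟨p0, hp0, e0⟩ := h4.2 x ⟨hxX, h2⟩ M (h1.mem_nhds h2) 0
    obtain ⟨p1, hp1, e1⟩ := h4.2 x ⟨hxX, h2⟩ M (h1.mem_nhds h2) 1
    have hne : w p1 = w p0 + 1 := by
      obtain ⟨q, hq, eq⟩ := hw' M (h1.mem_nhds h2) (w p0 + 1)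
      rcases z2cases (v q) with e | e
      · have := same q hq p0 hp0 (e.trans e0.symm)
        rw [eq] at this
        exfalso; revert this; generalize w p0 = c; revert c; decide
      · rw [← same q hq p1 hp1 (e.trans e1.symm), eq]
    refine ⟨w p0, fun y hy => ?_⟩
    rcases z2cases (v y) with e | e
    · rw [same y hy p0 hp0 (e.trans e0.symm), e, zero_add]
    · rw [same y hy p1 hp1 (e.trans e1.symm), e, hne, add_comm]
  obtain ⟨c, hc⟩ := ex u (fun p hp => hu.1 p ⟨hp.1.1, hp.2⟩)
    (fun O hO v => hu.2 x ⟨hxX, mem_of_mem_nhds hN⟩ O hO v)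
  obtain ⟨c', hc'⟩ := ex u' (fun p hp => hu'.1 p ⟨hp.1.2, hp.2⟩)
    (fun O hO v => hu'.2 x ⟨hxX, mem_of_mem_nhds hN'⟩ O hO v)
  refine ⟨c + c', ?_⟩
  filter_upwards [h1.mem_nhds h2] with y hy hyX
  rw [hc y ⟨hy, hyX⟩, hc' y ⟨hy, hyX⟩]
  generalize v y = a; clear hc hc'; revert a c c'; decide

/-- A domain is locally connected at a frontier point that is an arc point of the frontier and
adherent to the exterior. -/
theorem lc_local [T2Space S] (hS : Surf S) {U X E : Set S} {x : S} (h : ArcAt X x)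
    (hU : IsOpen U) (hfr : frontier U ⊆ X) (hUX : Disjoint U X)
    (hxE : x ∈ closure E) (hEU : Disjoint E U) (hEX : Disjoint E X) {O : Set S}
    (hO : O ∈ 𝓝 x) : ∃ N, IsOpen N ∧ x ∈ N ∧ N ⊆ O ∧ ∀ p ∈ N ∩ U, ∀ q ∈ N ∩ U, Jn (O ∩ U) p q := by
  obtain ⟨N, h1, h2, h3, h4⟩ := three_local hS h hO
  obtain ⟨r, hrN, hrE⟩ := mem_closure_iff.mp hxE N h1 h2
  have hcl : ∀ z ∈ O \ X, z ∈ closure U → z ∈ U := by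
    intro z hz hzU
    by_contra hc
    exact hz.2 (hfr ⟨hzU, by rwa [hU.interior_eq]⟩)
  have hn : ∀ p ∈ U, ¬ Jn (O \ X) p r := fun p hp hj =>
    disjoint_left.mp hEU hrE (hj.mem_of_clopen hU hcl hp)
  refine ⟨N, h1, h2, h3, fun p hp q hq => ?_⟩
  have hX : ∀ p ∈ U, p ∉ X := fun p hp => disjoint_left.mp hUX hp
  rcases h4 p ⟨hp.1, hX p hp.2⟩ q ⟨hq.1, hX q hq.2⟩ r ⟨hrN, disjoint_left.mp hEX hrE⟩ with e | e | e
  · obtain ⟨M, m1, m2, m3, m4⟩ := e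
    refine ⟨M, m1, fun z hz => ⟨(m2 hz).1, ?_⟩, m3, m4⟩
    exact Jn.mem_of_clopen ⟨M, m1, m2, m3, hz⟩ hU hcl hp.2
  · exact absurd e (hn q hq.2)
  · exact absurd e (hn p hp.2)

/-! ### Arcs and Jordan curves -/

/-- `A` is an arc with end points `a` and `b`. -/
def IsArc (A : Set S) (a b : S) : Prop := ∃ f : ℝ → S, ContinuousOn f (Icc 0 1) ∧ InjOn f (Icc 0 1) ∧
  f '' Icc 0 1 = A ∧ f 0 = a ∧ f 1 = b

/-- `J` is a Jordan curve, parametrised by a periodic map. -/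
def IsJordan (J : Set S) : Prop := ∃ γ : ℝ → S, Continuous γ ∧ Function.Periodic γ 1 ∧
  InjOn γ (Ico 0 1) ∧ range γ = J

/-- `J` is the union of the two arcs `A₁`, `A₂` from `a` to `b`. -/
structure Halves (J A₁ A₂ : Set S) (a b : S) : Prop where
  arc₁ : IsArc A₁ a b
  arc₂ : IsArc A₂ a b
  inter : A₁ ∩ A₂ = {a, b}
  union : A₁ ∪ A₂ = J

lemma isArc_of {f : ℝ → S} {c d : ℝ} (h : c < d) (hf : ContinuousOn f (Icc c d)) (hi : InjOn f (Icc c d)) :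
    IsArc (f '' Icc c d) (f c) (f d) := by
  have hd : 0 < d - c := by linarith
  have him : (fun t => c + t * (d - c)) '' Icc (0 : ℝ) 1 = Icc c d := by
    ext t; constructor
    · rintro ⟨s, hs, rfl⟩; constructor
      · nlinarith [hs.1]
      · nlinarith [hs.2]
    · intro ht
      refine ⟨(t - c) / (d - c), ⟨div_nonneg (by linarith [ht.1]) hd.le, ?_⟩, ?_⟩
      · rw [div_le_one hd]; linarith [ht.2]
      · show c + (t - c) / (d - c) * (d - c) = t
        rw [div_mul_cancel₀ _ hd.ne']; ring
  have hm : MapsTo (fun t => c + t * (d - c)) (Icc (0 : ℝ) 1) (Icc c d) := by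
    rw [← him]; exact mapsTo_image _ _
  refine ⟨fun t => f (c + t * (d - c)), hf.comp (by fun_prop) hm, ?_, ?_, by simp, by simp⟩
  · intro s hs t ht e
    have := hi (hm hs) (hm ht) e
    have h2 : (s - t) * (d - c) = 0 := by linarith
    rcases mul_eq_zero.mp h2 with h3 | h3 <;> linarith
  · rw [← him, image_image]

lemma IsArc.symm {A : Set S} {a b : S} (h : IsArc A a b) : IsArc A b a := by
  obtain ⟨f, h1, h2, h3, h4, h5⟩ := h
  have hm : MapsTo (fun t : ℝ => 1 - t) (Icc 0 1) (Icc 0 1) := fun t ht =>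
    ⟨by linarith [ht.2], by linarith [ht.1]⟩
  refine ⟨fun t => f (1 - t), h1.comp (by fun_prop) hm, ?_, ?_, by simpa, by simpa⟩
  · intro s hs t ht e; have := h2 (hm hs) (hm ht) e; linarith
  · rw [← h3]; ext y; constructor
    · rintro ⟨t, ht, rfl⟩; exact ⟨_, hm ht, rfl⟩
    · rintro ⟨t, ht, rfl⟩; exact ⟨_, hm ht, by simp⟩

lemma IsArc.left {A : Set S} {a b : S} (h : IsArc A a b) : a ∈ A := by
  obtain ⟨f, h1, h2, rfl, rfl, rfl⟩ := h; exact ⟨0, by simp, rfl⟩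
lemma IsArc.right {A : Set S} {a b : S} (h : IsArc A a b) : b ∈ A := h.symm.left
lemma IsArc.ne {A : Set S} {a b : S} (h : IsArc A a b) : a ≠ b := by
  obtain ⟨f, h1, h2, rfl, rfl, rfl⟩ := h
  intro e; exact zero_ne_one (h2 (by simp) (by simp) e)
lemma IsArc.isCompact {A : Set S} {a b : S} (h : IsArc A a b) : IsCompact A := by
  obtain ⟨f, h1, h2, rfl, rfl, rfl⟩ := h; exact isCompact_Icc.image_of_continuousOn h1
lemma IsArc.isClosed [T2Space S] {A : Set S} {a b : S} (h : IsArc A a b) : IsClosed A := h.isCompact.isClosed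
lemma IsArc.isPreconnected {A : Set S} {a b : S} (h : IsArc A a b) : IsPreconnected A := by
  obtain ⟨f, h1, h2, rfl, rfl, rfl⟩ := h; exact isPreconnected_Icc.image f h1

lemma IsArc.image {T : Type*} [TopologicalSpace T] {A : Set S} {a b : S} (h : IsArc A a b) {g : S → T}
    (hg : ContinuousOn g A) (hi : InjOn g A) : IsArc (g '' A) (g a) (g b) := by
  obtain ⟨f, h1, h2, rfl, rfl, rfl⟩ := h
  exact ⟨fun t => g (f t), hg.comp h1 (mapsTo_image _ _), fun s hs t ht e =>
    h2 hs ht (hi ⟨s, hs, rfl⟩ ⟨t, ht, rfl⟩ e), (image_image _ _ _).symm, rfl, rfl⟩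

lemma inner_eq {f : ℝ → S} (hi : InjOn f (Icc 0 1)) :
    f '' Icc 0 1 \ {f 0, f 1} = f '' Ioo 0 1 := by
  ext y; constructor
  · rintro ⟨⟨t, ht, rfl⟩, h⟩
    simp only [mem_insert_iff, mem_singleton_iff, not_or] at h
    exact ⟨t, ⟨lt_of_le_of_ne ht.1 fun e => h.1 (by rw [← e]), lt_of_le_of_ne ht.2 fun e => h.2 (by rw [← e])⟩, rfl⟩
  · rintro ⟨t, ht, rfl⟩
    refine ⟨⟨t, ⟨ht.1.le, ht.2.le⟩, rfl⟩, ?_⟩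
    rintro (e | e)
    · have := hi ⟨ht.1.le, ht.2.le⟩ (by simp) e; linarith [ht.1]
    · have := hi ⟨ht.1.le, ht.2.le⟩ (by simp) e; linarith [ht.2]

lemma IsArc.inner_pre {A : Set S} {a b : S} (h : IsArc A a b) : IsPreconnected (A \ {a, b}) := by
  obtain ⟨f, h1, h2, rfl, rfl, rfl⟩ := h
  rw [inner_eq h2]; exact isPreconnected_Ioo.image f (h1.mono Ioo_subset_Icc_self)
lemma IsArc.inner_ne {A : Set S} {a b : S} (h : IsArc A a b) : (A \ {a, b}).Nonempty := by
  obtain ⟨f, h1, h2, rfl, rfl, rfl⟩ := h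
  rw [inner_eq h2]; exact ⟨f (1 / 2), 1 / 2, by constructor <;> norm_num, rfl⟩
lemma IsArc.sub_closure {A : Set S} {a b : S} (h : IsArc A a b) : A ⊆ closure (A \ {a, b}) := by
  obtain ⟨f, h1, h2, rfl, rfl, rfl⟩ := h
  rw [inner_eq h2]
  rintro _ ⟨t, ht, rfl⟩
  have := (h1 t ht).mono Ioo_subset_Icc_self
  exact this.mem_closure_image (by rw [closure_Ioo zero_ne_one]; exact ht)

lemma arcAt_of {f : ℝ → S} {c t d : ℝ} (h1 : c < t) (h2 : t < d) (hf : ContinuousOn f (Icc c d))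
    (hi : InjOn f (Icc c d)) {X : Set S} (hX : f '' Icc c d ⊆ X)
    (hX' : ∀ᶠ y in 𝓝 (f t), y ∈ X → y ∈ f '' Icc c d) : ArcAt X (f t) :=
  ⟨f, c, t, d, h1, h2, hf, hi, rfl, hX, hX'⟩

lemma IsArc.arcAt {A X : Set S} {a b z : S} (h : IsArc A a b) (hz : z ∈ A) (ha : z ≠ a) (hb : z ≠ b)
    (hX : A ⊆ X) (hX' : ∀ᶠ y in 𝓝 z, y ∈ X → y ∈ A) : ArcAt X z := by
  obtain ⟨f, h1, h2, rfl, rfl, rfl⟩ := h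
  obtain ⟨t, ht, rfl⟩ := hz
  exact arcAt_of (lt_of_le_of_ne ht.1 fun e => ha (by rw [← e])) (lt_of_le_of_ne ht.2 fun e => hb (by rw [← e]))
    h1 h2 hX hX'

lemma IsArc.endAt {A : Set S} {a b : S} (h : IsArc A a b) : EndAt A a := by
  obtain ⟨f, h1, h2, rfl, rfl, rfl⟩ := h
  exact ⟨f, 0, 1, zero_lt_one, h1, h2, rfl, Subset.rfl, .of_forall fun _ h => h⟩

/-- Decomposition of an arc at an interior point. -/
lemma IsArc.split {A : Set S} {a b z : S} (h : IsArc A a b) (hz : z ∈ A) (ha : z ≠ a) (hb : z ≠ b) :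
    ∃ A₁ A₂, IsArc A₁ a z ∧ IsArc A₂ z b ∧ A₁ ∪ A₂ = A ∧ A₁ ∩ A₂ = {z} := by
  obtain ⟨f, h1, h2, rfl, rfl, rfl⟩ := h
  obtain ⟨t, ht, rfl⟩ := hz
  have h0 : 0 < t := lt_of_le_of_ne ht.1 fun e => ha (by rw [← e])
  have h1' : t < 1 := lt_of_le_of_ne ht.2 fun e => hb (by rw [← e])
  have s1 : Icc 0 t ⊆ Icc 0 1 := Icc_subset_Icc le_rfl ht.2
  have s2 : Icc t 1 ⊆ Icc 0 1 := Icc_subset_Icc ht.1 le_rfl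
  refine ⟨f '' Icc 0 t, f '' Icc t 1, isArc_of h0 (h1.mono s1) (h2.mono s1),
    isArc_of h1' (h1.mono s2) (h2.mono s2), ?_, ?_⟩
  · rw [← image_union, Icc_union_Icc_eq_Icc h0.le h1'.le]
  · rw [← h2.image_inter s1 s2, Icc_inter_Icc_eq_singleton h0.le h1'.le, image_singleton]

/-- First hit: a subarc from `a` which meets the closed set `C` exactly at its end. -/
lemma IsArc.first_hit {A C : Set S} {a b : S} (h : IsArc A a b) (hC : IsClosed C) (ha : a ∉ C)
    (hAC : (A ∩ C).Nonempty) : ∃ A' c, IsArc A' a c ∧ A' ⊆ A ∧ A' ∩ C = {c} ∧ c ∈ C := by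
  obtain ⟨f, h1, h2, rfl, rfl, rfl⟩ := h
  obtain ⟨_, ⟨t₁, ht₁, rfl⟩, hc₁⟩ := hAC
  have hcl : IsCompact (Icc 0 1 ∩ f ⁻¹' C) :=
    isCompact_Icc.of_isClosed_subset (h1.preimage_isClosed_of_isClosed isClosed_Icc hC) inter_subset_left
  obtain ⟨t, ⟨ht, htC⟩, hmin⟩ := hcl.exists_isLeast ⟨t₁, ht₁, hc₁⟩
  have h0 : 0 < t := lt_of_le_of_ne ht.1 (by rintro rfl; exact ha htC)
  have s1 : Icc 0 t ⊆ Icc 0 1 := Icc_subset_Icc le_rfl ht.2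
  refine ⟨f '' Icc 0 t, f t, isArc_of h0 (h1.mono s1) (h2.mono s1), image_mono s1, ?_, htC⟩
  ext y; constructor
  · rintro ⟨⟨s, hs, rfl⟩, hsC⟩
    rw [le_antisymm hs.2 (hmin ⟨s1 hs, hsC⟩)]; rfl
  · rintro rfl; exact ⟨⟨t, ⟨h0.le, le_rfl⟩, rfl⟩, htC⟩

lemma IsArc.sub_end {A : Set S} {a b z : S} (h : IsArc A a b) (hz : z ∈ A) (ha : z ≠ a) :
    ∃ A', IsArc A' a z ∧ A' ⊆ A := by
  by_cases hb : z = b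
  · subst hb; exact ⟨A, h, Subset.rfl⟩
  · obtain ⟨A₁, A₂, h1, h2, h3, h4⟩ := h.split hz ha hb
    exact ⟨A₁, h1, h3 ▸ subset_union_left⟩

/-- Concatenation of two paths. -/
lemma glue_path {f g : ℝ → S} (hf : ContinuousOn f (Icc 0 1)) (hg : ContinuousOn g (Icc 0 1))
    (hfi : InjOn f (Icc 0 1)) (hgi : InjOn g (Icc 0 1)) (h : f 1 = g 0) :
    ∃ k : ℝ → S, ContinuousOn k (Icc 0 1) ∧ k 0 = f 0 ∧ k 1 = g 1 ∧ k (1 / 2) = f 1 ∧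
      k '' Icc 0 (1 / 2) = f '' Icc 0 1 ∧ k '' Icc (1 / 2) 1 = g '' Icc 0 1 ∧
      InjOn k (Icc 0 (1 / 2)) ∧ InjOn k (Icc (1 / 2) 1) := by
  classical
  let k : ℝ → S := fun t => if t ≤ 1 / 2 then f (2 * t) else g (2 * t - 1)
  have k1 : ∀ t ∈ Icc (0 : ℝ) (1 / 2), k t = f (2 * t) := fun t ht => if_pos ht.2
  have k2 : ∀ t ∈ Icc (1 / 2 : ℝ) 1, k t = g (2 * t - 1) := by
    intro t ht
    by_cases h' : t ≤ 1 / 2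
    · have : t = 1 / 2 := le_antisymm h' ht.1
      subst this; rw [k1 _ ⟨by norm_num, le_rfl⟩]; norm_num [h]
    · exact if_neg h'
  have m1 : MapsTo (fun t : ℝ => 2 * t) (Icc 0 (1 / 2)) (Icc 0 1) := fun t ht =>
    ⟨by linarith [ht.1], by linarith [ht.2]⟩
  have m2 : MapsTo (fun t : ℝ => 2 * t - 1) (Icc (1 / 2) 1) (Icc 0 1) := fun t ht =>
    ⟨by linarith [ht.1], by linarith [ht.2]⟩
  refine ⟨k, ?_, ?_, ?_, ?_, ?_, ?_, ?_, ?_⟩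
  · rw [← Icc_union_Icc_eq_Icc (show (0 : ℝ) ≤ 1 / 2 by norm_num) (by norm_num)]
    exact ContinuousOn.union_of_isClosed ((hf.comp (by fun_prop) m1).congr k1)
      ((hg.comp (by fun_prop) m2).congr k2) isClosed_Icc isClosed_Icc
  · rw [k1 0 (by constructor <;> norm_num)]; norm_num
  · rw [k2 1 (by constructor <;> norm_num)]; norm_num
  · rw [k1 (1 / 2) (by constructor <;> norm_num)]; norm_num
  · rw [image_congr k1]; ext y; constructor
    · rintro ⟨t, ht, rfl⟩; exact ⟨_, m1 ht, rfl⟩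
    · rintro ⟨t, ht, rfl⟩
      exact ⟨t / 2, ⟨by linarith [ht.1], by linarith [ht.2]⟩, congrArg f (by ring)⟩
  · rw [image_congr k2]; ext y; constructor
    · rintro ⟨t, ht, rfl⟩; exact ⟨_, m2 ht, rfl⟩
    · rintro ⟨t, ht, rfl⟩
      exact ⟨(t + 1) / 2, ⟨by linarith [ht.1], by linarith [ht.2]⟩, congrArg g (by ring)⟩
  · intro s hs t ht e; rw [k1 s hs, k1 t ht] at e; linarith [hfi (m1 hs) (m1 ht) e]
  · intro s hs t ht e; rw [k2 s hs, k2 t ht] at e; linarith [hgi (m2 hs) (m2 ht) e]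

lemma IsArc.concat {A B : Set S} {a b c : S} (hA : IsArc A a b) (hB : IsArc B b c) (h : A ∩ B = {b}) :
    IsArc (A ∪ B) a c := by
  obtain ⟨f, f1, f2, rfl, rfl, rfl⟩ := hA
  obtain ⟨g, g1, g2, rfl, g4, rfl⟩ := hB
  obtain ⟨k, k1, k2, k3, k4, k5, k6, k7, k8⟩ := glue_path f1 g1 f2 g2 g4.symm
  have hun : Icc (0 : ℝ) (1 / 2) ∪ Icc (1 / 2) 1 = Icc 0 1 :=
    Icc_union_Icc_eq_Icc (by norm_num) (by norm_num)
  refine ⟨k, k1, ?_, ?_, k2, k3⟩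
  · have cross : ∀ s ∈ Icc (0 : ℝ) (1 / 2), ∀ t ∈ Icc (1 / 2 : ℝ) 1, k s = k t → s = t := by
      intro s hs t ht e
      have h1 : k s ∈ ({f 1} : Set S) := by
        rw [← h, ← k5, ← k6]; exact ⟨⟨s, hs, rfl⟩, e ▸ ⟨t, ht, rfl⟩⟩
      have e1 : k s = k (1 / 2) := by rw [k4]; exact h1
      rw [k7 hs ⟨by norm_num, le_rfl⟩ e1, ← k8 ht ⟨le_rfl, by norm_num⟩ (e ▸ e1)]
    rw [← hun]
    rintro s (hs | hs) t (ht | ht) e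
    · exact k7 hs ht e
    · exact cross s hs t ht e
    · exact (cross t ht s hs e.symm).symm
    · exact k8 hs ht e
  · rw [← k5, ← k6, ← image_union, hun]

lemma Halves.isJordan {J A B : Set S} {a b : S} (hJ : Halves J A B a b) : IsJordan J := by
  obtain ⟨hA, hB, h, hU⟩ := hJ
  have hB' := hB.symm
  obtain ⟨f, f1, f2, rfl, rfl, rfl⟩ := hA
  obtain ⟨g, g1, g2, rfl, g4, g5⟩ := hB'
  obtain ⟨k, k1, k2, k3, k4, k5, k6, k7, k8⟩ := glue_path f1 g1 f2 g2 g4.symm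
  have hun : Icc (0 : ℝ) (1 / 2) ∪ Icc (1 / 2) 1 = Icc 0 1 :=
    Icc_union_Icc_eq_Icc (by norm_num) (by norm_num)
  have k01 : k 0 = k 1 := by rw [k2, k3, g5]
  refine ⟨k ∘ Int.fract, k1.comp_fract'' k01, ?_, ?_, ?_⟩
  · intro t; simp
  · have inj : InjOn k (Ico 0 1) := by
      have cross : ∀ s ∈ Icc (0 : ℝ) (1 / 2), ∀ t ∈ Icc (1 / 2 : ℝ) 1, t < 1 → k s = k t → s = t := by
        intro s hs t ht ht1 e
        have h1 : k s ∈ ({f 0, f 1} : Set S) := by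
          rw [← h, ← k5, ← k6]; exact ⟨⟨s, hs, rfl⟩, e ▸ ⟨t, ht, rfl⟩⟩
        rcases h1 with h1 | h1
        · have := k8 ht ⟨by norm_num, le_rfl⟩ (by rw [← e, h1, k3, g5]); linarith
        · have e1 : k s = k (1 / 2) := by rw [k4]; exact h1
          rw [k7 hs ⟨by norm_num, le_rfl⟩ e1, ← k8 ht ⟨le_rfl, by norm_num⟩ (e ▸ e1)]
      intro s hs t ht e
      rcases le_total s (1 / 2) with h3 | h3 <;> rcases le_total t (1 / 2) with h4 | h4
      · exact k7 ⟨hs.1, h3⟩ ⟨ht.1, h4⟩ e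
      · exact cross s ⟨hs.1, h3⟩ t ⟨h4, ht.2.le⟩ ht.2 e
      · exact (cross t ⟨ht.1, h4⟩ s ⟨h3, hs.2.le⟩ hs.2 e.symm).symm
      · exact k8 ⟨h3, hs.2.le⟩ ⟨h4, ht.2.le⟩ e
    intro s hs t ht e
    simp only [Function.comp_apply, Int.fract_eq_self.mpr hs, Int.fract_eq_self.mpr ht] at e
    exact inj hs ht e
  · rw [← hU, ← k5, ← k6, ← image_union, hun]
    ext y; constructor
    · rintro ⟨t, rfl⟩; exact ⟨_, ⟨Int.fract_nonneg t, (Int.fract_lt_one t).le⟩, rfl⟩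
    · rintro ⟨t, ht, rfl⟩
      rcases eq_or_lt_of_le ht.2 with rfl | h1
      · exact ⟨0, by simp [k01]⟩
      · exact ⟨t, by simp [Int.fract_eq_self.mpr ⟨ht.1, h1⟩]⟩

lemma Halves.symm {J A B : Set S} {a b : S} (h : Halves J A B a b) : Halves J B A a b :=
  ⟨h.arc₂, h.arc₁, by rw [inter_comm, h.inter], by rw [union_comm, h.union]⟩
lemma Halves.flip {J A B : Set S} {a b : S} (h : Halves J A B a b) : Halves J A B b a :=
  ⟨h.arc₁.symm, h.arc₂.symm, by rw [h.inter, pair_comm], h.union⟩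

lemma per_eq {γ : ℝ → S} (hp : Function.Periodic γ 1) (hi : InjOn γ (Ico 0 1))
    {s t : ℝ} (h : γ s = γ t) : ∃ n : ℤ, s = t + n := by
  have h1 : ∀ x, γ x = γ (Int.fract x) := fun x => by
    have := hp.sub_int_mul_eq (x := x) ⌊x⌋
    rw [mul_one] at this; exact this.symm
  have h2 : Int.fract s = Int.fract t := hi ⟨Int.fract_nonneg s, Int.fract_lt_one s⟩
    ⟨Int.fract_nonneg t, Int.fract_lt_one t⟩ (by rw [← h1, ← h1, h])
  refine ⟨⌊s⌋ - ⌊t⌋, ?_⟩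
  have h3 := Int.floor_add_fract s; have h4 := Int.floor_add_fract t
  push_cast; linarith

lemma per_inj {γ : ℝ → S} (hp : Function.Periodic γ 1) (hi : InjOn γ (Ico 0 1))
    {s t : ℝ} (h : γ s = γ t) (h1 : s < t + 1) (h2 : t < s + 1) : s = t := by
  obtain ⟨n, hn⟩ := per_eq hp hi h
  have h3 : (n : ℝ) < 1 := by linarith
  have h4 : (-1 : ℝ) < n := by linarith
  have h5 : n < 1 := by exact_mod_cast h3
  have h6 : -1 < n := by exact_mod_cast h4
  have : n = 0 := by omega
  rw [hn, this]; simp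

lemma per_injOn {γ : ℝ → S} (hp : Function.Periodic γ 1) (hi : InjOn γ (Ico 0 1))
    {s t : ℝ} (h : t < s + 1) : InjOn γ (Icc s t) := fun x hx y hy e =>
  per_inj hp hi e (by linarith [hx.1, hx.2, hy.1, hy.2]) (by linarith [hx.1, hx.2, hy.1, hy.2])

lemma per_halves {γ : ℝ → S} (hp : Function.Periodic γ 1) (hi : InjOn γ (Ico 0 1))
    (hc : Continuous γ) {s t : ℝ} (h1 : s < t) (h2 : t < s + 1) :
    Halves (range γ) (γ '' Icc s t) (γ '' Icc t (s + 1)) (γ s) (γ t) := by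
  have hs : γ (s + 1) = γ s := hp s
  refine ⟨isArc_of h1 hc.continuousOn (per_injOn hp hi h2), ?_, ?_, ?_⟩
  · have := (isArc_of h2 hc.continuousOn (per_injOn hp hi (by linarith))).symm
    rwa [hs] at this
  · ext y; constructor
    · rintro ⟨⟨x, hx, rfl⟩, z, hz, e⟩
      obtain ⟨n, hn⟩ := per_eq hp hi e
      have h3 : -1 < (n : ℝ) := by linarith [hx.1, hx.2, hz.1, hz.2]
      have h4 : (n : ℝ) ≤ 1 := by linarith [hx.1, hx.2, hz.1, hz.2]
      have h5 : n ≤ 1 := by exact_mod_cast h4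
      have h6 : -1 < n := by exact_mod_cast h3
      obtain rfl | rfl : n = 0 ∨ n = 1 := by omega
      · right
        simp only [Int.cast_zero, add_zero] at hn
        rw [show x = t by linarith [hx.2, hz.1]]; rfl
      · left
        simp only [Int.cast_one] at hn
        rw [show x = s by linarith [hx.1, hz.2]]
    · rintro (rfl | rfl)
      · exact ⟨⟨s, ⟨le_rfl, h1.le⟩, rfl⟩, s + 1, ⟨h2.le, le_rfl⟩, hs⟩
      · exact ⟨⟨t, ⟨h1.le, le_rfl⟩, rfl⟩, t, ⟨le_rfl, h2.le⟩, rfl⟩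
  · rw [← image_union, Icc_union_Icc_eq_Icc h1.le h2.le, hp.image_Icc zero_lt_one]

lemma IsJordan.isCompact {J : Set S} (h : IsJordan J) : IsCompact J := by
  obtain ⟨γ, hc, hp, hi, rfl⟩ := h
  rw [← hp.image_Icc zero_lt_one 0]; exact isCompact_Icc.image hc

lemma IsJordan.nonempty {J : Set S} (h : IsJordan J) : J.Nonempty := by
  obtain ⟨γ, hc, hp, hi, rfl⟩ := h; exact ⟨γ 0, 0, rfl⟩

lemma IsJordan.halves {J : Set S} (h : IsJordan J) {a b : S} (ha : a ∈ J) (hb : b ∈ J) (hab : a ≠ b) :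
    ∃ A₁ A₂, Halves J A₁ A₂ a b := by
  obtain ⟨γ, hc, hp, hi, rfl⟩ := h
  obtain ⟨s, rfl⟩ := ha
  obtain ⟨t', rfl⟩ := hb
  obtain ⟨t, ht, e⟩ := hp.exists_mem_Ico zero_lt_one t' s
  rw [e] at hab ⊢
  exact ⟨_, _, per_halves hp hi hc (lt_of_le_of_ne ht.1 (by rintro rfl; exact hab rfl)) ht.2⟩

/-- Short subarcs of a Jordan curve. -/
lemma IsJordan.local [T2Space S] {J : Set S} (h : IsJordan J) {y : S} (hy : y ∈ J) {N : Set S} (hN : N ∈ 𝓝 y) :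
    ∃ N', IsOpen N' ∧ y ∈ N' ∧ N' ⊆ N ∧ ∃ (f : ℝ → S) (c t d : ℝ), c < t ∧ t < d ∧ Continuous f ∧
      InjOn f (Icc c d) ∧ f t = y ∧ f '' Icc c d ⊆ J ∧ f '' Icc c d ⊆ N ∧ J ∩ N' ⊆ f '' Icc c d ∧
      ∀ p ∈ J ∩ N', ∀ q ∈ J ∩ N', p ≠ q → ∃ A₁ A₂, Halves J A₁ A₂ p q ∧ A₁ ⊆ N := by
  obtain ⟨γ, hc, hp, hi, rfl⟩ := h
  obtain ⟨t, rfl⟩ := hy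
  obtain ⟨δ', hδ', hball⟩ := Metric.mem_nhds_iff.mp (hc.continuousAt hN)
  set δ := min (δ' / 2) (1 / 4)
  have hδ : 0 < δ := lt_min (by linarith) (by norm_num)
  have hδ1 : δ ≤ 1 / 4 := min_le_right _ _
  have hδ2 : δ ≤ δ' / 2 := min_le_left _ _
  have hin : γ '' Icc (t - δ) (t + δ) ⊆ N := by
    rintro _ ⟨s, hs, rfl⟩
    exact hball (by rw [Real.ball_eq_Ioo]; constructor <;> linarith [hs.1, hs.2])
  have hcl : IsClosed (γ '' Icc (t + δ) (t - δ + 1)) := (isCompact_Icc.image hc).isClosed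
  have hyn : γ t ∉ γ '' Icc (t + δ) (t - δ + 1) := by
    rintro ⟨s, hs, e⟩
    have := per_inj hp hi e (by linarith [hs.1, hs.2]) (by linarith [hs.1, hs.2])
    linarith [hs.1]
  have hout : range γ ∩ (interior N ∩ (γ '' Icc (t + δ) (t - δ + 1))ᶜ) ⊆ γ '' Icc (t - δ) (t + δ) := by
    rintro _ ⟨⟨s, rfl⟩, -, hs⟩
    obtain ⟨s', hs', e⟩ := hp.exists_mem_Ico zero_lt_one s (t - δ)
    rw [e] at hs ⊢
    refine ⟨s', ⟨hs'.1, ?_⟩, rfl⟩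
    by_contra! hcon
    exact hs ⟨s', ⟨hcon.le, hs'.2.le⟩, rfl⟩
  refine ⟨interior N ∩ (γ '' Icc (t + δ) (t - δ + 1))ᶜ, isOpen_interior.inter hcl.isOpen_compl,
    ⟨mem_interior_iff_mem_nhds.mpr hN, hyn⟩, inter_subset_left.trans interior_subset, γ, t - δ, t, t + δ,
    by linarith, by linarith, hc, per_injOn hp hi (by linarith), rfl, image_subset_range _ _, hin, hout, ?_⟩
  intro p hp1 q hq1 hpq
  obtain ⟨s, hs, rfl⟩ := hout hp1
  obtain ⟨s', hs', rfl⟩ := hout hq1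
  rcases lt_trichotomy s s' with h | h | h
  · exact ⟨_, _, per_halves hp hi hc h (by linarith [hs.1, hs'.2]),
      (image_mono (Icc_subset_Icc hs.1 hs'.2)).trans hin⟩
  · exact absurd (by rw [h]) hpq
  · exact ⟨_, _, (per_halves hp hi hc h (by linarith [hs'.1, hs.2])).flip,
      (image_mono (Icc_subset_Icc hs'.1 hs.2)).trans hin⟩

lemma IsJordan.arcAt [T2Space S] {J X : Set S} (h : IsJordan J) {y : S} (hy : y ∈ J) (hX : J ⊆ X)
    (hX' : ∀ᶠ z in 𝓝 y, z ∈ X → z ∈ J) : ArcAt X y := by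
  obtain ⟨N', h1, h2, h3, f, c, t, d, h4, h5, h6, h7, rfl, h9, h10, h11, -⟩ := h.local hy univ_mem
  refine ⟨f, c, t, d, h4, h5, h6.continuousOn, h7, rfl, h9.trans hX, ?_⟩
  filter_upwards [hX', h1.mem_nhds h2] with z hz hz2 hzX
  exact h11 ⟨hz hzX, hz2⟩

/-! ### Regular regions, accessibility and crosscuts -/

/-- `p` and `q` are equal or joined by an arc inside `A`. -/
def AJ (A : Set S) (p q : S) : Prop := (p = q ∧ p ∈ A) ∨ ∃ B ⊆ A, IsArc B p q

lemma AJ.symm {A : Set S} {p q : S} (h : AJ A p q) : AJ A q p := by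
  rcases h with ⟨rfl, h⟩ | ⟨B, hB, h⟩
  · exact Or.inl ⟨rfl, h⟩
  · exact Or.inr ⟨B, hB, h.symm⟩

lemma AJ.mono {A B : Set S} {p q : S} (h : AJ A p q) (hAB : A ⊆ B) : AJ B p q := by
  rcases h with ⟨rfl, h⟩ | ⟨C, hC, h⟩
  · exact Or.inl ⟨rfl, hAB h⟩
  · exact Or.inr ⟨C, hC.trans hAB, h⟩

lemma IsArc.aj {A B : Set S} {a b z : S} (h : IsArc B a b) (hz : z ∈ B) (hA : B ⊆ A) : AJ A z b := by
  by_cases hzb : z = b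
  · exact Or.inl ⟨hzb, hA hz⟩
  · obtain ⟨A', h1, h2⟩ := h.symm.sub_end hz hzb
    exact Or.inr ⟨A', h2.trans hA, h1.symm⟩

lemma AJ.trans [T2Space S] {A : Set S} {p q r : S} (h : AJ A p q) (h' : AJ A q r) : AJ A p r := by
  rcases h with ⟨rfl, -⟩ | ⟨B, hB, h⟩
  · exact h'
  rcases h' with ⟨rfl, -⟩ | ⟨B', hB', h'⟩
  · exact Or.inr ⟨B, hB, h⟩
  by_cases hp : p ∈ B'
  · exact h'.aj hp hB'
  obtain ⟨A', c, h1, h2, h3, h4⟩ := h.first_hit h'.isClosed hp ⟨q, h.right, h'.left⟩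
  by_cases hc : c = r
  · subst hc; exact Or.inr ⟨A', h2.trans hB, h1⟩
  obtain ⟨B'', h5, h6⟩ := h'.symm.sub_end h4 hc
  refine Or.inr ⟨A' ∪ B'', union_subset (h2.trans hB) (h6.trans hB'), h1.concat h5.symm ?_⟩
  apply Subset.antisymm
  · rw [← h3]; exact inter_subset_inter_right _ h6
  · rintro _ rfl; exact ⟨h1.right, h5.right⟩

lemma seg_arc {p q : ℂ} (h : p ≠ q) : IsArc (segment ℝ p q) p q := by
  have := isArc_of (f := fun t : ℝ => AffineMap.lineMap p q t) (c := 0) (d := 1) zero_lt_one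
    (by fun_prop) ((AffineMap.lineMap_injective ℝ h).injOn)
  simpa [segment_eq_image_lineMap] using this

/-- Open connected subsets of a surface are arc-connected. -/
lemma open_aj [T2Space S] (hS : Surf S) {U : Set S} (hU : IsOpen U) {p q : S} (h : Jn U p q) :
    AJ U p q := by
  have key : ∀ z ∈ U, ∃ O ∈ 𝓝 z, ∀ y ∈ O, AJ U z y := by
    intro z hz
    obtain ⟨φ, hφ, rfl⟩ := hS.chart z
    have : φ ⁻¹' U ∈ 𝓝 (0 : ℂ) := hφ.continuous.continuousAt (hU.mem_nhds hz)
    obtain ⟨r, hr, hr'⟩ := Metric.mem_nhds_iff.1 this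
    refine ⟨φ '' ball 0 r, hφ.isOpenMap.image_mem_nhds (ball_mem_nhds _ hr), ?_⟩
    rintro _ ⟨y, hy, rfl⟩
    by_cases hy0 : 0 = y
    · subst hy0; exact Or.inl ⟨rfl, hz⟩
    · refine Or.inr ⟨φ '' segment ℝ 0 y, ?_, (seg_arc hy0).image hφ.continuous.continuousOn
        hφ.injective.injOn⟩
      rintro _ ⟨v, hv, rfl⟩
      exact hr' ((convex_ball (0:ℂ) r).segment_subset (mem_ball_self hr) hy hv)
  have hU' : IsOpen {y | y ∈ U ∧ AJ U p y} := by
    rw [isOpen_iff_mem_nhds]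
    rintro y ⟨hy, hpy⟩
    obtain ⟨O, hO, hO'⟩ := key y hy
    filter_upwards [hO, hU.mem_nhds hy] with v hv hv'
    exact ⟨hv', hpy.trans (hO' v hv)⟩
  refine (h.mem_of_clopen hU' ?_ ⟨h.left, Or.inl ⟨rfl, h.left⟩⟩).2
  intro z hz hzc
  obtain ⟨O, hO, hO'⟩ := key z hz
  obtain ⟨y, hy, hy'⟩ := mem_closure_iff_nhds.1 hzc O hO
  exact ⟨hz, hy'.2.trans (hO' y hy).symm⟩

/-- An infinite chain of arcs converging to a point forms an arc. -/
lemma ray_arc {C : ℕ → Set S} {x : ℕ → S} {a : S} (hC : ∀ k, IsArc (C k) (x k) (x (k + 1)))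
    (h1 : ∀ k, C k ∩ C (k + 1) ⊆ {x (k + 1)}) (h2 : ∀ j k, j + 2 ≤ k → Disjoint (C j) (C k))
    (ha : ∀ k, a ∉ C k) (hlim : ∀ O ∈ 𝓝 a, ∀ᶠ k in atTop, C k ⊆ O) :
    IsArc ({a} ∪ ⋃ k, C k) a (x 0) := by
  choose c hc hi him h0 he using hC
  set f : ℝ → S := fun t => c ⌊t⌋₊ (t - ⌊t⌋₊) with hf
  have fl : ∀ t : ℝ, 0 ≤ t → t - ⌊t⌋₊ ∈ Ico (0:ℝ) 1 := fun t ht =>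
    ⟨sub_nonneg.2 (Nat.floor_le ht), by linarith [Nat.lt_floor_add_one t]⟩
  have feq : ∀ n : ℕ, EqOn f (fun t => c n (t - n)) (Icc n (n + 1)) := by
    intro n t ht
    rcases ht.2.lt_or_eq with h | h
    · have : ⌊t⌋₊ = n := (Nat.floor_eq_iff (le_trans (Nat.cast_nonneg n) ht.1)).2 ⟨ht.1, h⟩
      simp only [hf, this]
    · have : ⌊t⌋₊ = n + 1 := by rw [h]; exact_mod_cast Nat.floor_natCast (n + 1)
      change c ⌊t⌋₊ (t - ⌊t⌋₊) = c n (t - n)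
      rw [this, h]
      push_cast
      rw [sub_self, h0, add_sub_cancel_left, he]
  have fc : ∀ n : ℕ, ContinuousOn f (Icc 0 n) := by
    intro n
    induction n with
    | zero => simp
    | succ n ih =>
      have e : Icc (0:ℝ) (n + 1 : ℕ) = Icc 0 (n:ℝ) ∪ Icc n (n + 1) := by
        push_cast; rw [Icc_union_Icc_eq_Icc (Nat.cast_nonneg n) (by linarith)]
      rw [e]
      refine ih.union_of_isClosed ?_ isClosed_Icc isClosed_Icc
      refine ContinuousOn.congr ?_ (feq n)
      refine (hc n).comp (by fun_prop) ?_
      rintro t ⟨ht, ht'⟩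
      exact ⟨by linarith, by linarith⟩
  have fc' : ContinuousOn f (Ici 0) := by
    intro t ht
    obtain ⟨n, hn⟩ := exists_nat_gt t
    refine ((fc n) t ⟨ht, hn.le⟩).mono_of_mem_nhdsWithin ?_
    filter_upwards [self_mem_nhdsWithin, mem_nhdsWithin_of_mem_nhds (Iio_mem_nhds hn)] with y hy hy'
    exact ⟨hy, le_of_lt hy'⟩
  have fm : ∀ t : ℝ, 0 ≤ t → f t ∈ C ⌊t⌋₊ := fun t ht => by
    rw [← him]; exact ⟨_, Ico_subset_Icc_self (fl t ht), rfl⟩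
  have finj : InjOn f (Ici 0) := by
    have aux : ∀ s t : ℝ, 0 ≤ s → s ≤ t → f s = f t → s = t := by
      intro s t hs hst h
      have ht := hs.trans hst
      rcases (Nat.floor_mono hst).eq_or_lt with hl | hl
      · have h : c ⌊s⌋₊ (s - ⌊s⌋₊) = c ⌊t⌋₊ (t - ⌊t⌋₊) := h
        rw [← hl] at h
        have ht' := fl t ht
        rw [← hl] at ht'
        have := hi ⌊s⌋₊ (Ico_subset_Icc_self (fl s hs)) (Ico_subset_Icc_self ht') h
        linarith
      rcases Nat.lt_iff_add_one_le.1 hl |>.eq_or_lt with hl | hl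
      · have e : f s = x (⌊s⌋₊ + 1) := h1 ⌊s⌋₊ ⟨fm s hs, by rw [hl, h]; exact fm t ht⟩
        rw [← he] at e
        have := hi _ (Ico_subset_Icc_self (fl s hs)) (right_mem_Icc.2 zero_le_one) e
        exact absurd this (fl s hs).2.ne
      · exact absurd (fm t ht) (by rw [← h]; exact (h2 _ _ hl).notMem_of_mem_left (fm s hs))
    intro s hs t ht h
    rcases le_total s t with hst | hst
    · exact aux s t hs hst h
    · exact (aux t s ht hst h.symm).symm
  have fim : f '' Ici 0 = ⋃ k, C k := by
    apply Subset.antisymm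
    · rintro _ ⟨t, ht, rfl⟩; exact mem_iUnion.2 ⟨_, fm t ht⟩
    · intro y hy
      obtain ⟨k, hk⟩ := mem_iUnion.1 hy
      rw [← him k] at hk
      obtain ⟨t, ht, rfl⟩ := hk
      have hk0 : (0:ℝ) ≤ k := Nat.cast_nonneg k
      refine ⟨k + t, add_nonneg hk0 ht.1, ?_⟩
      rw [feq k ⟨by linarith [ht.1], by linarith [ht.2]⟩]
      simp
  have bnd : ∀ s : ℝ, 0 < s → s ≤ 1 → 0 ≤ 1 / s - 1 := fun s h h' => by
    rw [sub_nonneg, le_div_iff₀ h]; linarith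
  set k : ℝ → S := fun s => if s ≤ 0 then a else f (1 / s - 1) with hk
  have k0 : k 0 = a := by simp [hk]
  have k1 : k 1 = x 0 := by simp [hk, hf, h0]
  have kpos : ∀ s : ℝ, 0 < s → k s = f (1 / s - 1) := fun s hs => if_neg (not_le.2 hs)
  refine ⟨k, ?_, ?_, ?_, k0, k1⟩
  · intro s hs
    rcases hs.1.eq_or_lt with rfl | h
    · intro O hO
      rw [k0] at hO
      obtain ⟨n, hn⟩ := eventually_atTop.1 (hlim O hO)
      have : Iio (1 / ((n : ℝ) + 1)) ∈ 𝓝 (0:ℝ) := Iio_mem_nhds (by positivity)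
      rw [Filter.mem_map]
      filter_upwards [self_mem_nhdsWithin, mem_nhdsWithin_of_mem_nhds this] with s hs hs'
      rcases hs.1.eq_or_lt with rfl | h
      · rw [mem_preimage, k0]; exact mem_of_mem_nhds hO
      · rw [mem_preimage, kpos s h]
        refine hn _ ?_ (fm _ (bnd s h hs.2))
        rw [Nat.le_floor_iff (bnd s h hs.2)]
        have : (n:ℝ) + 1 ≤ 1 / s := by
          rw [le_div_iff₀ h, mul_comm]; exact ((lt_div_iff₀ (by positivity)).1 hs').le
        linarith
    · have : ContinuousOn (fun s : ℝ => f (1 / s - 1)) (Ioc 0 1) := by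
        refine fc'.comp ?_ (fun s hs => bnd s hs.1 hs.2)
        refine ContinuousOn.sub (continuousOn_const.div continuousOn_id fun s hs => hs.1.ne') continuousOn_const
      have h' : ContinuousOn k (Ioc 0 1) := this.congr fun s hs => kpos s hs.1
      refine (h' s ⟨h, hs.2⟩).mono_of_mem_nhdsWithin ?_
      filter_upwards [self_mem_nhdsWithin, mem_nhdsWithin_of_mem_nhds (Ioi_mem_nhds h)] with y hy hy'
      exact ⟨hy', hy.2⟩
  · intro s hs t ht h
    have aux : ∀ t : ℝ, 0 < t → t ≤ 1 → k t ≠ a := fun t ht ht' => by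
      rw [kpos t ht]; intro h; exact ha _ (h ▸ fm _ (bnd t ht ht'))
    rcases hs.1.eq_or_lt with rfl | hs0 <;> rcases ht.1.eq_or_lt with rfl | ht0
    · rfl
    · rw [k0] at h; exact absurd h.symm (aux t ht0 ht.2)
    · rw [k0] at h; exact absurd h (aux s hs0 hs.2)
    · rw [kpos s hs0, kpos t ht0] at h
      have := finj (bnd s hs0 hs.2) (bnd t ht0 ht.2) h
      have e : 1 / s = 1 / t := by linarith
      simpa using e
  · rw [← fim]
    apply Subset.antisymm
    · rintro _ ⟨s, hs, rfl⟩
      rcases hs.1.eq_or_lt with rfl | hs0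
      · left; exact k0
      · right; rw [kpos s hs0]; exact ⟨_, bnd s hs0 hs.2, rfl⟩
    · rintro _ (rfl | ⟨t, ht, rfl⟩)
      · exact ⟨0, by simp, k0⟩
      · have ht : (0:ℝ) ≤ t := ht
        refine ⟨1 / (t + 1), ⟨by positivity, ?_⟩, ?_⟩
        · rw [div_le_one (by linarith)]; linarith
        · rw [kpos _ (by positivity)]; simp

/-- An open connected set `U` whose frontier `X` is locally an arc, with the exterior of `U`
adherent to all of `X`. -/
structure Reg (U X : Set S) : Prop where
  op : IsOpen U
  pre : IsPreconnected U
  fr : frontier U = X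
  arc : ∀ x ∈ X, ArcAt X x
  ext : X ⊆ closure (closure U)ᶜ

lemma Reg.disj {U X : Set S} (h : Reg U X) : Disjoint U X := by
  rw [← h.fr, disjoint_left]; intro x hx hx'
  rw [h.op.frontier_eq] at hx'; exact hx'.2 hx

lemma Reg.sub {U X : Set S} (h : Reg U X) : X ⊆ closure U := h.fr ▸ frontier_subset_closure

lemma Reg.lc [T2Space S] (hS : Surf S) {U X : Set S} (h : Reg U X) {x : S} (hx : x ∈ X) {O : Set S}
    (hO : O ∈ 𝓝 x) : ∃ N, IsOpen N ∧ x ∈ N ∧ N ⊆ O ∧ ∀ p ∈ N ∩ U, ∀ q ∈ N ∩ U, Jn (O ∩ U) p q :=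
  lc_local hS (h.arc x hx) h.op h.fr.subset h.disj (h.ext hx)
    (disjoint_left.2 fun _ hy hy' => hy (subset_closure hy'))
    (disjoint_left.2 fun _ hy hy' => hy (h.sub hy')) hO

/-- Every boundary point of a regular region is accessible by an arc. -/
lemma Reg.access [T2Space S] [FirstCountableTopology S] (hS : Surf S) {U X : Set S} (h : Reg U X)
    {a : S} (ha : a ∈ X) {q : S} (hq : q ∈ U) : AJ (insert a U) a q := by
  have haU : a ∉ U := fun h' => h.disj.notMem_of_mem_left h' ha
  have lc : ∀ O ∈ 𝓝 a, ∃ N, IsOpen N ∧ a ∈ N ∧ N ⊆ interior O ∧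
      ∀ p ∈ N ∩ U, ∀ q ∈ N ∩ U, Jn (interior O ∩ U) p q := fun O hO =>
    h.lc hS ha (interior_mem_nhds.2 hO)
  choose! N hN hN' hNO hNJ using lc
  have dense : ∀ O ∈ 𝓝 a, ∃ p, p ∈ O ∩ U := fun O hO => mem_closure_iff_nhds.1 (h.sub ha) O hO
  obtain ⟨W, hW⟩ := (𝓝 a).exists_antitone_basis
  let T := {s : Set S × S × Set S // s.1 ∈ 𝓝 a ∧ s.2.1 ∈ N s.1 ∩ U ∧ IsClosed s.2.2 ∧ a ∉ s.2.2 ∧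
    s.2.1 ∈ s.2.2}
  let R : ℕ → T → T → Prop := fun k t t' => ∃ B, IsArc B t.1.2.1 t'.1.2.1 ∧ B ⊆ t.1.1 ∩ U ∧
    t'.1.1 ⊆ W k ∧ Disjoint t'.1.1 t.1.2.2 ∧ t'.1.2.2 = t.1.2.2 ∪ B
  have step : ∀ (k : ℕ) (t : T), ∃ t', R k t t' := by
    rintro k ⟨⟨O, p, K⟩, hO, hp, hK, haK, hpK⟩
    simp only at hO hp hK haK hpK
    have hO' : N O ∩ W k ∩ Kᶜ ∈ 𝓝 a := inter_mem (inter_mem ((hN O hO).mem_nhds (hN' O hO))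
      (hW.mem k)) (hK.isOpen_compl.mem_nhds haK)
    obtain ⟨p', hp'⟩ := dense _ ((hN _ hO').mem_nhds (hN' _ hO'))
    have hp'O := interior_subset (hNO _ hO' hp'.1)
    rcases open_aj hS (isOpen_interior.inter h.op) (hNJ O hO p hp p' ⟨hp'O.1.1, hp'.2⟩) with
      ⟨e, -⟩ | ⟨B, hB, hBa⟩
    · exact absurd hpK (e ▸ hp'O.2)
    · refine ⟨⟨⟨_, p', K ∪ B⟩, hO', hp', hK.union hBa.isClosed, ?_, Or.inr hBa.right⟩, B, hBa,
        hB.trans (inter_subset_inter_left _ interior_subset), ?_, ?_, rfl⟩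
      · rintro (h' | h')
        · exact haK h'
        · exact haU (hB h').2
      · exact fun y hy => hy.1.2
      · exact disjoint_left.2 fun y hy => hy.2
  choose g hg using step
  obtain ⟨p₀, hp₀⟩ := dense _ ((hN _ univ_mem).mem_nhds (hN' _ univ_mem))
  let s : ℕ → T := fun k => Nat.rec ⟨⟨univ, p₀, {p₀}⟩, univ_mem, hp₀, isClosed_singleton,
    fun h' => haU (h' ▸ hp₀.2), rfl⟩ (fun k t => g k t) k
  have hs : ∀ k, R k (s k) (s (k + 1)) := fun k => hg k (s k)
  choose B hB hBO hW' hdis hK using hs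
  have Kmono : Monotone fun k => (s k).1.2.2 := monotone_nat_of_le_succ fun k => by
    change (s k).1.2.2 ⊆ (s (k+1)).1.2.2
    rw [hK k]; exact subset_union_left
  have Bdis : ∀ j k, j + 2 ≤ k → Disjoint (B j) (B k) := by
    intro j k hjk
    obtain ⟨m, rfl⟩ : ∃ m, k = m + 1 := ⟨k - 1, by omega⟩
    refine disjoint_left.2 fun y hy hy' => (hdis m).notMem_of_mem_left (hBO _ hy').1 ?_
    apply Kmono (show j + 1 ≤ m by omega)
    change y ∈ (s (j+1)).1.2.2
    rw [hK]; exact Or.inr hy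
  -- shorten the arcs so that consecutive ones meet only at end points
  let T' := {t : ℕ × S // t.2 ∈ B t.1 ∧ t.2 ∉ B (t.1 + 1)}
  have step' : ∀ t : T', ∃ t' : T', t'.1.1 = t.1.1 + 1 ∧ ∃ C, IsArc C t.1.2 t'.1.2 ∧ C ⊆ B t.1.1 ∧
      C ∩ B (t.1.1 + 1) = {t'.1.2} := by
    rintro ⟨⟨k, x⟩, hx, hx'⟩
    simp only at hx hx'
    rcases (hB k).aj hx Subset.rfl with ⟨e, -⟩ | ⟨A, hA, hAa⟩
    · exact absurd (hB (k+1)).left (e ▸ hx')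
    · obtain ⟨C, c, h1, h2, h3, h4⟩ := hAa.first_hit (hB (k+1)).isClosed hx'
        ⟨_, hAa.right, (hB (k+1)).left⟩
      exact ⟨⟨⟨k + 1, c⟩, h4, (Bdis k (k+2) le_rfl).notMem_of_mem_left (hA (h2 h1.right))⟩, rfl, C, h1,
        h2.trans hA, h3⟩
  choose g' hg' C' hC1 hC2 hC3 using step'
  let r : ℕ → T' := fun k => Nat.rec ⟨⟨0, p₀⟩, (hB 0).left, fun h' =>
    (hdis 0).notMem_of_mem_left (hBO _ h').1 rfl⟩ (fun _ t => g' t) k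
  have hr : ∀ k, r (k + 1) = g' (r k) := fun k => rfl
  have hrk : ∀ k, (r k).1.1 = k := by
    intro k
    induction k with
    | zero => rfl
    | succ k ih => rw [hr, hg', ih]
  have hCB : ∀ k, C' (r k) ⊆ B k := fun k => by simpa [hrk k] using hC2 (r k)
  have key : IsArc ({a} ∪ ⋃ k, C' (r k)) a p₀ := by
    refine ray_arc (C := fun k => C' (r k)) (x := fun k => (r k).1.2) ?_ ?_ ?_ ?_ ?_
    · intro k; simp only [hr]; exact hC1 (r k)
    · intro k
      have := hC3 (r k)
      rw [hrk k, ← hr] at this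
      rw [← this]
      exact inter_subset_inter_right _ (hCB (k + 1))
    · exact fun j k hjk => (Bdis j k hjk).mono (hCB j) (hCB k)
    · exact fun k hk => haU (hBO k (hCB k hk)).2
    · intro O hO
      obtain ⟨n, hn⟩ := hW.mem_iff.1 hO
      rw [eventually_atTop]
      refine ⟨n + 1, fun k hk => ?_⟩
      obtain ⟨m, rfl⟩ : ∃ m, k = m + 1 := ⟨k - 1, by omega⟩
      exact fun y hy => hn (hW.antitone (show n ≤ m by omega) (hW' m (hBO (m + 1) (hCB (m + 1) hy)).1))
  have h1 : AJ (insert a U) a p₀ := by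
    refine Or.inr ⟨_, ?_, key⟩
    rintro y (rfl | hy)
    · exact mem_insert _ _
    · obtain ⟨k, hk⟩ := mem_iUnion.1 hy
      exact Or.inr (hBO k (hCB k hk)).2
  exact h1.trans ((open_aj hS h.op (jn_of_pre h.pre hp₀.2 hq)).mono (subset_insert _ _))

/-- Any two boundary points of a regular region are the ends of a crosscut. -/
lemma Reg.crosscut [T2Space S] [FirstCountableTopology S] (hS : Surf S) {U X : Set S} (h : Reg U X)
    {a b : S} (ha : a ∈ X) (hb : b ∈ X) (hab : a ≠ b) : ∃ A, IsArc A a b ∧ A \ {a, b} ⊆ U := by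
  obtain ⟨q, -, hq⟩ := mem_closure_iff_nhds.1 (h.sub ha) univ univ_mem
  have h1 : AJ (insert a (insert b U)) a b := ((h.access hS ha hq).mono (insert_subset_insert
    (subset_insert _ _))).trans ((h.access hS hb hq).symm.mono (subset_insert _ _))
  rcases h1 with ⟨e, -⟩ | ⟨A, hA, hAa⟩
  · exact absurd e hab
  · refine ⟨A, hAa, fun y hy => ?_⟩
    rcases hA hy.1 with h' | h' | h'
    · exact absurd (Or.inl h') hy.2
    · exact absurd (Or.inr h') hy.2
    · exact h'

/-! ### Cells and their splitting -/

/-- A property that is open and closed along a preconnected set. -/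
lemma pre_induct {A : Set S} (hA : IsPreconnected A) {C : Set S} (hC : IsClosed C)
    (hop : ∀ z ∈ A, z ∈ C → ∀ᶠ y in 𝓝 z, y ∈ A → y ∈ C) (hne : (A ∩ C).Nonempty) : A ⊆ C := by
  by_contra hcon
  obtain ⟨y, hy, hyC⟩ := not_subset.1 hcon
  obtain ⟨z, hz, hzC⟩ := hne
  obtain ⟨v, hv, hv1, hv2⟩ := hA Cᶜ (interior {y | y ∈ A → y ∈ C}) hC.isOpen_compl isOpen_interior
    (fun v hv => by
      by_cases h : v ∈ C
      · right; exact mem_interior_iff_mem_nhds.2 (hop v hv h)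
      · left; exact h) ⟨y, hy, hyC⟩ ⟨z, hz, mem_interior_iff_mem_nhds.2 (hop z hz hzC)⟩
  exact hv1 (interior_subset hv2 hv)

/-- A relatively clopen part of `U \ σ` is adherent to the whole crosscut `σ`. -/
lemma adh_all [T2Space S] (hS : Surf S) {U σ G : Set S} {a b : S} (hU : IsOpen U)
    (hUp : IsPreconnected U) (hσ : IsArc σ a b) (hσU : σ \ {a, b} ⊆ U)
    (haU : a ∉ U) (hbU : b ∉ U) (hG : IsOpen G)
    (hGn : G.Nonempty) (hGU : G ⊆ U \ σ) (hcl : ∀ z ∈ U \ σ, z ∈ closure G → z ∈ G) :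
    σ ⊆ closure G := by
  refine hσ.sub_closure.trans (closure_minimal ?_ isClosed_closure)
  refine pre_induct hσ.inner_pre isClosed_closure ?_ ?_
  · rintro z ⟨hz, hz'⟩ hzG
    obtain ⟨N, hN, hzN, hNU, hN'⟩ := merge_local hS (hσ.arcAt hz (fun h => hz' (Or.inl h))
      (fun h => hz' (Or.inr h)) Subset.rfl (Eventually.of_forall fun _ h => h))
      (hU.mem_nhds (hσU ⟨hz, hz'⟩))
    obtain ⟨y, hy, hy'⟩ := mem_closure_iff_nhds.1 hzG N (hN.mem_nhds hzN)
    filter_upwards [hN.mem_nhds hzN] with v hv hvσ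
    exact hN' G hG hcl ⟨y, hy', hy, (hGU hy').2⟩ ⟨hvσ.1, hv⟩
  · by_contra hcon
    rw [not_nonempty_iff_eq_empty] at hcon
    obtain ⟨g, hg⟩ := hGn
    obtain ⟨z, hz⟩ := hσ.inner_ne
    have := (jn_of_pre hUp (hGU hg).1 (hσU hz)).mem_of_clopen hG (fun v hv hvG => by
      by_cases hvσ : v ∈ σ
      · by_cases hvab : v ∈ ({a, b} : Set S)
        · rcases hvab with rfl | rfl
          · exact absurd hv haU
          · exact absurd hv hbU
        · exact absurd (show v ∈ (σ \ {a,b}) ∩ closure G from ⟨⟨hvσ, hvab⟩, hvG⟩) (hcon ▸ notMem_empty v)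
      · exact hcl v ⟨hv, hvσ⟩ hvG) hg
    exact (hGU this).2 hz.1

lemma comp_clopen (hS : Surf S) {A : Set S} (hA : IsOpen A) (p : S) :
    IsOpen {q | Jn A p q} ∧ {q | Jn A p q} ⊆ A ∧ ∀ z ∈ A, z ∈ closure {q | Jn A p q} → z ∈ {q | Jn A p q} := by
  have := hS.locConn
  exact ⟨isOpen_jn hA p, fun q hq => hq.right, fun z hz hz' => jn_of_closure hA hz hz'⟩

/-- A crosscut separates a region into at most two pieces. -/
lemma cut_three [T2Space S] (hS : Surf S) {U σ : Set S} {a b : S} (hU : IsOpen U)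
    (hUp : IsPreconnected U) (hσ : IsArc σ a b) (hσU : σ \ {a, b} ⊆ U)
    (haU : a ∉ U) (hbU : b ∉ U) {p q r : S} (hp : p ∈ U \ σ) (hq : q ∈ U \ σ) (hr : r ∈ U \ σ) :
    Jn (U \ σ) p q ∨ Jn (U \ σ) q r ∨ Jn (U \ σ) p r := by
  obtain ⟨z, hz, hz'⟩ := hσ.inner_ne
  have hA : IsOpen (U \ σ) := hU.sdiff hσ.isClosed
  have adh : ∀ p ∈ U \ σ, σ ⊆ closure {q | Jn (U \ σ) p q} := fun p hp =>
    have h := comp_clopen hS hA p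
    adh_all hS hU hUp hσ hσU haU hbU h.1 ⟨p, Jn.refl hp⟩ h.2.1 h.2.2
  obtain ⟨N, hN, hzN, -, hN'⟩ := three_local hS (hσ.arcAt hz (fun h => hz' (Or.inl h))
      (fun h => hz' (Or.inr h)) Subset.rfl (Eventually.of_forall fun _ h => h))
      (hU.mem_nhds (hσU ⟨hz, hz'⟩))
  have ex : ∀ p ∈ U \ σ, ∃ p', p' ∈ N \ σ ∧ Jn (U \ σ) p p' := fun p hp => by
    obtain ⟨y, hy, hy'⟩ := mem_closure_iff_nhds.1 (adh p hp hz) N (hN.mem_nhds hzN)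
    exact ⟨y, ⟨hy, hy'.right.2⟩, hy'⟩
  obtain ⟨p', hp1, hp2⟩ := ex p hp
  obtain ⟨q', hq1, hq2⟩ := ex q hq
  obtain ⟨r', hr1, hr2⟩ := ex r hr
  rcases hN' p' hp1 q' hq1 r' hr1 with h | h | h
  · exact Or.inl ((hp2.trans h).trans hq2.symm)
  · exact Or.inr (Or.inl ((hq2.trans h).trans hr2.symm))
  · exact Or.inr (Or.inr ((hp2.trans h).trans hr2.symm))

/-- Jordan separation inside `U`: Jordan curves in the closure of `U` separate `U` locally. -/
def JS (U : Set S) : Prop := ∀ γ, IsJordan γ → γ ⊆ closure U → ∀ x ∈ γ ∩ U, ∀ N ∈ 𝓝 x,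
  ∃ p ∈ N \ γ, ∃ q ∈ N \ γ, ¬ Jn (U \ γ) p q

lemma JS.mono {U V : Set S} (h : JS U) (hV : IsOpen V) (hVU : V ⊆ U) : JS V := by
  intro γ hγ hγV x hx N hN
  obtain ⟨p, hp, q, hq, hpq⟩ := h γ hγ (hγV.trans (closure_mono hVU)) x ⟨hx.1, hVU hx.2⟩ (N ∩ V)
    (inter_mem hN (hV.mem_nhds hx.2))
  exact ⟨p, ⟨hp.1.1, hp.2⟩, q, ⟨hq.1.1, hq.2⟩, fun h' => hpq (h'.mono fun y hy => ⟨hVU hy.1, hy.2⟩)⟩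

/-- Removing part of a Jordan curve leaves several pieces if the rest is not in `U`. -/
lemma JS.pieces {U σ Y : Set S} (h : JS U) (hU : IsOpen U) (hγ : IsJordan (σ ∪ Y)) (hσ : σ ⊆ closure U)
    (hY : Y ⊆ closure U) (hUY : Disjoint U Y) (hne : (σ ∩ U).Nonempty) :
    ∃ p ∈ U \ σ, ∃ q ∈ U \ σ, ¬ Jn (U \ σ) p q := by
  obtain ⟨z, hz, hzU⟩ := hne
  obtain ⟨p, hp, q, hq, hpq⟩ := h _ hγ (union_subset hσ hY) z ⟨Or.inl hz, hzU⟩ U (hU.mem_nhds hzU)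
  exact ⟨p, ⟨hp.1, fun h => hp.2 (Or.inl h)⟩, q, ⟨hq.1, fun h => hq.2 (Or.inl h)⟩, fun h' => hpq
    (h'.mono fun y hy => ⟨hy.1, fun h => h.elim hy.2 (disjoint_left.1 hUY hy.1)⟩)⟩

/-- A cell: a region bounded by a Jordan curve `J` in which Jordan separation holds, and whose
closure is compact and avoids `w`. -/
structure Cell (w : S) (U J : Set S) : Prop where
  op : IsOpen U
  pre : IsPreconnected U
  cpt : IsCompact (closure U)
  jor : IsJordan J
  fr : frontier U = J
  ext : J ⊆ closure (closure U)ᶜ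
  hw : w ∉ closure U
  js : JS U

lemma Cell.reg [T2Space S] {w : S} {U J : Set S} (h : Cell w U J) : Reg U J :=
  ⟨h.op, h.pre, h.fr, fun _ hx => h.jor.arcAt hx Subset.rfl (Eventually.of_forall fun _ h => h), h.ext⟩

lemma Cell.closure_eq {w : S} {U J : Set S} (h : Cell w U J) : closure U = U ∪ J := by
  rw [closure_eq_self_union_frontier, h.fr]

lemma Cell.nonempty {w : S} {U J : Set S} (h : Cell w U J) : U.Nonempty := by
  obtain ⟨x, hx⟩ := h.jor.nonempty
  rw [← h.fr] at hx
  exact closure_nonempty_iff.1 ⟨x, hx.1⟩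

/-- A component of `U \ σ` adherent to one point of a connected boundary piece `E` off `σ` fills
`U` near all of `E`. -/
lemma adh_pre [T2Space S] (hS : Surf S) {U X σ G E : Set S} (h : Reg U X) (hσ : IsClosed σ)
    (hGo : IsOpen G) (hcl : ∀ z ∈ U \ σ, z ∈ closure G → z ∈ G) (hGU : G ⊆ U) (hE : IsPreconnected E)
    (hEX : E ⊆ X) (hEσ : Disjoint E σ) (hne : (E ∩ closure G).Nonempty) :
    (∀ z ∈ E, ∀ᶠ y in 𝓝 z, y ∈ U → y ∈ G) ∧ E ⊆ closure G := by
  have loc : ∀ z ∈ E, z ∈ closure G → ∀ᶠ y in 𝓝 z, y ∈ U → y ∈ G := by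
    intro z hz hzG
    obtain ⟨N, hN, hzN, -, hN'⟩ := h.lc hS (hEX hz) (hσ.isOpen_compl.mem_nhds (hEσ.notMem_of_mem_left hz))
    obtain ⟨g, hg, hg'⟩ := mem_closure_iff_nhds.1 hzG N (hN.mem_nhds hzN)
    filter_upwards [hN.mem_nhds hzN] with y hy hyU
    exact (hN' g ⟨hg, hGU hg'⟩ y ⟨hy, hyU⟩).mem_of_clopen hGo
      (fun v hv hv' => hcl v ⟨hv.2, hv.1⟩ hv') hg'
  have sub : E ⊆ closure G := by
    refine pre_induct hE isClosed_closure (fun z hz hzG => ?_) hne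
    filter_upwards [eventually_eventually_nhds.2 (loc z hz hzG)] with y hy hyJ
    have : y ∈ closure U := h.sub (hEX hyJ)
    rw [mem_closure_iff_nhds] at this ⊢
    intro O hO
    obtain ⟨v, hv, hvU⟩ := this _ (inter_mem hO hy)
    exact ⟨v, hv.1, hv.2 hvU⟩
  exact ⟨fun z hz => loc z hz (sub hz), sub⟩

/-- Two different components of `U \ σ` do not both adhere to the same connected boundary piece. -/
lemma adh_excl [T2Space S] (hS : Surf S) {U X σ E : Set S} (h : Reg U X) (hσ : IsClosed σ)
    (hE : IsPreconnected E) (hEX : E ⊆ X) (hEσ : Disjoint E σ) {p q : S} (hpq : ¬ Jn (U \ σ) p q)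
    (hne : (E ∩ closure {y | Jn (U \ σ) p y}).Nonempty) : E ∩ closure {y | Jn (U \ σ) q y} = ∅ := by
  obtain ⟨hGo, hGs, hGc⟩ := comp_clopen hS (h.op.sdiff hσ) p
  have := (adh_pre hS h hσ hGo hGc (hGs.trans sdiff_subset) hE hEX hEσ hne).1
  rw [eq_empty_iff_forall_notMem]
  rintro z ⟨hz, hzq⟩
  obtain ⟨y, hy, hyq⟩ := mem_closure_iff_nhds.1 hzq _ (this z hz)
  exact hpq ((show Jn (U \ σ) p y from hy hyq.right.1).trans (Jn.symm hyq))

/-- A component adherent to the endpoint `a` of a cut `σ` adheres to boundary points off `σ`: turning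
around the tip of `σ` leads from inside to outside `U`. -/
lemma touch_end [T2Space S] (hS : Surf S) {U X σ T G : Set S} {a b : S} (h : Reg U X) (hσ : IsArc σ a b)
    (hσU : σ ⊆ closure U) (hT : IsClosed T) (haT : a ∉ T) (haX : a ∈ X) (hGo : IsOpen G)
    (hcl : ∀ z ∈ U, z ∉ σ → z ∉ T → z ∈ closure G → z ∈ G) (hGU : G ⊆ U \ σ) (ha : a ∈ closure G) :
    ∃ z ∈ X, z ∉ σ ∧ z ∉ T ∧ z ∈ closure G := by
  by_contra! hcon
  obtain ⟨N, hN, haN, -, hN'⟩ := end_local hS hσ.endAt (O := Tᶜ) (hT.isOpen_compl.mem_nhds haT)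
  obtain ⟨y, hy, hy'⟩ := mem_closure_iff_nhds.1 ha N (hN.mem_nhds haN)
  obtain ⟨e, he, he'⟩ := mem_closure_iff_nhds.1 (h.ext haX) N (hN.mem_nhds haN)
  have := (hN' y ⟨hy, (hGU hy').2⟩ e ⟨he, fun h' => he' (hσU h')⟩).mem_of_clopen hGo (fun z hz hzG => by
    by_cases hzU : z ∈ U
    · exact hcl z hzU hz.2 hz.1 hzG
    have hzX : z ∈ X := by
      have := closure_mono (hGU.trans sdiff_subset) hzG
      rw [closure_eq_self_union_frontier, h.fr] at this
      exact this.resolve_left hzU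
    exact absurd hzG (hcon z hzX hz.2 hz.1)) hy'
  exact he' (subset_closure (hGU this).1)

lemma cut_closure {U X σ : Set S} {a b : S} (h : Reg U X) (hσU : σ \ {a, b} ⊆ U)
    (ha : a ∈ X) (hb : b ∈ X) : σ ⊆ closure U := by
  intro z hz
  by_cases hz' : z ∈ ({a, b} : Set S)
  · rcases hz' with rfl | rfl
    · exact h.sub ha
    · exact h.sub hb
  · exact subset_closure (hσU ⟨hz, hz'⟩)

lemma cut_bdry {U X σ : Set S} {a b : S} (h : Reg U X) (hσU : σ \ {a, b} ⊆ U) {z : S}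
    (hz : z ∈ σ) (hz' : z ∈ X) : z = a ∨ z = b := by
  by_contra hcon
  exact h.disj.notMem_of_mem_left (hσU ⟨hz, hcon⟩) hz'

/-- A crosscut splits a cell into two cells. -/
theorem Cell.split [T2Space S] (hS : Surf S) {w : S} {U J J₁ J₂ σ : Set S} {a b : S} (h : Cell w U J)
    (hJ : Halves J J₁ J₂ a b) (hσ : IsArc σ a b) (hσU : σ \ {a, b} ⊆ U) :
    ∃ U₁ U₂, Cell w U₁ (σ ∪ J₁) ∧ Cell w U₂ (σ ∪ J₂) ∧ U₁ ∪ U₂ = U \ σ ∧ Disjoint U₁ U₂ := by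
  have hr := h.reg
  have hJ1 : J₁ ⊆ J := hJ.union ▸ subset_union_left
  have hJ2 : J₂ ⊆ J := hJ.union ▸ subset_union_right
  have haJ : a ∈ J := hJ1 hJ.arc₁.left
  have hbJ : b ∈ J := hJ1 hJ.arc₁.right
  have haU : a ∉ U := fun h' => hr.disj.notMem_of_mem_left h' haJ
  have hbU : b ∉ U := fun h' => hr.disj.notMem_of_mem_left h' hbJ
  have hσJ : ∀ z ∈ σ, z ∈ J → z ∈ ({a, b} : Set S) := fun z hz hz' => cut_bdry hr hσU hz hz'
  have halves : ∀ J' ⊆ J, IsArc J' a b → Halves (σ ∪ J') σ J' a b := fun J' hJ' hJ'a =>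
    ⟨hσ, hJ'a, Subset.antisymm (fun z hz => hσJ z hz.1 (hJ' hz.2)) (by
      rintro z (rfl | rfl)
      · exact ⟨hσ.left, hJ'a.left⟩
      · exact ⟨hσ.right, hJ'a.right⟩), rfl⟩
  have hσcl : σ ⊆ closure U := cut_closure hr hσU haJ hbJ
  have hA : IsOpen (U \ σ) := h.op.sdiff hσ.isClosed
  have dis : ∀ J' ⊆ J, Disjoint (J' \ {a, b}) σ := fun J' hJ' =>
    disjoint_left.2 fun z hz hz' => hz.2 (hσJ z hz' (hJ' hz.1))
  have off : ∀ z ∉ σ, z ∉ ({a, b} : Set S) := by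
    rintro z hz (rfl | rfl)
    · exact hz hσ.left
    · exact hz hσ.right
  obtain ⟨p, hp, q, hq, hpq⟩ := h.js.pieces h.op (halves J₁ hJ1 hJ.arc₁).isJordan hσcl (hJ1.trans hr.sub)
    (hr.disj.mono_right hJ1) (hσ.inner_ne.mono fun _ hz => ⟨hz.1, hσU hz⟩)
  -- each piece touches one of the two frontier arcs
  have touch : ∀ p ∈ U \ σ, ((J₁ \ {a, b}) ∩ closure {y | Jn (U \ σ) p y}).Nonempty ∨
      ((J₂ \ {a, b}) ∩ closure {y | Jn (U \ σ) p y}).Nonempty := by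
    intro p hp
    obtain ⟨hGo, hGs, hGc⟩ := comp_clopen hS hA p
    obtain ⟨z, hzJ, hzσ, -, hzG⟩ := touch_end hS hr hσ hσcl isClosed_empty (notMem_empty a) haJ hGo
      (fun z h1 h2 _ h4 => hGc z ⟨h1, h2⟩ h4) hGs
      (adh_all hS h.op h.pre hσ hσU haU hbU hGo ⟨p, Jn.refl hp⟩ hGs hGc hσ.left)
    rw [← hJ.union] at hzJ
    exact hzJ.imp (fun h' => ⟨z, ⟨h', off z hzσ⟩, hzG⟩) fun h' => ⟨z, ⟨h', off z hzσ⟩, hzG⟩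
  have excl : ∀ J' ⊆ J, IsArc J' a b → ∀ p q, ¬ Jn (U \ σ) p q →
      ((J' \ {a, b}) ∩ closure {y | Jn (U \ σ) p y}).Nonempty →
      (J' \ {a, b}) ∩ closure {y | Jn (U \ σ) q y} = ∅ :=
    fun J' hJ' hJ'a p q hpq hne => adh_excl hS hr hσ.isClosed hJ'a.inner_pre (sdiff_subset.trans hJ') (dis J' hJ') hpq hne
  have build : ∀ J' ⊆ J, IsArc J' a b → ∀ J'', J' ∪ J'' = J → ∀ p ∈ U \ σ, ∀ q ∈ U \ σ, ¬ Jn (U \ σ) p q →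
      ((J' \ {a, b}) ∩ closure {y | Jn (U \ σ) p y}).Nonempty →
      (J'' \ {a, b}) ∩ closure {y | Jn (U \ σ) p y} = ∅ → Cell w {y | Jn (U \ σ) p y} (σ ∪ J') := by
    intro J' hJ' hJ'a J'' hJJ p hp q hq hpq hne hem
    obtain ⟨hGo, hGs, hGc⟩ := comp_clopen hS hA p
    obtain ⟨hGo', hGs', hGc'⟩ := comp_clopen hS hA q
    have hsub := closure_mono (hGs.trans sdiff_subset)
    refine ⟨hGo, isPreconnected_jn p, h.cpt.of_isClosed_subset isClosed_closure hsub,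
      (halves J' hJ' hJ'a).isJordan, ?_, ?_, fun h' => h.hw (hsub h'), h.js.mono hGo (hGs.trans sdiff_subset)⟩
    · rw [hGo.frontier_eq]
      apply Subset.antisymm
      · rintro z ⟨hz, hz'⟩
        by_cases hzσ : z ∈ σ
        · exact Or.inl hzσ
        have hzU : z ∉ U := fun h' => hz' (hGc z ⟨h', hzσ⟩ hz)
        have hzJ : z ∈ J := by
          have := hsub hz
          rw [h.closure_eq] at this
          exact this.resolve_left hzU
        rw [← hJJ] at hzJ
        rcases hzJ with h' | h'
        · exact Or.inr h'
        · exact (hem.subset ⟨⟨h', off z hzσ⟩, hz⟩).elim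
      · rintro z (hz | hz)
        · exact ⟨adh_all hS h.op h.pre hσ hσU haU hbU hGo ⟨p, Jn.refl hp⟩ hGs hGc hz, fun h' =>
            (hGs h').2 hz⟩
        · exact ⟨hJ'a.sub_closure.trans (closure_minimal (adh_pre hS hr hσ.isClosed hGo hGc
            (hGs.trans sdiff_subset) hJ'a.inner_pre (sdiff_subset.trans hJ') (dis J' hJ') hne).2 isClosed_closure) hz,
            fun h' => hr.disj.notMem_of_mem_left (hGs h').1 (hJ' hz)⟩
    · rintro z (hz | hz)
      · have := adh_all hS h.op h.pre hσ hσU haU hbU hGo' ⟨q, Jn.refl hq⟩ hGs' hGc' hz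
        refine closure_mono ?_ this
        have hd : Disjoint {y | Jn (U \ σ) q y} {y | Jn (U \ σ) p y} :=
          disjoint_left.2 fun y hy hy' => hpq (Jn.trans hy' (Jn.symm hy))
        exact (hd.closure_right hGo').subset_compl_right
      · exact closure_mono (compl_subset_compl.2 hsub) (h.ext (hJ' hz))
  have fin : ∀ p ∈ U \ σ, ∀ q ∈ U \ σ, ¬ Jn (U \ σ) p q →
      ((J₁ \ {a, b}) ∩ closure {y | Jn (U \ σ) p y}).Nonempty →
      ∃ U₁ U₂, Cell w U₁ (σ ∪ J₁) ∧ Cell w U₂ (σ ∪ J₂) ∧ U₁ ∪ U₂ = U \ σ ∧ Disjoint U₁ U₂ := by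
    intro p hp q hq hpq hne
    have hqp : ¬ Jn (U \ σ) q p := fun h => hpq h.symm
    have e1 := excl J₁ hJ1 hJ.arc₁ p q hpq hne
    have n2 := (touch q hq).resolve_left (by rw [e1]; exact not_nonempty_empty)
    have e2 := excl J₂ hJ2 hJ.arc₂ q p hqp n2
    refine ⟨{y | Jn (U \ σ) p y}, {y | Jn (U \ σ) q y}, build J₁ hJ1 hJ.arc₁ J₂ hJ.union p hp q hq hpq hne e2,
      build J₂ hJ2 hJ.arc₂ J₁ (by rw [union_comm, hJ.union]) q hq p hp hqp n2 e1, ?_, ?_⟩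
    · apply Subset.antisymm
      · rintro y (hy | hy)
        · exact Jn.right hy
        · exact Jn.right hy
      · intro r hr'
        rcases cut_three hS h.op h.pre hσ hσU haU hbU hp hq hr' with h' | h' | h'
        · exact absurd h' hpq
        · exact Or.inr h'
        · exact Or.inl h'
    · exact disjoint_left.2 fun y hy hy' => hpq (Jn.trans hy (Jn.symm hy'))
  have hqp : ¬ Jn (U \ σ) q p := fun h => hpq h.symm
  rcases touch p hp with h' | h'
  · exact fin p hp q hq hpq h'
  · have e2 := excl J₂ hJ2 hJ.arc₂ p q hpq h'
    exact fin q hq p hp hqp ((touch q hq).resolve_right (by rw [e2]; exact not_nonempty_empty))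

/-- An open set that misses a point `w` outside the disc `N` and has its frontier in `N` lies in `N`. -/
lemma small_in [ConnectedSpace S] {N V : Set S} {w : S} (hN : IsOpen N) (hNc : IsPreconnected (closure N \ N))
    (hV : IsOpen V) (hfr : frontier V ⊆ N) (hwV : w ∉ V) (hwN : w ∉ N) : V ⊆ N := by
  intro v hv
  by_contra hvN
  have hcl : ∀ z ∉ N, z ∈ closure V → z ∈ V := fun z hz hzV => by
    by_contra h
    exact hz (hfr (by rw [hV.frontier_eq]; exact ⟨hzV, h⟩))
  by_cases hne : ((closure N \ N) ∩ closure V).Nonempty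
  · have hsub : closure N \ N ⊆ closure V := pre_induct hNc isClosed_closure (fun z hz hzV => by
      filter_upwards [hV.mem_nhds (hcl z hz.2 hzV)] with y hy _ using subset_closure hy) hne
    have hcp : IsClopen (V ∪ N) := by
      refine ⟨isClosed_of_closure_subset ?_, hV.union hN⟩
      rw [closure_union]
      rintro z (hz | hz)
      · by_cases h : z ∈ N
        · exact Or.inr h
        · exact Or.inl (hcl z h hz)
      · by_cases h : z ∈ N
        · exact Or.inr h
        · exact Or.inl (hcl z h (hsub ⟨hz, h⟩))
    have := hcp.eq_univ ⟨v, Or.inl hv⟩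
    exact (this ▸ mem_univ w : w ∈ V ∪ N).elim hwV hwN
  · rw [not_nonempty_iff_eq_empty] at hne
    have e : V \ closure N = closure V \ N := by
      apply Subset.antisymm
      · exact fun z hz => ⟨subset_closure hz.1, fun h => hz.2 (subset_closure h)⟩
      · exact fun z hz => ⟨hcl z hz.2 hz.1, fun h => by
          exact (hne.subset ⟨⟨h, hz.2⟩, hz.1⟩).elim⟩
    have hcp : IsClopen (V \ closure N) :=
      ⟨e ▸ isClosed_closure.sdiff hN, hV.sdiff isClosed_closure⟩
    have := hcp.eq_univ ⟨v, e ▸ ⟨subset_closure hv, hvN⟩⟩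
    exact hwV (this ▸ mem_univ w : w ∈ V \ closure N).1

/-! ### Traces of a Jordan curve on a cell -/

/-- The traces of an open set on a Jordan curve are open arcs with end points outside the set. -/
lemma jordan_comp [T2Space S] {Γ U : Set S} (hΓ : IsJordan Γ) (hU : IsOpen U)
    (h2 : ∃ x ∈ Γ \ U, ∃ y ∈ Γ \ U, x ≠ y) {z : S} (hz : z ∈ Γ ∩ U) :
    IsClosed (Γ \ {y | Jn (Γ ∩ U) z y}) ∧ ∃ p q, p ∈ Γ \ U ∧ q ∈ Γ \ U ∧
      IsArc ({y | Jn (Γ ∩ U) z y} ∪ {p, q}) p q := by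
  obtain ⟨g, hg, hp, hi, rfl⟩ := hΓ
  obtain ⟨⟨t₀, rfl⟩, hzU⟩ := hz
  obtain ⟨_, ⟨⟨s, rfl⟩, hsU⟩, y, ⟨⟨s', rfl⟩, hsU'⟩, hne⟩ := h2
  have hcl : IsClosed {t | g t ∉ U} := (hU.preimage hg).isClosed_compl
  have ex1 : ({t | g t ∉ U} ∩ Iic t₀).Nonempty := by
    obtain ⟨t, ht, ht'⟩ := hp.exists_mem_Ico zero_lt_one s (t₀ - 1)
    exact ⟨t, by rw [mem_ofPred_eq, ← ht']; exact hsU, by have := ht.2; simp at this ⊢; linarith⟩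
  have ex2 : ({t | g t ∉ U} ∩ Ici t₀).Nonempty := by
    obtain ⟨t, ht, ht'⟩ := hp.exists_mem_Ico zero_lt_one s t₀
    exact ⟨t, by rw [mem_ofPred_eq, ← ht']; exact hsU, ht.1⟩
  have m1 := (hcl.inter isClosed_Iic).csSup_mem ex1 ⟨t₀, fun t ht => ht.2⟩
  have m2 := (hcl.inter isClosed_Ici).csInf_mem ex2 ⟨t₀, fun t ht => ht.2⟩
  have l1 : ∀ t, g t ∉ U → t ≤ t₀ → t ≤ sSup ({t | g t ∉ U} ∩ Iic t₀) := fun t h h' =>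
    le_csSup ⟨t₀, fun t ht => ht.2⟩ ⟨h, h'⟩
  have l2 : ∀ t, g t ∉ U → t₀ ≤ t → sInf ({t | g t ∉ U} ∩ Ici t₀) ≤ t := fun t h h' =>
    csInf_le ⟨t₀, fun t ht => ht.2⟩ ⟨h, h'⟩
  generalize sSup ({t | g t ∉ U} ∩ Iic t₀) = α at m1 l1
  generalize sInf ({t | g t ∉ U} ∩ Ici t₀) = β at m2 l2
  have hα : α < t₀ := lt_of_le_of_ne m1.2 fun e => m1.1 (e ▸ hzU)
  have hβ : t₀ < β := lt_of_le_of_ne m2.2 fun e => m2.1 (e ▸ hzU)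
  have hin : ∀ t ∈ Ioo α β, g t ∈ U := by
    intro t ht
    by_contra h
    rcases le_total t t₀ with h' | h'
    · exact absurd (l1 t h h') (not_le.2 ht.1)
    · exact absurd (l2 t h h') (not_le.2 ht.2)
  have hαU : g (α + 1) ∉ U := by rw [hp]; exact m1.1
  have hβ1 : β < α + 1 := by
    have hle : β ≤ α + 1 := by
      by_contra hcon
      rcases le_total (α + 1) t₀ with h' | h'
      · linarith [l1 _ hαU h']
      · linarith [l2 _ hαU h']
    refine lt_of_le_of_ne hle fun e => hne ?_
    have aux : ∀ s, g s ∉ U → g s = g α := fun s hs => by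
      obtain ⟨t, ht, ht'⟩ := hp.exists_mem_Ico zero_lt_one s α
      rcases ht.1.eq_or_lt with h | h
      · rw [ht', h]
      · exact absurd (hin t ⟨h, by rw [e]; exact ht.2⟩) (by rw [← ht']; exact hs)
    rw [aux s hsU, aux s' hsU']
  have hαβ := hα.trans hβ
  have hinj := per_injOn hp hi hβ1
  have hran : ∀ y ∈ range g, y ∉ g '' Icc β (α + 1) → y ∈ g '' Ioo α β := by
    rintro _ ⟨s, rfl⟩ h
    obtain ⟨t, ht, ht'⟩ := hp.exists_mem_Ico zero_lt_one s α
    rw [ht'] at h ⊢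
    refine ⟨t, ⟨lt_of_le_of_ne ht.1 ?_, ?_⟩, rfl⟩
    · rintro rfl; exact h ⟨α + 1, ⟨hβ1.le, le_rfl⟩, hp α⟩
    · by_contra h'; exact h ⟨t, ⟨not_lt.1 h', ht.2.le⟩, rfl⟩
  have hdis : ∀ y ∈ g '' Ioo α β, y ∉ g '' Icc β (α + 1) := by
    rintro _ ⟨t, ht, rfl⟩ ⟨t', ht', e⟩
    have := per_inj hp hi e (by linarith [ht.1, ht'.2]) (by linarith [ht.2, ht'.1])
    linarith [ht.2, ht'.1]
  have hcl2 : IsClosed (g '' Icc β (α + 1)) := (isCompact_Icc.image hg).isClosed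
  have hK : {y | Jn (range g ∩ U) (g t₀) y} = g '' Ioo α β := by
    apply Subset.antisymm
    · rintro y ⟨M, hM, hMs, h1, h2⟩
      have := pre_induct hM (isCompact_Icc.image hg : IsCompact (g '' Icc α β)).isClosed (fun v hv hvC => by
        obtain ⟨t, ht, rfl⟩ := hvC
        have ht' : t ∈ Ioo α β := ⟨lt_of_le_of_ne ht.1 fun e => m1.1 (e ▸ (hMs hv).2),
          lt_of_le_of_ne ht.2 fun e => m2.1 (e ▸ (hMs hv).2)⟩
        filter_upwards [hcl2.isOpen_compl.mem_nhds (hdis _ ⟨t, ht', rfl⟩)] with y hy hyM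
        exact image_mono Ioo_subset_Icc_self (hran y (hMs hyM).1 hy)) ⟨_, h1, t₀, ⟨hα.le, hβ.le⟩, rfl⟩
      obtain ⟨t, ht, rfl⟩ := this h2
      exact ⟨t, ⟨lt_of_le_of_ne ht.1 fun e => m1.1 (e ▸ (hMs h2).2),
          lt_of_le_of_ne ht.2 fun e => m2.1 (e ▸ (hMs h2).2)⟩, rfl⟩
    · intro y hy
      refine ⟨g '' Ioo α β, isPreconnected_Ioo.image g hg.continuousOn, ?_, ⟨t₀, ⟨hα, hβ⟩, rfl⟩, hy⟩
      rintro _ ⟨t, ht, rfl⟩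
      exact ⟨⟨t, rfl⟩, hin t ht⟩
  rw [hK]
  refine ⟨?_, g α, g β, ⟨⟨α, rfl⟩, m1.1⟩, ⟨⟨β, rfl⟩, m2.1⟩, ?_⟩
  · convert hcl2 using 1
    apply Subset.antisymm
    · intro y hy
      by_contra h
      exact hy.2 (hran y hy.1 h)
    · intro y hy
      refine ⟨image_subset_range _ _ hy, fun h => hdis y h hy⟩
  · have := isArc_of hαβ hg.continuousOn hinj
    convert this using 1
    rw [← image_pair, ← image_union, union_comm, insert_union, singleton_union]
    congr 1
    ext t
    simp only [mem_insert_iff, mem_Ioo, mem_Icc]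
    constructor
    · rintro (rfl | rfl | h)
      · exact ⟨le_rfl, hαβ.le⟩
      · exact ⟨hαβ.le, le_rfl⟩
      · exact ⟨h.1.le, h.2.le⟩
    · intro h
      rcases h.1.eq_or_lt with h1 | h1
      · exact Or.inl h1.symm
      rcases h.2.eq_or_lt with h2 | h2
      · exact Or.inr (Or.inl h2)
      · exact Or.inr (Or.inr ⟨h1, h2⟩)

/-- Small intervals on a Jordan curve. -/
lemma jordan_interval [T2Space S] {Γ : Set S} (hΓ : IsJordan Γ) {y : S} (hy : y ∈ Γ) {N : Set S}
    (hN : N ∈ 𝓝 y) : ∃ I, IsOpen I ∧ y ∈ I ∧ ∃ E : List S, ∀ M, IsPreconnected M → M ⊆ Γ →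
      (∀ e ∈ E, e ∉ M) → (M ∩ I).Nonempty → closure M ⊆ N := by
  obtain ⟨g, hg, hp, hi, rfl⟩ := hΓ
  obtain ⟨s, rfl⟩ := hy
  obtain ⟨δ, hδ, hδN⟩ := Metric.mem_nhds_iff.1 (hg.continuousAt hN)
  obtain ⟨ε, hε, hεδ, hε2⟩ : ∃ ε > 0, ε < δ ∧ ε < 1 / 2 := by
    refine ⟨min (δ / 2) (1 / 4), by positivity, ?_, ?_⟩
    · exact (min_le_left _ _).trans_lt (by linarith)
    · exact (min_le_right _ _).trans_lt (by norm_num)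
  have hcl : IsClosed (g '' Icc (s + ε) (s + 1 - ε)) := (isCompact_Icc.image hg).isClosed
  have hcl' : IsClosed (g '' Icc (s - ε) (s + ε)) := (isCompact_Icc.image hg).isClosed
  have hdis : ∀ t ∈ Ioo (s - ε) (s + ε), g t ∉ g '' Icc (s + ε) (s + 1 - ε) := by
    rintro t ht ⟨t', ht', e⟩
    have := per_inj hp hi e (by linarith [ht.1, ht'.2]) (by linarith [ht.2, ht'.1])
    linarith [ht.2, ht'.1]
  have hran : ∀ y ∈ range g, y ∉ g '' Icc (s + ε) (s + 1 - ε) → y ∈ g '' Icc (s - ε) (s + ε) := by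
    rintro _ ⟨r, rfl⟩ h
    obtain ⟨t, ht, ht'⟩ := hp.exists_mem_Ico zero_lt_one r (s - ε)
    rw [ht'] at h ⊢
    refine ⟨t, ⟨ht.1, ?_⟩, rfl⟩
    by_contra h'; exact h ⟨t, ⟨(not_le.1 h').le, by linarith [ht.2]⟩, rfl⟩
  refine ⟨_, hcl.isOpen_compl, hdis s ⟨by linarith, by linarith⟩, [g (s - ε), g (s + ε)], ?_⟩
  intro M hM hMΓ hE ⟨v, hv, hvI⟩
  have : M ⊆ g '' Icc (s - ε) (s + ε) := by
    refine pre_induct hM hcl' (fun v hv hvC => ?_) ⟨v, hv, hran v (hMΓ hv) hvI⟩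
    obtain ⟨t, ht, rfl⟩ := hvC
    have ht' : t ∈ Ioo (s - ε) (s + ε) := ⟨lt_of_le_of_ne ht.1 fun e => hE (g (s - ε)) (by simp) (e ▸ hv),
      lt_of_le_of_ne ht.2 fun e => hE (g (s + ε)) (by simp) (e ▸ hv)⟩
    filter_upwards [hcl.isOpen_compl.mem_nhds (hdis t ht')] with y hy hyM
    exact hran y (hMΓ hyM) hy
  refine (closure_minimal this hcl').trans ?_
  rintro _ ⟨t, ht, rfl⟩
  apply hδN
  rw [mem_ball, Real.dist_eq, abs_lt]
  constructor <;> linarith [ht.1, ht.2]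

/-- Finite subdivisions of a cell by successive crosscuts, with pieces satisfying `P`. -/
inductive Tree (w : S) (P : Set S → Prop) : Set S → Set S → Prop
  | leaf {U J : Set S} : Cell w U J → P U → Tree w P U J
  | node {U J J₁ J₂ σ U₁ U₂ : Set S} {a b : S} : Cell w U J → Halves J J₁ J₂ a b → IsArc σ a b →
      σ \ {a, b} ⊆ U → U₁ ∪ U₂ = U \ σ → Disjoint U₁ U₂ → Tree w P U₁ (σ ∪ J₁) →
      Tree w P U₂ (σ ∪ J₂) → Tree w P U J

lemma Tree.cell {w : S} {P : Set S → Prop} {U J : Set S} (h : Tree w P U J) : Cell w U J := by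
  cases h with
  | leaf h _ => exact h
  | node h => exact h

lemma Tree.bind {w : S} {P Q : Set S → Prop} {U J : Set S} (h : Tree w P U J)
    (hPQ : ∀ V J', Cell w V J' → V ⊆ U → P V → Tree w Q V J') : Tree w Q U J := by
  induction h with
  | leaf h hP => exact hPQ _ _ h Subset.rfl hP
  | node h hJ hσ hσU hun hd _ _ ih1 ih2 =>
    refine Tree.node h hJ hσ hσU hun hd (ih1 fun V J' hV hVU => hPQ V J' hV (hVU.trans ?_))
      (ih2 fun V J' hV hVU => hPQ V J' hV (hVU.trans ?_))
    · exact fun y hy => (hun.subset (Or.inl hy)).1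
    · exact fun y hy => (hun.subset (Or.inr hy)).1

/-- Cutting a cell along finitely many traces of a Jordan curve. -/
lemma cut_list [T2Space S] (hS : Surf S) {w : S} {Γ U₀ : Set S} (hΓ : IsJordan Γ) (hU₀ : IsOpen U₀)
    (h2 : ∃ x ∈ Γ \ U₀, ∃ y ∈ Γ \ U₀, x ≠ y) (L : List S) : ∀ V J, Cell w V J → V ⊆ U₀ →
    (∀ z ∈ Γ ∩ U₀, {y | Jn (Γ ∩ U₀) z y} ⊆ V ∨ Disjoint {y | Jn (Γ ∩ U₀) z y} V) →
    Tree w (fun V' => V' ⊆ V ∧ ∀ e ∈ L, e ∈ Γ ∩ U₀ → Disjoint {y | Jn (Γ ∩ U₀) e y} V') V J := by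
  induction L with
  | nil => intro V J hV _ _; exact Tree.leaf hV ⟨Subset.rfl, by simp⟩
  | cons e L ih =>
    intro V J hV hVU hsat
    by_cases hcase : e ∈ Γ ∩ U₀ → Disjoint {y | Jn (Γ ∩ U₀) e y} V
    · refine (ih V J hV hVU hsat).bind fun V' J' hV' _ hP => Tree.leaf hV' ⟨hP.1, fun e' he' h' => ?_⟩
      rcases List.mem_cons.1 he' with rfl | he'
      · exact (hcase h').mono_right hP.1
      · exact hP.2 e' he' h'
    · push Not at hcase
      obtain ⟨he, hed⟩ := hcase
      have heV := (hsat e he).resolve_right hed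
      obtain ⟨-, p, q, hp, hq, hσ⟩ := jordan_comp hΓ hU₀ h2 he
      set K : S → Set S := fun z => {y | Jn (Γ ∩ U₀) z y} with hK
      have hσU : (K e ∪ {p, q}) \ {p, q} ⊆ V := fun y hy => heV (hy.1.resolve_right hy.2)
      have hJ : ∀ y ∈ ({p, q} : Set S), y ∈ J := by
        intro y hy
        have hy1 : y ∈ closure V := closure_mono hσU (hσ.sub_closure (Or.inr hy))
        rw [hV.closure_eq] at hy1
        refine hy1.resolve_left fun h => ?_
        rcases hy with rfl | rfl
        · exact hp.2 (hVU h)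
        · exact hq.2 (hVU h)
      obtain ⟨J₁, J₂, hH⟩ := hV.jor.halves (hJ p (by simp)) (hJ q (by simp)) hσ.ne
      obtain ⟨U₁, U₂, hc1, hc2, hun, hd⟩ := hV.split hS hH hσ hσU
      have sub1 : U₁ ⊆ V := fun y hy => (hun.subset (Or.inl hy)).1
      have sub2 : U₂ ⊆ V := fun y hy => (hun.subset (Or.inr hy)).1
      have sat : ∀ z ∈ Γ ∩ U₀, (K z ⊆ U₁ ∨ K z ⊆ U₂) ∨ (Disjoint (K z) U₁ ∧ Disjoint (K z) U₂) := by
        intro z hz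
        rcases hsat z hz with h | h
        · by_cases hze : Jn (Γ ∩ U₀) e z
          · right
            have : ∀ y ∈ K z, y ∉ U₁ ∪ U₂ := fun y hy hy' =>
              (hun.subset hy').2 (Or.inl (hze.trans hy))
            exact ⟨disjoint_left.2 fun y hy hy' => this y hy (Or.inl hy'),
              disjoint_left.2 fun y hy hy' => this y hy (Or.inr hy')⟩
          · left
            have hsub : K z ⊆ U₁ ∪ U₂ := by
              rw [hun]
              refine fun y hy => ⟨h hy, ?_⟩
              rintro (h' | h')
              · exact hze (Jn.trans h' (Jn.symm hy))
              · rcases h' with rfl | rfl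
                · exact hp.2 (Jn.right hy).2
                · exact hq.2 (Jn.right hy).2
            rcases (isPreconnected_jn (A := Γ ∩ U₀) z).subset_or_subset hc1.op hc2.op hd hsub with h' | h'
            · exact Or.inl h'
            · exact Or.inr h'
        · exact Or.inr ⟨h.mono_right sub1, h.mono_right sub2⟩
      have dis1 : Disjoint (K e) U₁ := disjoint_left.2 fun y hy hy' =>
        (hun.subset (Or.inl hy')).2 (Or.inl hy)
      have dis2 : Disjoint (K e) U₂ := disjoint_left.2 fun y hy hy' =>
        (hun.subset (Or.inr hy')).2 (Or.inl hy)
      refine Tree.node hV hH hσ hσU hun hd ((ih U₁ _ hc1 (sub1.trans hVU) fun z hz => ?_).bind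
          fun V' J' hV' hV'' hP => Tree.leaf hV' ⟨hP.1.trans sub1, fun e' he' h' => ?_⟩)
        ((ih U₂ _ hc2 (sub2.trans hVU) fun z hz => ?_).bind
          fun V' J' hV' hV'' hP => Tree.leaf hV' ⟨hP.1.trans sub2, fun e' he' h' => ?_⟩)
      · rcases sat z hz with (h | h) | h
        · exact Or.inl h
        · exact Or.inr (hd.symm.mono_left h)
        · exact Or.inr h.1
      · rcases List.mem_cons.1 he' with rfl | he'
        · exact dis1.mono_right hP.1
        · exact hP.2 e' he' h'
      · rcases sat z hz with (h | h) | h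
        · exact Or.inr (hd.mono_left h)
        · exact Or.inl h
        · exact Or.inr h.2
      · rcases List.mem_cons.1 he' with rfl | he'
        · exact dis2.mono_right hP.1
        · exact hP.2 e' he' h'

/-- Removing crosscuts that cut off neither `x` nor `y` does not separate `x` from `y`. -/
lemma join_reduce [T2Space S] (hS : Surf S) {Γ U₀ : Set S} {x y : S} (hΓ : IsClosed Γ) (hU₀ : IsOpen U₀)
    (hx : x ∉ Γ) (hy : y ∉ Γ) (L : List S)
    (hL : ∀ z ∈ L, IsClosed (Γ \ {y | Jn (Γ ∩ U₀) z y}) ∧ ∃ p ∈ Γ \ U₀, ∃ q ∈ Γ \ U₀,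
      IsArc ({y | Jn (Γ ∩ U₀) z y} ∪ {p, q}) p q ∧ ∃ U₁, IsOpen U₁ ∧
        {y | Jn (Γ ∩ U₀) z y} ⊆ closure U₁ ∧ U₁ ⊆ U₀ \ ({y | Jn (Γ ∩ U₀) z y} ∪ {p, q}) ∧
        (∀ v ∈ U₀ \ ({y | Jn (Γ ∩ U₀) z y} ∪ {p, q}), v ∈ closure U₁ → v ∈ U₁) ∧ x ∉ U₁ ∧ y ∉ U₁)
    (hJ : Jn (U₀ \ {v | v ∈ Γ ∧ ∀ z ∈ L, ¬ Jn (Γ ∩ U₀) z v}) x y) : Jn (U₀ \ Γ) x y := by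
  induction L with
  | nil => simpa using hJ
  | cons z L ih =>
    apply ih fun z hz => hL z (List.mem_cons_of_mem _ hz)
    set P := U₀ \ {v | v ∈ Γ ∧ ∀ z' ∈ z :: L, ¬ Jn (Γ ∩ U₀) z' v} with hP
    have hcl : ∀ L' : List S, (∀ z ∈ L', IsClosed (Γ \ {y | Jn (Γ ∩ U₀) z y})) →
        IsClosed {v | v ∈ Γ ∧ ∀ z' ∈ L', ¬ Jn (Γ ∩ U₀) z' v} := by
      intro L' h
      have : {v | v ∈ Γ ∧ ∀ z' ∈ L', ¬ Jn (Γ ∩ U₀) z' v} =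
          Γ ∩ ⋂ z' ∈ L', Γ \ {y | Jn (Γ ∩ U₀) z' y} := by
        ext v
        simp only [mem_ofPred_eq, mem_inter_iff, mem_iInter, Set.mem_sdiff]
        exact ⟨fun h => ⟨h.1, fun i hi => ⟨h.1, h.2 i hi⟩⟩, fun h => ⟨h.1, fun i hi => (h.2 i hi).2⟩⟩
      rw [this]
      exact hΓ.inter (isClosed_biInter h)
    have hPo : IsOpen P := hU₀.sdiff (hcl _ fun z hz => (hL z hz).1)
    obtain ⟨-, p, hp, q, hq, hσ, U₁, hU₁, hKU, hUs, hUc, hxU, hyU⟩ := hL z List.mem_cons_self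
    set K := {y | Jn (Γ ∩ U₀) z y} with hK
    have hsubP : ∀ v ∈ P, v ∉ K → v ∈ U₀ \ {v | v ∈ Γ ∧ ∀ z' ∈ L, ¬ Jn (Γ ∩ U₀) z' v} := by
      rintro v ⟨hv, hv'⟩ hvK
      refine ⟨hv, fun h => hv' ⟨h.1, fun z' hz' => ?_⟩⟩
      rcases List.mem_cons.1 hz' with rfl | hz'
      · exact hvK
      · exact h.2 z' hz'
    obtain ⟨hCo, hCs, hCc⟩ := comp_clopen hS hPo x
    have hCp : IsPreconnected {v | Jn P x v} := isPreconnected_jn x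
    have hxC : x ∈ {v | Jn P x v} := Jn.refl hJ.left
    by_cases hne : ({v | Jn P x v} ∩ K).Nonempty
    · obtain ⟨v, hv, hvK⟩ := hne
      have hKP : K ⊆ P := fun u hu => ⟨(Jn.right hu).2, fun h => h.2 z List.mem_cons_self hu⟩
      have hKC : K ⊆ {v | Jn P x v} := fun u hu => Jn.trans hv
        ((jn_of_pre (isPreconnected_jn z) hvK hu).mono hKP)
      obtain ⟨r, hr, hrU⟩ := mem_closure_iff_nhds.1 (hKU hvK) _ (hCo.mem_nhds (hKC hvK))
      have hΓσ : K ∪ {p, q} ⊆ Γ := by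
        rintro u (hu | rfl | rfl)
        · exact (Jn.right hu).1
        · exact hp.1
        · exact hq.1
      have cut := cut_three hS hCo hCp hσ (fun u hu => hKC (hu.1.resolve_right hu.2))
        (fun h => hp.2 (hCs h).1) (fun h => hq.2 (hCs h).1) (p := x) (q := y) (r := r)
        ⟨hxC, fun h => hx (hΓσ h)⟩ ⟨hJ, fun h => hy (hΓσ h)⟩ ⟨hr, (hUs hrU).2⟩
      have back : ∀ u, Jn ({v | Jn P x v} \ (K ∪ {p, q})) u r → u ∈ U₁ := fun u hu =>
        hu.symm.mem_of_clopen hU₁ (fun v hv hv' => hUc v ⟨(hCs hv.1).1, hv.2⟩ hv') hrU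
      rcases cut with h | h | h
      · exact h.mono fun u hu => hsubP u (hCs hu.1) fun h => hu.2 (Or.inl h)
      · exact absurd (back _ h) hyU
      · exact absurd (back _ h) hxU
    · rw [not_nonempty_iff_eq_empty] at hne
      exact (jn_of_pre hCp hxC hJ).mono fun u hu => hsubP u (hCs hu) fun h =>
        (hne.subset ⟨hu, h⟩).elim

/-! ### Subdividing cells -/

lemma closure_disc [T2Space S] {φ : ℂ → S} (hφ : IsOpenEmbedding φ) (z : ℂ) (r : ℝ) :
    closure (φ '' ball z r) ⊆ φ '' closedBall z r :=
  closure_minimal (image_mono ball_subset_closedBall)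
    ((isCompact_closedBall z r).image hφ.continuous).isClosed

lemma disc_bdry [T2Space S] {φ : ℂ → S} (hφ : IsOpenEmbedding φ) (z : ℂ) {r : ℝ} (hr : r ≠ 0) :
    closure (φ '' ball z r) \ φ '' ball z r = φ '' sphere z r := by
  have : closure (φ '' ball z r) = φ '' closedBall z r := by
    refine (closure_disc hφ z r).antisymm ?_
    rw [← closure_ball z hr]
    exact image_closure_subset_closure_image hφ.continuous
  rw [this, ← image_sdiff hφ.injective, closedBall_sdiff_ball]

lemma disc_pre [T2Space S] {φ : ℂ → S} (hφ : IsOpenEmbedding φ) (z : ℂ) {r : ℝ} (hr : r ≠ 0) :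
    IsPreconnected (closure (φ '' ball z r) \ φ '' ball z r) := by
  rw [disc_bdry hφ z hr]
  exact (isPreconnected_sphere (by simp [Complex.rank_real_complex]) z r).image _ hφ.continuous.continuousOn

lemma circle_jordan {φ : ℂ → S} (hφ : IsOpenEmbedding φ) {r : ℝ} (hr : 0 < r) :
    IsJordan (φ '' sphere 0 r) := by
  refine ⟨fun t => φ (r * Complex.exp (2 * Real.pi * t * Complex.I)), ?_, ?_, ?_, ?_⟩
  · exact hφ.continuous.comp (by fun_prop)
  · intro t
    simp only
    congr 2
    rw [Complex.exp_eq_exp_iff_exists_int]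
    exact ⟨1, by push_cast; ring⟩
  · intro s hs t ht h
    have h := mul_left_cancel₀ (by exact_mod_cast hr.ne') (hφ.injective h)
    obtain ⟨n, hn⟩ := Complex.exp_eq_exp_iff_exists_int.1 h
    have h2 : ((2 * Real.pi * Complex.I : ℂ)) ≠ 0 := Complex.two_pi_I_ne_zero
    have h3 : (s : ℂ) = t + n := mul_left_cancel₀ h2 (by linear_combination hn)
    have h4 : s = t + n := by exact_mod_cast h3
    have : (n : ℝ) < 1 := by linarith [hs.2, ht.1]
    have h5 : (-1 : ℝ) < n := by linarith [hs.1, ht.2]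
    have : n = 0 := by
      have a : n < 1 := by exact_mod_cast this
      have b : -1 < n := by exact_mod_cast h5
      omega
    simpa [this] using h4
  · rw [show (fun t : ℝ => φ (r * Complex.exp (2 * Real.pi * t * Complex.I))) =
      φ ∘ fun t : ℝ => (r * Complex.exp (2 * Real.pi * t * Complex.I)) from rfl, range_comp]
    congr 1
    ext z
    simp only [mem_range, mem_sphere_zero_iff_norm]
    constructor
    · rintro ⟨t, rfl⟩
      rw [norm_mul, show (2 * Real.pi * t * Complex.I : ℂ) = ((2 * Real.pi * t : ℝ) : ℂ) * Complex.I by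
        push_cast; ring, Complex.norm_exp_ofReal_mul_I, Complex.norm_real]
      simp [hr.le]
    · intro hz
      refine ⟨z.arg / (2 * Real.pi), ?_⟩
      have : (2 * Real.pi * ((z.arg / (2 * Real.pi) : ℝ) : ℂ) * Complex.I) = z.arg * Complex.I := by
        have : (Real.pi : ℂ) ≠ 0 := by exact_mod_cast Real.pi_ne_zero
        push_cast; field_simp
      rw [this, ← hz, Complex.norm_mul_exp_arg_mul_I]

/-- A cell whose boundary meets the disc of radius `1` and leaves that of radius `2` of a chart can
be cut, along arcs of the circle of radius `3 / 2`, into cells that avoid the smaller disc or lie in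
the larger one. -/
theorem lemA [T2Space S] [ConnectedSpace S] (hS : Surf S) {w : S} {V J : Set S} (hV : Cell w V J)
    {φ : ℂ → S} (hφ : IsOpenEmbedding φ) (hw : w ∉ φ '' closedBall 0 2) {p₀ q₀ : S} (hp₀ : p₀ ∈ J)
    (hp₀' : p₀ ∈ φ '' ball 0 1) (hq₀ : q₀ ∈ J) (hq₀' : q₀ ∉ φ '' ball 0 2) :
    Tree w (fun V' => V' ⊆ V ∧ (Disjoint V' (φ '' ball 0 1) ∨ V' ⊆ φ '' ball 0 2)) V J := by
  set Γ := φ '' sphere 0 (3 / 2) with hΓdef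
  have hΓ : IsJordan Γ := circle_jordan hφ (by norm_num)
  have hΓc : IsClosed Γ := hΓ.isCompact.isClosed
  have hJV : Disjoint J V := hV.reg.disj.symm
  have hBo : IsOpen (φ '' ball 0 (3 / 2)) := hφ.isOpenMap _ isOpen_ball
  have hsplit : ∀ v, v ∈ closure (φ '' ball 0 (3 / 2)) → v ∉ Γ → v ∈ φ '' ball 0 (3 / 2) := by
    intro v hv hv'
    by_contra h
    exact hv' ((disc_bdry hφ 0 (by norm_num : (3 / 2 : ℝ) ≠ 0)).subset ⟨hv, h⟩)
  have hB1Γ : ∀ v ∈ φ '' ball 0 1, v ∉ Γ := by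
    rintro _ ⟨z, hz, rfl⟩ ⟨z', hz', h⟩
    rw [hφ.injective h] at hz'
    rw [mem_ball_zero_iff] at hz; rw [mem_sphere_zero_iff_norm] at hz'; linarith
  have hB2Γ : ∀ v ∈ Γ, v ∈ φ '' ball 0 2 := by
    rintro _ ⟨z, hz, rfl⟩
    refine mem_image_of_mem _ ?_
    rw [mem_sphere_zero_iff_norm] at hz
    rw [mem_ball_zero_iff]; linarith
  have hmeet : ∀ A : Set S, IsPreconnected A → p₀ ∈ A → q₀ ∈ A → (A ∩ Γ).Nonempty := by
    intro A hA hp hq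
    by_contra hne
    have hA' : ∀ v ∈ A, v ∉ Γ := fun v hv hv' => hne ⟨v, hv, hv'⟩
    have : q₀ ∈ φ '' ball 0 (3 / 2) :=
      (jn_of_pre hA hp hq).mem_of_clopen hBo (fun v hv hv' => hsplit v hv' (hA' v hv))
        (image_mono (ball_subset_ball (by norm_num)) hp₀')
    exact hq₀' (image_mono (ball_subset_ball (by norm_num)) this)
  have h2 : ∃ x ∈ Γ \ V, ∃ y ∈ Γ \ V, x ≠ y := by
    obtain ⟨A₁, A₂, hA⟩ := hV.jor.halves hp₀ hq₀ (by rintro rfl; exact hq₀' (image_mono (ball_subset_ball (by norm_num)) hp₀'))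
    obtain ⟨x, hx, hx'⟩ := hmeet A₁ hA.arc₁.isPreconnected hA.arc₁.left hA.arc₁.right
    obtain ⟨y, hy, hy'⟩ := hmeet A₂ hA.arc₂.isPreconnected hA.arc₂.left hA.arc₂.right
    refine ⟨x, ⟨hx', disjoint_left.1 hJV (hA.union.subset (Or.inl hx))⟩, y,
      ⟨hy', disjoint_left.1 hJV (hA.union.subset (Or.inr hy))⟩, ?_⟩
    rintro rfl
    rcases hA.inter.subset ⟨hx, hy⟩ with rfl | rfl
    · exact hB1Γ _ hp₀' hx'
    · exact hq₀' (hB2Γ _ hx')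
  have hdata : ∀ y ∈ Γ ∩ J, ∃ N, IsOpen N ∧ IsPreconnected (closure N \ N) ∧ w ∉ N ∧
      Disjoint N (φ '' ball 0 1) ∧ N ⊆ φ '' ball 0 2 ∧ ∃ N', N' ⊆ N ∧
      (∀ p ∈ J ∩ N', ∀ q ∈ J ∩ N', p ≠ q → ∃ A₁ A₂, Halves J A₁ A₂ p q ∧ A₁ ⊆ N) ∧
      ∃ I, IsOpen I ∧ y ∈ I ∧ ∃ E : List S, ∀ M, IsPreconnected M → M ⊆ Γ →
      (∀ e ∈ E, e ∉ M) → (M ∩ I).Nonempty → closure M ⊆ N' := by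
    rintro y ⟨⟨z, hz, rfl⟩, hyJ⟩
    rw [mem_sphere_zero_iff_norm] at hz
    have hsub : ball z (1 / 4) ⊆ ball 0 2 := ball_subset_ball' (by rw [dist_zero_right]; linarith)
    have hNo : IsOpen (φ '' ball z (1 / 4)) := hφ.isOpenMap _ isOpen_ball
    obtain ⟨N', hN'o, hyN', hN'N, -, -, -, -, -, -, -, -, -, -, -, -, hN'⟩ := hV.jor.local hyJ
      (hNo.mem_nhds (mem_image_of_mem _ (mem_ball_self (by norm_num))))
    obtain ⟨I, hIo, hyI, E, hE⟩ := jordan_interval hΓ (y := φ z)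
      (mem_image_of_mem _ (mem_sphere_zero_iff_norm.2 hz)) (hN'o.mem_nhds hyN')
    refine ⟨_, hNo, disc_pre hφ _ (by norm_num), fun h => hw (image_mono (hsub.trans ball_subset_closedBall) h),
      ?_, image_mono hsub, N', hN'N, hN', I, hIo, hyI, E, hE⟩
    rw [disjoint_left]
    rintro _ ⟨v, hv, rfl⟩ ⟨v', hv', h⟩
    rw [hφ.injective h] at hv'
    rw [mem_ball_zero_iff] at hv'; rw [mem_ball, dist_eq_norm] at hv
    have := norm_sub_norm_le z v
    rw [norm_sub_rev] at this; linarith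
  choose! N hNo hNp hwN hN1 hN2 N' hN'N hN' I hIo hyI E hE using hdata
  have hJc : IsClosed J := hV.jor.isCompact.isClosed
  obtain ⟨t, ht, hcov⟩ := (hΓ.isCompact.inter_right hJc).elim_nhds_subcover I
    fun y hy => (hIo y hy).mem_nhds (hyI y hy)
  set L₀ := t.toList.flatMap E
  refine (cut_list hS hΓ hV.op h2 L₀ V J hV Subset.rfl
    fun z hz => Or.inl fun v hv => (Jn.right hv).2).bind fun V' J' hV' hV'V hP =>
      Tree.leaf hV' ⟨hV'V, ?_⟩
  by_contra hcon
  rw [not_or, not_disjoint_iff, not_subset] at hcon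
  obtain ⟨⟨x, hx, hx1⟩, y, hy, hy2⟩ := hcon
  have hxy : x ≠ y := by rintro rfl; exact hy2 (image_mono (ball_subset_ball (by norm_num)) hx1)
  have hxΓ := hB1Γ x hx1
  have hyΓ : y ∉ Γ := fun h => hy2 (hB2Γ y h)
  set K : S → Set S := fun z => {y | Jn (Γ ∩ V) z y} with hK
  have hKr : ∀ z ∈ Γ ∩ V, z ∈ K z := fun z hz => Jn.refl hz
  have hopen : ∀ L' : List S, (∀ z ∈ L', z ∈ Γ ∩ V) →
      IsOpen (V \ {v | v ∈ Γ ∧ ∀ z ∈ L', ¬ Jn (Γ ∩ V) z v}) := by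
    intro L' hL'
    refine hV.op.sdiff ?_
    have : {v | v ∈ Γ ∧ ∀ z' ∈ L', ¬ Jn (Γ ∩ V) z' v} = Γ ∩ ⋂ z' ∈ L', Γ \ {y | Jn (Γ ∩ V) z' y} := by
      ext v
      simp only [mem_ofPred_eq, mem_inter_iff, mem_iInter, Set.mem_sdiff]
      exact ⟨fun h => ⟨h.1, fun i hi => ⟨h.1, h.2 i hi⟩⟩, fun h => ⟨h.1, fun i hi => (h.2 i hi).2⟩⟩
    rw [this]
    exact hΓc.inter (isClosed_biInter fun z hz => (jordan_comp hΓ hV.op h2 (hL' z hz)).1)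
  -- a finite list of the components met by an arc from `x` to `y` in the leaf
  obtain ⟨L, hLV, hJn⟩ : ∃ L : List S, (∀ z ∈ L, z ∈ Γ ∩ V') ∧
      Jn (V \ {v | v ∈ Γ ∧ ∀ z ∈ L, ¬ Jn (Γ ∩ V) z v}) x y := by
    obtain ⟨A, hAV, hA⟩ := (open_aj hS hV'.op (jn_of_pre hV'.pre hx hy)).resolve_left (fun h => hxy h.1)
    classical
    obtain ⟨s, hs, hsc⟩ := hA.isCompact.elim_nhds_subcover
      (fun v => if v ∈ Γ then V \ {u | u ∈ Γ ∧ ∀ z ∈ [v], ¬ Jn (Γ ∩ V) z u} else Γᶜ) (by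
        intro v hv
        by_cases h : v ∈ Γ
        · simp only [h, if_true]
          have hvV : v ∈ Γ ∩ V := ⟨h, hV'V (hAV hv)⟩
          exact (hopen [v] (by simpa using hvV)).mem_nhds ⟨hvV.2, fun h' => h'.2 v (by simp) (hKr v hvV)⟩
        · simp only [h, if_false]
          exact hΓc.isOpen_compl.mem_nhds h)
    refine ⟨(s.filter (· ∈ Γ)).toList, fun z hz => ?_, A, hA.isPreconnected, fun v hv => ?_, hA.left, hA.right⟩
    · simp at hz
      exact ⟨hz.2, hAV (hs z hz.1)⟩
    · refine ⟨hV'V (hAV hv), fun h => ?_⟩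
      obtain ⟨z, hz, hvz⟩ := mem_iUnion₂.1 (hsc hv)
      by_cases hzΓ : z ∈ Γ
      · simp only [hzΓ, if_true] at hvz
        refine hvz.2 ⟨h.1, fun z' hz' => h.2 z' ?_⟩
        simp at hz'
        simp [hz', hz, hzΓ]
      · simp only [hzΓ, if_false] at hvz
        exact hvz h.1
  have hfin : Jn (V \ Γ) x y := by
    refine join_reduce hS hΓc hV.op hxΓ hyΓ L (fun z hz => ?_) hJn
    have hzV' := hLV z hz
    have hzV : z ∈ Γ ∩ V := ⟨hzV'.1, hV'V hzV'.2⟩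
    obtain ⟨hcl, p, q, hp, hq, hσ⟩ := jordan_comp hΓ hV.op h2 hzV
    change IsArc (K z ∪ {p, q}) p q at hσ
    have hσK : K z ∪ {p, q} ⊆ closure (K z) := hσ.sub_closure.trans
      (closure_mono fun v hv => hv.1.resolve_right hv.2)
    have hKV : K z ⊆ V := fun v hv => (Jn.right hv).2
    have hJof : ∀ v ∈ Γ \ V, v ∈ closure (K z) → v ∈ Γ ∩ J := fun v hv hv' =>
      ⟨hv.1, ((hV.closure_eq.subset (closure_mono hKV hv')).resolve_left hv.2)⟩
    have hpJ := hJof p hp (hσK hσ.left)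
    have hqJ := hJof q hq (hσK hσ.right)
    obtain ⟨y', hy', hpI⟩ := mem_iUnion₂.1 (hcov hpJ)
    have hyΓJ := ht y' hy'
    have hKN : closure (K z) ⊆ N' y' := by
      refine hE y' hyΓJ (K z) (isPreconnected_jn z) (fun v hv => (Jn.right hv).1) (fun e he heK => ?_) ?_
      · have := hP.2 e (List.mem_flatMap.2 ⟨y', Finset.mem_toList.2 hy', he⟩) (Jn.right heK)
        exact disjoint_left.1 this (Jn.symm heK) hzV'.2
      · obtain ⟨v, hv, hv'⟩ := mem_closure_iff_nhds.1 (hσK hσ.left) _ ((hIo y' hyΓJ).mem_nhds hpI)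
        exact ⟨v, hv', hv⟩
    obtain ⟨A₁, A₂, hH, hA₁⟩ := hN' y' hyΓJ p ⟨hpJ.2, hKN (hσK hσ.left)⟩ q ⟨hqJ.2, hKN (hσK hσ.right)⟩ hσ.ne
    obtain ⟨U₁, U₂, hU₁, hU₂, hun, hd⟩ := hV.split hS hH hσ (fun v hv => hKV (hv.1.resolve_right hv.2))
    have hU₁N : U₁ ⊆ N y' := small_in (hNo y' hyΓJ) (hNp y' hyΓJ) hU₁.op
      (hU₁.fr ▸ union_subset ((hσK.trans hKN).trans (hN'N y' hyΓJ)) hA₁)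
      (fun h => hU₁.hw (subset_closure h)) (hwN y' hyΓJ)
    refine ⟨hcl, p, hp, q, hq, hσ, U₁, hU₁.op, ?_, fun v hv => hun.subset (Or.inl hv), ?_, ?_, ?_⟩
    · intro v hv
      exact frontier_subset_closure (hU₁.fr.symm.subset (Or.inl (Or.inl hv)))
    · intro v hv hv'
      rcases hun.symm.subset hv with h | h
      · exact h
      · exact absurd hv' (disjoint_left.1 (hd.symm.closure_right hU₂.op) h)
    · exact fun h => disjoint_left.1 (hN1 y' hyΓJ) (hU₁N h) hx1
    · exact fun h => hy2 (hN2 y' hyΓJ (hU₁N h))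
  have : y ∈ φ '' ball 0 (3 / 2) := hfin.mem_of_clopen hBo (fun v hv hv' => hsplit v hv' hv.2)
    (image_mono (ball_subset_ball (by norm_num)) hx1)
  exact hy2 (image_mono (ball_subset_ball (by norm_num)) this)

/-- Any cell can be cut by finitely many crosscuts into cells subordinate to a given cover. -/
theorem subdivide [T2Space S] [ConnectedSpace S] (hS : Surf S) {w : S} {U J : Set S} (hU : Cell w U J)
    (O : S → Set S) (hO : ∀ x, O x ∈ 𝓝 x) : Tree w (fun V => ∃ x, V ⊆ O x) U J := by
  have hch : ∀ x ∈ closure U, ∃ φ : ℂ → S, IsOpenEmbedding φ ∧ φ 0 = x ∧ φ '' ball 0 2 ⊆ O x ∧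
      w ∉ φ '' closedBall 0 2 := by
    intro x hx
    obtain ⟨φ, hφ, rfl⟩ := hS.chart x
    have hxw : φ 0 ≠ w := by rintro rfl; exact hU.hw hx
    have : φ ⁻¹' (O (φ 0) ∩ {w}ᶜ) ∈ 𝓝 (0 : ℂ) :=
      hφ.continuous.continuousAt (inter_mem (hO _) (isOpen_compl_singleton.mem_nhds hxw))
    obtain ⟨r, hr, hrs⟩ := Metric.nhds_basis_closedBall.mem_iff.1 this
    have hr' : ((r / 2 : ℝ) : ℂ) ≠ 0 := by exact_mod_cast (half_pos hr).ne'
    have hsub : ∀ z ∈ closedBall (0 : ℂ) 2, φ (((r / 2 : ℝ) : ℂ) * z) ∈ O (φ 0) ∩ {w}ᶜ := by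
      intro z hz
      apply hrs
      rw [mem_closedBall_zero_iff] at hz ⊢
      rw [norm_mul, Complex.norm_real, Real.norm_of_nonneg (half_pos hr).le]
      nlinarith
    refine ⟨fun z => φ (((r / 2 : ℝ) : ℂ) * z), hφ.comp (Homeomorph.mulLeft₀ _ hr').isOpenEmbedding, by simp, ?_, ?_⟩
    · rintro _ ⟨z, hz, rfl⟩
      exact (hsub z (ball_subset_closedBall hz)).1
    · rintro ⟨z, hz, h⟩
      exact (hsub z hz).2 h
  choose! φ hφ hφ0 hφO hφw using hch
  obtain ⟨t, ht, hcov⟩ := hU.cpt.elim_nhds_subcover (fun x => φ x '' ball 0 1) fun x hx =>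
    ((hφ x hx).isOpenMap _ isOpen_ball).mem_nhds ⟨0, by simp, hφ0 x hx⟩
  classical
  have main : ∀ n, ∀ V J', Cell w V J' → V ⊆ U →
      (t.filter fun l => ¬ Disjoint V (φ l '' ball 0 1)).card ≤ n → Tree w (fun V => ∃ x, V ⊆ O x) V J' := by
    intro n
    induction n using Nat.strong_induction_on with
    | _ n ih =>
    intro V J' hV hVU hc
    by_cases hex : ∃ l ∈ t, V ⊆ φ l '' ball 0 2
    · obtain ⟨l, hl, h⟩ := hex
      exact Tree.leaf hV ⟨l, h.trans (hφO l (ht l hl))⟩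
    push Not at hex
    obtain ⟨p, hp⟩ := hV.jor.nonempty
    have hpV : p ∈ closure V := hV.reg.sub hp
    obtain ⟨l, hl, hpl⟩ := mem_iUnion₂.1 (hcov (closure_mono hVU hpV))
    have hφl := hφ l (ht l hl)
    obtain ⟨q, hq, hq'⟩ : ∃ q ∈ J', q ∉ φ l '' ball 0 2 := by
      by_contra! hcon
      exact hex l hl (small_in (hφl.isOpenMap _ isOpen_ball) (disc_pre hφl 0 two_ne_zero) hV.op
        (hV.fr ▸ hcon) (fun h => hV.hw (subset_closure h))
        fun h => hφw l (ht l hl) (image_mono ball_subset_closedBall h))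
    refine (lemA hS hV hφl (hφw l (ht l hl)) hp hpl hq hq').bind fun V' J'' hV' hV'V hP => ?_
    rcases hP.2 with h | h
    · refine ih _ (lt_of_lt_of_le ?_ hc) V' J'' hV' (hV'V.trans hVU) le_rfl
      apply Finset.card_lt_card
      rw [Finset.ssubset_iff_of_subset]
      · refine ⟨l, ?_, ?_⟩
        · rw [Finset.mem_filter, not_disjoint_iff]
          obtain ⟨v, hv, hv'⟩ := mem_closure_iff_nhds.1 hpV _ ((hφl.isOpenMap _ isOpen_ball).mem_nhds hpl)
          exact ⟨hl, v, hv', hv⟩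
        · simp [h]
      · intro k hk
        rw [Finset.mem_filter] at hk ⊢
        exact ⟨hk.1, fun h => hk.2 (h.mono_left hV'V)⟩
    · exact Tree.leaf hV' ⟨l, h.trans (hφO l (ht l hl))⟩
  exact main _ U J hU Subset.rfl le_rfl

end

/-! ### Matching decompositions of two cells -/

section
variable {S T : Type*} [TopologicalSpace S] [TopologicalSpace T]

/-- A compact relation that is single-valued in both directions, i.e. the graph of a homeomorphism
between two compact sets. -/
structure Bij (Θ : Set (S × T)) : Prop where
  cpt : IsCompact Θ
  fn : ∀ z ∈ Θ, ∀ z' ∈ Θ, z.1 = z'.1 → z.2 = z'.2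
  inj : ∀ z ∈ Θ, ∀ z' ∈ Θ, z.2 = z'.2 → z.1 = z'.1

lemma Bij.swap {Θ : Set (S × T)} (h : Bij Θ) : Bij (Prod.swap ⁻¹' Θ : Set (T × S)) := by
  refine ⟨?_, fun z hz z' hz' => h.inj _ hz _ hz', fun z hz z' hz' => h.fn _ hz _ hz'⟩
  rw [← image_swap_eq_preimage_swap]
  exact h.cpt.image continuous_swap

lemma Bij.exists_fun [T2Space S] {Θ : Set (S × T)} (h : Bij Θ) (t₀ : T) :
    ∃ g : S → T, ContinuousOn g (Prod.fst '' Θ) ∧ InjOn g (Prod.fst '' Θ) ∧ ∀ z ∈ Θ, g z.1 = z.2 := by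
  classical
  let g : S → T := fun x => if hx : ∃ y, (x, y) ∈ Θ then hx.choose else t₀
  have hg : ∀ z ∈ Θ, g z.1 = z.2 := by
    intro z hz
    have hx : ∃ y, (z.1, y) ∈ Θ := ⟨z.2, hz⟩
    simp only [g, dif_pos hx]
    exact h.fn _ hx.choose_spec _ hz rfl
  refine ⟨g, ?_, ?_, hg⟩
  · rw [continuousOn_iff_isClosed]
    intro C hC
    refine ⟨Prod.fst '' (Θ ∩ Prod.snd ⁻¹' C), ((h.cpt.inter_right (hC.preimage continuous_snd)).image
      continuous_fst).isClosed, ?_⟩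
    ext x
    constructor
    · rintro ⟨hx, z, hz, rfl⟩
      exact ⟨⟨z, ⟨hz, by simpa [hg z hz] using hx⟩, rfl⟩, z, hz, rfl⟩
    · rintro ⟨⟨z, hz, rfl⟩, hx⟩
      exact ⟨by simpa [hg z hz.1] using hz.2, hx⟩
  · rintro _ ⟨z, hz, rfl⟩ _ ⟨z', hz', rfl⟩ he
    rw [hg z hz, hg z' hz'] at he
    exact h.inj _ hz _ hz' he

/-- A pair of open sets with their frontiers, one in each surface. -/
structure Pr (S T : Type*) where
  V : Set S
  J : Set S
  V' : Set T
  J' : Set T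

/-- The pair with the two surfaces exchanged. -/
def Pr.swap (l : Pr S T) : Pr T S := ⟨l.V', l.J', l.V, l.J⟩

/-- Combinatorially equivalent decompositions of `K` and `K'` into finitely many cells, with a
homeomorphism `Θ` between sets containing the frontiers of the cells. -/
structure St (w : S) (w' : T) (K : Set S) (K' : Set T) (Θ : Set (S × T)) (L : Set (Pr S T)) : Prop where
  bij : Bij Θ
  fin : L.Finite
  cell : ∀ l ∈ L, Cell w l.V l.J
  cell' : ∀ l ∈ L, Cell w' l.V' l.J'
  mat : ∀ l ∈ L, ∀ z ∈ Θ, z.1 ∈ l.J ↔ z.2 ∈ l.J'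
  dom : ∀ l ∈ L, ∀ x ∈ l.J, ∃ y, (x, y) ∈ Θ
  dom' : ∀ l ∈ L, ∀ y ∈ l.J', ∃ x, (x, y) ∈ Θ
  off : ∀ l ∈ L, ∀ z ∈ Θ, z.1 ∉ l.V
  off' : ∀ l ∈ L, ∀ z ∈ Θ, z.2 ∉ l.V'
  dis : ∀ l ∈ L, ∀ m ∈ L, l ≠ m → Disjoint l.V m.V
  dis' : ∀ l ∈ L, ∀ m ∈ L, l ≠ m → Disjoint l.V' m.V'
  cov : ∀ x ∈ K, ∃ l ∈ L, x ∈ closure l.V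
  cov' : ∀ y ∈ K', ∃ l ∈ L, y ∈ closure l.V'

lemma St.swap {w : S} {w' : T} {K : Set S} {K' : Set T} {Θ : Set (S × T)} {L : Set (Pr S T)}
    (h : St w w' K K' Θ L) : St w' w K' K (Prod.swap ⁻¹' Θ) (Pr.swap '' L) := by
  refine ⟨h.bij.swap, h.fin.image _, ?_, ?_, ?_, ?_, ?_, ?_, ?_, ?_, ?_, ?_, ?_⟩
  · rintro _ ⟨l, hl, rfl⟩; exact h.cell' l hl
  · rintro _ ⟨l, hl, rfl⟩; exact h.cell l hl
  · rintro _ ⟨l, hl, rfl⟩ z hz; exact (h.mat l hl _ hz).symm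
  · rintro _ ⟨l, hl, rfl⟩; exact h.dom' l hl
  · rintro _ ⟨l, hl, rfl⟩; exact h.dom l hl
  · rintro _ ⟨l, hl, rfl⟩ z hz; exact h.off' l hl _ hz
  · rintro _ ⟨l, hl, rfl⟩ z hz; exact h.off l hl _ hz
  · rintro _ ⟨l, hl, rfl⟩ _ ⟨m, hm, rfl⟩ hne; exact h.dis' l hl m hm fun h => hne (by rw [h])
  · rintro _ ⟨l, hl, rfl⟩ _ ⟨m, hm, rfl⟩ hne; exact h.dis l hl m hm fun h => hne (by rw [h])
  · intro x hx
    obtain ⟨l, hl, h⟩ := h.cov' x hx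
    exact ⟨_, ⟨l, hl, rfl⟩, h⟩
  · intro x hx
    obtain ⟨l, hl, h⟩ := h.cov x hx
    exact ⟨_, ⟨l, hl, rfl⟩, h⟩

lemma cut_cov [T2Space S] {w : S} {V J J₁ J₂ σ U₁ U₂ : Set S} {a b : S} (hV : Cell w V J)
    (hH : Halves J J₁ J₂ a b) (hU₁ : Cell w U₁ (σ ∪ J₁)) (hU₂ : Cell w U₂ (σ ∪ J₂))
    (hun : U₁ ∪ U₂ = V \ σ) : closure V ⊆ closure U₁ ∪ closure U₂ := by
  intro x hx
  rcases hV.closure_eq.subset hx with h | h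
  · by_cases hσ : x ∈ σ
    · exact Or.inl (hU₁.reg.sub (Or.inl hσ))
    · exact (hun.symm.subset ⟨h, hσ⟩).imp (fun h => subset_closure h) (fun h => subset_closure h)
  · rw [← hH.union] at h
    exact h.imp (fun h => hU₁.reg.sub (Or.inr h)) (fun h => hU₂.reg.sub (Or.inr h))

lemma rel_halves [T2Space S] {Θ : Set (S × T)} (h : Bij Θ) {J J₁ J₂ : Set S} {J' : Set T} {a b : S}
    (hH : Halves J J₁ J₂ a b) (mat : ∀ z ∈ Θ, z.1 ∈ J ↔ z.2 ∈ J') (dom : ∀ x ∈ J, ∃ y, (x, y) ∈ Θ)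
    (dom' : ∀ y ∈ J', ∃ x, (x, y) ∈ Θ) : ∃ J₁' J₂' a' b', Halves J' J₁' J₂' a' b' ∧ (a, a') ∈ Θ ∧
      (b, b') ∈ Θ ∧ (∀ z ∈ Θ, z.1 ∈ J₁ ↔ z.2 ∈ J₁') ∧ (∀ z ∈ Θ, z.1 ∈ J₂ ↔ z.2 ∈ J₂') := by
  have h1 : J₁ ⊆ J := hH.union ▸ subset_union_left
  have h2 : J₂ ⊆ J := hH.union ▸ subset_union_right
  obtain ⟨t₀, -⟩ := dom a (h1 hH.arc₁.left)
  obtain ⟨g, hgc, hgi, hg⟩ := h.exists_fun t₀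
  have hJd : J ⊆ Prod.fst '' Θ := fun x hx => by
    obtain ⟨y, hy⟩ := dom x hx
    exact ⟨_, hy, rfl⟩
  have hgΘ : ∀ x ∈ J, (x, g x) ∈ Θ := fun x hx => by
    obtain ⟨y, hy⟩ := dom x hx
    rwa [hg _ hy]
  have hmat : ∀ A ⊆ J, ∀ z ∈ Θ, z.1 ∈ A ↔ z.2 ∈ g '' A := by
    intro A hA z hz
    constructor
    · exact fun hz' => ⟨z.1, hz', hg z hz⟩
    · rintro ⟨x, hx, hxz⟩
      rwa [← h.inj (x, g x) (hgΘ x (hA hx)) z hz hxz]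
  refine ⟨g '' J₁, g '' J₂, g a, g b, ⟨hH.arc₁.image (hgc.mono (h1.trans hJd)) (hgi.mono (h1.trans hJd)),
    hH.arc₂.image (hgc.mono (h2.trans hJd)) (hgi.mono (h2.trans hJd)), ?_, ?_⟩,
    hgΘ a (h1 hH.arc₁.left), hgΘ b (h1 hH.arc₁.right), hmat J₁ h1, hmat J₂ h2⟩
  · rw [← (hgi.mono hJd).image_inter h1 h2, hH.inter, image_pair]
  · rw [← image_union, hH.union]
    ext y
    constructor
    · rintro ⟨x, hx, rfl⟩
      exact (mat _ (hgΘ x hx)).1 hx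
    · intro hy
      obtain ⟨x, hx⟩ := dom' y hy
      exact ⟨x, (mat _ hx).2 hy, hg _ hx⟩

/-- Adding a pair of matching crosscuts to a boundary correspondence. -/
lemma arc_bij {Θ : Set (S × T)} (h : Bij Θ) {σ V : Set S} {σ' V' : Set T} {a b : S} {a' b' : T}
    (hσ : IsArc σ a b) (hσ' : IsArc σ' a' b') (ha : (a, a') ∈ Θ) (hb : (b, b') ∈ Θ)
    (hσV : σ \ {a, b} ⊆ V) (hσV' : σ' \ {a', b'} ⊆ V') (off : ∀ z ∈ Θ, z.1 ∉ V) (off' : ∀ z ∈ Θ, z.2 ∉ V') :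
    ∃ Φ : Set (S × T), Bij (Θ ∪ Φ) ∧ (∀ z ∈ Φ, z.1 ∈ σ ∧ z.2 ∈ σ' ∧ (z ∈ Θ ∨ z.1 ∈ V ∧ z.2 ∈ V')) ∧
      (∀ x ∈ σ, ∃ y, (x, y) ∈ Φ) ∧ (∀ y ∈ σ', ∃ x, (x, y) ∈ Φ) := by
  obtain ⟨s, hsc, hsi, rfl, rfl, rfl⟩ := hσ
  obtain ⟨s', hsc', hsi', rfl, rfl, rfl⟩ := hσ'
  have key : ∀ t ∈ Icc (0 : ℝ) 1, (s t, s' t) ∈ Θ ∨ s t ∈ V ∧ s' t ∈ V' := by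
    intro t ht
    by_cases h0 : t = 0
    · subst h0; exact Or.inl ha
    by_cases h1 : t = 1
    · subst h1; exact Or.inl hb
    have hne : t ∈ Ioo (0 : ℝ) 1 := ⟨lt_of_le_of_ne ht.1 (Ne.symm h0), lt_of_le_of_ne ht.2 h1⟩
    right
    constructor
    · apply hσV; rw [inner_eq hsi]; exact ⟨t, hne, rfl⟩
    · apply hσV'; rw [inner_eq hsi']; exact ⟨t, hne, rfl⟩
  refine ⟨(fun t => (s t, s' t)) '' Icc 0 1, ⟨h.cpt.union (isCompact_Icc.image_of_continuousOn
    (hsc.prodMk hsc')), ?_, ?_⟩, ?_, ?_, ?_⟩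
  · have one : ∀ z ∈ Θ, ∀ t ∈ Icc (0 : ℝ) 1, z.1 = s t → z.2 = s' t := by
      intro z hz t ht he
      rcases key t ht with hk | hk
      · exact h.fn z hz _ hk he
      · exact absurd (he ▸ hk.1) (off z hz)
    rintro z (hz | ⟨t, ht, rfl⟩) z' (hz' | ⟨t', ht', rfl⟩) he
    · exact h.fn z hz z' hz' he
    · exact one z hz t' ht' he
    · exact (one z' hz' t ht he.symm).symm
    · exact congrArg s' (hsi ht ht' he)
  · have one : ∀ z ∈ Θ, ∀ t ∈ Icc (0 : ℝ) 1, z.2 = s' t → z.1 = s t := by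
      intro z hz t ht he
      rcases key t ht with hk | hk
      · exact h.inj z hz _ hk he
      · exact absurd (he ▸ hk.2) (off' z hz)
    rintro z (hz | ⟨t, ht, rfl⟩) z' (hz' | ⟨t', ht', rfl⟩) he
    · exact h.inj z hz z' hz' he
    · exact one z hz t' ht' he
    · exact (one z' hz' t ht he.symm).symm
    · exact congrArg s (hsi' ht ht' he)
  · rintro _ ⟨t, ht, rfl⟩
    exact ⟨⟨t, ht, rfl⟩, ⟨t, ht, rfl⟩, key t ht⟩
  · rintro _ ⟨t, ht, rfl⟩
    exact ⟨s' t, t, ht, rfl⟩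
  · rintro _ ⟨t, ht, rfl⟩
    exact ⟨s t, t, ht, rfl⟩

/-- One cell of the first surface is cut along a crosscut, and the matching cell of the second
surface along a corresponding crosscut. -/
lemma St.cut [T2Space S] [T2Space T] [FirstCountableTopology T] (hT : Surf T) {w : S} {w' : T}
    {K : Set S} {K' : Set T} {Θ : Set (S × T)} {L : Set (Pr S T)} {V J J₁ J₂ σ U₁ U₂ : Set S} {V' J' : Set T}
    {a b : S} (h : St w w' K K' Θ (insert ⟨V, J, V', J'⟩ L)) (hnL : ⟨V, J, V', J'⟩ ∉ L)
    (hH : Halves J J₁ J₂ a b) (hσ : IsArc σ a b) (hσV : σ \ {a, b} ⊆ V) (hun : U₁ ∪ U₂ = V \ σ)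
    (hd : Disjoint U₁ U₂) (hU₁ : Cell w U₁ (σ ∪ J₁)) (hU₂ : Cell w U₂ (σ ∪ J₂)) :
    ∃ Θ' U₁' U₂' J₁' J₂', Θ ⊆ Θ' ∧ U₁' ⊆ V' ∧ U₂' ⊆ V' ∧
      St w w' K K' Θ' (insert ⟨U₁, σ ∪ J₁, U₁', J₁'⟩ (insert ⟨U₂, σ ∪ J₂, U₂', J₂'⟩ L)) := by
  have hm : (⟨V, J, V', J'⟩ : Pr S T) ∈ insert ⟨V, J, V', J'⟩ L := mem_insert _ _
  have hL : ∀ l ∈ L, l ∈ insert ⟨V, J, V', J'⟩ L := fun l hl => mem_insert_of_mem _ hl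
  have hV := h.cell _ hm
  have hV' := h.cell' _ hm
  obtain ⟨J₁', J₂', a', b', hH', ha, hb, hm1, hm2⟩ := rel_halves h.bij hH (h.mat _ hm) (h.dom _ hm) (h.dom' _ hm)
  change Halves J' J₁' J₂' a' b' at hH'
  have hJ₁ : J₁ ⊆ J := hH.union ▸ subset_union_left
  have hJ₂ : J₂ ⊆ J := hH.union ▸ subset_union_right
  have hJ₁' : J₁' ⊆ J' := hH'.union ▸ subset_union_left
  have hJ₂' : J₂' ⊆ J' := hH'.union ▸ subset_union_right
  obtain ⟨σ', hσ', hσV'⟩ := hV'.reg.crosscut hT (hJ₁' hH'.arc₁.left) (hJ₁' hH'.arc₁.right) hH'.arc₁.ne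
  obtain ⟨U₁', U₂', hU₁', hU₂', hun', hd'⟩ := hV'.split hT hH' hσ' hσV'
  obtain ⟨Φ, hΦ, hΦ1, hΦ2, hΦ3⟩ := arc_bij h.bij hσ hσ' ha hb hσV hσV' (h.off _ hm) (h.off' _ hm)
  have s1 : U₁ ⊆ V \ σ := hun ▸ subset_union_left
  have s2 : U₂ ⊆ V \ σ := hun ▸ subset_union_right
  have s1' : U₁' ⊆ V' \ σ' := hun' ▸ subset_union_left
  have s2' : U₂' ⊆ V' \ σ' := hun' ▸ subset_union_right
  -- the old correspondence meets the crosscut only at its end points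
  have e1 : ∀ z ∈ Θ, z.1 ∈ σ → z.1 = a ∨ z.1 = b := fun z hz hzσ => by
    by_contra hcon
    exact h.off _ hm z hz (hσV ⟨hzσ, hcon⟩)
  have e2 : ∀ z ∈ Θ, z.2 ∈ σ' → z.2 = a' ∨ z.2 = b' := fun z hz hzσ => by
    by_contra hcon
    exact h.off' _ hm z hz (hσV' ⟨hzσ, hcon⟩)
  have dL : ∀ l ∈ L, Disjoint l.V V := fun l hl => h.dis _ (hL l hl) _ hm (by rintro rfl; exact hnL hl)
  have dL' : ∀ l ∈ L, Disjoint l.V' V' := fun l hl => h.dis' _ (hL l hl) _ hm (by rintro rfl; exact hnL hl)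
  refine ⟨Θ ∪ Φ, U₁', U₂', σ' ∪ J₁', σ' ∪ J₂', subset_union_left, s1'.trans sdiff_subset,
    s2'.trans sdiff_subset, hΦ, ((h.fin.subset (subset_insert _ _)).insert _).insert _,
    ?_, ?_, ?_, ?_, ?_, ?_, ?_, ?_, ?_, ?_, ?_⟩
  · rintro l (rfl | rfl | hl)
    exacts [hU₁, hU₂, h.cell _ (hL l hl)]
  · rintro l (rfl | rfl | hl)
    exacts [hU₁', hU₂', h.cell' _ (hL l hl)]
  · have new : ∀ A ⊆ J, ∀ A' ⊆ J', a ∈ A → b ∈ A → a' ∈ A' → b' ∈ A' → (∀ z ∈ Θ, z.1 ∈ A ↔ z.2 ∈ A') →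
        ∀ z ∈ Θ ∪ Φ, z.1 ∈ σ ∪ A ↔ z.2 ∈ σ' ∪ A' := by
      rintro A - A' - haA hbA haA' hbA' hA z (hz | hz)
      · constructor
        · rintro (hz' | hz')
          · rcases e1 z hz hz' with h' | h'
            · exact Or.inr ((hA z hz).1 (h' ▸ haA))
            · exact Or.inr ((hA z hz).1 (h' ▸ hbA))
          · exact Or.inr ((hA z hz).1 hz')
        · rintro (hz' | hz')
          · rcases e2 z hz hz' with h' | h'
            · exact Or.inr ((hA z hz).2 (h' ▸ haA'))
            · exact Or.inr ((hA z hz).2 (h' ▸ hbA'))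
          · exact Or.inr ((hA z hz).2 hz')
      · exact ⟨fun _ => Or.inl (hΦ1 z hz).2.1, fun _ => Or.inl (hΦ1 z hz).1⟩
    rintro l (rfl | rfl | hl)
    · exact new J₁ hJ₁ J₁' hJ₁' hH.arc₁.left hH.arc₁.right hH'.arc₁.left hH'.arc₁.right hm1
    · exact new J₂ hJ₂ J₂' hJ₂' hH.arc₂.left hH.arc₂.right hH'.arc₂.left hH'.arc₂.right hm2
    · rintro z (hz | hz)
      · exact h.mat l (hL l hl) z hz
      · rcases (hΦ1 z hz).2.2 with h' | h'
        · exact h.mat l (hL l hl) z h'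
        · have c1 := (h.cell l (hL l hl)).reg.sub
          have c2 := (h.cell' l (hL l hl)).reg.sub
          exact ⟨fun hh => absurd (c1 hh) (disjoint_right.1 ((dL l hl).closure_left hV.op) h'.1),
            fun hh => absurd (c2 hh) (disjoint_right.1 ((dL' l hl).closure_left hV'.op) h'.2)⟩
  · have new : ∀ A ⊆ J, ∀ x ∈ σ ∪ A, ∃ y, (x, y) ∈ Θ ∪ Φ := by
      rintro A hA x (hx | hx)
      · obtain ⟨y, hy⟩ := hΦ2 x hx
        exact ⟨y, Or.inr hy⟩
      · obtain ⟨y, hy⟩ := h.dom _ hm x (hA hx)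
        exact ⟨y, Or.inl hy⟩
    rintro l (rfl | rfl | hl)
    · exact new J₁ hJ₁
    · exact new J₂ hJ₂
    · intro x hx
      obtain ⟨y, hy⟩ := h.dom l (hL l hl) x hx
      exact ⟨y, Or.inl hy⟩
  · have new : ∀ A ⊆ J', ∀ x ∈ σ' ∪ A, ∃ y, (y, x) ∈ Θ ∪ Φ := by
      rintro A hA x (hx | hx)
      · obtain ⟨y, hy⟩ := hΦ3 x hx
        exact ⟨y, Or.inr hy⟩
      · obtain ⟨y, hy⟩ := h.dom' _ hm x (hA hx)
        exact ⟨y, Or.inl hy⟩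
    rintro l (rfl | rfl | hl)
    · exact new J₁' hJ₁'
    · exact new J₂' hJ₂'
    · intro x hx
      obtain ⟨y, hy⟩ := h.dom' l (hL l hl) x hx
      exact ⟨y, Or.inl hy⟩
  · have new : ∀ U ⊆ V \ σ, ∀ z ∈ Θ ∪ Φ, z.1 ∉ U := by
      rintro U hU z (hz | hz) hzU
      · exact h.off _ hm z hz (hU hzU).1
      · exact (hU hzU).2 (hΦ1 z hz).1
    rintro l (rfl | rfl | hl)
    · exact new U₁ s1
    · exact new U₂ s2
    · rintro z (hz | hz)
      · exact h.off l (hL l hl) z hz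
      · rcases (hΦ1 z hz).2.2 with h' | h'
        · exact h.off l (hL l hl) z h'
        · exact disjoint_right.1 (dL l hl) h'.1
  · have new : ∀ U ⊆ V' \ σ', ∀ z ∈ Θ ∪ Φ, z.2 ∉ U := by
      rintro U hU z (hz | hz) hzU
      · exact h.off' _ hm z hz (hU hzU).1
      · exact (hU hzU).2 (hΦ1 z hz).2.1
    rintro l (rfl | rfl | hl)
    · exact new U₁' s1'
    · exact new U₂' s2'
    · rintro z (hz | hz)
      · exact h.off' l (hL l hl) z hz
      · rcases (hΦ1 z hz).2.2 with h' | h'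
        · exact h.off' l (hL l hl) z h'
        · exact disjoint_right.1 (dL' l hl) h'.2
  · have n1 := fun l hl => (dL l hl).mono_right (s1.trans sdiff_subset)
    have n2 := fun l hl => (dL l hl).mono_right (s2.trans sdiff_subset)
    rintro l (rfl | rfl | hl) m (rfl | rfl | hm') hne
    exacts [absurd rfl hne, hd, (n1 m hm').symm, hd.symm, absurd rfl hne, (n2 m hm').symm, n1 l hl, n2 l hl,
      h.dis l (hL l hl) m (hL m hm') hne]
  · have n1 := fun l hl => (dL' l hl).mono_right (s1'.trans sdiff_subset)
    have n2 := fun l hl => (dL' l hl).mono_right (s2'.trans sdiff_subset)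
    rintro l (rfl | rfl | hl) m (rfl | rfl | hm') hne
    exacts [absurd rfl hne, hd', (n1 m hm').symm, hd'.symm, absurd rfl hne, (n2 m hm').symm, n1 l hl, n2 l hl,
      h.dis' l (hL l hl) m (hL m hm') hne]
  · intro x hx
    obtain ⟨l, rfl | hl, hxl⟩ := h.cov x hx
    · rcases cut_cov hV hH hU₁ hU₂ hun hxl with h' | h'
      · exact ⟨_, Or.inl rfl, h'⟩
      · exact ⟨_, Or.inr (Or.inl rfl), h'⟩
    · exact ⟨l, Or.inr (Or.inr hl), hxl⟩
  · intro x hx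
    obtain ⟨l, rfl | hl, hxl⟩ := h.cov' x hx
    · rcases cut_cov hV' hH' hU₁' hU₂' hun' hxl with h' | h'
      · exact ⟨_, Or.inl rfl, h'⟩
      · exact ⟨_, Or.inr (Or.inl rfl), h'⟩
    · exact ⟨l, Or.inr (Or.inr hl), hxl⟩

/-! ### Extending boundary homeomorphisms -/

lemma St.not_mem {w : S} {w' : T} {K : Set S} {K' : Set T} {Θ : Set (S × T)} {L : Set (Pr S T)} {m : Pr S T}
    (h : St w w' K K' Θ (insert m L)) (hm : m ∉ L) {l : Pr S T} (hl : l.V.Nonempty) (hlm : l.V ⊆ m.V) : l ∉ L := by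
  intro hlL
  obtain ⟨x, hx⟩ := hl
  exact disjoint_left.1 (h.dis l (Or.inr hlL) m (Or.inl rfl) (by rintro rfl; exact hm hlL)) hx (hlm hx)

/-- A subdivision of one cell of the first surface is copied in the second surface. -/
lemma St.tree [T2Space S] [T2Space T] [FirstCountableTopology T] (hT : Surf T) {w : S} {w' : T}
    {K : Set S} {K' : Set T} {P : Set S → Prop} {V J : Set S} (ht : Tree w P V J) :
    ∀ (Θ : Set (S × T)) (L : Set (Pr S T)) (V' J' : Set T), St w w' K K' Θ (insert ⟨V, J, V', J'⟩ L) →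
      ⟨V, J, V', J'⟩ ∉ L → ∃ Θ' L₁, Θ ⊆ Θ' ∧ St w w' K K' Θ' (L₁ ∪ L) ∧
        ∀ l ∈ L₁, P l.V ∧ l.V ⊆ V ∧ l.V' ⊆ V' := by
  induction ht with
  | @leaf V J hV hP =>
    intro Θ L V' J' h hn
    refine ⟨Θ, {⟨V, J, V', J'⟩}, Subset.rfl, h, ?_⟩
    rintro l rfl
    exact ⟨hP, Subset.rfl, Subset.rfl⟩
  | @node V J J₁ J₂ σ U₁ U₂ a b hV hH hσ hσV hun hd ht₁ ht₂ ih₁ ih₂ =>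
    intro Θ L V' J' h hn
    obtain ⟨Θ₁, U₁', U₂', J₁', J₂', hΘ₁, s1', s2', h1⟩ := h.cut hT hn hH hσ hσV hun hd ht₁.cell ht₂.cell
    have s1 : U₁ ⊆ V := (hun ▸ subset_union_left : U₁ ⊆ V \ σ).trans sdiff_subset
    have s2 : U₂ ⊆ V := (hun ▸ subset_union_right : U₂ ⊆ V \ σ).trans sdiff_subset
    obtain ⟨x₁, hx₁⟩ := ht₁.cell.nonempty
    obtain ⟨x₂, hx₂⟩ := ht₂.cell.nonempty
    obtain ⟨Θ₂, L₁, hΘ₂, h2, hL₁⟩ := ih₁ Θ₁ _ U₁' J₁' h1 (by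
      rintro (he | he)
      · rw [Pr.mk.injEq] at he
        exact disjoint_left.1 hd hx₁ (he.1 ▸ hx₁)
      · exact h.not_mem hn ⟨x₁, hx₁⟩ s1 he)
    rw [union_insert] at h2
    obtain ⟨Θ₃, L₂, hΘ₃, h3, hL₂⟩ := ih₂ Θ₂ _ U₂' J₂' h2 (by
      rintro (he | he)
      · exact disjoint_left.1 hd ((hL₁ _ he).2.1 hx₂) hx₂
      · exact h.not_mem hn ⟨x₂, hx₂⟩ s2 he)
    rw [← union_assoc] at h3
    refine ⟨Θ₃, L₂ ∪ L₁, hΘ₁.trans (hΘ₂.trans hΘ₃), h3, ?_⟩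
    rintro l (hl | hl)
    · exact ⟨(hL₂ l hl).1, (hL₂ l hl).2.1.trans s2, (hL₂ l hl).2.2.trans s2'⟩
    · exact ⟨(hL₁ l hl).1, (hL₁ l hl).2.1.trans s1, (hL₁ l hl).2.2.trans s1'⟩

lemma St.refine' [T2Space S] [T2Space T] [FirstCountableTopology T] (hT : Surf T) {w : S} {w' : T}
    {K : Set S} {K' : Set T} {P : Set S → Prop} (hP : ∀ V J, Cell w V J → Tree w P V J)
    {M : Set (Pr S T)} (hM : M.Finite) :
    ∀ (Θ : Set (S × T)) (R : Set (Pr S T)), St w w' K K' Θ (M ∪ R) → Disjoint M R →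
      ∃ Θ' M', Θ ⊆ Θ' ∧ St w w' K K' Θ' (M' ∪ R) ∧
        ∀ l ∈ M', P l.V ∧ ∃ m ∈ M, l.V ⊆ m.V ∧ l.V' ⊆ m.V' := by
  induction M, hM using Set.Finite.induction_on with
  | empty => exact fun Θ R h _ => ⟨Θ, ∅, Subset.rfl, h, by simp⟩
  | @insert m M hmM hMf ih =>
    intro Θ R h hd
    rw [insert_union] at h
    have hmn : m ∉ M ∪ R := by
      rintro (h' | h')
      · exact hmM h'
      · exact disjoint_left.1 hd (mem_insert _ _) h'
    obtain ⟨Θ₁, L₁, hΘ₁, h1, hL₁⟩ := St.tree hT (hP _ _ (h.cell m (mem_insert _ _))) Θ _ m.V' m.J' h hmn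
    rw [union_left_comm] at h1
    obtain ⟨Θ₂, M', hΘ₂, h2, hM'⟩ := ih Θ₁ _ h1 (by
      rw [disjoint_union_right]
      refine ⟨disjoint_right.2 fun l hl hlM => ?_, hd.mono_left (subset_insert _ _)⟩
      exact h.not_mem hmn (h1.cell l (Or.inr (Or.inl hl))).nonempty (hL₁ l hl).2.1 (Or.inl hlM))
    rw [← union_assoc] at h2
    refine ⟨Θ₂, M' ∪ L₁, hΘ₁.trans hΘ₂, h2, ?_⟩
    rintro l (hl | hl)
    · obtain ⟨p, m', hm', q⟩ := hM' l hl
      exact ⟨p, m', Or.inr hm', q⟩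
    · exact ⟨(hL₁ l hl).1, m, Or.inl rfl, (hL₁ l hl).2⟩

/-- All cells of the first surface are subdivided, with matching subdivisions in the second one. -/
lemma St.refine [T2Space S] [T2Space T] [FirstCountableTopology T] (hT : Surf T) {w : S} {w' : T}
    {K : Set S} {K' : Set T} {P : Set S → Prop} (hP : ∀ V J, Cell w V J → Tree w P V J)
    {Θ : Set (S × T)} {L : Set (Pr S T)} (h : St w w' K K' Θ L) :
      ∃ Θ' L', Θ ⊆ Θ' ∧ St w w' K K' Θ' L' ∧ ∀ l ∈ L', P l.V ∧ ∃ m ∈ L, l.V ⊆ m.V ∧ l.V' ⊆ m.V' := by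
  obtain ⟨Θ', L', h1, h2, h3⟩ := St.refine' hT hP h.fin Θ ∅ (by simpa using h) (by simp)
  exact ⟨Θ', L', h1, by simpa using h2, h3⟩

lemma St.refine_both [T2Space S] [T2Space T] [FirstCountableTopology T] [FirstCountableTopology S] (hS : Surf S)
    (hT : Surf T) {w : S} {w' : T}
    {K : Set S} {K' : Set T} {P : Set S → Prop} (hP : ∀ V J, Cell w V J → Tree w P V J)
    {P' : Set T → Prop} (hP' : ∀ V J, Cell w' V J → Tree w' P' V J) (hmono : ∀ U V, U ⊆ V → P V → P U)
    {Θ : Set (S × T)} {L : Set (Pr S T)} (h : St w w' K K' Θ L) :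
      ∃ Θ' L', Θ ⊆ Θ' ∧ St w w' K K' Θ' L' ∧
        ∀ l ∈ L', P l.V ∧ P' l.V' ∧ ∃ m ∈ L, l.V ⊆ m.V ∧ l.V' ⊆ m.V' := by
  obtain ⟨Θ₁, L₁, hΘ₁, h1, hL₁⟩ := h.refine hT hP
  obtain ⟨Θ₂, L₂, hΘ₂, h2, hL₂⟩ := h1.swap.refine hS hP'
  refine ⟨Prod.swap ⁻¹' Θ₂, Pr.swap '' L₂, fun z hz => ?_, h2.swap, ?_⟩
  · exact hΘ₂ (by simpa using hΘ₁ hz)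
  · rintro _ ⟨l, hl, rfl⟩
    obtain ⟨p, _, ⟨m, hm, rfl⟩, q1, q2⟩ := hL₂ l hl
    obtain ⟨p', n, hn, q1', q2'⟩ := hL₁ m hm
    exact ⟨hmono _ _ q2 p', p, n, hn, Subset.trans q2 q1', Subset.trans q1 q2'⟩

lemma small_dist {Y : Type*} [PseudoMetricSpace Y] {A : Set Y} {r : ℝ} (h : ∃ x, A ⊆ ball x r) :
    ∀ u ∈ closure A, ∀ v ∈ closure A, dist u v ≤ 2 * r := by
  obtain ⟨x, hx⟩ := h
  intro u hu v hv
  have hc : closure A ⊆ closedBall x r := closure_minimal (hx.trans ball_subset_closedBall) isClosed_closedBall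
  have := dist_triangle_right u v x
  linarith [mem_closedBall.1 (hc hu), mem_closedBall.1 (hc hv)]

/-- A homeomorphism between the frontiers of two cells extends to the closed cells. -/
theorem cell_extend {S T : Type*} [MetricSpace S] [MetricSpace T] [ConnectedSpace S] [ConnectedSpace T]
    (hS : Surf S) (hT : Surf T) {w : S} {w' : T} {U J : Set S} {U' J' : Set T} (hU : Cell w U J)
    (hU' : Cell w' U' J') {Θ₀ : Set (S × T)} (hΘ : Bij Θ₀) (h1 : Prod.fst '' Θ₀ = J)
    (h2 : Prod.snd '' Θ₀ = J') :
    ∃ G : Set (S × T), Bij G ∧ Prod.fst '' G = closure U ∧ Prod.snd '' G = closure U' ∧ Θ₀ ⊆ G := by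
  let X := {p : Set (S × T) × Set (Pr S T) // St w w' (closure U) (closure U') p.1 p.2}
  have hstep : ∀ (n : ℕ) (p : X), ∃ q : X, p.1.1 ⊆ q.1.1 ∧ ∀ l ∈ q.1.2,
      (∃ x, l.V ⊆ ball x (1 / (n + 1))) ∧ (∃ x, l.V' ⊆ ball x (1 / (n + 1))) ∧
        ∃ m ∈ p.1.2, l.V ⊆ m.V ∧ l.V' ⊆ m.V' := by
    intro n p
    have hn : (0 : ℝ) < 1 / (n + 1) := by positivity
    obtain ⟨Θ', L', a, b, c⟩ := p.2.refine_both hS hT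
      (fun V J h => subdivide hS h (fun x => ball x (1 / (n + 1))) fun x => ball_mem_nhds x hn)
      (fun V J h => subdivide hT h (fun x => ball x (1 / (n + 1))) fun x => ball_mem_nhds x hn)
      (fun U V hUV ⟨x, hx⟩ => ⟨x, hUV.trans hx⟩)
    exact ⟨⟨(Θ', L'), b⟩, a, c⟩
  choose g hg1 hg2 using hstep
  have h0 : St w w' (closure U) (closure U') Θ₀ {⟨U, J, U', J'⟩} := by
    have t1 : ∀ z ∈ Θ₀, z.1 ∈ J := fun z hz => h1 ▸ ⟨z, hz, rfl⟩
    have t2 : ∀ z ∈ Θ₀, z.2 ∈ J' := fun z hz => h2 ▸ ⟨z, hz, rfl⟩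
    refine ⟨hΘ, finite_singleton _, ?_, ?_, ?_, ?_, ?_, ?_, ?_, ?_, ?_, ?_, ?_⟩
    · rintro l rfl; exact hU
    · rintro l rfl; exact hU'
    · rintro l rfl z hz; exact ⟨fun _ => t2 z hz, fun _ => t1 z hz⟩
    · rintro l rfl x hx
      obtain ⟨z, hz, rfl⟩ := h1.symm.subset hx
      exact ⟨z.2, hz⟩
    · rintro l rfl x hx
      obtain ⟨z, hz, rfl⟩ := h2.symm.subset hx
      exact ⟨z.1, hz⟩
    · rintro l rfl z hz; exact disjoint_right.1 hU.reg.disj (t1 z hz)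
    · rintro l rfl z hz; exact disjoint_right.1 hU'.reg.disj (t2 z hz)
    · rintro l rfl m rfl h; exact absurd rfl h
    · rintro l rfl m rfl h; exact absurd rfl h
    · exact fun x hx => ⟨_, rfl, hx⟩
    · exact fun x hx => ⟨_, rfl, hx⟩
  let s : ℕ → X := fun k => Nat.rec ⟨(Θ₀, {⟨U, J, U', J'⟩}), h0⟩ (fun k p => g k p) k
  have hs1 : ∀ k, (s k).1.1 ⊆ (s (k + 1)).1.1 := fun k => hg1 k (s k)
  have hs2 : ∀ k, ∀ l ∈ (s (k + 1)).1.2, (∃ x, l.V ⊆ ball x (1 / (k + 1))) ∧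
      (∃ x, l.V' ⊆ ball x (1 / (k + 1))) ∧ ∃ m ∈ (s k).1.2, l.V ⊆ m.V ∧ l.V' ⊆ m.V' := fun k => hg2 k (s k)
  have hst : ∀ k, St w w' (closure U) (closure U') (s k).1.1 (s k).1.2 := fun k => (s k).2
  have hΘs : ∀ k, Θ₀ ⊆ (s k).1.1 := by
    intro k
    induction k with
    | zero => exact Subset.rfl
    | succ k ih => exact ih.trans (hs1 k)
  let R : ℕ → Set (S × T) := fun k => ⋃ l ∈ (s k).1.2, closure l.V ×ˢ closure l.V'
  have hRc : ∀ k, IsCompact (R k) := fun k => (hst k).fin.isCompact_biUnion fun l hl =>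
    ((hst k).cell l hl).cpt.prod ((hst k).cell' l hl).cpt
  have hRm : ∀ k, R (k + 1) ⊆ R k := by
    intro k z hz
    obtain ⟨l, hl, hz'⟩ := mem_iUnion₂.1 hz
    obtain ⟨-, -, m, hm, m1, m2⟩ := hs2 k l hl
    exact mem_iUnion₂.2 ⟨m, hm, closure_mono m1 hz'.1, closure_mono m2 hz'.2⟩
  have hR0 : R 0 = closure U ×ˢ closure U' := by simp [R, s]
  have hRe1 : ∀ k, ∀ x ∈ closure U, ∃ y, (x, y) ∈ R k := by
    intro k x hx
    obtain ⟨l, hl, hxl⟩ := (hst k).cov x hx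
    obtain ⟨y, hy⟩ := ((hst k).cell' l hl).nonempty
    exact ⟨y, mem_iUnion₂.2 ⟨l, hl, hxl, subset_closure hy⟩⟩
  have hRe2 : ∀ k, ∀ y ∈ closure U', ∃ x, (x, y) ∈ R k := by
    intro k x hx
    obtain ⟨l, hl, hxl⟩ := (hst k).cov' x hx
    obtain ⟨y, hy⟩ := ((hst k).cell l hl).nonempty
    exact ⟨y, mem_iUnion₂.2 ⟨l, hl, subset_closure hy, hxl⟩⟩
  have hanti := antitone_nat_of_succ_le hRm
  have tiny : ∀ d : ℝ, (∀ k : ℕ, d ≤ 4 * (1 / (k + 1))) → d ≤ 0 := by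
    intro d hd
    refine ge_of_tendsto' (x := atTop) (f := fun k : ℕ => 4 * (1 / ((k : ℝ) + 1))) ?_ hd
    simpa using (tendsto_one_div_add_atTop_nhds_zero_nat (𝕜 := ℝ)).const_mul 4
  refine ⟨⋂ k, R k, ⟨?_, ?_, ?_⟩, ?_, ?_, ?_⟩
  · exact (hRc 0).of_isClosed_subset (isClosed_iInter fun k => (hRc k).isClosed) (iInter_subset _ 0)
  · rintro ⟨x, y⟩ hz ⟨x', y'⟩ hz' (rfl : x = x')
    refine dist_le_zero.1 (tiny _ fun k => ?_)
    obtain ⟨l, hl, hxl, hyl⟩ := mem_iUnion₂.1 (mem_iInter.1 hz (k + 1))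
    obtain ⟨m, hm, hxm, hym⟩ := mem_iUnion₂.1 (mem_iInter.1 hz' (k + 1))
    have hsl := small_dist (hs2 k l hl).2.1
    have hsm := small_dist (hs2 k m hm).2.1
    have hpos : (0 : ℝ) < 1 / (k + 1) := by positivity
    by_cases hlm : l = m
    · subst hlm
      have := hsl _ hyl _ hym
      simp only; linarith
    · have hd := (hst (k + 1)).dis l hl m hm hlm
      have c1 := (hst (k + 1)).cell l hl
      have c2 := (hst (k + 1)).cell m hm
      have j1 : x ∈ l.J := (c1.closure_eq.subset hxl).resolve_left fun h =>
        disjoint_left.1 (hd.closure_right c1.op) h hxm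
      have j2 : x ∈ m.J := (c2.closure_eq.subset hxm).resolve_left fun h =>
        disjoint_left.1 (hd.symm.closure_right c2.op) h hxl
      obtain ⟨y₀, hy₀⟩ := (hst (k + 1)).dom l hl x j1
      have k1 := ((hst (k + 1)).cell' l hl).reg.sub (((hst (k + 1)).mat l hl _ hy₀).1 j1)
      have k2 := ((hst (k + 1)).cell' m hm).reg.sub (((hst (k + 1)).mat m hm _ hy₀).1 j2)
      have := dist_triangle y y₀ y'
      have := hsl _ hyl _ k1
      have := hsm _ k2 _ hym
      simp only at *; linarith
  · rintro ⟨y, x⟩ hz ⟨y', x'⟩ hz' (rfl : x = x')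
    refine dist_le_zero.1 (tiny _ fun k => ?_)
    obtain ⟨l, hl, hyl, hxl⟩ := mem_iUnion₂.1 (mem_iInter.1 hz (k + 1))
    obtain ⟨m, hm, hym, hxm⟩ := mem_iUnion₂.1 (mem_iInter.1 hz' (k + 1))
    have hsl := small_dist (hs2 k l hl).1
    have hsm := small_dist (hs2 k m hm).1
    have hpos : (0 : ℝ) < 1 / (k + 1) := by positivity
    by_cases hlm : l = m
    · subst hlm
      have := hsl _ hyl _ hym
      simp only; linarith
    · have hd := (hst (k + 1)).dis' l hl m hm hlm
      have c1 := (hst (k + 1)).cell' l hl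
      have c2 := (hst (k + 1)).cell' m hm
      have j1 : x ∈ l.J' := (c1.closure_eq.subset hxl).resolve_left fun h =>
        disjoint_left.1 (hd.closure_right c1.op) h hxm
      have j2 : x ∈ m.J' := (c2.closure_eq.subset hxm).resolve_left fun h =>
        disjoint_left.1 (hd.symm.closure_right c2.op) h hxl
      obtain ⟨y₀, hy₀⟩ := (hst (k + 1)).dom' l hl x j1
      have k1 := ((hst (k + 1)).cell l hl).reg.sub (((hst (k + 1)).mat l hl _ hy₀).2 j1)
      have k2 := ((hst (k + 1)).cell m hm).reg.sub (((hst (k + 1)).mat m hm _ hy₀).2 j2)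
      have := dist_triangle y y₀ y'
      have := hsl _ hyl _ k1
      have := hsm _ k2 _ hym
      simp only at *; linarith
  · apply Subset.antisymm
    · rintro _ ⟨z, hz, rfl⟩
      exact (hR0.subset (mem_iInter.1 hz 0)).1
    · intro x hx
      obtain ⟨z, hz⟩ := IsCompact.nonempty_iInter_of_sequence_nonempty_isCompact_isClosed
        (fun k => R k ∩ {x} ×ˢ univ) (fun k => inter_subset_inter_left _ (hRm k))
        (fun k => by
          obtain ⟨y, hy⟩ := hRe1 k x hx
          exact ⟨(x, y), hy, rfl, trivial⟩)
        ((hRc 0).inter_right (isClosed_singleton.prod isClosed_univ))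
        fun k => (hRc k).isClosed.inter (isClosed_singleton.prod isClosed_univ)
      rw [mem_iInter] at hz
      exact ⟨z, mem_iInter.2 fun k => (hz k).1, (hz 0).2.1⟩
  · apply Subset.antisymm
    · rintro _ ⟨z, hz, rfl⟩
      exact (hR0.subset (mem_iInter.1 hz 0)).2
    · intro x hx
      obtain ⟨z, hz⟩ := IsCompact.nonempty_iInter_of_sequence_nonempty_isCompact_isClosed
        (fun k => R k ∩ univ ×ˢ {x}) (fun k => inter_subset_inter_left _ (hRm k))
        (fun k => by
          obtain ⟨y, hy⟩ := hRe2 k x hx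
          exact ⟨(y, x), hy, trivial, rfl⟩)
        ((hRc 0).inter_right (isClosed_univ.prod isClosed_singleton))
        fun k => (hRc k).isClosed.inter (isClosed_univ.prod isClosed_singleton)
      rw [mem_iInter] at hz
      exact ⟨z, mem_iInter.2 fun k => (hz k).1, (hz 0).2.2⟩
  · intro z hz
    refine mem_iInter.2 fun k => ?_
    have hzk := hΘs k hz
    have hzU : z.1 ∈ closure U := hU.reg.sub (h1 ▸ ⟨z, hz, rfl⟩)
    obtain ⟨l, hl, hzl⟩ := (hst k).cov _ hzU
    have hj : z.1 ∈ l.J := (((hst k).cell l hl).closure_eq.subset hzl).resolve_left ((hst k).off l hl z hzk)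
    exact mem_iUnion₂.2 ⟨l, hl, hzl, ((hst k).cell' l hl).reg.sub (((hst k).mat l hl z hzk).1 hj)⟩

end

/-! ### Jordan separation in the plane -/

/-- The converse of `jn_of_sqrt`. -/
lemma sqrt_of_jn {Y : Set ℂ} (hY : IsClosed Y) {p q : ℂ} (h : Jn Yᶜ p q) :
    ∃ s, SqrtOn s (fun z => (z - p) / (z - q)) Y := by
  have near : ∀ r r' ε, ball r ε ⊆ Yᶜ ∨ ball r' ε ⊆ Yᶜ → r' ∈ ball r (ε / 2) → r ∈ Yᶜ → r' ∈ Yᶜ →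
      (∃ s, SqrtOn s (fun z => (z - p) / (z - r)) Y) → ∃ s, SqrtOn s (fun z => (z - p) / (z - r')) Y := by
    rintro r r' ε hε hr' hrY hr'Y ⟨s, hs⟩
    have hne : ∀ v ∈ Yᶜ, ∀ z ∈ Y, z - v ≠ 0 := fun v hv z hz => sub_ne_zero.2 (by rintro rfl; exact hv hz)
    have hd : dist r' r < ε / 2 := hr'
    have hpos : ∀ z ∈ Y, 0 < ((z - r) / (z - r')).re := by
      intro z hz
      apply re_pos_ratio
      have h1 : ε / 2 ≤ dist z r' := by
        rcases hε with hε | hε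
        · have : ε ≤ dist z r := by
            by_contra hc
            exact hε (mem_ball.2 (not_le.1 hc)) hz
          have := dist_triangle z r' r
          linarith
        · have : ε ≤ dist z r' := by
            by_contra hc
            exact hε (mem_ball.2 (not_le.1 hc)) hz
          linarith [dist_nonneg (x := r') (y := r)]
      rw [← dist_eq_norm, ← dist_eq_norm, dist_comm r r']
      linarith
    have hc : ContinuousOn (fun z => (z - r) / (z - r')) Y :=
      (by fun_prop : ContinuousOn (fun z => z - r) Y).div (by fun_prop) (hne r' hr'Y)
    refine ⟨_, (hs.mul (psq_cont hc hpos)).congr fun z hz => ?_⟩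
    exact div_mul_div_cancel₀ (hne r hrY z hz)
  have hop := hY.isOpen_compl
  refine (h.mem_of_clopen (U := {r | r ∈ Yᶜ ∧ ∃ s, SqrtOn s (fun z => (z - p) / (z - r)) Y}) ?_ ?_ ?_).2
  · rw [Metric.isOpen_iff]
    rintro r ⟨hr, hs⟩
    obtain ⟨ε, hε, hb⟩ := Metric.isOpen_iff.1 hop r hr
    refine ⟨ε / 2, half_pos hε, fun r' hr' => ?_⟩
    have hr'Y : r' ∈ Yᶜ := hb (ball_subset_ball (by linarith) hr')
    exact ⟨hr'Y, near r r' ε (Or.inl hb) hr' hr hr'Y hs⟩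
  · intro v hv hvc
    obtain ⟨ε, hε, hb⟩ := Metric.isOpen_iff.1 hop v hv
    obtain ⟨r, ⟨hr, hs⟩, hd⟩ := Metric.mem_closure_iff.1 hvc (ε / 2) (half_pos hε)
    exact ⟨hv, near r v ε (Or.inr hb) (mem_ball.2 hd) hr hv hs⟩
  · refine ⟨h.left, fun _ => 1, continuousOn_const, fun z hz => ?_⟩
    have : z - p ≠ 0 := sub_ne_zero.2 (by rintro rfl; exact h.left hz)
    simp [this]

/-- The planar Jordan separation theorem in local form. -/
theorem plane_js {γ : Set ℂ} (hγ : IsJordan γ) {x : ℂ} (hx : x ∈ γ) {N : Set ℂ} (hN : N ∈ 𝓝 x) :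
    ∃ p ∈ N \ γ, ∃ q ∈ N \ γ, ¬ Jn γᶜ p q := by
  obtain ⟨c, hc, hp, hi, rfl⟩ := hγ
  obtain ⟨t₀, rfl⟩ := hx
  set a := t₀ - 1 / 4 with ha
  set b := t₀ + 1 / 4 with hb
  have hH := per_halves hp hi hc (s := a) (t := b) (by linarith) (by linarith)
  have hinj : InjOn c (Icc a b) := per_injOn hp hi (by linarith)
  have hK : IsCompact (c '' Icc b (a + 1)) := isCompact_Icc.image hc
  have hxK : c t₀ ∉ c '' Icc b (a + 1) := by
    rintro ⟨s, hs, h⟩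
    have h1 := hs.1; have h2 := hs.2
    have := per_inj hp hi h (by linarith) (by linarith)
    linarith
  obtain ⟨R, hR, hRb⟩ := Metric.isOpen_iff.1 hK.isClosed.isOpen_compl _ hxK
  have hRK : ∀ z ∈ c '' Icc b (a + 1), R ≤ dist z (c t₀) := fun z hz => by
    by_contra hcon
    exact hRb (mem_ball.2 (not_le.1 hcon)) hz
  obtain ⟨ρ, hρ, u, hO, -, hboth, -, hC⟩ := plane_side (f := c) (a := a) (t₀ := t₀) (b := b) (by linarith) (by linarith)
    hc.continuousOn hinj (X := range c) (image_subset_range _ _)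
    (by
      filter_upwards [hK.isClosed.isOpen_compl.mem_nhds hxK] with y hy hyr
      exact (hH.union.symm.subset hyr).resolve_right hy)
    (O := N ∩ ball (c t₀) (R / 3)) (inter_mem hN (ball_mem_nhds _ (by linarith)))
  obtain ⟨p, ⟨hpb, hpγ⟩, hup⟩ := hboth (c t₀) ⟨mem_range_self _, mem_ball_self hρ⟩ _ (ball_mem_nhds _ hρ) 0
  obtain ⟨q, ⟨hqb, hqγ⟩, huq⟩ := hboth (c t₀) ⟨mem_range_self _, mem_ball_self hρ⟩ _ (ball_mem_nhds _ hρ) 1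
  refine ⟨p, ⟨(hO hpb).1, hpγ⟩, q, ⟨(hO hqb).1, hqγ⟩, fun hJ => ?_⟩
  obtain ⟨g, hg⟩ := sqrt_of_jn (IsJordan.isCompact ⟨c, hc, hp, hi, rfl⟩).isClosed hJ
  have hcc : ContinuousOn c (Icc a b) := hc.continuousOn
  have h1 := hC p ⟨hpb, hpγ⟩ q ⟨hqb, hqγ⟩ (fun t => g (c t)) (hg.comp hcc fun t _ => mem_range_self t)
  rw [hup, huq] at h1
  have hnot := (not_congr h1).1 (by decide)
  apply hnot
  have hp3 : dist p (c t₀) < R / 3 := (hO hpb).2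
  have hq3 : dist q (c t₀) < R / 3 := (hO hqb).2
  have hpos : ∀ z ∈ c '' Icc b (a + 1), 0 < ((z - p) / (z - q)).re := by
    intro z hz
    apply re_pos_ratio
    rw [← dist_eq_norm, ← dist_eq_norm]
    have := hRK z hz
    have := dist_triangle_right p q (c t₀)
    have := dist_triangle z q (c t₀)
    linarith
  have hne : ∀ z ∈ c '' Icc b (a + 1), z - q ≠ 0 := by
    rintro z ⟨t, -, rfl⟩
    exact sub_ne_zero.2 fun h => hqγ ⟨t, h⟩
  have hs2 := psq_cont ((by fun_prop : ContinuousOn (fun z => z - p) (c '' Icc b (a + 1))).div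
    (by fun_prop) hne) hpos
  have hpre : IsPreconnected (c '' Icc b (a + 1)) := isPreconnected_Icc.image _ hc.continuousOn
  have mb : c b ∈ c '' Icc b (a + 1) := ⟨b, ⟨le_rfl, by linarith⟩, rfl⟩
  have ma : c a ∈ c '' Icc b (a + 1) := ⟨a + 1, ⟨by linarith, le_rfl⟩, hp a⟩
  have hr0 : ∀ z ∈ c '' Icc b (a + 1), (z - p) / (z - q) ≠ 0 := fun z hz h => by
    have := hpos z hz; rw [h] at this; simp at this
  have hg' := hg.mono (image_subset_range c (Icc b (a + 1)))
  exact ⟨fun h => (hg'.eq_of_eq hpre hs2 hr0 ma h.symm _ mb).symm,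
    fun h => (hg'.eq_of_eq hpre hs2 hr0 mb h.symm _ ma).symm⟩

/-! ### Quadrilaterals and parametrisation of cells -/

section
/-- Four arcs, parametrized by `[0,1]`, forming a topological quadrilateral: left and right sides
`l`, `r` (upwards), bottom and top sides `b`, `t` (rightwards). -/
structure Quad {S : Type*} [TopologicalSpace S] (l r b t : ℝ → S) : Prop where
  lc : ContinuousOn l (Icc 0 1)
  rc : ContinuousOn r (Icc 0 1)
  bc : ContinuousOn b (Icc 0 1)
  tc : ContinuousOn t (Icc 0 1)
  li : InjOn l (Icc 0 1)
  ri : InjOn r (Icc 0 1)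
  bi : InjOn b (Icc 0 1)
  ti : InjOn t (Icc 0 1)
  lb : ∀ x ∈ Icc (0 : ℝ) 1, ∀ y ∈ Icc (0 : ℝ) 1, l x = b y ↔ x = 0 ∧ y = 0
  lt : ∀ x ∈ Icc (0 : ℝ) 1, ∀ y ∈ Icc (0 : ℝ) 1, l x = t y ↔ x = 1 ∧ y = 0
  rb : ∀ x ∈ Icc (0 : ℝ) 1, ∀ y ∈ Icc (0 : ℝ) 1, r x = b y ↔ x = 0 ∧ y = 1
  rt : ∀ x ∈ Icc (0 : ℝ) 1, ∀ y ∈ Icc (0 : ℝ) 1, r x = t y ↔ x = 1 ∧ y = 1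
  lr : ∀ x ∈ Icc (0 : ℝ) 1, ∀ y ∈ Icc (0 : ℝ) 1, l x ≠ r y
  bt : ∀ x ∈ Icc (0 : ℝ) 1, ∀ y ∈ Icc (0 : ℝ) 1, b x ≠ t y

variable {S T : Type*} [TopologicalSpace S] [TopologicalSpace T]

lemma Quad.halves {l r b t : ℝ → S} (h : Quad l r b t) :
    Halves (l '' Icc 0 1 ∪ r '' Icc 0 1 ∪ b '' Icc 0 1 ∪ t '' Icc 0 1)
      (b '' Icc 0 1 ∪ r '' Icc 0 1) (l '' Icc 0 1 ∪ t '' Icc 0 1) (l 0) (r 1) := by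
  have m0 : (0 : ℝ) ∈ Icc (0 : ℝ) 1 := by simp
  have m1 : (1 : ℝ) ∈ Icc (0 : ℝ) 1 := by simp
  have e1 := (h.lb 0 m0 0 m0).2 ⟨rfl, rfl⟩
  have e2 := (h.lt 1 m1 0 m0).2 ⟨rfl, rfl⟩
  have e3 := (h.rb 0 m0 1 m1).2 ⟨rfl, rfl⟩
  have e4 := (h.rt 1 m1 1 m1).2 ⟨rfl, rfl⟩
  refine ⟨?_, ?_, ?_, ?_⟩
  · rw [e1]
    refine (isArc_of zero_lt_one h.bc h.bi).concat (e3 ▸ isArc_of zero_lt_one h.rc h.ri) ?_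
    apply Subset.antisymm
    · rintro _ ⟨⟨x, hx, rfl⟩, y, hy, hxy⟩
      rw [((h.rb y hy x hx).1 hxy).2]; rfl
    · rintro _ rfl
      exact ⟨⟨1, m1, rfl⟩, 0, m0, e3⟩
  · rw [e4]
    refine (isArc_of zero_lt_one h.lc h.li).concat (e2 ▸ isArc_of zero_lt_one h.tc h.ti) ?_
    apply Subset.antisymm
    · rintro _ ⟨⟨x, hx, rfl⟩, y, hy, hxy⟩
      rw [((h.lt x hx y hy).1 hxy.symm).1]; rfl
    · rintro _ rfl
      exact ⟨⟨1, m1, rfl⟩, 0, m0, e2.symm⟩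
  · apply Subset.antisymm
    · rintro _ ⟨⟨x, hx, rfl⟩ | ⟨x, hx, rfl⟩, ⟨y, hy, hxy⟩ | ⟨y, hy, hxy⟩⟩
      · left; rw [← hxy, ((h.lb y hy x hx).1 hxy).1]
      · exact (h.bt x hx y hy hxy.symm).elim
      · exact (h.lr y hy x hx hxy).elim
      · right; rw [((h.rt x hx y hy).1 hxy.symm).1]; rfl
    · rintro _ (rfl | rfl)
      · exact ⟨Or.inl ⟨0, m0, e1.symm⟩, Or.inl ⟨0, m0, rfl⟩⟩
      · exact ⟨Or.inr ⟨1, m1, rfl⟩, Or.inr ⟨1, m1, e4.symm⟩⟩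
  · ext z; simp only [mem_union]; tauto

/-- The relation pairing corresponding boundary points of two quadrilaterals. -/
def qrel (l r b t : ℝ → S) (l' r' b' t' : ℝ → T) : Set (S × T) :=
  (fun x => (l x, l' x)) '' Icc 0 1 ∪ (fun x => (r x, r' x)) '' Icc 0 1 ∪
    (fun x => (b x, b' x)) '' Icc 0 1 ∪ (fun x => (t x, t' x)) '' Icc 0 1

lemma Quad.fn {l r b t : ℝ → S} {l' r' b' t' : ℝ → T} (h : Quad l r b t) (h' : Quad l' r' b' t') :
    ∀ z ∈ qrel l r b t l' r' b' t', ∀ z' ∈ qrel l r b t l' r' b' t', z.1 = z'.1 → z.2 = z'.2 := by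
  rintro _ (((⟨x, hx, rfl⟩ | ⟨x, hx, rfl⟩) | ⟨x, hx, rfl⟩) | ⟨x, hx, rfl⟩) _
    (((⟨y, hy, rfl⟩ | ⟨y, hy, rfl⟩) | ⟨y, hy, rfl⟩) | ⟨y, hy, rfl⟩) e <;> simp only at e ⊢
  · rw [h.li hx hy e]
  · exact (h.lr _ hx _ hy e).elim
  · exact (h'.lb _ hx _ hy).2 ((h.lb _ hx _ hy).1 e)
  · exact (h'.lt _ hx _ hy).2 ((h.lt _ hx _ hy).1 e)
  · exact (h.lr _ hy _ hx e.symm).elim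
  · rw [h.ri hx hy e]
  · exact (h'.rb _ hx _ hy).2 ((h.rb _ hx _ hy).1 e)
  · exact (h'.rt _ hx _ hy).2 ((h.rt _ hx _ hy).1 e)
  · exact ((h'.lb _ hy _ hx).2 ((h.lb _ hy _ hx).1 e.symm)).symm
  · exact ((h'.rb _ hy _ hx).2 ((h.rb _ hy _ hx).1 e.symm)).symm
  · rw [h.bi hx hy e]
  · exact (h.bt _ hx _ hy e).elim
  · exact ((h'.lt _ hy _ hx).2 ((h.lt _ hy _ hx).1 e.symm)).symm
  · exact ((h'.rt _ hy _ hx).2 ((h.rt _ hy _ hx).1 e.symm)).symm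
  · exact (h.bt _ hy _ hx e.symm).elim
  · rw [h.ti hx hy e]

lemma qrel_swap {l r b t : ℝ → S} {l' r' b' t' : ℝ → T} {z : S × T} :
    z ∈ qrel l r b t l' r' b' t' → z.swap ∈ qrel l' r' b' t' l r b t := by
  rintro (((⟨x, hx, rfl⟩ | ⟨x, hx, rfl⟩) | ⟨x, hx, rfl⟩) | ⟨x, hx, rfl⟩)
  · exact Or.inl (Or.inl (Or.inl ⟨x, hx, rfl⟩))
  · exact Or.inl (Or.inl (Or.inr ⟨x, hx, rfl⟩))
  · exact Or.inl (Or.inr ⟨x, hx, rfl⟩)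
  · exact Or.inr ⟨x, hx, rfl⟩

lemma Quad.bij {l r b t : ℝ → S} {l' r' b' t' : ℝ → T} (h : Quad l r b t) (h' : Quad l' r' b' t') :
    Bij (qrel l r b t l' r' b' t') := by
  refine ⟨?_, h.fn h', fun z hz z' hz' e => h'.fn h _ (qrel_swap hz) _ (qrel_swap hz') e⟩
  exact (((isCompact_Icc.image_of_continuousOn (h.lc.prodMk h'.lc)).union
    (isCompact_Icc.image_of_continuousOn (h.rc.prodMk h'.rc))).union
    (isCompact_Icc.image_of_continuousOn (h.bc.prodMk h'.bc))).union
    (isCompact_Icc.image_of_continuousOn (h.tc.prodMk h'.tc))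

lemma qrel_fst {l r b t : ℝ → S} {l' r' b' t' : ℝ → T} :
    Prod.fst '' (qrel l r b t l' r' b' t') =
      l '' Icc 0 1 ∪ r '' Icc 0 1 ∪ b '' Icc 0 1 ∪ t '' Icc 0 1 := by
  simp only [qrel, image_union, image_image]

lemma qrel_snd {l r b t : ℝ → S} {l' r' b' t' : ℝ → T} :
    Prod.snd '' (qrel l r b t l' r' b' t') =
      l' '' Icc 0 1 ∪ r' '' Icc 0 1 ∪ b' '' Icc 0 1 ∪ t' '' Icc 0 1 := by
  simp only [qrel, image_union, image_image]

/-- The boundary of the unit square. -/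
lemma quad_model : Quad (fun t => (⟨0, t⟩ : ℂ)) (fun t => ⟨1, t⟩) (fun s => ⟨s, 0⟩) (fun s => ⟨s, 1⟩) := by
  have c1 : ∀ x : ℝ, Continuous fun t : ℝ => (⟨x, t⟩ : ℂ) := fun x =>
    Complex.equivRealProdCLM.symm.continuous.comp (by fun_prop : Continuous fun t : ℝ => (x, t))
  have c2 : ∀ x : ℝ, Continuous fun t : ℝ => (⟨t, x⟩ : ℂ) := fun x =>
    Complex.equivRealProdCLM.symm.continuous.comp (by fun_prop : Continuous fun t : ℝ => (t, x))
  constructor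
  · exact (c1 _).continuousOn
  · exact (c1 _).continuousOn
  · exact (c2 _).continuousOn
  · exact (c2 _).continuousOn
  all_goals intro x hx y hy
  all_goals simp only [Complex.ext_iff, ne_eq]
  all_goals first | tauto | norm_num

/-- The open unit square. -/
def sqo : Set ℂ := Ioo (0 : ℝ) 1 ×ℂ Ioo (0 : ℝ) 1
/-- The closed unit square. -/
def sqc : Set ℂ := Icc (0 : ℝ) 1 ×ℂ Icc (0 : ℝ) 1

lemma sq_closure : closure sqo = sqc := by
  rw [sqo, Complex.closure_reProdIm, closure_Ioo (by norm_num)]; rfl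

lemma sq_compact : IsCompact sqc := isCompact_Icc.reProdIm isCompact_Icc

lemma sq_cell : Cell (5 : ℂ) sqo ((fun t => (⟨0, t⟩ : ℂ)) '' Icc 0 1 ∪ (fun t => ⟨1, t⟩) '' Icc 0 1 ∪
    (fun s => ⟨s, 0⟩) '' Icc 0 1 ∪ (fun s => ⟨s, 1⟩) '' Icc 0 1) := by
  have hop : IsOpen sqo := isOpen_Ioo.reProdIm isOpen_Ioo
  have hfr : frontier sqo = (fun t => (⟨0, t⟩ : ℂ)) '' Icc 0 1 ∪ (fun t => ⟨1, t⟩) '' Icc 0 1 ∪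
    (fun s => ⟨s, 0⟩) '' Icc 0 1 ∪ (fun s => ⟨s, 1⟩) '' Icc 0 1 := by
    rw [hop.frontier_eq, sq_closure]
    ext z
    simp only [sqc, sqo, Set.mem_sdiff, Complex.mem_reProdIm, mem_union, mem_image, Complex.ext_iff, mem_Icc,
      mem_Ioo]
    constructor
    · rintro ⟨⟨⟨h1, h2⟩, h3, h4⟩, h5⟩
      rcases h1.eq_or_lt with h | h1
      · exact Or.inl (Or.inl (Or.inl ⟨z.im, ⟨h3, h4⟩, h, rfl⟩))
      rcases h2.eq_or_lt with h | h2
      · exact Or.inl (Or.inl (Or.inr ⟨z.im, ⟨h3, h4⟩, h.symm, rfl⟩))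
      rcases h3.eq_or_lt with h | h3
      · exact Or.inl (Or.inr ⟨z.re, ⟨h1.le, h2.le⟩, rfl, h⟩)
      rcases h4.eq_or_lt with h | h4
      · exact Or.inr ⟨z.re, ⟨h1.le, h2.le⟩, rfl, h.symm⟩
      exact (h5 ⟨⟨h1, h2⟩, h3, h4⟩).elim
    · rintro (((⟨x, hx, e1, e2⟩ | ⟨x, hx, e1, e2⟩) | ⟨x, hx, e1, e2⟩) | ⟨x, hx, e1, e2⟩) <;>
        rw [← e1, ← e2] <;> simp [hx.1, hx.2]
  refine ⟨hop, ?_, ?_, quad_model.halves.isJordan, hfr, ?_, ?_, ?_⟩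
  · exact (((convex_Ioo (0 : ℝ) 1).linear_preimage Complex.reLm).inter
      ((convex_Ioo (0 : ℝ) 1).linear_preimage Complex.imLm)).isPreconnected
  · rw [sq_closure]; exact sq_compact
  · rw [closure_compl, sq_closure, sqc, Complex.interior_reProdIm, interior_Icc, ← hfr, hop.frontier_eq]
    exact fun z hz => hz.2
  · rw [sq_closure]
    intro h
    have := h.1.2
    norm_num at this
  · intro γ hγ _ x hx N hN
    obtain ⟨p, hp, q, hq, hpq⟩ := plane_js hγ hx.1 hN
    exact ⟨p, hp, q, hq, fun h => hpq (h.mono fun z hz => hz.2)⟩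

lemma surf_C : Surf ℂ := fun x => ⟨fun z => z + x, (Homeomorph.addRight x).isOpenEmbedding, zero_add x⟩

/-- A cell whose boundary is a quadrilateral is parametrized by the closed square, extending the
given parametrizations of the sides. -/
theorem quad_param {S : Type*} [MetricSpace S] [ConnectedSpace S] (hS : Surf S) {w : S} {G : Set S}
    {l r b t : ℝ → S} (h : Quad l r b t)
    (hG : Cell w G (l '' Icc 0 1 ∪ r '' Icc 0 1 ∪ b '' Icc 0 1 ∪ t '' Icc 0 1)) :
    ∃ k : ℂ → S, ContinuousOn k sqc ∧ InjOn k sqc ∧ k '' sqc = closure G ∧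
      ∀ x ∈ Icc (0 : ℝ) 1, k ⟨0, x⟩ = l x ∧ k ⟨1, x⟩ = r x ∧ k ⟨x, 0⟩ = b x ∧ k ⟨x, 1⟩ = t x := by
  obtain ⟨Φ, hΦ, h1, h2, hsub⟩ := cell_extend hS surf_C hG sq_cell (h.bij quad_model) qrel_fst qrel_snd
  obtain ⟨k, kc, ki, kz⟩ := hΦ.swap.exists_fun w
  have e : Prod.fst '' (Prod.swap ⁻¹' Φ : Set (ℂ × S)) = sqc := by
    rw [← sq_closure, ← h2]
    ext z; constructor
    · rintro ⟨⟨a, b⟩, hab, rfl⟩; exact ⟨(b, a), hab, rfl⟩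
    · rintro ⟨⟨a, b⟩, hab, rfl⟩; exact ⟨(b, a), hab, rfl⟩
  rw [e] at kc ki
  refine ⟨k, kc, ki, ?_, fun x hx => ⟨?_, ?_, ?_, ?_⟩⟩
  · rw [← h1, ← e]
    ext z; constructor
    · rintro ⟨_, ⟨⟨a, b⟩, hab, rfl⟩, rfl⟩; exact ⟨(b, a), hab, (kz _ hab).symm⟩
    · rintro ⟨⟨a, b⟩, hab, rfl⟩; exact ⟨b, ⟨(b, a), hab, rfl⟩, kz (b, a) hab⟩
  · exact kz (⟨0, x⟩, l x) (hsub (Or.inl (Or.inl (Or.inl ⟨x, hx, rfl⟩))))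
  · exact kz (⟨1, x⟩, r x) (hsub (Or.inl (Or.inl (Or.inr ⟨x, hx, rfl⟩))))
  · exact kz (⟨x, 0⟩, b x) (hsub (Or.inl (Or.inr ⟨x, hx, rfl⟩)))
  · exact kz (⟨x, 1⟩, t x) (hsub (Or.inr ⟨x, hx, rfl⟩))

/-- Every cell is parametrized by the closed square. -/
theorem disc_param {S : Type*} [MetricSpace S] [ConnectedSpace S] (hS : Surf S) {w : S} {G J : Set S}
    (hG : Cell w G J) : ∃ k : ℂ → S, ContinuousOn k sqc ∧ InjOn k sqc ∧ k '' sqc = closure G := by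
  obtain ⟨γ, hc, hp, hi, hγ⟩ := hG.jor
  obtain ⟨δ, dc, dp, di, hδ⟩ := sq_cell.jor
  have hrange : range (fun t => (γ t, δ t)) = (fun t => (γ t, δ t)) '' Icc 0 1 := by
    have : Function.Periodic (fun t => (γ t, δ t)) 1 := fun t => by simp [hp t, dp t]
    have := this.image_Icc zero_lt_one 0
    rw [← this]; simp
  have hb : Bij (range fun t => (γ t, δ t)) := by
    refine ⟨hrange ▸ isCompact_Icc.image (hc.prodMk dc), ?_, ?_⟩
    · rintro _ ⟨s, rfl⟩ _ ⟨t, rfl⟩ e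
      obtain ⟨n, rfl⟩ := per_eq hp hi e
      simpa using (dp.int_mul n) t
    · rintro _ ⟨s, rfl⟩ _ ⟨t, rfl⟩ e
      obtain ⟨n, rfl⟩ := per_eq dp di e
      simpa using (hp.int_mul n) t
  obtain ⟨Φ, hΦ, h1, h2, hsub⟩ := cell_extend hS surf_C hG sq_cell hb
    (by rw [← range_comp, ← hγ]; rfl) (by rw [← range_comp, ← hδ]; rfl)
  obtain ⟨k, kc, ki, kz⟩ := hΦ.swap.exists_fun w
  have e : Prod.fst '' (Prod.swap ⁻¹' Φ : Set (ℂ × S)) = sqc := by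
    rw [← sq_closure, ← h2]
    ext z; constructor
    · rintro ⟨⟨a, b⟩, hab, rfl⟩; exact ⟨(b, a), hab, rfl⟩
    · rintro ⟨⟨a, b⟩, hab, rfl⟩; exact ⟨(b, a), hab, rfl⟩
  rw [e] at kc ki
  refine ⟨k, kc, ki, ?_⟩
  rw [← h1, ← e]
  ext z; constructor
  · rintro ⟨_, ⟨⟨a, b⟩, hab, rfl⟩, rfl⟩; exact ⟨(b, a), hab, (kz _ hab).symm⟩
  · rintro ⟨⟨a, b⟩, hab, rfl⟩; exact ⟨b, ⟨(b, a), hab, rfl⟩, kz (b, a) hab⟩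

end

/-! ### Square roots of differences of charts -/

/-- A continuous `2πi`-periodic function descends along `w ↦ z₀ + exp w`. -/
lemma exp_descend {h : ℂ → ℂ} (hc : Continuous h) (hp : Function.Periodic h (2 * Real.pi * Complex.I)) (z₀ : ℂ) :
    ContinuousOn (fun z => h (Complex.log (z - z₀))) {z₀}ᶜ ∧
      ∀ w, h (Complex.log (Complex.exp w)) = h w := by
  have key : ∀ w, h (Complex.log (Complex.exp w)) = h w := by
    intro w
    obtain ⟨n, hn⟩ := Complex.exp_eq_exp_iff_exists_int.1 (Complex.exp_log (Complex.exp_ne_zero w))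
    rw [hn]; exact (hp.int_mul n) w
  refine ⟨fun z hz => ContinuousAt.continuousWithinAt ?_, key⟩
  have hz' : z - z₀ ≠ 0 := sub_ne_zero.2 hz
  intro V hV
  have h1 : h ⁻¹' V ∈ 𝓝 (Complex.log (z - z₀)) := hc.continuousAt hV
  have hop : IsOpenMap fun w => z₀ + Complex.exp w :=
    (Homeomorph.addLeft z₀).isOpenMap.comp Complex.isOpenMap_exp
  have h2 := hop.image_mem_nhds h1
  rw [Complex.exp_log hz', add_sub_cancel] at h2
  rw [Filter.mem_map]
  filter_upwards [h2]
  rintro _ ⟨w, hw, rfl⟩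
  change h (Complex.log (z₀ + Complex.exp w - z₀)) ∈ V
  rw [add_sub_cancel_left, key]; exact hw

/-- The difference quotient of an open embedding of the plane has a continuous square root: both
numerator and denominator wind an odd number of times around the base point. -/
lemma ratio {κ : ℂ → ℂ} (hκ : IsOpenEmbedding κ) (z₀ : ℂ) : ∃ τ : ℂ → ℂ, ContinuousOn τ {z₀}ᶜ ∧
    ∀ z, z ≠ z₀ → τ z ≠ 0 ∧ κ z - κ z₀ = (z - z₀) * τ z ^ 2 := by
  have hcov : IsCoveringMap (fun z : ℂ => (⟨Complex.exp z, Complex.exp_ne_zero z⟩ : {z : ℂ // z ≠ 0})) :=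
    Complex.isCoveringMap_exp
  have h0 : ∀ w, κ (z₀ + Complex.exp w) - κ z₀ ≠ 0 := fun w h => by
    have := hκ.injective (sub_eq_zero.1 h)
    exact Complex.exp_ne_zero w (by simp at this)
  have hgc : Continuous fun w => κ (z₀ + Complex.exp w) - κ z₀ :=
    (hκ.continuous.comp (by fun_prop)).sub continuous_const
  let f : C(ℂ, {z : ℂ // z ≠ 0}) := ⟨fun w => ⟨κ (z₀ + Complex.exp w) - κ z₀, h0 w⟩, hgc.subtype_mk _⟩
  obtain ⟨F, hF, -⟩ := hcov.existsUnique_continuousMap_lifts f 0 (Complex.log (κ (z₀ + Complex.exp 0) - κ z₀))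
    (Subtype.ext (Complex.exp_log (h0 0)))
  have hs : SqrtOn (fun w => Complex.exp (F w / 2)) (fun w => κ (z₀ + Complex.exp w) - κ z₀) univ := by
    refine ⟨by fun_prop, fun w _ => ?_⟩
    rw [← Complex.exp_nat_mul]
    have := congrArg Subtype.val (congrFun hF.2 w)
    simp only [Function.comp] at this
    rw [show ((2 : ℕ) : ℂ) * (F w / 2) = F w by push_cast; ring, this]
    rfl
  set s := fun w => Complex.exp (F w / 2) with hsdef
  have hsc : Continuous s := by fun_prop
  have hs' : SqrtOn (fun w => s (w + 2 * Real.pi * Complex.I)) (fun w => κ (z₀ + Complex.exp w) - κ z₀) univ := by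
    refine ⟨by fun_prop, fun w _ => ?_⟩
    rw [hs.2 _ (mem_univ _)]
    simp only
    rw [Complex.exp_periodic]
  rcases hs.eq_or_neg isPreconnected_univ hs' (fun w _ => h0 w) with h | h
  · exfalso
    -- a single-valued root of `κ z - κ z₀` would give one of `p - κ z₀` near `κ z₀`
    obtain ⟨d1, d2⟩ := exp_descend (h := s) hsc (fun w => h w (mem_univ _)) z₀
    obtain ⟨r, hr, hball⟩ := Metric.isOpen_iff.1 hκ.isOpen_range (κ z₀) (mem_range_self _)
    obtain ⟨g, hg⟩ : ∃ g : ℂ → ℂ, ∀ z, g (κ z) = z := ⟨_, Function.leftInverse_invFun hκ.injective⟩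
    have hgc : ContinuousOn g (range κ) := by
      rintro _ ⟨z, rfl⟩
      apply ContinuousAt.continuousWithinAt
      intro V hV
      rw [hg] at hV
      rw [Filter.mem_map]
      filter_upwards [hκ.isOpenMap.image_mem_nhds hV]
      rintro _ ⟨v, hv, rfl⟩
      rw [mem_preimage, hg]; exact hv
    have hmaps : MapsTo g (ball (κ z₀) r \ {κ z₀}) {z₀}ᶜ := by
      rintro p ⟨hp, hp'⟩ e
      obtain ⟨z, rfl⟩ := hball hp
      rw [hg] at e
      exact hp' (congrArg κ e)
    refine no_sqrt (a := κ z₀) hr (s := fun p => Complex.I * s (Complex.log (g p - z₀))) ⟨?_, ?_⟩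
    · exact continuousOn_const.mul (d1.comp (hgc.mono fun p hp => hball hp.1) hmaps)
    · intro p hp
      have hz := hmaps hp
      obtain ⟨z, rfl⟩ := hball hp.1
      rw [hg] at hz
      simp only [hg]
      rw [mul_pow, hs.2 _ (mem_univ _)]
      simp only
      rw [Complex.exp_log (sub_ne_zero.2 hz), Complex.I_sq]
      simp
  · have hq : Continuous fun w => s w / Complex.exp (w / 2) :=
      hsc.div (by fun_prop) fun w => Complex.exp_ne_zero _
    obtain ⟨d1, d2⟩ := exp_descend (h := fun w => s w / Complex.exp (w / 2)) hq (fun w => by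
      simp only
      have e : Complex.exp ((w + 2 * Real.pi * Complex.I) / 2) = - Complex.exp (w / 2) := by
        rw [show (w + 2 * Real.pi * Complex.I) / 2 = w / 2 + Real.pi * Complex.I by ring, Complex.exp_add,
          Complex.exp_pi_mul_I]; ring
      rw [h w (mem_univ _), e, neg_div_neg_eq]) z₀
    refine ⟨_, d1, fun z hz => ⟨?_, ?_⟩⟩
    · exact div_ne_zero (hs.ne (mem_univ _) (h0 _)) (Complex.exp_ne_zero _)
    · have hz' := sub_ne_zero.2 hz
      have e : Complex.exp (Complex.log (z - z₀) / 2) ^ 2 = z - z₀ := by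
        rw [← Complex.exp_nat_mul]
        rw [show ((2 : ℕ) : ℂ) * (Complex.log (z - z₀) / 2) = Complex.log (z - z₀) by push_cast; ring,
          Complex.exp_log hz']
      rw [div_pow, e, hs.2 _ (mem_univ _)]
      simp only
      rw [Complex.exp_log hz', mul_div_cancel₀ _ hz', add_sub_cancel]

/-! ### The mod 2 degree on a grid -/

/-- Inverse of a chart, with junk values off its range. -/
def cinv {S : Type*} (φ : ℂ → S) : S → ℂ := Function.invFun φ

section
variable {S : Type*} [TopologicalSpace S]

lemma cinv_app {φ : ℂ → S} (hφ : IsOpenEmbedding φ) (z : ℂ) : cinv φ (φ z) = z :=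
  Function.leftInverse_invFun hφ.injective z

lemma app_cinv {φ : ℂ → S} {x : S} (hx : x ∈ range φ) : φ (cinv φ x) = x :=
  Function.invFun_eq hx

lemma cinv_inj {φ : ℂ → S} {x y : S} (hx : x ∈ range φ) (hy : y ∈ range φ)
    (h : cinv φ x = cinv φ y) : x = y := by
  rw [← app_cinv hx, h, app_cinv hy]

lemma cinv_cont {φ : ℂ → S} (hφ : IsOpenEmbedding φ) : ContinuousOn (cinv φ) (range φ) := by
  rintro _ ⟨z, rfl⟩
  apply ContinuousAt.continuousWithinAt
  intro V hV
  rw [cinv_app hφ] at hV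
  rw [Filter.mem_map]
  filter_upwards [hφ.isOpenMap.image_mem_nhds hV]
  rintro _ ⟨v, hv, rfl⟩
  rw [mem_preimage, cinv_app hφ]; exact hv

/-- The displacement of `H` from `x` in the chart `φ`. -/
def psi (φ : ℂ → S) (H : ℝ × ℝ → S) (x : S) (z : ℝ × ℝ) : ℂ := cinv φ (H z) - cinv φ x

lemma psi_cont {φ : ℂ → S} (hφ : IsOpenEmbedding φ) {H : ℝ × ℝ → S} (hH : Continuous H) (x : S)
    {A : Set (ℝ × ℝ)} (hA : H '' A ⊆ range φ) : ContinuousOn (psi φ H x) A :=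
  ((cinv_cont hφ).comp hH.continuousOn fun z hz => hA ⟨z, hz, rfl⟩).sub continuousOn_const

lemma psi_ne {φ : ℂ → S} {H : ℝ × ℝ → S} {x : S} (hx : x ∈ range φ)
    {z : ℝ × ℝ} (hz : H z ∈ range φ) (h : H z ≠ x) : psi φ H x z ≠ 0 :=
  fun e => h (cinv_inj hz hx (sub_eq_zero.1 e))

open Classical in
/-- The local degree of `H` over `x`, computed in the chart `φ` from the grid squares whose image
contains `x`, with weights `w`. -/
def DD (H : ℝ × ℝ → S) (n : ℕ) (φ : ℂ → S) (w : ℕ → ℕ → ZMod 2) (x : S) : ZMod 2 :=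
  Dg n (fun j k => if x ∈ H '' Q n j k then w j k else 0) (hE n (psi φ H x)) (vE n (psi φ H x))

/-- Weights on grid squares that agree on neighbouring squares meeting over `x`. -/
structure Wt (H : ℝ × ℝ → S) (n : ℕ) (w : ℕ → ℕ → ZMod 2) (x : S) : Prop where
  per : ∀ k < n, w n k = w 0 k
  hor : ∀ j < n, ∀ k < n, ∀ z ∈ Q n j k, z ∈ Q n (j + 1) k → H z = x → w j k = w (j + 1) k
  ver : ∀ j < n, ∀ k, k + 1 < n → ∀ z ∈ Q n j k, z ∈ Q n j (k + 1) → H z = x → w j k = w j (k + 1)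

/-- The chart `φ` contains the images of all grid squares over `x`. -/
def Fit (H : ℝ × ℝ → S) (n : ℕ) (φ : ℂ → S) (x : S) : Prop :=
  ∀ j ≤ n, ∀ k < n, x ∈ H '' Q n j k → H '' Q n j k ⊆ range φ

/-- Horizontal grid edge. -/
def Eg (n j r : ℕ) : Set (ℝ × ℝ) := Icc (V n j r) (V n (j + 1) r)

/-- Contribution of the boundary edge `j` in row `r` to the change of degree. -/
def row (n : ℕ) (ψ ψ' : ℝ × ℝ → ℂ) (j r : ℕ) : ZMod 2 :=
  hE n ψ' j r + (hE n ψ j r + (muV n ψ (fun z => psq (ψ' z / ψ z)) j r +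
    muV n ψ (fun z => psq (ψ' z / ψ z)) (j + 1) r))

lemma Dg_ext {n : ℕ} {p p' h v : ℕ → ℕ → ZMod 2}
    (hp : ∀ j < n, ∀ k < n, p j k * bd h v j k = p' j k * bd h v j k) : Dg n p h v = Dg n p' h v :=
  Finset.sum_congr rfl fun j hj => Finset.sum_congr rfl fun k hk =>
    hp j (Finset.mem_range.1 hj) k (Finset.mem_range.1 hk)

lemma Q_image_per {n : ℕ} (hn : 0 < n) {H : ℝ × ℝ → S} (hper : ∀ z, H (z + (1, 0)) = H z) (k : ℕ) :
    H '' Q n n k = H '' Q n 0 k := by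
  ext x; constructor
  · rintro ⟨z, hz, rfl⟩
    refine ⟨z - (1, 0), (Q_per hn k _).2 (by simpa using hz), ?_⟩
    rw [← hper]; simp
  · rintro ⟨z, hz, rfl⟩
    exact ⟨z + (1, 0), (Q_per hn k z).1 hz, hper z⟩

lemma Q_compact (n j k : ℕ) : IsCompact (Q n j k) := isCompact_Icc
lemma Eg_compact (n j r : ℕ) : IsCompact (Eg n j r) := isCompact_Icc

variable [T2Space S] {H : ℝ × ℝ → S} {n : ℕ}

lemma sep_ev (hH : Continuous H) {C : Set (ℝ × ℝ)} (hC : IsCompact C) (x : S) :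
    ∀ᶠ y in 𝓝 x, y ∈ H '' C → x ∈ H '' C := by
  by_cases h : x ∈ H '' C
  · exact Eventually.of_forall fun _ _ => h
  · filter_upwards [(hC.image hH).isClosed.isOpen_compl.mem_nhds h] with y hy hy'
    exact (hy hy').elim

lemma fin_ev {n : ℕ} {x : S} {P : ℕ → ℕ → S → Prop} (h : ∀ j k, ∀ᶠ y in 𝓝 x, P j k y) :
    ∀ᶠ y in 𝓝 x, ∀ j ≤ n, ∀ k ≤ n, P j k y := by
  have : ∀ᶠ y in 𝓝 x, ∀ j ∈ Finset.range (n + 1), ∀ k ∈ Finset.range (n + 1), P j k y :=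
    (Filter.eventually_all_finset _).2 fun j _ => (Filter.eventually_all_finset _).2 fun k _ => h j k
  filter_upwards [this] with y hy j hj k hk
  exact hy j (Finset.mem_range.2 (by omega)) k (Finset.mem_range.2 (by omega))

open Classical in
/-- Near `x`, the degree changes only through boundary edges passing over `x`. -/
theorem DD_near (hH : Continuous H) (hper : ∀ z, H (z + (1, 0)) = H z) (hn : 0 < n) {φ : ℂ → S}
    (hφ : IsOpenEmbedding φ) {x : S} (hx : x ∈ range φ) (hf : Fit H n φ x) {w : ℕ → ℕ → ZMod 2}
    (hw : Wt H n w x) : ∀ᶠ y in 𝓝 x, ∀ᶠ y' in 𝓝 x, y ∈ range φ ∧ y' ∈ range φ ∧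
      DD H n φ w y' + DD H n φ w y = ∑ j ∈ Finset.range n,
        ((if x ∈ H '' Eg n j 0 then w j 0 * row n (psi φ H y) (psi φ H y') j 0 else 0) +
        (if x ∈ H '' Eg n j n then w j (n - 1) * row n (psi φ H y) (psi φ H y') j n else 0)) := by
  have sQ := fin_ev (n := n) fun j k => sep_ev hH (Q_compact n j k) x
  have sV := fin_ev (n := n) fun j k => sep_ev hH ((Q_compact n j k).inter (Q_compact n (j + 1) k)) x
  have sH := fin_ev (n := n) fun j k => sep_ev hH ((Q_compact n j k).inter (Q_compact n j (k + 1))) x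
  have sE := fin_ev (n := n) fun j k => sep_ev hH (Eg_compact n j k) x
  have hO := (sQ.and (sV.and (sH.and sE)))
  obtain ⟨ξ, rfl⟩ := hx
  obtain ⟨R, hR, hball⟩ := Metric.eventually_nhds_iff_ball.1 ((chart_event hφ).1 hO)
  have hK : φ '' ball ξ (R / 3) ∈ 𝓝 (φ ξ) := hφ.isOpenMap.image_mem_nhds (ball_mem_nhds _ (by linarith))
  have sub : ball ξ (R / 3) ⊆ ball ξ R := ball_subset_ball (by linarith)
  filter_upwards [hK] with y hy
  filter_upwards [hK] with y' hy'
  obtain ⟨η, hη, rfl⟩ := hy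
  obtain ⟨η', hη', rfl⟩ := hy'
  refine ⟨mem_range_self _, mem_range_self _, ?_⟩
  set Z := H ⁻¹' (φ '' ball ξ R) with hZ
  set p : ℕ → ℕ → ZMod 2 := fun j k => if φ ξ ∈ H '' Q n j k then w j k else 0 with hp
  have hDD : ∀ θ ∈ ball ξ (R / 3), DD H n φ w (φ θ) = Dg n p (hE n (psi φ H (φ θ))) (vE n (psi φ H (φ θ))) := by
    intro θ hθ
    refine Dg_ext fun j hj k hk => ?_
    by_cases h1 : φ θ ∈ H '' Q n j k
    · have h2 := (hball θ (sub hθ)).1 j hj.le k hk.le h1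
      simp only [hp, if_pos h1, if_pos h2]
    · by_cases h2 : φ ξ ∈ H '' Q n j k
      · have hr := hf j hj.le k hk h2
        rw [bd_eq_zero (psi_cont hφ hH _ hr) fun z hz => psi_ne (mem_range_self _) (hr ⟨z, hz, rfl⟩)
          fun e => h1 ⟨z, hz, e⟩]
        simp
      · simp only [hp, if_neg h1, if_neg h2]
  have hcmp : ∀ j ≤ n, ∀ k < n, φ ξ ∈ H '' Q n j k →
      Cmp (psi φ H (φ η)) (psi φ H (φ η')) (fun z => psq (psi φ H (φ η') z / psi φ H (φ η) z)) (Q n j k \ Z) := by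
    intro j hj k hk hxQ
    have hr := hf j hj k hk hxQ
    have hr' : H '' (Q n j k \ Z) ⊆ range φ := (image_mono sdiff_subset).trans hr
    have hpos : ∀ z ∈ Q n j k \ Z, 0 < (psi φ H (φ η') z / psi φ H (φ η) z).re := by
      rintro z ⟨hz, hzZ⟩
      obtain ⟨ζ, hζ⟩ := hr ⟨z, hz, rfl⟩
      simp only [psi, ← hζ, cinv_app hφ]
      apply re_pos_ratio
      have h1 : R ≤ dist ζ ξ := by
        by_contra hc
        exact hzZ ⟨ζ, mem_ball.2 (not_le.1 hc), hζ⟩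
      have h2 : dist η ξ < R / 3 := hη
      have h3 : dist η' ξ < R / 3 := hη'
      rw [← dist_eq_norm, ← dist_eq_norm]
      have := dist_triangle_right η' η ξ
      have := dist_triangle ζ η ξ
      linarith
    have hne : ∀ θ ∈ ball ξ (R / 3), ∀ z ∈ Q n j k \ Z, psi φ H (φ θ) z ≠ 0 := fun θ hθ z hz =>
      psi_ne (mem_range_self _) (hr ⟨z, hz.1, rfl⟩) fun e => hz.2 ⟨θ, sub hθ, e.symm⟩
    have hc := psi_cont hφ hH (φ η) hr'
    refine ⟨hc, hne η hη, (psq_cont ((psi_cont hφ hH (φ η') hr').div hc (hne η hη)) hpos).1,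
      fun z _ => psq_ne _, fun z hz => ?_⟩
    rw [psq_sq (div_ne_zero (hne η' hη' z hz) (hne η hη z hz)), mul_div_cancel₀ _ (hne η hη z hz)]
  have hpsi : ∀ θ z, psi φ H (φ θ) (z + (1, 0)) = psi φ H (φ θ) z := fun θ z => by simp only [psi, hper]
  rw [hDD η hη, hDD η' hη', Dg_cmp hn (Z := Z) (p := p) (τ := fun z => psq (psi φ H (φ η') z / psi φ H (φ η) z)) ?_
    (hpsi η) (hpsi η') (fun z => by simp only [hpsi]) ?_ ?_ ?_]
  · have hterm : ∀ j < n, ∀ k < n, ∀ r ≤ n, Eg n j r ⊆ Q n j k →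
        p j k * row n (psi φ H (φ η)) (psi φ H (φ η')) j r =
        if φ ξ ∈ H '' Eg n j r then w j k * row n (psi φ H (φ η)) (psi φ H (φ η')) j r else 0 := by
      intro j hj k hk r hr hsub
      by_cases h1 : φ ξ ∈ H '' Eg n j r
      · have h2 : φ ξ ∈ H '' Q n j k := image_mono hsub h1
        simp only [hp, if_pos h1, if_pos h2]
      · rw [if_neg h1]
        by_cases h2 : φ ξ ∈ H '' Q n j k
        · have hE : Eg n j r ⊆ Q n j k \ Z := by
            refine fun z hz => ⟨hsub hz, ?_⟩
            rintro ⟨ζ, hζ, e⟩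
            exact h1 ((hball ζ hζ).2.2.2 j hj.le r hr ⟨z, hz, e.symm⟩)
          have := ((hcmp j hj.le k hk h2).mono hE).par (V_mono n (Nat.le_succ j) le_rfl)
          have hrow : row n (psi φ H (φ η)) (psi φ H (φ η')) j r = 0 := by
            simp only [row, muV]
            rw [Annulus.hE, Annulus.hE, this]
            generalize par _ _ _ = a, sg _ = b, sg _ = c
            revert a b c; decide
          rw [hrow, mul_zero]
        · simp only [hp, if_neg h2, zero_mul]
    refine Finset.sum_congr rfl fun j hj => ?_
    have hj := Finset.mem_range.1 hj
    congr 1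
    · exact hterm j hj 0 hn 0 (Nat.zero_le _) (Icc_subset_Icc_right (V_mono n le_rfl (Nat.zero_le _)))
    · refine hterm j hj (n - 1) (by omega) n le_rfl ?_
      rw [Q, Nat.sub_add_cancel hn]
      exact Icc_subset_Icc_left (V_mono n le_rfl (Nat.sub_le _ _))
  · intro k hk
    simp only [hp, Q_image_per hn hper k, hw.per k hk]
  · rintro j hj k hk z hz hz' ⟨ζ, hζ, e⟩
    obtain ⟨z', ⟨h1, h2⟩, h3⟩ := (hball ζ hζ).2.1 j hj.le k hk.le ⟨z, ⟨hz, hz'⟩, e.symm⟩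
    simp only [hp]
    rw [if_pos ⟨z', h1, h3⟩, if_pos ⟨z', h2, h3⟩, hw.hor j hj k hk z' h1 h2 h3]
  · rintro j hj k hk z hz hz' ⟨ζ, hζ, e⟩
    obtain ⟨z', ⟨h1, h2⟩, h3⟩ := (hball ζ hζ).2.2.1 j hj.le k (by omega) ⟨z, ⟨hz, hz'⟩, e.symm⟩
    simp only [hp]
    rw [if_pos ⟨z', h1, h3⟩, if_pos ⟨z', h2, h3⟩, hw.ver j hj k hk z' h1 h2 h3]
  · intro j hj k hk hpk
    apply hcmp j hj k hk
    by_contra hc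
    exact hpk (by simp only [hp, if_neg hc])

open Classical in
/-- The degree does not depend on the chart. -/
theorem DD_chart (hH : Continuous H) (hper : ∀ z, H (z + (1, 0)) = H z) (hn : 0 < n) {φ δ : ℂ → S}
    (hφ : IsOpenEmbedding φ) (hδ : IsOpenEmbedding δ) (hsub : range δ ⊆ range φ) {x : S}
    (hx : x ∈ range δ) (hf : Fit H n δ x) {w : ℕ → ℕ → ZMod 2} (hw : Wt H n w x)
    (hx0 : ∀ s, H (s, 0) ≠ x) (hx1 : ∀ s, H (s, 1) ≠ x) : DD H n φ w x = DD H n δ w x := by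
  have hκ : IsOpenEmbedding fun z => cinv φ (δ z) := by
    refine IsOpenEmbedding.of_continuous_injective_isOpenMap ?_ ?_ ?_
    · exact (cinv_cont hφ).comp_continuous hδ.continuous fun z => hsub (mem_range_self z)
    · intro z z' h
      exact hδ.injective (cinv_inj (hsub (mem_range_self z)) (hsub (mem_range_self z')) h)
    · intro U hU
      have : (fun z => cinv φ (δ z)) '' U = φ ⁻¹' (δ '' U) := by
        ext v; constructor
        · rintro ⟨z, hz, rfl⟩
          exact ⟨z, hz, (app_cinv (hsub (mem_range_self z))).symm⟩
        · rintro ⟨z, hz, e⟩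
          exact ⟨z, hz, by simp only; rw [e, cinv_app hφ]⟩
      rw [this]
      exact (hδ.isOpenMap U hU).preimage hφ.continuous
  obtain ⟨τ, hτc, hτ⟩ := ratio hκ (cinv δ x)
  refine Dg_cmp_int hn (Z := H ⁻¹' {x}) (τ := fun z => τ (cinv δ (H z))) ?_ (fun z => by simp only [psi, hper])
    (fun z => by simp only [psi, hper]) (fun z => by simp only [hper]) ?_ ?_ ?_ ?_
  · intro k hk
    simp only [Q_image_per hn hper k, hw.per k hk]
  · rintro j hj k hk z hz hz' (e : H z = x)
    rw [if_pos ⟨z, hz, e⟩, if_pos ⟨z, hz', e⟩, hw.hor j hj k hk z hz hz' e]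
  · rintro j hj k hk z hz hz' (e : H z = x)
    rw [if_pos ⟨z, hz, e⟩, if_pos ⟨z, hz', e⟩, hw.ver j hj k hk z hz hz' e]
  · intro j hj k hk hpk
    have hxQ : x ∈ H '' Q n j k := by
      by_contra hc
      exact hpk (by simp only [if_neg hc])
    have hr := hf j hj k hk hxQ
    have hr' : H '' (Q n j k \ H ⁻¹' {x}) ⊆ range δ := (image_mono sdiff_subset).trans hr
    have hne : ∀ z ∈ Q n j k \ H ⁻¹' {x}, cinv δ (H z) ≠ cinv δ x := fun z hz e =>
      hz.2 (cinv_inj (hr ⟨z, hz.1, rfl⟩) hx e)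
    refine ⟨psi_cont hδ hH x hr', fun z hz => psi_ne hx (hr ⟨z, hz.1, rfl⟩) hz.2, ?_,
      fun z hz => (hτ _ (hne z hz)).1, fun z hz => ?_⟩
    · exact hτc.comp ((cinv_cont hδ).comp hH.continuousOn fun z hz => hr' ⟨z, hz, rfl⟩) hne
    · have := (hτ _ (hne z hz)).2
      simp only [app_cinv hx, app_cinv (hr ⟨z, hz.1, rfl⟩)] at this
      exact this
  · rintro ⟨s, t⟩ (e : H (s, t) = x)
    constructor
    · rintro (rfl : t = 0); exact hx0 s e
    · rintro (rfl : t = 1); exact hx1 s e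

end

/-! ### Homotopies and good grids -/

lemma sg_two {c s t : ℂ} (hc : c ≠ 0) (ht : t ≠ 0) (h : s ^ 2 = t ^ 2) :
    (sg (c * s) + sg (c * t) = 0 ↔ s = t) := by
  rcases sq_cases h with rfl | rfl
  · simp only [iff_true]
    generalize sg _ = a; revert a; decide
  · constructor
    · intro h'
      rw [mul_neg, sg_neg (mul_ne_zero hc ht)] at h'
      exfalso; revert h'
      generalize sg _ = a; revert a; decide
    · intro h'
      exact (ne_neg ht h'.symm).elim

lemma row_eq {n j R : ℕ} {a b r : ℝ} (hab : a ≤ b) (hu : V n j R = (a, r)) (hv : V n (j + 1) R = (b, r))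
    {f : ℝ → ℂ} {ψ ψ' : ℝ × ℝ → ℂ} {p q : ℂ} (hf : ContinuousOn f (Icc a b))
    (hψ : ∀ t, ψ (t, r) = f t - q) (hψ' : ∀ t, ψ' (t, r) = f t - p)
    (hp : ∀ t ∈ Icc a b, f t ≠ p) (hq : ∀ t ∈ Icc a b, f t ≠ q) {σ : ℝ → ℂ}
    (hσ : SqrtOn σ (fun t => (f t - p) / (f t - q)) (Icc a b)) :
    row n ψ ψ' j R = 0 ↔ (σ a = psq ((f a - p) / (f a - q)) ↔ σ b = psq ((f b - p) / (f b - q))) := by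
  have ha : a ∈ Icc a b := ⟨le_rfl, hab⟩
  have hb : b ∈ Icc a b := ⟨hab, le_rfl⟩
  have hq' : ∀ t ∈ Icc a b, f t - q ≠ 0 := fun t ht => sub_ne_zero.2 (hq t ht)
  have hp' : ∀ t ∈ Icc a b, f t - p ≠ 0 := fun t ht => sub_ne_zero.2 (hp t ht)
  have hmem : ∀ z ∈ Icc (a, r) (b, r), z.1 ∈ Icc a b ∧ z = (z.1, r) := by
    rintro ⟨x, y⟩ ⟨⟨h1, h2⟩, h3, h4⟩
    exact ⟨⟨h1, h3⟩, Prod.ext rfl (le_antisymm h4 h2)⟩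
  have hσ2 : ∀ t ∈ Icc a b, σ t ^ 2 = (f t - p) / (f t - q) := hσ.2
  have key := par_mul_sq (ψ := ψ) (ψ' := ψ') (τ := fun z => σ z.1) (u := (a, r)) (v := (b, r)) ⟨hab, le_rfl⟩
    (by
      refine ContinuousOn.congr (f := fun z : ℝ × ℝ => f z.1 - q) ?_ fun z hz => ?_
      · exact (hf.comp continuous_fst.continuousOn fun z hz => (hmem z hz).1).sub continuousOn_const
      · rw [(hmem z hz).2, hψ])
    (fun z hz => by rw [(hmem z hz).2, hψ]; exact hq' _ (hmem z hz).1)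
    (hσ.1.comp continuous_fst.continuousOn fun z hz => (hmem z hz).1)
    (fun z hz h0 => by
      have := hσ2 _ (hmem z hz).1
      rw [h0] at this
      exact div_ne_zero (hp' _ (hmem z hz).1) (hq' _ (hmem z hz).1) (by rw [← this]; simp))
    (fun z hz => by
      rw [hσ2 _ (hmem z hz).1, (hmem z hz).2, hψ, hψ', mul_div_cancel₀ _ (hq' _ (hmem z hz).1)])
  have hA := sg_two (c := csq (f a - q)) (s := σ a) (t := psq ((f a - p) / (f a - q)))
    (fun h => hq' a ha (by rw [← csq_sq (f a - q), h]; simp)) (psq_ne _)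
    (by rw [hσ2 a ha, psq_sq (div_ne_zero (hp' a ha) (hq' a ha))])
  have hB := sg_two (c := csq (f b - q)) (s := σ b) (t := psq ((f b - p) / (f b - q)))
    (fun h => hq' b hb (by rw [← csq_sq (f b - q), h]; simp)) (psq_ne _)
    (by rw [hσ2 b hb, psq_sq (div_ne_zero (hp' b hb) (hq' b hb))])
  rw [← hA, ← hB]
  simp only [row, hE, muV, hu, hv, hψ, hψ'] at key ⊢
  rw [key]
  generalize par _ _ _ = x, sg _ = c1, sg _ = c2, sg _ = c3, sg _ = c4
  clear * -
  revert x c1 c2 c3 c4; decide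

section
variable {S : Type*} [TopologicalSpace S]

/-- A free homotopy between disjoint simple closed curves, as a map on the plane which is periodic
in the first variable. -/
structure Hom (H : ℝ × ℝ → S) : Prop where
  cont : Continuous H
  per : ∀ z, H (z + (1, 0)) = H z
  cpt : IsCompact (range H)
  inj0 : InjOn (fun s => H (s, 0)) (Ico 0 1)
  inj1 : InjOn (fun s => H (s, 1)) (Ico 0 1)
  disj : ∀ s t, H (s, 0) ≠ H (t, 1)

/-- The union of the two boundary curves of a homotopy. -/
def Bd (H : ℝ × ℝ → S) : Set S := range (fun s => H (s, 0)) ∪ range (fun s => H (s, 1))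

variable {H : ℝ × ℝ → S}

lemma Hom.per' (h : Hom H) (r : ℝ) : Function.Periodic (fun s => H (s, r)) 1 := fun s => by
  have := h.per (s, r)
  simpa using this

lemma Hom.jor0 (h : Hom H) : IsJordan (range fun s => H (s, 0)) :=
  ⟨_, h.cont.comp (by fun_prop), h.per' 0, h.inj0, rfl⟩

lemma Hom.jor1 (h : Hom H) : IsJordan (range fun s => H (s, 1)) :=
  ⟨_, h.cont.comp (by fun_prop), h.per' 1, h.inj1, rfl⟩

lemma Hom.closed [T2Space S] (h : Hom H) : IsClosed (Bd H) :=
  h.jor0.isCompact.isClosed.union h.jor1.isCompact.isClosed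

lemma Hom.arcAt [T2Space S] (h : Hom H) {x : S} (hx : x ∈ Bd H) : ArcAt (Bd H) x := by
  rcases hx with hx | hx
  · refine h.jor0.arcAt hx subset_union_left ?_
    have : x ∉ range fun s => H (s, 1) := by
      rintro ⟨t, ht⟩; obtain ⟨s, hs⟩ := hx; exact h.disj s t (hs.trans ht.symm)
    filter_upwards [h.jor1.isCompact.isClosed.isOpen_compl.mem_nhds this] with z hz hz'
    exact hz'.resolve_right hz
  · refine h.jor1.arcAt hx subset_union_right ?_
    have : x ∉ range fun s => H (s, 0) := by
      rintro ⟨t, ht⟩; obtain ⟨s, hs⟩ := hx; exact h.disj t s (ht.trans hs.symm)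
    filter_upwards [h.jor0.isCompact.isClosed.isOpen_compl.mem_nhds this] with z hz hz'
    exact hz'.resolve_left hz

/-- `ch` is a choice of charts for which the degree on the `n`-th grid is well behaved: near every
point it may be computed in a single chart. -/
structure Nice (H : ℝ × ℝ → S) (n : ℕ) (ch : S → ℂ → S) : Prop where
  two : 2 ≤ n
  loc : ∀ x₀, ∃ δ : ℂ → S, IsOpenEmbedding δ ∧ x₀ ∈ range δ ∧ ∀ᶠ x in 𝓝 x₀, x ∈ range δ ∧ Fit H n δ x ∧
    ∀ w, Wt H n w x → x ∉ Bd H → DD H n (ch x) w x = DD H n δ w x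

lemma DD_out {n : ℕ} {φ : ℂ → S} {w : ℕ → ℕ → ZMod 2} {x : S} (hx : x ∉ range H) : DD H n φ w x = 0 := by
  have : ∀ j k, x ∉ H '' Q n j k := fun j k ⟨z, _, e⟩ => hx ⟨z, e⟩
  simp only [DD, Dg, this, if_false, zero_mul, Finset.sum_const_zero]
end

section
variable {S : Type*} [MetricSpace S] {H : ℝ × ℝ → S}

lemma small_charts (hS : Surf S) {K : Set S} (hK : IsCompact K) {η : ℝ} (hη : 0 < η) :
    ∃ ε > 0, ∀ x ∈ K, ∃ δ : ℂ → S, IsOpenEmbedding δ ∧ ball x ε ⊆ range δ ∧ range δ ⊆ ball x η := by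
  obtain ⟨ε, hε, h⟩ := lebesgue_number_lemma_of_metric (ι := {δ : ℂ → S // IsOpenEmbedding δ ∧ ∀ z z', dist (δ z) (δ z') < η})
    (c := fun δ => range δ.1) hK (fun δ => δ.2.1.isOpen_range) (fun x _ => by
      obtain ⟨φ, hφ, h0⟩ := hS.chart x
      obtain ⟨r, hr, hb⟩ := Metric.mem_nhds_iff.1 (hφ.continuous.continuousAt.preimage_mem_nhds
        (ball_mem_nhds (φ 0) (half_pos hη)))
      let e := OpenPartialHomeomorph.univBall (0 : ℂ) r
      have he : IsOpenEmbedding e := OpenPartialHomeomorph.isOpenEmbedding _ (OpenPartialHomeomorph.univBall_source 0 r)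
      have hm : ∀ z, φ (e z) ∈ ball (φ 0) (η / 2) := fun z => hb (by
        have := e.map_source (x := z) (by rw [OpenPartialHomeomorph.univBall_source]; trivial)
        rwa [OpenPartialHomeomorph.univBall_target 0 hr] at this)
      refine mem_iUnion.2 ⟨⟨fun z => φ (e z), hφ.comp he, fun z z' => ?_⟩, 0, ?_⟩
      · have h1 := mem_ball.1 (hm z)
        have h2 := mem_ball.1 (hm z')
        have := dist_triangle_right (φ (e z)) (φ (e z')) (φ 0)
        linarith
      · simp only [e, OpenPartialHomeomorph.univBall_apply_zero, h0])
  refine ⟨ε, hε, fun x hx => ?_⟩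
  obtain ⟨δ, hδ⟩ := h x hx
  refine ⟨δ.1, δ.2.1, hδ, ?_⟩
  obtain ⟨z, hz⟩ := hδ (mem_ball_self hε)
  rintro _ ⟨z', rfl⟩
  rw [← hz]
  exact δ.2.2 _ _

/-- On a compact set there are charts of uniform size, so all fine grids are well behaved. -/
theorem exists_nice (hS : Surf S) (h : Hom H) : ∃ ch, ∀ᶠ n in atTop, Nice H n ch := by
  obtain ⟨η, hη, h1⟩ := small_charts hS h.cpt one_pos
  obtain ⟨ε, hε, h2⟩ := small_charts hS h.cpt (half_pos hη)
  have h1' : ∀ x, ∃ φ : ℂ → S, x ∈ range H → IsOpenEmbedding φ ∧ ball x η ⊆ range φ := fun x => by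
    by_cases hx : x ∈ range H
    · obtain ⟨φ, a, b, _⟩ := h1 x hx
      exact ⟨φ, fun _ => ⟨a, b⟩⟩
    · exact ⟨fun _ => x, fun h => (hx h).elim⟩
  choose ch hch using h1'
  obtain ⟨N, hN⟩ := grid_fine h.cont (half_pos hε)
  refine ⟨ch, ?_⟩
  filter_upwards [eventually_ge_atTop N, eventually_ge_atTop 2] with n hn hn2
  refine ⟨hn2, fun x₀ => ?_⟩
  by_cases hx₀ : x₀ ∈ range H
  · obtain ⟨δ, hδ, hb, hr⟩ := h2 x₀ hx₀
    refine ⟨δ, hδ, hb (mem_ball_self hε), ?_⟩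
    filter_upwards [ball_mem_nhds x₀ (half_pos hε), ball_mem_nhds x₀ (half_pos hη)] with x hx hx'
    have hxr : x ∈ range δ := hb (ball_subset_ball (by linarith) hx)
    have hfit : Fit H n δ x := by
      rintro j hj k hk ⟨z, hz, rfl⟩
      rintro _ ⟨z', hz', rfl⟩
      apply hb
      have h3 := hN n hn (by omega) j hj k hk z' hz' z hz
      have h4 := mem_ball.1 hx
      have := dist_triangle (H z') (H z) x₀
      rw [mem_ball]; linarith
    refine ⟨hxr, hfit, fun w hw hxB => ?_⟩
    by_cases hxH : x ∈ range H
    · refine DD_chart h.cont h.per (by omega) (hch x hxH).1 hδ ?_ hxr hfit hw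
        (fun s e => hxB (Or.inl ⟨s, e⟩)) (fun s e => hxB (Or.inr ⟨s, e⟩))
      refine fun y hy => (hch x hxH).2 ?_
      have h3 := mem_ball.1 (hr hy)
      have h4 := mem_ball.1 hx'
      have := dist_triangle_right y x x₀
      rw [mem_ball]; linarith
    · rw [DD_out hxH, DD_out hxH]
  · obtain ⟨φ, hφ, h0⟩ := hS.chart x₀
    refine ⟨φ, hφ, ⟨0, h0⟩, ?_⟩
    filter_upwards [h.cpt.isClosed.isOpen_compl.mem_nhds hx₀, hφ.isOpen_range.mem_nhds ⟨0, h0⟩] with x hx hx'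
    refine ⟨hx', ?_, fun w _ _ => by rw [DD_out hx, DD_out hx]⟩
    rintro j hj k hk ⟨z, hz, rfl⟩
    exact (hx ⟨z, rfl⟩).elim

end

/-! ### The degree near the boundary curves -/

section
variable {S : Type*} [TopologicalSpace S] [T2Space S] {H : ℝ × ℝ → S} {n : ℕ} {ch : S → ℂ → S}

lemma Wt_ev (hH : Continuous H) {w : ℕ → ℕ → ZMod 2} {x : S} (hw : Wt H n w x) :
    ∀ᶠ y in 𝓝 x, Wt H n w y := by
  have sV := fin_ev (n := n) fun j k => sep_ev hH ((Q_compact n j k).inter (Q_compact n (j + 1) k)) x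
  have sH := fin_ev (n := n) fun j k => sep_ev hH ((Q_compact n j k).inter (Q_compact n j (k + 1))) x
  filter_upwards [sV, sH] with y h1 h2
  refine ⟨hw.per, ?_, ?_⟩
  · intro j hj k hk z hz hz' e
    obtain ⟨z', ⟨a, b⟩, c⟩ := h1 j hj.le k hk.le ⟨z, ⟨hz, hz'⟩, e⟩
    exact hw.hor j hj k hk z' a b c
  · intro j hj k hk z hz hz' e
    obtain ⟨z', ⟨a, b⟩, c⟩ := h2 j hj.le k (by omega) ⟨z, ⟨hz, hz'⟩, e⟩
    exact hw.ver j hj k hk z' a b c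

lemma Wt_const (c : ZMod 2) (x : S) : Wt H n (fun _ _ => c) x :=
  ⟨fun _ _ => rfl, fun _ _ _ _ _ _ _ _ => rfl, fun _ _ _ _ _ _ _ _ => rfl⟩

lemma Eg_zero {j : ℕ} {z : ℝ × ℝ} (hz : z ∈ Eg n j 0) : z.2 = 0 := by
  obtain ⟨⟨_, h1⟩, _, h2⟩ := hz
  simp only [V, Nat.cast_zero, zero_div] at h1 h2
  exact le_antisymm h2 h1

lemma Eg_top (hn : 0 < n) {j : ℕ} {z : ℝ × ℝ} (hz : z ∈ Eg n j n) : z.2 = 1 := by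
  obtain ⟨⟨_, h1⟩, _, h2⟩ := hz
  simp only [V, div_self (show (n : ℝ) ≠ 0 by positivity)] at h1 h2
  exact le_antisymm h2 h1

/-- The weighted degree is locally constant off the boundary curves. -/
lemma DD_lc (h : Hom H) (hN : Nice H n ch) {w : ℕ → ℕ → ZMod 2} {x : S} (hw : Wt H n w x) (hx : x ∉ Bd H) :
    ∀ᶠ y in 𝓝 x, DD H n (ch y) w y = DD H n (ch x) w x := by
  have hn : 0 < n := by have := hN.two; omega
  obtain ⟨δ, hδ, hxδ, hev⟩ := hN.loc x
  have h0 : ∀ j, x ∉ H '' Eg n j 0 := by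
    rintro j ⟨z, hz, e⟩
    exact hx (Or.inl ⟨z.1, by rw [← e]; exact congrArg H (Prod.ext rfl (Eg_zero hz).symm)⟩)
  have h1 : ∀ j, x ∉ H '' Eg n j n := by
    rintro j ⟨z, hz, e⟩
    exact hx (Or.inr ⟨z.1, by rw [← e]; exact congrArg H (Prod.ext rfl (Eg_top hn hz).symm)⟩)
  have key := (DD_near h.cont h.per hn hδ hxδ hev.self_of_nhds.2.1 hw).self_of_nhds
  filter_upwards [key, hev, Wt_ev h.cont hw, h.closed.isOpen_compl.mem_nhds hx] with y hy hy' hwy hyB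
  rw [hy'.2.2 w hwy hyB, hev.self_of_nhds.2.2 w hw hx]
  have := hy.2.2
  simp only [h0, h1, if_false, add_zero, Finset.sum_const_zero] at this
  revert this
  generalize DD H n δ w y = a, DD H n δ w x = b
  clear * -
  revert a b; decide

/-- Crossing a boundary edge at an interior point changes the degree. -/
lemma DD_jump_edge (h : Hom H) (hN : Nice H n ch) {j R : ℕ} (hj : j < n) {r s : ℝ} (hr : (R : ℝ) / n = r)
    (hR : R = 0 ∧ r = 0 ∨ R = n ∧ r = 1) (h1 : (j : ℝ) / n < s) (h2 : s < (j + 1 : ℝ) / n)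
    {O : Set S} (hO : O ∈ 𝓝 (H (s, r))) (v : ZMod 2) :
    ∃ q ∈ O \ Bd H, DD H n (ch q) (fun _ _ => 1) q = v := by
  have hn2 := hN.two
  have hn : 0 < n := by omega
  have hn' : (0 : ℝ) < n := by exact_mod_cast hn
  set a : ℝ := j / n with ha
  set b : ℝ := (j + 1) / n with hb
  have hab : b < a + 1 := by
    rw [ha, hb, div_add_one hn'.ne', div_lt_div_iff_of_pos_right hn']
    have : (2 : ℝ) ≤ n := by exact_mod_cast hn2
    linarith
  have hinj : InjOn (fun s => H (s, r)) (Ico 0 1) := by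
    rcases hR with ⟨_, rfl⟩ | ⟨_, rfl⟩
    exacts [h.inj0, h.inj1]
  have hrow : range (fun s => H (s, r)) ⊆ Bd H := by
    rcases hR with ⟨_, rfl⟩ | ⟨_, rfl⟩
    exacts [subset_union_left, subset_union_right]
  have hcont : Continuous fun s => H (s, r) := h.cont.comp (by fun_prop)
  have hinj' : InjOn (fun s => H (s, r)) (Icc a b) := per_injOn (h.per' r) hinj hab
  set x := H (s, r) with hx
  have hu : V n j R = (a, r) := by rw [V, hr]
  have hv : V n (j + 1) R = (b, r) := by rw [V, hr, hb]; push_cast; rfl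
  have hEg : ∀ t ∈ Icc a b, (t, r) ∈ Eg n j R := fun t ht => by
    rw [Eg, hu, hv]; exact ⟨⟨ht.1, le_rfl⟩, ht.2, le_rfl⟩
  -- the rest of the boundary stays away from `x`
  obtain ⟨C, hC, hxC, hBC⟩ : ∃ C : Set S, IsClosed C ∧ x ∉ C ∧
      Bd H ⊆ (fun s => H (s, r)) '' Icc a b ∪ C := by
    have hH := per_halves (h.per' r) hinj hcont (h1.trans h2) hab
    have hcl : IsClosed ((fun s => H (s, r)) '' Icc b (a + 1)) := (isCompact_Icc.image hcont).isClosed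
    have hx1 : x ∉ (fun s => H (s, r)) '' Icc b (a + 1) := by
      intro hc
      have hm : x ∈ (fun s => H (s, r)) '' Icc a b := ⟨s, ⟨h1.le, h2.le⟩, rfl⟩
      have := hH.inter.subset ⟨hm, hc⟩
      rcases this with e | e
      · exact h1.ne' (hinj' ⟨h1.le, h2.le⟩ ⟨le_rfl, (h1.trans h2).le⟩ e)
      · exact h2.ne (hinj' ⟨h1.le, h2.le⟩ ⟨(h1.trans h2).le, le_rfl⟩ e)
    have hsub := hH.union.symm.subset
    rcases hR with ⟨_, rfl⟩ | ⟨_, rfl⟩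
    · refine ⟨_, hcl.union h.jor1.isCompact.isClosed, ?_, ?_⟩
      · rintro (hc | ⟨t, ht⟩)
        · exact hx1 hc
        · exact h.disj s t ht.symm
      · rintro y (hy | hy)
        · rcases hsub hy with hy | hy
          exacts [Or.inl hy, Or.inr (Or.inl hy)]
        · exact Or.inr (Or.inr hy)
    · refine ⟨_, hcl.union h.jor0.isCompact.isClosed, ?_, ?_⟩
      · rintro (hc | ⟨t, ht⟩)
        · exact hx1 hc
        · exact h.disj t s ht
      · rintro y (hy | hy)
        · exact Or.inr (Or.inr hy)
        · rcases hsub hy with hy | hy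
          exacts [Or.inl hy, Or.inr (Or.inl hy)]
  obtain ⟨δ, hδ, hxδ, hev⟩ := hN.loc x
  have hfit := hev.self_of_nhds.2.1
  have hEδ : ∀ t ∈ Icc a b, H (t, r) ∈ range δ := by
    obtain ⟨k, hk, hkE⟩ : ∃ k < n, Eg n j R ⊆ Q n j k := by
      rcases hR with ⟨rfl, _⟩ | ⟨rfl, _⟩
      · exact ⟨0, hn, Icc_subset_Icc_right (V_mono n le_rfl (Nat.zero_le _))⟩
      · refine ⟨R - 1, by omega, ?_⟩
        rw [Q, Nat.sub_add_cancel hn]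
        exact Icc_subset_Icc_left (V_mono _ le_rfl (Nat.sub_le _ _))
    intro t ht
    exact hfit j hj.le k hk ⟨(s, r), hkE (hEg s ⟨h1.le, h2.le⟩), rfl⟩ ⟨_, hkE (hEg t ht), rfl⟩
  set f : ℝ → ℂ := fun t => cinv δ (H (t, r)) with hf
  have hfc : ContinuousOn f (Icc a b) := (cinv_cont hδ).comp hcont.continuousOn hEδ
  have hfi : InjOn f (Icc a b) := fun t ht t' ht' e => hinj' ht ht' (cinv_inj (hEδ t ht) (hEδ t' ht') e)
  have hfx : δ (f s) = x := app_cinv hxδ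
  have hft : ∀ t ∈ Icc a b, δ (f t) = H (t, r) := fun t ht => app_cinv (hEδ t ht)
  have hX : f '' Icc a b ⊆ δ ⁻¹' Bd H := by
    rintro _ ⟨t, ht, rfl⟩
    rw [mem_preimage, hft t ht]; exact hrow ⟨t, rfl⟩
  have hX' : ∀ᶠ y in 𝓝 (f s), y ∈ δ ⁻¹' Bd H → y ∈ f '' Icc a b := by
    refine (chart_event hδ (P := fun y => y ∈ Bd H → cinv δ y ∈ f '' Icc a b)).1 ?_ |>.mono fun y hy hy' => ?_
    · rw [hfx]
      filter_upwards [hC.isOpen_compl.mem_nhds hxC] with y hy hy'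
      rcases hBC hy' with ⟨t, ht, rfl⟩ | hc
      · exact ⟨t, ht, rfl⟩
      · exact (hy hc).elim
    · rw [← cinv_app hδ y]; exact hy hy'
  obtain ⟨ρ, hρ, u, -, -, hd, -, hside⟩ := plane_side h1 h2 hfc hfi hX hX' (univ_mem (f := 𝓝 (f s)))
  have hev2 := DD_near h.cont h.per hn hδ hxδ hfit (w := fun _ _ => 1) (Wt_const 1 x)
  rw [← hfx] at hev2 hev hO
  have E1 := (chart_event hδ).1 hev
  have E2 := (chart_event hδ).1 hev2
  have E3 := (chart_event hδ).1 hO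
  have hfsX : f s ∈ δ ⁻¹' Bd H ∩ ball (f s) ρ := ⟨hX ⟨s, ⟨h1.le, h2.le⟩, rfl⟩, mem_ball_self hρ⟩
  have hdiff : ∀ η θ, η ∈ ball (f s) ρ \ δ ⁻¹' Bd H → θ ∈ ball (f s) ρ \ δ ⁻¹' Bd H →
      (row n (psi δ H (δ η)) (psi δ H (δ θ)) j R = 0 ↔ u θ = u η) := by
    intro η θ hη hθ
    have hne : ∀ t ∈ Icc a b, ∀ p ∈ ball (f s) ρ \ δ ⁻¹' Bd H, f t ≠ p := by
      rintro t ht p hp rfl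
      exact hp.2 (hX ⟨t, ht, rfl⟩)
    obtain ⟨σ, hσ, -⟩ := exists_sqrt_path (g := fun t => (f t - θ) / (f t - η)) (h1.trans h2).le
      ((hfc.sub continuousOn_const).div (hfc.sub continuousOn_const) fun t ht => sub_ne_zero.2 (hne t ht η hη))
      (fun t ht => div_ne_zero (sub_ne_zero.2 (hne t ht θ hθ)) (sub_ne_zero.2 (hne t ht η hη)))
      ⟨le_rfl, (h1.trans h2).le⟩ (w := psq ((f a - θ) / (f a - η)))
      (psq_sq (div_ne_zero (sub_ne_zero.2 (hne a ⟨le_rfl, (h1.trans h2).le⟩ θ hθ))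
        (sub_ne_zero.2 (hne a ⟨le_rfl, (h1.trans h2).le⟩ η hη))))
    rw [hside θ hθ η hη σ hσ]
    exact row_eq (h1.trans h2).le hu hv hfc (fun t => by simp only [psi, hf, cinv_app hδ])
      (fun t => by simp only [psi, hf, cinv_app hδ]) (fun t ht => hne t ht θ hθ) (fun t ht => hne t ht η hη) hσ
  have hEx : ∀ i < n, x ∈ H '' Eg n i R → i = j := by
    rintro i hi ⟨⟨t, t'⟩, ht, e⟩
    have ht' : t' = r := by
      rcases hR with ⟨rfl, rfl⟩ | ⟨rfl, rfl⟩
      exacts [Eg_zero ht, Eg_top hn ht]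
    subst ht'
    have ht1 : (i : ℝ) / n ≤ t := ht.1.1
    have ht2 : t ≤ ((i + 1 : ℕ) : ℝ) / n := ht.2.1
    have hi0 : (0 : ℝ) ≤ i / n := by positivity
    have hi1 : ((i + 1 : ℕ) : ℝ) / n ≤ 1 := by
      rw [div_le_one hn']; exact_mod_cast hi
    have hj0 : (0 : ℝ) ≤ a := by positivity
    have hj1 : b ≤ 1 := by
      rw [hb, div_le_one hn']; exact_mod_cast hj
    have : t = s := per_inj (h.per' t') hinj e (by linarith) (by linarith)
    subst this
    have e1 := ht1.trans_lt h2
    have e2 := h1.trans_le ht2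
    rw [hb, div_lt_div_iff_of_pos_right hn'] at e1
    rw [ha, div_lt_div_iff_of_pos_right hn'] at e2
    have e1 : i < j + 1 := by exact_mod_cast e1
    have e2 : j < i + 1 := by exact_mod_cast e2
    omega
  have hEx' : x ∈ H '' Eg n j R := ⟨(s, r), hEg s ⟨h1.le, h2.le⟩, rfl⟩
  obtain ⟨η, ⟨⟨hη1, hη2⟩, hη3⟩, hη4⟩ := hd _ hfsX _ (inter_mem E2 (ball_mem_nhds (f s) hρ)) 0
  have E4 := (chart_event hδ).1 hη1
  -- choose the side of the second point so as to get the value `v`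
  obtain ⟨θ, ⟨⟨⟨⟨hθ1, hθ2⟩, hθ3⟩, hθ4⟩, hθ5⟩, hθ6⟩ := hd _ hfsX _ (inter_mem (inter_mem (inter_mem E1 E4) E3) (ball_mem_nhds (f s) hρ))
    (v + DD H n δ (fun _ _ => 1) (δ η))
  refine ⟨δ θ, ⟨hθ3, hθ5⟩, ?_⟩
  rw [hθ1.2.2 _ (Wt_const 1 _) hθ5]
  have hs := hθ2.2.2
  have hrow' := hdiff η θ ⟨hη2, hη3⟩ ⟨hθ4, hθ5⟩
  rw [hfx] at hs
  have hs' : DD H n δ (fun _ _ => 1) (δ θ) + DD H n δ (fun _ _ => 1) (δ η) =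
      row n (psi δ H (δ η)) (psi δ H (δ θ)) j R := by
    rw [hs, Finset.sum_eq_single_of_mem j (Finset.mem_range.2 hj)]
    · rcases hR with ⟨rfl, rfl⟩ | ⟨rfl, rfl⟩
      · rw [if_pos hEx', if_neg, one_mul, add_zero]
        rintro ⟨z, hz, e⟩
        refine h.disj s z.1 (e.symm.trans (congrArg H (Prod.ext rfl (Eg_top hn hz))))
      · rw [if_neg, if_pos hEx', one_mul, zero_add]
        rintro ⟨z, hz, e⟩
        refine h.disj z.1 s (Eq.trans (b := H z) (congrArg H (Prod.ext rfl (Eg_zero hz).symm)) e)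
    · intro i hi hij
      have hi := Finset.mem_range.1 hi
      rcases hR with ⟨rfl, rfl⟩ | ⟨rfl, rfl⟩
      · rw [if_neg fun hc => hij (hEx i hi hc), if_neg, add_zero]
        rintro ⟨z, hz, e⟩
        refine h.disj s z.1 (e.symm.trans (congrArg H (Prod.ext rfl (Eg_top hn hz))))
      · rw [if_neg, if_neg fun hc => hij (hEx i hi hc), add_zero]
        rintro ⟨z, hz, e⟩
        refine h.disj z.1 s (Eq.trans (b := H z) (congrArg H (Prod.ext rfl (Eg_zero hz).symm)) e)
  rw [← hs', hη4, hθ6] at hrow'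
  revert hrow'
  generalize DD H n δ (fun _ _ => 1) (δ η) = A, DD H n δ (fun _ _ => 1) (δ θ) = B
  clear * -
  revert A B v; decide

/-- The degree of the homotopy is a global side function of the boundary. -/
theorem DD_side (h : Hom H) (hN : Nice H n ch) :
    SideAt (Bd H) univ fun x => DD H n (ch x) (fun _ _ => 1) x := by
  refine ⟨fun p hp => DD_lc h hN (Wt_const 1 p) hp.2, fun z hz O hO v => ?_⟩
  have hn : 0 < n := by have := hN.two; omega
  have hn' : (0 : ℝ) < n := by exact_mod_cast hn
  have key : ∀ (R : ℕ) (r s : ℝ), (R : ℝ) / n = r → (R = 0 ∧ r = 0 ∨ R = n ∧ r = 1) → H (s, r) = z →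
      ∃ q ∈ O \ Bd H, DD H n (ch q) (fun _ _ => 1) q = v := by
    intro R r s hr hR e
    obtain ⟨s', hs', es⟩ := (h.per' r).exists_mem_Ico₀ one_pos s
    have es : H (s, r) = H (s', r) := es
    rw [es] at e
    obtain ⟨O', hO', hO'o, hzO'⟩ := _root_.mem_nhds_iff.1 hO
    have hcont : Continuous fun s => H (s, r) := h.cont.comp (by fun_prop)
    obtain ⟨ρ, hρ, hb⟩ := Metric.isOpen_iff.1 (hO'o.preimage hcont) s' (by rw [mem_preimage, e]; exact hzO')
    -- perturb `s'` to the right, off the grid points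
    set j := ⌊s' * n⌋₊ with hj
    have j1 : (j : ℝ) ≤ s' * n := Nat.floor_le (mul_nonneg hs'.1 hn'.le)
    have j2 : s' * n < j + 1 := Nat.lt_floor_add_one _
    have hjn : j < n := by
      have : (j : ℝ) < n := j1.trans_lt (by nlinarith [hs'.2])
      exact_mod_cast this
    have g1 : (j : ℝ) / n ≤ s' := by rwa [div_le_iff₀ hn']
    have g2 : s' < (j + 1 : ℝ) / n := by rwa [lt_div_iff₀ hn']
    obtain ⟨t, ht1, ht2⟩ := exists_between (lt_min g2 (lt_add_of_pos_right s' hρ))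
    have ht3 := lt_min_iff.1 ht2
    refine (DD_jump_edge h hN hjn hr hR (g1.trans_lt ht1) ht3.1 (hO'o.mem_nhds (hb ?_)) v).imp
      fun q hq => ⟨⟨hO' hq.1.1, hq.1.2⟩, hq.2⟩
    rw [mem_ball, Real.dist_eq, abs_of_pos (by linarith)]
    linarith [ht3.2]
  rcases hz.1 with ⟨s, e⟩ | ⟨s, e⟩
  · exact key 0 0 s (by simp) (Or.inl ⟨rfl, rfl⟩) e
  · exact key n 1 s (div_self hn'.ne') (Or.inr ⟨rfl, rfl⟩) e

end

/-! ### The degree function -/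

section
variable {S : Type*} [TopologicalSpace S]

lemma SideAt.frequently {X N : Set S} (hN : IsOpen N) {u : S → ZMod 2} (h : SideAt X N u) {x : S} (hx : x ∈ N)
    {P : S → Prop} (hP : ∀ᶠ y in 𝓝 x, P y) : ∃ y, y ∉ X ∧ P y := by
  by_cases hxX : x ∈ X
  · obtain ⟨q, hq, -⟩ := h.2 x ⟨hxX, hx⟩ _ (inter_mem hP (hN.mem_nhds hx)) 0
    exact ⟨q, hq.2, hq.1.1⟩
  · exact ⟨x, hxX, hP.self_of_nhds⟩

variable [T2Space S]

/-- Two side functions of the same set differ by a constant near any point. -/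
lemma pt_const (hS : Surf S) {X N N' : Set S} (hX : ∀ x ∈ X, ArcAt X x) (hN : IsOpen N) (hN' : IsOpen N')
    {u u' : S → ZMod 2} (hu : SideAt X N u) (hu' : SideAt X N' u') {x : S} (hx : x ∈ N) (hx' : x ∈ N') :
    ∃ c, ∀ᶠ y in 𝓝 x, y ∉ X → u y + u' y = c := by
  by_cases hxX : x ∈ X
  · exact side_diff hS (hX x hxX) (hN.mem_nhds hx) (hN'.mem_nhds hx') hu hu'
  · refine ⟨u x + u' x, ?_⟩
    filter_upwards [hu.1 x ⟨hx, hxX⟩, hu'.1 x ⟨hx', hxX⟩] with y h1 h2 _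
    rw [h1, h2]

/-- Two side functions of the same set differ by a constant along a connected set. -/
lemma pair_const (hS : Surf S) {X N N' : Set S} (hX : ∀ x ∈ X, ArcAt X x) (hN : IsOpen N) (hN' : IsOpen N')
    {u u' : S → ZMod 2} (hu : SideAt X N u) (hu' : SideAt X N' u') {M : Set S} (hM : IsPreconnected M)
    (hMN : M ⊆ N) (hMN' : M ⊆ N') : ∃ c, ∀ x ∈ M, ∀ᶠ y in 𝓝 x, y ∉ X → u y + u' y = c := by
  have h : ∀ x, ∃ c, x ∈ N ∩ N' → ∀ᶠ y in 𝓝 x, y ∉ X → u y + u' y = c := fun x => by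
    by_cases hx : x ∈ N ∩ N'
    · obtain ⟨c, hc⟩ := pt_const hS hX hN hN' hu hu' hx.1 hx.2
      exact ⟨c, fun _ => hc⟩
    · exact ⟨0, fun h => (hx h).elim⟩
  choose c hc using h
  have hlc : ∀ p ∈ N ∩ N', ∀ᶠ q in 𝓝 p, c q = c p := fun p hp => by
    filter_upwards [(hN.inter hN').mem_nhds hp, (hc p hp).eventually_nhds] with q hq hq'
    obtain ⟨y, hy, h1, h2⟩ := hu.frequently hN hq.1 ((hc q hq).and hq')
    rw [← h1 hy, ← h2 hy]
  rcases M.eq_empty_or_nonempty with rfl | ⟨x₀, hx₀⟩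
  · exact ⟨0, fun _ h => h.elim⟩
  · refine ⟨c x₀, fun x hx => ?_⟩
    have : Jn (N ∩ N') x x₀ := ⟨M, hM, fun z hz => ⟨hMN hz, hMN' hz⟩, hx, hx₀⟩
    rw [← jn_const hlc this]
    exact hc x ⟨hMN hx, hMN' hx⟩

/-- Two global side functions of the same set differ by a constant. -/
lemma side_unique (hS : Surf S) [ConnectedSpace S] {X : Set S} (hX : ∀ x ∈ X, ArcAt X x) {u u' : S → ZMod 2}
    (hu : SideAt X univ u) (hu' : SideAt X univ u') : ∃ c, ∀ x ∉ X, u x + u' x = c := by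
  obtain ⟨c, hc⟩ := pair_const hS hX isOpen_univ isOpen_univ hu hu' isPreconnected_univ
    (subset_univ _) (subset_univ _)
  exact ⟨c, fun x hx => (hc x trivial).self_of_nhds hx⟩
end

/-- The degree function of a homotopy: one function that is computed by infinitely many grids. -/
theorem exists_deg {S : Type*} [MetricSpace S] [ConnectedSpace S] (hS : Surf S) {H : ℝ × ℝ → S} (h : Hom H) :
    ∃ (d : S → ZMod 2) (ch : S → ℂ → S), SideAt (Bd H) univ d ∧ (∀ x ∉ range H, d x = 0) ∧
      ∃ᶠ n in atTop, Nice H n ch ∧ ∀ x ∉ Bd H, d x = DD H n (ch x) (fun _ _ => 1) x := by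
  obtain ⟨ch, hch⟩ := exists_nice hS h
  obtain ⟨N, hN⟩ := hch.exists
  set D : ℕ → S → ZMod 2 := fun n x => DD H n (ch x) (fun _ _ => 1) x with hD
  have hside : ∀ n, Nice H n ch → SideAt (Bd H) univ (D n) := fun n hn => DD_side h hn
  have hcase : ∀ᶠ n in atTop, (Nice H n ch ∧ ∀ x ∉ Bd H, D n x = D N x) ∨
      (Nice H n ch ∧ ∀ x ∉ Bd H, D n x = D N x + 1) := by
    filter_upwards [hch] with n hn
    obtain ⟨c, hc⟩ := side_unique hS (fun x hx => h.arcAt hx) (hside n hn) (hside N hN)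
    rcases z2cases c with rfl | rfl
    · left
      refine ⟨hn, fun x hx => ?_⟩
      have := hc x hx
      revert this
      generalize D n x = a, D N x = b
      clear * -
      revert a b; decide
    · right
      refine ⟨hn, fun x hx => ?_⟩
      have := hc x hx
      revert this
      generalize D n x = a, D N x = b
      clear * -
      revert a b; decide
  have hout : ∀ n, ∀ x ∉ range H, D n x = 0 := fun n x hx => DD_out hx
  rcases Filter.frequently_or_distrib.1 hcase.frequently with hf | hf
  · exact ⟨D N, ch, hside N hN, hout N, hf.mono fun n hn => ⟨hn.1, fun x hx => (hn.2 x hx).symm⟩⟩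
  · obtain ⟨m, hm, hm'⟩ := hf.exists
    refine ⟨D m, ch, hside m hm, hout m, hf.mono fun n hn => ⟨hn.1, fun x hx => ?_⟩⟩
    rw [hm' x hx]; exact (hn.2 x hx).symm

/-! ### Weighted degrees -/

section
variable {S : Type*} [TopologicalSpace S] {H : ℝ × ℝ → S} {n : ℕ}

lemma SideAt.add_const {X N : Set S} {u : S → ZMod 2} (h : SideAt X N u) (c : ZMod 2) :
    SideAt X N fun x => u x + c := by
  refine ⟨fun p hp => (h.1 p hp).mono fun q hq => by simp only [hq], fun z hz O hO v => ?_⟩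
  obtain ⟨q, hq, e⟩ := h.2 z hz O hO (v + c)
  refine ⟨q, hq, ?_⟩
  simp only [e]; clear * -; revert v c; decide

lemma SideAt.mono {X N N' : Set S} {u : S → ZMod 2} (h : SideAt X N u) (hN : N' ⊆ N) : SideAt X N' u :=
  ⟨fun p hp => h.1 p ⟨hN hp.1, hp.2⟩, fun z hz => h.2 z ⟨hz.1, hN hz.2⟩⟩

lemma DD_ext {φ : ℂ → S} {w w' : ℕ → ℕ → ZMod 2} {x : S}
    (h : ∀ j < n, ∀ k < n, x ∈ H '' Q n j k → w j k = w' j k) : DD H n φ w x = DD H n φ w' x := by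
  refine Dg_ext fun j hj k hk => ?_
  by_cases hx : x ∈ H '' Q n j k
  · simp only [if_pos hx, h j hj k hk hx]
  · simp only [if_neg hx]

lemma DD_add {φ : ℂ → S} {w : ℕ → ℕ → ZMod 2} {c : ZMod 2} {x : S} :
    DD H n φ (fun j k => w j k + c) x = DD H n φ w x + c * DD H n φ (fun _ _ => 1) x := by
  simp only [DD, Dg, Finset.mul_sum, ← Finset.sum_add_distrib]
  refine Finset.sum_congr rfl fun j _ => Finset.sum_congr rfl fun k _ => ?_
  split_ifs <;> ring

/-- A choice, for every grid square, of a side function of `γ` on a neighbourhood of its image;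
these functions vanish where the degree `d` does. -/
structure Sys (H : ℝ × ℝ → S) (n : ℕ) (γ : Set S) (d : S → ZMod 2) (N : ℕ → ℕ → Set S)
    (u : ℕ → ℕ → S → ZMod 2) : Prop where
  op : ∀ j ≤ n, ∀ k < n, IsOpen (N j k)
  sub : ∀ j ≤ n, ∀ k < n, H '' Q n j k ⊆ N j k
  side : ∀ j ≤ n, ∀ k < n, SideAt γ (N j k) (u j k)
  norm : ∀ j ≤ n, ∀ k < n, ∀ p ∈ N j k, p ∉ Bd H → d p = 0 → u j k p = 0
  per : ∀ k, u n k = u 0 k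

variable [T2Space S]

/-- The side functions of a system can be normalised by constants so as to agree on overlaps. -/
lemma Sys.weights (hS : Surf S) (h : Hom H) (hn : 0 < n) {γ : Set S} (hγ : ∀ x ∈ γ, ArcAt γ x) {d : S → ZMod 2}
    (hd : SideAt (Bd H) univ d) (hdγ : ∀ x ∈ γ, x ∉ Bd H → d x = 1) {N : ℕ → ℕ → Set S} {u : ℕ → ℕ → S → ZMod 2}
    (hs : Sys H n γ d N u) : ∃ f : ℕ → ℕ → ZMod 2, (∀ k < n, f n k = f 0 k) ∧
      (∀ j < n, ∀ k < n, ∀ z ∈ Q n j k, z ∈ Q n (j + 1) k →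
        ∀ᶠ y in 𝓝 (H z), y ∉ γ → f j k + u j k y = f (j + 1) k + u (j + 1) k y) ∧
      (∀ j < n, ∀ k, k + 1 < n → ∀ z ∈ Q n j k, z ∈ Q n j (k + 1) →
        ∀ᶠ y in 𝓝 (H z), y ∉ γ → f j k + u j k y = f j (k + 1) + u j (k + 1) y) := by
  have gv : ∀ j k, ∃ c, j ≤ n → k + 1 < n → ∀ z ∈ Q n j k ∩ Q n j (k + 1), ∀ᶠ y in 𝓝 (H z), y ∉ γ →
      u j k y + u j (k + 1) y = c := by
    intro j k
    by_cases hjk : j ≤ n ∧ k + 1 < n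
    · obtain ⟨c, hc⟩ := pair_const hS hγ (hs.op j hjk.1 k (by omega)) (hs.op j hjk.1 (k + 1) hjk.2)
        (hs.side j hjk.1 k (by omega)) (hs.side j hjk.1 (k + 1) hjk.2)
        (M := H '' (Q n j k ∩ Q n j (k + 1)))
        (((convex_Icc _ _).inter (convex_Icc _ _)).isPreconnected.image _ h.cont.continuousOn)
        ((image_mono inter_subset_left).trans (hs.sub j hjk.1 k (by omega)))
        ((image_mono inter_subset_right).trans (hs.sub j hjk.1 _ hjk.2))
      exact ⟨c, fun _ _ z hz => hc _ ⟨z, hz, rfl⟩⟩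
    · exact ⟨0, fun a b => (hjk ⟨a, b⟩).elim⟩
  have gh : ∀ j k, ∃ c, j < n → k < n → ∀ z ∈ Q n j k ∩ Q n (j + 1) k, ∀ᶠ y in 𝓝 (H z), y ∉ γ →
      u j k y + u (j + 1) k y = c := by
    intro j k
    by_cases hjk : j < n ∧ k < n
    · obtain ⟨c, hc⟩ := pair_const hS hγ (hs.op j hjk.1.le k hjk.2) (hs.op (j + 1) hjk.1 k hjk.2)
        (hs.side j hjk.1.le k hjk.2) (hs.side (j + 1) hjk.1 k hjk.2)
        (M := H '' (Q n j k ∩ Q n (j + 1) k))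
        (((convex_Icc _ _).inter (convex_Icc _ _)).isPreconnected.image _ h.cont.continuousOn)
        ((image_mono inter_subset_left).trans (hs.sub j hjk.1.le k hjk.2))
        ((image_mono inter_subset_right).trans (hs.sub _ hjk.1 _ hjk.2))
      exact ⟨c, fun _ _ z hz => hc _ ⟨z, hz, rfl⟩⟩
    · exact ⟨0, fun a b => (hjk ⟨a, b⟩).elim⟩
  choose gv hgv using gv
  choose gh hgh using gh
  have mem : ∀ j k a b : ℕ, j ≤ a → a ≤ j + 1 → k ≤ b → b ≤ k + 1 → V n a b ∈ Q n j k :=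
    fun j k a b h1 h2 h3 h4 => ⟨V_mono n h1 h3, V_mono n h2 h4⟩
  have freq : ∀ j ≤ n, ∀ k < n, ∀ z ∈ Q n j k, ∀ P : S → Prop, (∀ᶠ y in 𝓝 (H z), P y) → ∃ y, y ∉ γ ∧ P y :=
    fun j hj k hk z hz P hP => (hs.side j hj k hk).frequently (hs.op j hj k hk) (hs.sub j hj k hk ⟨z, hz, rfl⟩) hP
  set f : ℕ → ℕ → ZMod 2 := fun j k => ∑ i ∈ Finset.range k, gv j i with hf
  have hf1 : ∀ j k, f j (k + 1) = f j k + gv j k := fun j k => Finset.sum_range_succ _ _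
  have hper : ∀ k, k + 1 < n → gv n k = gv 0 k := by
    intro k hk
    have e : H (V n n (k + 1)) = H (V n 0 (k + 1)) := by
      have := V_per hn 0 (k + 1)
      rw [zero_add] at this
      rw [this, h.per]
    have h1 := hgv n k le_rfl hk (V n n (k + 1)) ⟨mem _ _ _ _ (by omega) (by omega) (by omega) (by omega),
      mem _ _ _ _ (by omega) (by omega) (by omega) (by omega)⟩
    have hm := mem 0 k 0 (k + 1) (by omega) (by omega) (by omega) (by omega)
    have h2 := hgv 0 k (Nat.zero_le _) hk (V n 0 (k + 1)) ⟨hm,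
      mem _ _ _ _ (by omega) (by omega) (by omega) (by omega)⟩
    rw [e] at h1
    obtain ⟨y, hy, h3, h4⟩ := freq 0 (Nat.zero_le _) k (by omega) _ hm _ (h1.and h2)
    rw [← h3 hy, ← h4 hy, hs.per, hs.per]
  have hhor : ∀ j < n, ∀ k < n, f j k + f (j + 1) k = gh j k := by
    intro j hj k
    induction k with
    | zero =>
      intro _
      simp only [hf, Finset.range_zero, Finset.sum_empty, add_zero]
      -- the common edge starts on the boundary, where both side functions vanish on one side
      have hm := mem j 0 (j + 1) 0 (by omega) (by omega) (by omega) (by omega)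
      have hm' := mem (j + 1) 0 (j + 1) 0 (by omega) (by omega) (by omega) (by omega)
      have h1 := hgh j 0 hj hn (V n (j + 1) 0) ⟨hm, hm'⟩
      have hb : H (V n (j + 1) 0) ∈ Bd H := Or.inl ⟨((j + 1 : ℕ) : ℝ) / n, by simp [V]⟩
      obtain ⟨q, ⟨⟨⟨h2, h3⟩, h4⟩, h5⟩, h6⟩ := hd.2 _ ⟨hb, trivial⟩ _ (inter_mem (inter_mem h1
        ((hs.op j hj.le 0 hn).mem_nhds (hs.sub j hj.le 0 hn ⟨_, hm, rfl⟩)))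
        ((hs.op (j + 1) hj 0 hn).mem_nhds (hs.sub (j + 1) hj 0 hn ⟨_, hm', rfl⟩))) 0
      have hqγ : q ∉ γ := fun hc => by
        have := hdγ q hc h5
        rw [h6] at this
        exact absurd this (by decide)
      rw [← h2 hqγ, hs.norm j hj.le 0 hn q h3 h5 h6, hs.norm (j + 1) hj 0 hn q h4 h5 h6, add_zero]
    | succ k ih =>
      intro hk
      have h0 := ih (by omega)
      rw [hf1, hf1]
      have m1 := mem j k (j + 1) (k + 1) (by omega) (by omega) (by omega) (by omega)
      have m2 := mem (j + 1) k (j + 1) (k + 1) (by omega) (by omega) (by omega) (by omega)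
      have m3 := mem j (k + 1) (j + 1) (k + 1) (by omega) (by omega) (by omega) (by omega)
      have m4 := mem (j + 1) (k + 1) (j + 1) (k + 1) (by omega) (by omega) (by omega) (by omega)
      obtain ⟨y, hy, h1, h2, h3, h4⟩ := freq j hj.le k (by omega) _ m1 _
        ((hgh j k hj (by omega) _ ⟨m1, m2⟩).and ((hgh j (k + 1) hj hk _ ⟨m3, m4⟩).and
          ((hgv j k hj.le hk _ ⟨m1, m3⟩).and (hgv (j + 1) k hj hk _ ⟨m2, m4⟩))))
      rw [← h1 hy] at h0
      rw [← h2 hy, ← h3 hy, ← h4 hy]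
      revert h0
      generalize f j k = a, f (j + 1) k = b, u j k y = c1, u (j + 1) k y = c2, u j (k + 1) y = c3,
        u (j + 1) (k + 1) y = c4
      clear * -
      revert a b c1 c2 c3 c4; decide
  refine ⟨f, fun k hk => ?_, fun j hj k hk z hz hz' => ?_, fun j hj k hk z hz hz' => ?_⟩
  · exact Finset.sum_congr rfl fun i hi => hper i (by have := Finset.mem_range.1 hi; omega)
  · filter_upwards [hgh j k hj hk z ⟨hz, hz'⟩] with y hy hyγ
    have h1 := hy hyγ
    rw [← hhor j hj k hk] at h1
    revert h1
    generalize f j k = a, f (j + 1) k = b, u j k y = c1, u (j + 1) k y = c2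
    clear * -
    revert a b c1 c2; decide
  · filter_upwards [hgv j k hj.le hk z ⟨hz, hz'⟩] with y hy hyγ
    rw [hf1, ← hy hyγ]
    generalize f j k = a, u j k y = c1, u j (k + 1) y = c2
    clear * -
    revert a c1 c2; decide

/-- The weighted degree separates the two sides of `γ` at points where the degree is `1`. -/
lemma Sys.separate (hS : Surf S) (h : Hom H) {ch : S → ℂ → S} (hN : Nice H n ch) {γ : Set S}
    (hγ : ∀ x ∈ γ, ArcAt γ x) {d : S → ZMod 2} (hd : SideAt (Bd H) univ d)
    (hdn : ∀ x ∉ Bd H, d x = DD H n (ch x) (fun _ _ => 1) x)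
    (hdγ : ∀ x ∈ γ, x ∉ Bd H → d x = 1) {N : ℕ → ℕ → Set S} {u : ℕ → ℕ → S → ZMod 2}
    (hs : Sys H n γ d N u) {x : S} (hx : x ∈ γ) (hxB : x ∉ Bd H) {O : Set S} (hO : O ∈ 𝓝 x) :
    ∃ p ∈ O \ γ, ∃ q ∈ O \ γ, ¬ Jn ((Bd H)ᶜ \ γ) p q := by
  have hn : 0 < n := by have := hN.two; omega
  obtain ⟨f, hfp, hfh, hfv⟩ := hs.weights hS h hn hγ hd hdγ
  set D : S → ZMod 2 := fun y => DD H n (ch y) (fun j k => f j k + u j k y) y with hD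
  have hlc : ∀ y ∈ (Bd H)ᶜ \ γ, ∀ᶠ z in 𝓝 y, D z = D y := by
    rintro y ⟨hyB, hyγ⟩
    have hw : Wt H n (fun j k => f j k + u j k y) y := by
      refine ⟨fun k hk => by rw [hfp k hk, hs.per], ?_, ?_⟩
      · rintro j hj k hk z hz hz' rfl
        exact (hfh j hj k hk z hz hz').self_of_nhds hyγ
      · rintro j hj k hk z hz hz' rfl
        exact (hfv j hj k hk z hz hz').self_of_nhds hyγ
    have hu : ∀ᶠ z in 𝓝 y, ∀ j ≤ n, ∀ k ≤ n, k < n → j < n → z ∈ H '' Q n j k → u j k z = u j k y := by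
      refine fin_ev fun j k => ?_
      by_cases hjk : k < n ∧ j < n
      · by_cases hyQ : y ∈ H '' Q n j k
        · filter_upwards [(hs.side j hjk.2.le k hjk.1).1 y ⟨hs.sub j hjk.2.le k hjk.1 hyQ, hyγ⟩] with z hz _ _ _
          exact hz
        · filter_upwards [sep_ev h.cont (Q_compact n j k) y] with z hz _ _ h'
          exact (hyQ (hz h')).elim
      · exact Eventually.of_forall fun z a b => (hjk ⟨a, b⟩).elim
    filter_upwards [DD_lc h hN hw hyB, hu] with z hz hz'
    simp only [hD]
    rw [← hz]
    exact DD_ext fun j hj k hk hm => by rw [hz' j hj.le k hk.le hk hj hm]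
  obtain ⟨N₀, hN₀, hxN₀, -, u₀, hu₀, -⟩ := exists_side hS (hγ x hx) univ_mem
  have hc : ∀ j k, ∃ c, (j ≤ n → k < n → x ∈ H '' Q n j k →
      ∀ᶠ y in 𝓝 x, y ∉ γ → u j k y + u₀ y = c) ∧ (x ∉ H '' Q n j k → c = f j k) := by
    intro j k
    by_cases hjk : (j ≤ n ∧ k < n) ∧ x ∈ H '' Q n j k
    · obtain ⟨c, hc⟩ := pt_const hS hγ (hs.op j hjk.1.1 k hjk.1.2) hN₀ (hs.side j hjk.1.1 k hjk.1.2) hu₀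
        (hs.sub j hjk.1.1 k hjk.1.2 hjk.2) hxN₀
      exact ⟨c, fun _ _ _ => hc, fun h => (h hjk.2).elim⟩
    · exact ⟨f j k, fun a b c => (hjk ⟨⟨a, b⟩, c⟩).elim, fun _ => rfl⟩
  choose c hc hc' using hc
  have hw : Wt H n (fun j k => f j k + c j k) x := by
    refine ⟨fun k hk => ?_, ?_, ?_⟩
    · by_cases hxQ : x ∈ H '' Q n 0 k
      · have h1 := hc 0 k (Nat.zero_le _) hk hxQ
        rw [← Q_image_per hn h.per] at hxQ
        have h2 := hc n k le_rfl hk hxQ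
        obtain ⟨y, hy, h3, h4⟩ := hu₀.frequently hN₀ hxN₀ (h1.and h2)
        rw [← h3 hy, ← h4 hy, hfp k hk, hs.per]
      · have hxQ' := hxQ
        rw [← Q_image_per hn h.per] at hxQ'
        rw [hc' 0 k hxQ, hc' n k hxQ', hfp k hk]
    · rintro j hj k hk z hz hz' rfl
      obtain ⟨y, hy, h1, h2, h3⟩ := hu₀.frequently hN₀ hxN₀ ((hc j k hj.le hk ⟨z, hz, rfl⟩).and
        ((hc (j + 1) k hj hk ⟨z, hz', rfl⟩).and (hfh j hj k hk z hz hz')))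
      rw [← h1 hy, ← h2 hy, ← add_assoc, ← add_assoc, h3 hy]
    · rintro j hj k hk z hz hz' rfl
      obtain ⟨y, hy, h1, h2, h3⟩ := hu₀.frequently hN₀ hxN₀ ((hc j k hj.le (by omega) ⟨z, hz, rfl⟩).and
        ((hc j (k + 1) hj.le hk ⟨z, hz', rfl⟩).and (hfv j hj k hk z hz hz')))
      rw [← h1 hy, ← h2 hy, ← add_assoc, ← add_assoc, h3 hy]
  have hall : ∀ᶠ y in 𝓝 x, ∀ j ≤ n, ∀ k ≤ n, k < n → j < n → y ∉ γ → y ∈ H '' Q n j k → u j k y = c j k + u₀ y := by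
    refine fin_ev fun j k => ?_
    by_cases hjk : k < n ∧ j < n
    · by_cases hyQ : x ∈ H '' Q n j k
      · filter_upwards [hc j k hjk.2.le hjk.1 hyQ] with y hy _ _ hyγ _
        rw [← hy hyγ]
        generalize u j k y = a, u₀ y = b
        clear * -
        revert a b; decide
      · filter_upwards [sep_ev h.cont (Q_compact n j k) x] with z hz _ _ _ h'
        exact (hyQ (hz h')).elim
    · exact Eventually.of_forall fun z a b => (hjk ⟨a, b⟩).elim
  have hval : ∀ᶠ y in 𝓝 x, y ∉ γ → D y = DD H n (ch x) (fun j k => f j k + c j k) x + u₀ y := by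
    filter_upwards [hall, DD_lc h hN hw hxB, hd.1 x ⟨trivial, hxB⟩, h.closed.isOpen_compl.mem_nhds hxB] with y h1 h2 h3 h4 hy
    rw [← h2]
    have : D y = DD H n (ch y) (fun j k => (f j k + c j k) + u₀ y) y :=
      DD_ext fun j hj k hk hm => by rw [h1 j hj.le k hk.le hk hj hy hm, add_assoc]
    rw [this, DD_add, ← hdn y h4, h3, hdγ x hx hxB, mul_one]
  obtain ⟨p, hp, ep⟩ := hu₀.2 x ⟨hx, hxN₀⟩ _ (inter_mem hO hval) 0
  obtain ⟨q, hq, eq⟩ := hu₀.2 x ⟨hx, hxN₀⟩ _ (inter_mem hO hval) 1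
  refine ⟨p, ⟨hp.1.1, hp.2⟩, q, ⟨hq.1.1, hq.2⟩, fun hj => ?_⟩
  have := jn_const hlc hj
  rw [hp.1.2 hp.2, hq.1.2 hq.2, ep, eq] at this
  revert this
  generalize DD H n (ch x) (fun j k => f j k + c j k) x = a
  clear * -
  revert a; decide
end

/-! ### Jordan separation in the region of odd degree -/

/-- Side functions of `γ` may be chosen to vanish where the degree does. -/
lemma norm_side {S : Type*} [TopologicalSpace S] [T2Space S] (hS : Surf S) {H : ℝ × ℝ → S} (h : Hom H)
    {d : S → ZMod 2} (hd : SideAt (Bd H) univ d) {U γ : Set S} (hUd : ∀ x ∈ U, d x = 1) (hγc : IsClosed γ)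
    (hγ : ∀ x ∈ γ, ArcAt γ x) (hγU : γ ⊆ closure U) (y : S) :
    ∃ N, IsOpen N ∧ y ∈ N ∧ ∃ u, SideAt γ N u ∧ ∀ p ∈ N, p ∉ Bd H → d p = 0 → u p = 0 := by
  have h1 : ∀ x ∈ γ, x ∉ Bd H → d x = 1 := by
    intro x hx hxB
    obtain ⟨z, hz, hzU⟩ := mem_closure_iff_nhds.1 (hγU hx) _ (hd.1 x ⟨trivial, hxB⟩)
    rw [← show d z = d x from hz, hUd z hzU]
  by_cases hy : y ∈ γ
  · obtain ⟨N₁, hN₁, hyN₁, -, u₁, hu₁, -⟩ := exists_side hS (hγ y hy) univ_mem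
    by_cases hyB : y ∈ Bd H
    · obtain ⟨N₂, hN₂, hyN₂, hN₂₁, u₂, hu₂, hj⟩ := exists_side hS (h.arcAt hyB) (hN₁.mem_nhds hyN₁)
      obtain ⟨c, hc⟩ := side_diff hS (h.arcAt hyB) univ_mem (hN₂.mem_nhds hyN₂) hd hu₂
      obtain ⟨M, hM, hMo, hyM⟩ := _root_.mem_nhds_iff.1 (inter_mem hc (hN₂.mem_nhds hyN₂))
      obtain ⟨p₀, hp₀, e₀⟩ := hd.2 y ⟨hyB, trivial⟩ M (hMo.mem_nhds hyM) 0
      refine ⟨M, hMo, hyM, fun x => u₁ x + u₁ p₀,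
        (hu₁.mono fun z hz => hN₂₁ (hM hz).2).add_const _, fun p hp hpB hp0 => ?_⟩
      have hu2 : u₂ p = u₂ p₀ := by
        have a := (hM hp).1 hpB
        have b := (hM hp₀.1).1 hp₀.2
        rw [hp0, zero_add] at a
        rw [e₀, zero_add] at b
        rw [a, b]
      obtain ⟨C, hC, hCs, hpC, hp₀C⟩ := hj p ⟨(hM hp).2, hpB⟩ p₀ ⟨(hM hp₀.1).2, hp₀.2⟩ hu2
      have hCγ : ∀ z ∈ C, z ∉ γ := by
        intro z hz hzγ
        have e1 : d z = d p := jn_const hd.1 ⟨C, hC, fun w hw => ⟨trivial, (hCs hw).2⟩, hz, hpC⟩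
        rw [h1 z hzγ (hCs hz).2, hp0] at e1
        exact absurd e1 (by decide)
      have e2 : u₁ p = u₁ p₀ := jn_const hu₁.1 ⟨C, hC, fun w hw => ⟨(hCs hw).1, hCγ w hw⟩, hpC, hp₀C⟩
      simp only [e2]
      generalize u₁ p₀ = a
      clear * -
      revert a; decide
    · obtain ⟨M, hM, hMo, hyM⟩ := _root_.mem_nhds_iff.1 (inter_mem (hd.1 y ⟨trivial, hyB⟩) (hN₁.mem_nhds hyN₁))
      refine ⟨M, hMo, hyM, u₁, hu₁.mono fun z hz => (hM hz).2, fun p hp hpB hp0 => ?_⟩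
      have : d p = d y := (hM hp).1
      rw [hp0, h1 y hy hyB] at this
      exact absurd this (by decide)
  · refine ⟨γᶜ, hγc.isOpen_compl, hy, fun _ => 0, ⟨fun _ _ => Eventually.of_forall fun _ => rfl, ?_⟩, fun _ _ _ _ => rfl⟩
    rintro z ⟨hz, hz'⟩
    exact (hz' hz).elim

/-- Jordan curves separate locally inside a region where the degree of the homotopy is `1`. -/
theorem deg_js {S : Type*} [MetricSpace S] (hS : Surf S) {H : ℝ × ℝ → S} (h : Hom H)
    {d : S → ZMod 2} {ch : S → ℂ → S} (hd : SideAt (Bd H) univ d)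
    (hf : ∃ᶠ n in atTop, Nice H n ch ∧ ∀ x ∉ Bd H, d x = DD H n (ch x) (fun _ _ => 1) x)
    {U : Set S} (hUd : ∀ x ∈ U, d x = 1) (hUB : ∀ x ∈ U, x ∉ Bd H) : JS U := by
  intro γ hγJ hγU x hx O hO
  have hγc := hγJ.isCompact.isClosed
  have hγ : ∀ x ∈ γ, ArcAt γ x := fun x hx => hγJ.arcAt hx Subset.rfl (Eventually.of_forall fun _ h => h)
  have hdγ : ∀ x ∈ γ, x ∉ Bd H → d x = 1 := by
    intro x hx hxB
    obtain ⟨z, hz, hzU⟩ := mem_closure_iff_nhds.1 (hγU hx) _ (hd.1 x ⟨trivial, hxB⟩)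
    rw [← show d z = d x from hz, hUd z hzU]
  choose N hNo hN u hu hu0 using norm_side hS h hd hUd hγc hγ hγU
  obtain ⟨ε, hε, hL⟩ := lebesgue_number_lemma_of_metric h.cpt hNo fun y _ => mem_iUnion.2 ⟨y, hN y⟩
  obtain ⟨M, hM⟩ := grid_fine h.cont hε
  obtain ⟨n, ⟨hnice, hdn⟩, hnM⟩ := (hf.and_eventually (eventually_ge_atTop M)).exists
  have hn : 0 < n := by have := hnice.two; omega
  have hsq : ∀ j k, ∃ y, j ≤ n → k < n → H '' Q n j k ⊆ N y := by
    intro j k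
    by_cases hjk : j ≤ n ∧ k < n
    · obtain ⟨y, hy⟩ := hL _ (mem_range_self (f := H) (V n j k))
      refine ⟨y, fun _ _ => ?_⟩
      rintro _ ⟨z, hz, rfl⟩
      refine hy (mem_ball.2 (hM n hnM hn j hjk.1 k hjk.2 z hz _ ⟨le_rfl, V_mono n (by omega) (by omega)⟩))
    · exact ⟨x, fun a b => (hjk ⟨a, b⟩).elim⟩
  choose y hy using hsq
  set y' : ℕ → ℕ → S := fun j k => y (if j = n then 0 else j) k with hy'
  have hs : Sys H n γ d (fun j k => N (y' j k)) (fun j k => u (y' j k)) := by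
    refine ⟨fun j _ k _ => hNo _, fun j hj k hk => ?_, fun j _ k _ => hu _, fun j _ k _ => hu0 _, fun k => ?_⟩
    · simp only [hy']
      split_ifs with e
      · rw [e, Q_image_per hn h.per]
        exact hy 0 k (Nat.zero_le _) hk
      · exact hy j k hj hk
    · simp [hy']
  obtain ⟨p, hp, q, hq, hpq⟩ := hs.separate hS h hnice hγ hd hdn hdγ hx.1 (hUB x hx.2) hO
  exact ⟨p, hp, q, hq, fun hj => hpq (hj.mono fun z hz => ⟨hUB z hz.1, hz.2⟩)⟩

/-! ### The region between the curves -/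

lemma IsJordan.isPreconnected {S : Type*} [TopologicalSpace S] {J : Set S} (h : IsJordan J) : IsPreconnected J := by
  obtain ⟨γ, hc, -, -, rfl⟩ := h
  exact isPreconnected_range hc

/-- A region swept out with odd degree, bounded by the first curve alone or by both curves. -/
theorem exists_region {S : Type*} [MetricSpace S] [ConnectedSpace S] (hS : Surf S) {H : ℝ × ℝ → S} (h : Hom H) :
    ∃ (U : Set S) (w : S), U.Nonempty ∧ JS U ∧ IsCompact (closure U) ∧ w ∉ closure U ∧
      (Reg U (range fun s => H (s, 0)) ∨ Reg U (Bd H)) := by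
  obtain ⟨d, ch, hd, hout, hf⟩ := exists_deg hS h
  set A : Set S := {x | x ∉ Bd H ∧ d x = 1} with hA
  have hAo : IsOpen A := by
    rw [isOpen_iff_mem_nhds]
    rintro x ⟨hx, hx'⟩
    filter_upwards [h.closed.isOpen_compl.mem_nhds hx, hd.1 x ⟨trivial, hx⟩] with y h1 h2
    exact ⟨h1, h2.trans hx'⟩
  have hx₀ : H (0, 0) ∈ Bd H := Or.inl ⟨0, rfl⟩
  obtain ⟨N, hN, hxN, -, hmer⟩ := merge_local hS (h.arcAt hx₀) univ_mem
  obtain ⟨p₀, hp₀, ep₀⟩ := hd.2 _ ⟨hx₀, trivial⟩ N (hN.mem_nhds hxN) 1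
  set U : Set S := {q | Jn A p₀ q} with hU
  obtain ⟨hUo, hUA, hUcl⟩ := comp_clopen hS hAo p₀
  have hp₀U : p₀ ∈ U := jn_of_pre isPreconnected_singleton rfl rfl |>.mono
    (singleton_subset_iff.2 (show p₀ ∈ A from ⟨hp₀.2, ep₀⟩))
  have hcl : ∀ z ∉ Bd H, z ∈ closure U → z ∈ U := by
    intro z hz hzU
    refine hUcl z ⟨hz, ?_⟩ hzU
    obtain ⟨y, hy, hyU⟩ := mem_closure_iff_nhds.1 hzU _ (hd.1 z ⟨trivial, hz⟩)
    rw [← show d y = d z from hy]; exact (hUA hyU).2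
  have hUB : Disjoint U (Bd H) := Set.disjoint_left.2 fun z hz => (hUA hz).1
  have hall : ∀ J : Set S, IsJordan J → J ⊆ Bd H → (J ∩ closure U).Nonempty → J ⊆ closure U := by
    intro J hJ hJB hne
    refine pre_induct hJ.isPreconnected isClosed_closure (fun z hz hzU => ?_) hne
    obtain ⟨M, hM, hzM, -, hmer⟩ := merge_local hS (h.arcAt (hJB hz)) univ_mem
    obtain ⟨y, hyM, hyU⟩ := mem_closure_iff_nhds.1 hzU M (hM.mem_nhds hzM)
    have := hmer U hUo (fun z hz => hcl z hz.2) ⟨y, hyU, hyM, (hUA hyU).1⟩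
    filter_upwards [hM.mem_nhds hzM] with y hy hyJ
    exact this ⟨hJB hyJ, hy⟩
  have h0 : (range fun s => H (s, 0)) ⊆ closure U :=
    hall _ h.jor0 subset_union_left ⟨H (0, 0), ⟨0, rfl⟩,
      hmer U hUo (fun z hz => hcl z hz.2) ⟨p₀, hp₀U, hp₀.1, hp₀.2⟩ ⟨hx₀, hxN⟩⟩
  have hfr : frontier U = Bd H ∩ closure U := by
    rw [hUo.frontier_eq]
    ext z
    exact ⟨fun hz => ⟨by_contra fun hc => hz.2 (hcl z hc hz.1), hz.1⟩,
      fun hz => ⟨hz.2, fun hc => (hUA hc).1 hz.1⟩⟩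
  have hzero : ∀ q, q ∉ Bd H → d q = 0 → q ∉ closure U := by
    intro q hq hq0 hc
    have := (hUA (hcl q hq hc)).2
    rw [hq0] at this
    exact absurd this (by decide)
  have hext : Bd H ⊆ closure (closure U)ᶜ := by
    intro z hz
    refine mem_closure_iff_nhds.2 fun O hO => ?_
    obtain ⟨q, hq, eq⟩ := hd.2 z ⟨hz, trivial⟩ O hO 0
    exact ⟨q, hq.1, hzero q hq.2 eq⟩
  obtain ⟨w, hw, ew⟩ := hd.2 _ ⟨hx₀, trivial⟩ univ univ_mem 0
  refine ⟨U, w, ⟨p₀, hp₀U⟩, deg_js hS h hd hf (fun x hx => (hUA hx).2) (fun x hx => (hUA hx).1), ?_,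
    hzero w hw.2 ew, ?_⟩
  · refine h.cpt.of_isClosed_subset isClosed_closure (closure_minimal (fun x hx => ?_) h.cpt.isClosed)
    by_contra hc
    have := (hUA hx).2
    rw [hout x hc] at this
    exact absurd this (by decide)
  · by_cases hne : ((range fun s => H (s, 1)) ∩ closure U).Nonempty
    · right
      refine ⟨hUo, isPreconnected_jn p₀, ?_, fun x hx => h.arcAt hx, hext⟩
      rw [hfr]
      exact inter_eq_left.2 (union_subset h0 (hall _ h.jor1 subset_union_right hne))
    · left
      refine ⟨hUo, isPreconnected_jn p₀, ?_, fun x hx => h.jor0.arcAt hx Subset.rfl (Eventually.of_forall fun _ h => h),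
        subset_union_left.trans hext⟩
      rw [hfr]
      ext z
      refine ⟨fun hz => hz.1.resolve_right fun hc => hne ⟨z, hc, hz.2⟩, fun hz => ⟨Or.inl hz, h0 hz⟩⟩

/-! ### Cutting the annular region -/

section
variable {S : Type*} [TopologicalSpace S]

lemma IsJordan.punct {J : Set S} (h : IsJordan J) {a : S} (ha : a ∈ J) : IsPreconnected (J \ {a}) := by
  obtain ⟨γ, hc, hp, hi, rfl⟩ := h
  obtain ⟨s, rfl⟩ := ha
  have : range γ \ {γ s} = γ '' Ioo s (s + 1) := by
    ext z
    constructor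
    · rintro ⟨⟨t, rfl⟩, ht⟩
      obtain ⟨u, hu, e⟩ := hp.exists_mem_Ico one_pos t s
      refine ⟨u, ⟨lt_of_le_of_ne hu.1 ?_, hu.2⟩, e.symm⟩
      rintro rfl
      exact ht e
    · rintro ⟨u, hu, rfl⟩
      refine ⟨⟨u, rfl⟩, fun e => hu.1.ne' (per_inj hp hi e (by linarith [hu.2]) (by linarith [hu.1]))⟩
  rw [this]
  exact isPreconnected_Ioo.image _ hc.continuousOn

/-- A cut joining the two boundary curves does not separate. -/
lemma cut_pre [T2Space S] (hS : Surf S) {U C D σ : Set S} {a b : S} (h : Reg U (C ∪ D))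
    (hC : IsJordan C) (hD : IsJordan D) (hCD : Disjoint C D) (hσ : IsArc σ a b) (hσU : σ \ {a, b} ⊆ U)
    (ha : a ∈ C) (hb : b ∈ D) : IsPreconnected (U \ σ) := by
  have haU : a ∉ U := fun h' => h.disj.notMem_of_mem_left h' (Or.inl ha)
  have hbU : b ∉ U := fun h' => h.disj.notMem_of_mem_left h' (Or.inr hb)
  have hA : IsOpen (U \ σ) := h.op.sdiff hσ.isClosed
  have hσC : Disjoint (C \ {a}) σ := disjoint_left.2 fun z hz hz' => by
    rcases cut_bdry h hσU hz' (Or.inl hz.1) with e | e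
    · exact hz.2 e
    · exact hCD.notMem_of_mem_left hz.1 (e ▸ hb)
  have touch : ∀ p ∈ U \ σ, ((C \ {a}) ∩ closure {y | Jn (U \ σ) p y}).Nonempty := by
    intro p hp
    obtain ⟨hGo, hGs, hGc⟩ := comp_clopen hS hA p
    have := adh_all hS h.op h.pre hσ hσU haU hbU hGo ⟨p, Jn.refl hp⟩ hGs hGc
    obtain ⟨z, hz, hzσ, hzD, hzG⟩ := touch_end hS h hσ (cut_closure h hσU (Or.inl ha) (Or.inr hb))
      hD.isCompact.isClosed (hCD.notMem_of_mem_left ha) (Or.inl ha) hGo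
      (fun z h1 h2 _ h4 => hGc z ⟨h1, h2⟩ h4) hGs (this hσ.left)
    exact ⟨z, ⟨hz.resolve_right hzD, fun e => hzσ (e ▸ hσ.left)⟩, hzG⟩
  rcases (U \ σ).eq_empty_or_nonempty with e | ⟨p, hp⟩
  · rw [e]; exact isPreconnected_empty
  have : U \ σ = {q | Jn (U \ σ) p q} := by
    refine Subset.antisymm (fun q hq => ?_) fun q hq => Jn.right hq
    by_contra hpq
    have := adh_excl hS h hσ.isClosed (hC.punct ha) (sdiff_subset.trans subset_union_left) hσC hpq (touch p hp)
    exact (touch q hq).ne_empty this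
  rw [this]
  exact isPreconnected_jn p

/-- A second cut, disjoint from the first one, between prescribed boundary points. -/
lemma second_cut [T2Space S] [FirstCountableTopology S] (hS : Surf S) {U X σ : Set S} {a b : S}
    (h : Reg U X) (hσ : IsClosed σ) (hV : IsPreconnected (U \ σ)) (ha : a ∈ X) (hb : b ∈ X)
    (haσ : a ∉ σ) (hbσ : b ∉ σ) (hab : a ≠ b) : ∃ A, IsArc A a b ∧ A \ {a, b} ⊆ U \ σ := by
  have acc : ∀ c ∈ X, c ∉ σ → ∃ q ∈ U \ σ, AJ (insert c (U \ σ)) c q := by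
    intro c hc hcσ
    obtain ⟨N, hN, hcN, hNσ, -⟩ := h.lc hS hc (hσ.isOpen_compl.mem_nhds hcσ)
    obtain ⟨q, hqN, hqU⟩ := mem_closure_iff_nhds.1 (h.sub hc) N (hN.mem_nhds hcN)
    have hcU : c ∉ U := fun h' => h.disj.notMem_of_mem_left h' hc
    rcases h.access hS hc hqU with ⟨rfl, -⟩ | ⟨B, hB, hBa⟩
    · exact absurd hqU hcU
    by_cases hne : (B ∩ σ).Nonempty
    · obtain ⟨A', d, hA', hA'B, hA'σ, hdσ⟩ := hBa.first_hit hσ hcσ hne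
      obtain ⟨z, hz, hz'⟩ := hA'.inner_ne
      simp only [mem_insert_iff, mem_singleton_iff, not_or] at hz'
      obtain ⟨A₁, A₂, h1, h2, h3, h4⟩ := hA'.split hz hz'.1 hz'.2
      have hd : d ∉ A₁ := fun hd => hz'.2 (by
        have : d ∈ A₁ ∩ A₂ := ⟨hd, h2.right⟩
        rw [h4] at this; exact (mem_singleton_iff.1 this).symm)
      have hA₁ : A₁ ⊆ A' := h3 ▸ subset_union_left
      have hsub : A₁ ⊆ insert c (U \ σ) := fun y hy => by
        rcases hB (hA'B (hA₁ hy)) with e | e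
        · exact Or.inl e
        · refine Or.inr ⟨e, fun hyσ => hd ?_⟩
          have : y ∈ A' ∩ σ := ⟨hA₁ hy, hyσ⟩
          rw [hA'σ] at this
          exact (mem_singleton_iff.1 this) ▸ hy
      refine ⟨z, (hsub h1.right).resolve_left hz'.1, Or.inr ⟨A₁, hsub, h1⟩⟩
    · rw [not_nonempty_iff_eq_empty] at hne
      refine ⟨q, ⟨hqU, hNσ hqN⟩, Or.inr ⟨B, fun y hy => (hB hy).imp id fun hy' => ⟨hy', fun hyσ => ?_⟩, hBa⟩⟩
      exact (hne.subset ⟨hy, hyσ⟩).elim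
  obtain ⟨p, hp, jp⟩ := acc a ha haσ
  obtain ⟨q, hq, jq⟩ := acc b hb hbσ
  have j := open_aj hS (h.op.sdiff hσ) (jn_of_pre hV hp hq)
  have s1 : insert a (U \ σ) ⊆ insert a (insert b (U \ σ)) := insert_subset_insert (subset_insert _ _)
  have s2 : insert b (U \ σ) ⊆ insert a (insert b (U \ σ)) := subset_insert _ _
  rcases ((jp.mono s1).trans (j.mono ((subset_insert _ _).trans s2))).trans (jq.mono s2).symm with
    ⟨e, -⟩ | ⟨A, hA, hAa⟩
  · exact absurd e hab
  refine ⟨A, hAa, fun z hz => ?_⟩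
  rcases hA hz.1 with e | e | e
  · exact (hz.2 (Or.inl e)).elim
  · exact (hz.2 (Or.inr e)).elim
  · exact e

/-! ### Two quadrilaterals -/

/-- Constructor of `Quad` from the incidences between images of sides. -/
lemma quad_of {l r b t : ℝ → S} (lc : ContinuousOn l (Icc 0 1)) (rc : ContinuousOn r (Icc 0 1))
    (bc : ContinuousOn b (Icc 0 1)) (tc : ContinuousOn t (Icc 0 1)) (li : InjOn l (Icc 0 1))
    (ri : InjOn r (Icc 0 1)) (bi : InjOn b (Icc 0 1)) (ti : InjOn t (Icc 0 1))
    (e1 : l 0 = b 0) (e2 : l 1 = t 0) (e3 : r 0 = b 1) (e4 : r 1 = t 1)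
    (hlb : ∀ z ∈ l '' Icc 0 1, z ∈ b '' Icc 0 1 → z = l 0)
    (hlt : ∀ z ∈ l '' Icc 0 1, z ∈ t '' Icc 0 1 → z = l 1)
    (hrb : ∀ z ∈ r '' Icc 0 1, z ∈ b '' Icc 0 1 → z = r 0)
    (hrt : ∀ z ∈ r '' Icc 0 1, z ∈ t '' Icc 0 1 → z = r 1)
    (hlr : Disjoint (l '' Icc 0 1) (r '' Icc 0 1)) (hbt : Disjoint (b '' Icc 0 1) (t '' Icc 0 1)) :
    Quad l r b t := by
  have m0 : (0 : ℝ) ∈ Icc (0 : ℝ) 1 := by simp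
  have m1 : (1 : ℝ) ∈ Icc (0 : ℝ) 1 := by simp
  have key : ∀ {f g : ℝ → S} {u v : ℝ}, InjOn f (Icc 0 1) → InjOn g (Icc 0 1) → u ∈ Icc (0 : ℝ) 1 →
      v ∈ Icc (0 : ℝ) 1 → f u = g v → (∀ z ∈ f '' Icc 0 1, z ∈ g '' Icc 0 1 → z = f u) →
      ∀ x ∈ Icc (0 : ℝ) 1, ∀ y ∈ Icc (0 : ℝ) 1, f x = g y ↔ x = u ∧ y = v := by
    intro f g u v fi gi hu hv e hz x hx y hy
    refine ⟨fun exy => ?_, ?_⟩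
    · have h1 := hz (f x) ⟨x, hx, rfl⟩ ⟨y, hy, exy.symm⟩
      exact ⟨fi hx hu h1, gi hy hv (by rw [← exy, h1, e])⟩
    · rintro ⟨rfl, rfl⟩
      exact e
  exact ⟨lc, rc, bc, tc, li, ri, bi, ti, key li bi m0 m0 e1 hlb, key li ti m1 m0 e2 hlt,
    key ri bi m0 m1 e3 hrb, key ri ti m1 m1 e4 hrt,
    fun x hx y hy e => hlr.notMem_of_mem_left ⟨x, hx, rfl⟩ ⟨y, hy, e.symm⟩,
    fun x hx y hy e => hbt.notMem_of_mem_left ⟨x, hx, rfl⟩ ⟨y, hy, e.symm⟩⟩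

/-- The two components of the cut region share out the two arcs of a boundary curve. -/
lemma label [T2Space S] (hS : Surf S) {U X σ C : Set S} {a b p q : S} (h : Reg U X) (hσ : IsClosed σ)
    (hC : IsJordan C) (hCX : C ⊆ X) (ha : a ∈ C) (hb : b ∈ C) (hab : a ≠ b)
    (hCσ : ∀ z ∈ C, z ∈ σ ↔ z = a ∨ z = b) (hpq : ¬ Jn (U \ σ) p q)
    (tp : ∃ z ∈ C, z ∉ σ ∧ z ∈ closure {y | Jn (U \ σ) p y})
    (tq : ∃ z ∈ C, z ∉ σ ∧ z ∈ closure {y | Jn (U \ σ) q y}) :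
    ∃ I₁ I₂, Halves C I₁ I₂ a b ∧ I₁ ⊆ closure {y | Jn (U \ σ) p y} ∧ I₂ ⊆ closure {y | Jn (U \ σ) q y} ∧
      (∀ z ∈ I₂, z ∉ σ → z ∉ closure {y | Jn (U \ σ) p y}) ∧
      (∀ z ∈ I₁, z ∉ σ → z ∉ closure {y | Jn (U \ σ) q y}) := by
  have hqp : ¬ Jn (U \ σ) q p := fun h => hpq h.symm
  have main : ∀ I₁ I₂, Halves C I₁ I₂ a b → (∃ z ∈ I₁, z ∉ σ ∧ z ∈ closure {y | Jn (U \ σ) p y}) →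
      ∃ I₁ I₂, Halves C I₁ I₂ a b ∧ I₁ ⊆ closure {y | Jn (U \ σ) p y} ∧ I₂ ⊆ closure {y | Jn (U \ σ) q y} ∧
      (∀ z ∈ I₂, z ∉ σ → z ∉ closure {y | Jn (U \ σ) p y}) ∧
      (∀ z ∈ I₁, z ∉ σ → z ∉ closure {y | Jn (U \ σ) q y}) := by
    rintro I₁ I₂ hI ⟨z, hz, hzσ, hzp⟩
    have h1 : I₁ ⊆ C := hI.union ▸ subset_union_left
    have h2 : I₂ ⊆ C := hI.union ▸ subset_union_right
    have off : ∀ z ∈ C, z ∉ σ ↔ z ∉ ({a, b} : Set S) := fun z hz => not_congr (hCσ z hz)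
    have use : ∀ I ⊆ C, IsArc I a b → ∀ p q, ¬ Jn (U \ σ) p q →
        (∃ z ∈ I, z ∉ σ ∧ z ∈ closure {y | Jn (U \ σ) p y}) →
        I ⊆ closure {y | Jn (U \ σ) p y} ∧ ∀ z ∈ I, z ∉ σ → z ∉ closure {y | Jn (U \ σ) q y} := by
      rintro I hIC hI p q hpq ⟨z, hz, hzσ, hzp⟩
      have hd : Disjoint (I \ {a, b}) σ := disjoint_left.2 fun y hy => (off y (hIC hy.1)).2 hy.2
      have hs : I \ {a, b} ⊆ X := sdiff_subset.trans (hIC.trans hCX)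
      have hn : ((I \ {a, b}) ∩ closure {y | Jn (U \ σ) p y}).Nonempty := ⟨z, ⟨hz, (off z (hIC hz)).1 hzσ⟩, hzp⟩
      obtain ⟨hGo, hGs, hGc⟩ := comp_clopen hS (h.op.sdiff hσ) p
      refine ⟨hI.sub_closure.trans (closure_minimal (adh_pre hS h hσ hGo hGc (hGs.trans sdiff_subset)
        hI.inner_pre hs hd hn).2 isClosed_closure), fun y hy hyσ hyq => ?_⟩
      have := adh_excl hS h hσ hI.inner_pre hs hd hpq hn
      exact (this.subset ⟨⟨hy, (off y (hIC hy)).1 hyσ⟩, hyq⟩).elim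
    obtain ⟨u1, u2⟩ := use I₁ h1 hI.arc₁ p q hpq ⟨z, hz, hzσ, hzp⟩
    obtain ⟨x, hx, hxσ, hxq⟩ := tq
    have hx2 : x ∈ I₂ := by
      rw [← hI.union] at hx
      exact hx.resolve_left fun hx1 => u2 x hx1 hxσ hxq
    obtain ⟨u3, u4⟩ := use I₂ h2 hI.arc₂ q p hqp ⟨x, hx2, hxσ, hxq⟩
    exact ⟨I₁, I₂, hI, u1, u3, u4, u2⟩
  obtain ⟨I₁, I₂, hI⟩ := hC.halves ha hb hab
  obtain ⟨z, hz, hz'⟩ := tp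
  rw [← hI.union] at hz
  rcases hz with hz | hz
  · exact main I₁ I₂ hI ⟨z, hz, hz'⟩
  · exact main I₂ I₁ hI.symm ⟨z, hz, hz'⟩

lemma IsJordan.two {J : Set S} (h : IsJordan J) : ∃ a ∈ J, ∃ b ∈ J, a ≠ b := by
  obtain ⟨γ, -, -, hi, rfl⟩ := h
  refine ⟨γ 0, ⟨0, rfl⟩, γ (1 / 2), ⟨_, rfl⟩, fun e => ?_⟩
  have := hi (by simp) (by constructor <;> norm_num) e
  norm_num at this

/-- Two cuts divide a region bounded by two curves into two quadrilaterals, glued along the cuts. -/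
theorem annulus_cells [T2Space S] [FirstCountableTopology S] (hS : Surf S) {U C D : Set S} {w : S}
    (h : Reg U (C ∪ D)) (hC : IsJordan C) (hD : IsJordan D) (hCD : Disjoint C D)
    (js : JS U) (cpt : IsCompact (closure U)) (hw : w ∉ closure U) :
    ∃ (l r b t b' t' : ℝ → S) (G G' : Set S), Quad l r b t ∧ Quad l r b' t' ∧
      Cell w G (l '' Icc 0 1 ∪ r '' Icc 0 1 ∪ b '' Icc 0 1 ∪ t '' Icc 0 1) ∧
      Cell w G' (l '' Icc 0 1 ∪ r '' Icc 0 1 ∪ b' '' Icc 0 1 ∪ t' '' Icc 0 1) ∧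
      b '' Icc 0 1 ∪ b' '' Icc 0 1 = C ∧ t '' Icc 0 1 ∪ t' '' Icc 0 1 = D ∧
      closure G ∩ closure G' ⊆ l '' Icc 0 1 ∪ r '' Icc 0 1 := by
  obtain ⟨a₁, ha₁, a₂, ha₂, haa⟩ := hC.two
  obtain ⟨b₁, hb₁, b₂, hb₂, hbb⟩ := hD.two
  have ne : ∀ {x y}, x ∈ C → y ∈ D → x ≠ y := fun hx hy e => hCD.notMem_of_mem_left hx (e ▸ hy)
  have nU : ∀ {x}, x ∈ C ∪ D → x ∉ U := fun hx h' => h.disj.notMem_of_mem_left h' hx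
  obtain ⟨σ₁, hσ₁, hσ₁U⟩ := h.crosscut hS (Or.inl ha₁) (Or.inr hb₁) (ne ha₁ hb₁)
  have cσ₁ : ∀ z ∈ σ₁, z ∈ C ∪ D → z = a₁ ∨ z = b₁ := fun z => cut_bdry h hσ₁U
  have pre₁ := cut_pre hS h hC hD hCD hσ₁ hσ₁U ha₁ hb₁
  have na₂ : a₂ ∉ σ₁ := fun hc => (cσ₁ _ hc (Or.inl ha₂)).elim haa.symm (ne ha₂ hb₁)
  have nb₂ : b₂ ∉ σ₁ := fun hc => (cσ₁ _ hc (Or.inr hb₂)).elim (ne ha₁ hb₂).symm hbb.symm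
  obtain ⟨σ₂, hσ₂, hσ₂V⟩ := second_cut hS h hσ₁.isClosed pre₁ (Or.inl ha₂) (Or.inr hb₂) na₂ nb₂ (ne ha₂ hb₂)
  have hσ₂U : σ₂ \ {a₂, b₂} ⊆ U := hσ₂V.trans sdiff_subset
  have cσ₂ : ∀ z ∈ σ₂, z ∈ C ∪ D → z = a₂ ∨ z = b₂ := fun z => cut_bdry h hσ₂U
  have pre₂ := cut_pre hS h hC hD hCD hσ₂ hσ₂U ha₂ hb₂
  have d12 : Disjoint σ₁ σ₂ := disjoint_left.2 fun z h1 h2 => by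
    by_cases hz : z ∈ ({a₂, b₂} : Set S)
    · rcases hz with rfl | rfl
      · exact na₂ h1
      · exact nb₂ h1
    · exact (hσ₂V ⟨h2, hz⟩).2 h1
  have hσ₁V : σ₁ \ {a₁, b₁} ⊆ U \ σ₂ := fun z hz => ⟨hσ₁U hz, d12.notMem_of_mem_left hz.1⟩
  set σ := σ₁ ∪ σ₂ with hσdef
  have hσ : IsClosed σ := hσ₁.isClosed.union hσ₂.isClosed
  have hW : IsOpen (U \ σ) := h.op.sdiff hσ
  have w1 : (U \ σ₁) \ σ₂ = U \ σ := Set.sdiff_sdiff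
  have w2 : (U \ σ₂) \ σ₁ = U \ σ := by rw [Set.sdiff_sdiff, hσdef, union_comm]
  have s₁ := cut_closure h hσ₁U (Or.inl ha₁) (Or.inr hb₁)
  have s₂ := cut_closure h hσ₂U (Or.inl ha₂) (Or.inr hb₂)
  have adh : ∀ p ∈ U \ σ, σ ⊆ closure {y | Jn (U \ σ) p y} := by
    intro p hp
    obtain ⟨hGo, hGs, hGc⟩ := comp_clopen hS hW p
    refine union_subset ?_ ?_
    · exact adh_all hS (h.op.sdiff hσ₂.isClosed) pre₂ hσ₁ hσ₁V (fun h' => nU (Or.inl ha₁) h'.1)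
        (fun h' => nU (Or.inr hb₁) h'.1) hGo ⟨p, Jn.refl hp⟩ (by rw [w2]; exact hGs) (by rw [w2]; exact hGc)
    · exact adh_all hS (h.op.sdiff hσ₁.isClosed) pre₁ hσ₂ hσ₂V (fun h' => nU (Or.inl ha₂) h'.1)
        (fun h' => nU (Or.inr hb₂) h'.1) hGo ⟨p, Jn.refl hp⟩ (by rw [w1]; exact hGs) (by rw [w1]; exact hGc)
  have touchC : ∀ p ∈ U \ σ, ∃ z ∈ C, z ∉ σ ∧ z ∈ closure {y | Jn (U \ σ) p y} := by
    intro p hp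
    obtain ⟨hGo, hGs, hGc⟩ := comp_clopen hS hW p
    obtain ⟨z, hz, h1, h2, h3⟩ := touch_end hS h hσ₁ s₁ (hD.isCompact.isClosed.union hσ₂.isClosed)
      (fun hc => hc.elim (hCD.notMem_of_mem_left ha₁) (d12.notMem_of_mem_left hσ₁.left)) (Or.inl ha₁) hGo
      (fun z h1 h2 h3 h4 => hGc z ⟨h1, fun hc => hc.elim h2 fun hc => h3 (Or.inr hc)⟩ h4)
      (fun y hy => ⟨(hGs hy).1, fun hc => (hGs hy).2 (Or.inl hc)⟩) (adh p hp (Or.inl hσ₁.left))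
    exact ⟨z, hz.resolve_right fun hc => h2 (Or.inl hc), fun hc => hc.elim h1 fun hc => h2 (Or.inr hc), h3⟩
  have touchD : ∀ p ∈ U \ σ, ∃ z ∈ D, z ∉ σ ∧ z ∈ closure {y | Jn (U \ σ) p y} := by
    intro p hp
    obtain ⟨hGo, hGs, hGc⟩ := comp_clopen hS hW p
    obtain ⟨z, hz, h1, h2, h3⟩ := touch_end hS h hσ₁.symm s₁ (hC.isCompact.isClosed.union hσ₂.isClosed)
      (fun hc => hc.elim (hCD.notMem_of_mem_right hb₁) (d12.notMem_of_mem_left hσ₁.right)) (Or.inr hb₁) hGo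
      (fun z h1 h2 h3 h4 => hGc z ⟨h1, fun hc => hc.elim h2 fun hc => h3 (Or.inr hc)⟩ h4)
      (fun y hy => ⟨(hGs hy).1, fun hc => (hGs hy).2 (Or.inl hc)⟩) (adh p hp (Or.inl hσ₁.right))
    exact ⟨z, hz.resolve_left fun hc => h2 (Or.inl hc), fun hc => hc.elim h1 fun hc => h2 (Or.inr hc), h3⟩
  have offC : ∀ z ∈ C, z ∈ σ ↔ z = a₁ ∨ z = a₂ := by
    refine fun z hz => ⟨?_, ?_⟩
    · rintro (hc | hc)
      · exact Or.inl ((cσ₁ z hc (Or.inl hz)).resolve_right (ne hz hb₁))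
      · exact Or.inr ((cσ₂ z hc (Or.inl hz)).resolve_right (ne hz hb₂))
    · rintro (rfl | rfl)
      · exact Or.inl hσ₁.left
      · exact Or.inr hσ₂.left
  have offD : ∀ z ∈ D, z ∈ σ ↔ z = b₁ ∨ z = b₂ := by
    refine fun z hz => ⟨?_, ?_⟩
    · rintro (hc | hc)
      · exact Or.inl ((cσ₁ z hc (Or.inr hz)).resolve_left (ne ha₁ hz).symm)
      · exact Or.inr ((cσ₂ z hc (Or.inr hz)).resolve_left (ne ha₂ hz).symm)
    · rintro (rfl | rfl)
      · exact Or.inl hσ₁.right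
      · exact Or.inr hσ₂.right
  obtain ⟨l, lc, li, le, l0, l1⟩ := hσ₁
  obtain ⟨r, rc, ri, re, r0, r1⟩ := hσ₂
  have quad : ∀ I K, I ⊆ C → K ⊆ D → IsArc I a₁ a₂ → IsArc K b₁ b₂ → ∃ b t, Quad l r b t ∧
      b '' Icc 0 1 = I ∧ t '' Icc 0 1 = K := by
    rintro I K hI hK ⟨b, bc, bi, be, b0, b1⟩ ⟨t, tc, ti, te, t0, t1⟩
    refine ⟨b, t, quad_of lc rc bc tc li ri bi ti (by rw [l0, b0]) (by rw [l1, t0]) (by rw [r0, b1])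
      (by rw [r1, t1]) ?_ ?_ ?_ ?_ (by rw [le, re]; exact d12) (by rw [be, te]; exact hCD.mono hI hK), be, te⟩
    · rw [le, be, l0]
      exact fun z hz hz' => (cσ₁ z hz (Or.inl (hI hz'))).resolve_right (ne (hI hz') hb₁)
    · rw [le, te, l1]
      exact fun z hz hz' => (cσ₁ z hz (Or.inr (hK hz'))).resolve_left (ne ha₁ (hK hz')).symm
    · rw [re, be, r0]
      exact fun z hz hz' => (cσ₂ z hz (Or.inl (hI hz'))).resolve_right (ne (hI hz') hb₂)
    · rw [re, te, r1]
      exact fun z hz hz' => (cσ₂ z hz (Or.inr (hK hz'))).resolve_left (ne ha₂ (hK hz')).symm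
  obtain ⟨p, hp, q, hq, hpq⟩ : ∃ p ∈ U \ σ, ∃ q ∈ U \ σ, ¬ Jn (U \ σ) p q := by
    obtain ⟨I₁, I₂, hI⟩ := hC.halves ha₁ ha₂ haa
    obtain ⟨K₁, K₂, hK⟩ := hD.halves hb₁ hb₂ hbb
    have hIC : I₁ ⊆ C := hI.union ▸ subset_union_left
    have hKD : K₁ ⊆ D := hK.union ▸ subset_union_left
    obtain ⟨b, t, hQ, be, te⟩ := quad I₁ K₁ hIC hKD hI.arc₁ hK.arc₁
    have hJ := hQ.halves.isJordan
    rw [le, re, be, te, union_assoc _ I₁] at hJ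
    have hl : IsArc σ₁ a₁ b₁ := ⟨l, lc, li, le, l0, l1⟩
    obtain ⟨z, hz, hz'⟩ := hl.inner_ne
    have hX := union_subset_union hIC hKD
    exact js.pieces h.op hJ (union_subset s₁ s₂) (hX.trans h.sub) (h.disj.mono_right hX)
      ⟨z, Or.inl hz, hσ₁U ⟨hz, hz'⟩⟩
  have hqp : ¬ Jn (U \ σ) q p := fun h => hpq h.symm
  obtain ⟨I₁, I₂, hI, iI₁, iI₂, oI₂, oI₁⟩ := label hS h hσ hC subset_union_left ha₁ ha₂ haa offC hpq
    (touchC p hp) (touchC q hq)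
  obtain ⟨K₁, K₂, hK, iK₁, iK₂, oK₂, oK₁⟩ := label hS h hσ hD subset_union_right hb₁ hb₂ hbb offD hpq
    (touchD p hp) (touchD q hq)
  have hI₁ : I₁ ⊆ C := hI.union ▸ subset_union_left
  have hI₂ : I₂ ⊆ C := hI.union ▸ subset_union_right
  have hK₁ : K₁ ⊆ D := hK.union ▸ subset_union_left
  have hK₂ : K₂ ⊆ D := hK.union ▸ subset_union_right
  obtain ⟨b, t, hQ, be, te⟩ := quad I₁ K₁ hI₁ hK₁ hI.arc₁ hK.arc₁
  obtain ⟨b', t', hQ', be', te'⟩ := quad I₂ K₂ hI₂ hK₂ hI.arc₂ hK.arc₂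
  have sub : ∀ p, closure {y | Jn (U \ σ) p y} ⊆ closure U := fun p =>
    closure_mono fun y hy => (Jn.right hy).1
  have cases : ∀ p z, z ∈ closure {y | Jn (U \ σ) p y} → z ∉ σ → Jn (U \ σ) p z ∨ z ∈ C ∪ D := by
    intro p z hz hzσ
    by_cases hzU : z ∈ U
    · exact Or.inl ((comp_clopen hS hW p).2.2 z ⟨hzU, hzσ⟩ hz)
    · have := sub p hz
      rw [closure_eq_self_union_frontier, h.fr] at this
      exact Or.inr (this.resolve_left hzU)
  have build : ∀ p q I I' K K', p ∈ U \ σ → q ∈ U \ σ → ¬ Jn (U \ σ) p q → I ∪ I' = C → K ∪ K' = D →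
      I ⊆ closure {y | Jn (U \ σ) p y} → K ⊆ closure {y | Jn (U \ σ) p y} →
      (∀ z ∈ I', z ∉ σ → z ∉ closure {y | Jn (U \ σ) p y}) →
      (∀ z ∈ K', z ∉ σ → z ∉ closure {y | Jn (U \ σ) p y}) → IsJordan (σ₁ ∪ σ₂ ∪ I ∪ K) →
      Cell w {y | Jn (U \ σ) p y} (σ₁ ∪ σ₂ ∪ I ∪ K) := by
    intro p q I I' K K' hp hq hpq eI eK sI sK oI oK hJ
    obtain ⟨hGo, hGs, hGc⟩ := comp_clopen hS hW p
    have hIX : I ⊆ C ∪ D := fun z hz => Or.inl (eI ▸ Or.inl hz)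
    have hKX : K ⊆ C ∪ D := fun z hz => Or.inr (eK ▸ Or.inl hz)
    refine ⟨hGo, isPreconnected_jn p, cpt.of_isClosed_subset isClosed_closure (sub p), hJ, ?_, ?_,
      fun h' => hw (sub p h'), js.mono hGo (hGs.trans sdiff_subset)⟩
    · rw [hGo.frontier_eq]
      apply Subset.antisymm
      · rintro z ⟨hz, hz'⟩
        by_cases hzσ : z ∈ σ
        · exact Or.inl (Or.inl hzσ)
        rcases (cases p z hz hzσ).resolve_left hz' with hc | hc
        · rw [← eI] at hc
          exact Or.inl (Or.inr (hc.resolve_right fun hc => oI z hc hzσ hz))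
        · rw [← eK] at hc
          exact Or.inr (hc.resolve_right fun hc => oK z hc hzσ hz)
      · rintro z ((hz | hz) | hz)
        · exact ⟨adh p hp hz, fun h' => (hGs h').2 hz⟩
        · exact ⟨sI hz, fun h' => nU (hIX hz) (hGs h').1⟩
        · exact ⟨sK hz, fun h' => nU (hKX hz) (hGs h').1⟩
    · have hX : C ∪ D ⊆ closure (closure {y | Jn (U \ σ) p y})ᶜ :=
        h.ext.trans (closure_mono (compl_subset_compl.2 (sub p)))
      rintro z ((hz | hz) | hz)
      · refine closure_mono ?_ (adh q hq hz)
        have hd : Disjoint {y | Jn (U \ σ) q y} {y | Jn (U \ σ) p y} :=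
          disjoint_left.2 fun y hy hy' => hpq (Jn.trans hy' (Jn.symm hy))
        exact (hd.closure_right (comp_clopen hS hW q).1).subset_compl_right
      · exact hX (hIX hz)
      · exact hX (hKX hz)
  have hJ := hQ.halves.isJordan
  have hJ' := hQ'.halves.isJordan
  refine ⟨l, r, b, t, b', t', {y | Jn (U \ σ) p y}, {y | Jn (U \ σ) q y}, hQ, hQ', ?_, ?_, by rw [be, be', hI.union], by rw [te, te', hK.union], ?_⟩
  · rw [le, re, be, te] at hJ ⊢
    exact build p q I₁ I₂ K₁ K₂ hp hq hpq hI.union hK.union iI₁ iK₁ oI₂ oK₂ hJ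
  · rw [le, re, be', te'] at hJ' ⊢
    exact build q p I₂ I₁ K₂ K₁ hq hp hqp hI.symm.union hK.symm.union iI₂ iK₂ oI₁ oK₁ hJ'
  · rw [le, re]
    rintro z ⟨hz, hz'⟩
    by_contra hzσ
    rcases cases p z hz hzσ with h1 | h1 | h1
    · rcases cases q z hz' hzσ with h2 | h2
      · exact hpq (h1.trans h2.symm)
      · exact nU h2 h1.right.1
    · rw [← hI.union] at h1
      exact h1.elim (fun h1 => oI₁ z h1 hzσ hz') fun h1 => oI₂ z h1 hzσ hz
    · rw [← hK.union] at h1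
      exact h1.elim (fun h1 => oK₁ z h1 hzσ hz') fun h1 => oK₂ z h1 hzσ hz

end

/-! ### Assembly -/

/-- The model plane of the statement. -/
abbrev E2 := EuclideanSpace ℝ (Fin 2)

/-- The model circle of the statement. -/
abbrev S1 := Metric.sphere (0 : E2) 1

lemma surf_of {S : Type*} [TopologicalSpace S] (hsurf : ∀ x : S, ∃ U : Set S, IsOpen U ∧ x ∈ U ∧
    Nonempty (U ≃ₜ E2)) : Surf S := by
  intro x
  obtain ⟨U, hU, hx, ⟨e⟩⟩ := hsurf x
  let ψ : ℂ ≃ₜ E2 := Complex.orthonormalBasisOneI.repr.toHomeomorph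
  let f : ℂ ≃ₜ U := (ψ.trans (Homeomorph.addRight (e ⟨x, hx⟩))).trans e.symm
  refine ⟨fun z => (f z : S), hU.isOpenEmbedding_subtypeVal.comp f.isOpenEmbedding, ?_⟩
  have : f 0 = ⟨x, hx⟩ := by
    change e.symm (Complex.orthonormalBasisOneI.repr 0 + e ⟨x, hx⟩) = _
    rw [map_zero, zero_add, e.symm_apply_apply]
  simp only [this]

/-- Surfaces are regular, hence metrizable when second countable. -/
lemma regular_of {S : Type*} [TopologicalSpace S] [T2Space S] (hS : Surf S) : RegularSpace S := by
  have : WeaklyLocallyCompactSpace S := ⟨fun x => by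
    obtain ⟨φ, hφ, rfl⟩ := hS.chart x
    exact ⟨φ '' closedBall 0 1, (isCompact_closedBall _ _).image hφ.continuous,
      hφ.isOpenMap.image_mem_nhds (closedBall_mem_nhds _ one_pos)⟩⟩
  infer_instance

lemma E2_norm (v : E2) : ‖v‖ = 1 ↔ v 0 ^ 2 + v 1 ^ 2 = 1 := by
  rw [EuclideanSpace.norm_eq, Real.sqrt_eq_one, Fin.sum_univ_two]
  simp

lemma S1_eq (v : S1) : v.1 0 ^ 2 + v.1 1 ^ 2 = 1 := (E2_norm _).1 (mem_sphere_zero_iff_norm.1 v.2)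

/-- The universal covering of the circle, with period `1`. -/
def circ (s : ℝ) : S1 := ⟨!₂[Real.cos (2 * Real.pi * s), Real.sin (2 * Real.pi * s)], by
  rw [mem_sphere_zero_iff_norm, E2_norm]; simp⟩

lemma circ_cont : Continuous circ := by
  unfold circ
  refine Continuous.subtype_mk ?_ _
  refine (PiLp.continuous_toLp 2 _).comp (continuous_pi fun i => ?_)
  fin_cases i <;> simp <;> fun_prop

lemma circ_per (s : ℝ) : circ (s + 1) = circ s := by
  unfold circ
  simp [mul_add, Real.cos_add_two_pi, Real.sin_add_two_pi]

lemma circ_inj : InjOn circ (Ico 0 1) := by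
  intro s hs t ht e
  have e' := congrArg Subtype.val e
  have h0 : Real.cos (2 * Real.pi * s) = Real.cos (2 * Real.pi * t) := congrArg (fun v : E2 => v 0) e'
  have h1 : Real.sin (2 * Real.pi * s) = Real.sin (2 * Real.pi * t) := congrArg (fun v : E2 => v 1) e'
  have hc : Real.cos (2 * Real.pi * (s - t)) = 1 := by
    rw [mul_sub, Real.cos_sub, h0, h1]
    nlinarith [Real.sin_sq_add_cos_sq (2 * Real.pi * t)]
  have := Real.pi_pos
  rw [Real.cos_eq_one_iff_of_lt_of_lt (by nlinarith [hs.1, ht.2]) (by nlinarith [ht.1, hs.2])] at hc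
  have : s - t = 0 := by
    rcases mul_eq_zero.1 hc with h | h
    · linarith
    · exact h
  linarith

lemma circ_surj : Function.Surjective circ := by
  intro v
  have hv := S1_eq v
  have hz : ‖(⟨v.1 0, v.1 1⟩ : ℂ)‖ = 1 := by
    rw [Complex.norm_def, Real.sqrt_eq_one, Complex.normSq_mk]; linarith
  have hz0 : (⟨v.1 0, v.1 1⟩ : ℂ) ≠ 0 := fun h => by rw [h] at hz; simp at hz
  refine ⟨Complex.arg ⟨v.1 0, v.1 1⟩ / (2 * Real.pi), ?_⟩
  have e : 2 * Real.pi * (Complex.arg ⟨v.1 0, v.1 1⟩ / (2 * Real.pi)) = Complex.arg ⟨v.1 0, v.1 1⟩ := by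
    field_simp
  unfold circ
  ext i
  simp only [e]
  rw [Complex.cos_arg hz0, Complex.sin_arg, hz]
  fin_cases i <;> simp

/-- The homotopy, unrolled to a map on the plane with period `1` in the first variable. -/
lemma hom_of {S : Type*} [TopologicalSpace S] {c₀ c₁ : C(S1, S)} (K : c₀.Homotopy c₁)
    (h0 : Function.Injective c₀) (h1 : Function.Injective c₁) (hd : Disjoint (range c₀) (range c₁)) :
    ∃ H : ℝ × ℝ → S, Hom H ∧ (range fun s => H (s, 0)) = range c₀ ∧ (range fun s => H (s, 1)) = range c₁ := by
  refine ⟨fun z => K (projIcc 0 1 zero_le_one z.2, circ z.1), ?_, ?_, ?_⟩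
  · have e0 : ∀ s, K (projIcc 0 1 zero_le_one (0 : ℝ), circ s) = c₀ (circ s) := fun s => by
      rw [projIcc_left]; exact K.apply_zero _
    have e1 : ∀ s, K (projIcc 0 1 zero_le_one (1 : ℝ), circ s) = c₁ (circ s) := fun s => by
      rw [projIcc_right]; exact K.apply_one _
    refine ⟨?_, ?_, ?_, ?_, ?_, ?_⟩
    · exact K.continuous.comp ((continuous_projIcc.comp continuous_snd).prodMk (circ_cont.comp continuous_fst))
    · intro z
      simp [circ_per]
    · have : (range fun z : ℝ × ℝ => K (projIcc 0 1 zero_le_one z.2, circ z.1)) = range K := by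
        apply Subset.antisymm
        · rintro _ ⟨z, rfl⟩
          exact ⟨_, rfl⟩
        · rintro _ ⟨⟨t, v⟩, rfl⟩
          obtain ⟨s, rfl⟩ := circ_surj v
          exact ⟨(s, t), by simp only [projIcc_val]⟩
      rw [this]
      exact isCompact_range K.continuous
    · intro s hs t ht e
      simp only [e0] at e
      exact circ_inj hs ht (h0 e)
    · intro s hs t ht e
      simp only [e1] at e
      exact circ_inj hs ht (h1 e)
    · intro s t e
      simp only [e0, e1] at e
      exact hd.notMem_of_mem_left ⟨_, rfl⟩ ⟨_, e.symm⟩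
  · simp only [projIcc_left]
    rw [← circ_surj.range_comp c₀]
    exact congrArg range (funext fun s => K.apply_zero _)
  · simp only [projIcc_right]
    rw [← circ_surj.range_comp c₁]
    exact congrArg range (funext fun s => K.apply_one _)

/-- A loop inside a parametrised closed disc is null-homotopic. -/
lemma null_of_disc {S : Type*} [TopologicalSpace S] [T2Space S] {k : ℂ → S} (hk : ContinuousOn k sqc)
    (hi : InjOn k sqc) (c : C(S1, S)) (hc : range c ⊆ k '' sqc) :
    ∃ p : S, ContinuousMap.Homotopic c (ContinuousMap.const _ p) := by
  have : CompactSpace sqc := isCompact_iff_compactSpace.1 sq_compact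
  have h0 : (0 : ℂ) ∈ sqc := by simp [sqc, Complex.mem_reProdIm]
  have hconv : Convex ℝ sqc := by
    have : sqc = Complex.reLm ⁻¹' Icc (0 : ℝ) 1 ∩ Complex.imLm ⁻¹' Icc (0 : ℝ) 1 := rfl
    rw [this]
    exact ((convex_Icc 0 1).linear_preimage _).inter ((convex_Icc 0 1).linear_preimage _)
  have : ContractibleSpace sqc := hconv.contractibleSpace ⟨0, h0⟩
  let K : C(sqc, S) := ⟨sqc.domRestrict k, hk.domRestrict⟩
  have hK : IsClosedEmbedding K := K.continuous.isClosedEmbedding (injOn_iff_injective.1 hi)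
  have : ∀ v, ∃ z : sqc, K z = c v := fun v => by
    obtain ⟨z, hz, e⟩ := hc ⟨v, rfl⟩
    exact ⟨⟨z, hz⟩, e⟩
  choose L hL using this
  have hLc : Continuous L := hK.isInducing.continuous_iff.2 ((funext hL : K ∘ L = c) ▸ c.continuous)
  have e : c = (K.comp (ContinuousMap.id _)).comp ⟨L, hLc⟩ := ContinuousMap.ext fun v => (hL v).symm
  obtain ⟨p, hp⟩ := ((id_nullhomotopic sqc).comp_right K).comp_left (⟨L, hLc⟩ : C(S1, sqc))
  exact ⟨p, e ▸ hp⟩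

/-- Two quadrilaterals glued along a pair of opposite sides form an embedded annulus. -/
lemma glue_annulus {S : Type*} [TopologicalSpace S] [T2Space S] {k k' : ℂ → S} {l r b t b' t' : ℝ → S}
    (hk : ContinuousOn k sqc) (hi : InjOn k sqc) (hk' : ContinuousOn k' sqc) (hi' : InjOn k' sqc)
    (e : ∀ x ∈ Icc (0 : ℝ) 1, k ⟨0, x⟩ = l x ∧ k ⟨1, x⟩ = r x ∧ k ⟨x, 0⟩ = b x ∧ k ⟨x, 1⟩ = t x)
    (e' : ∀ x ∈ Icc (0 : ℝ) 1, k' ⟨0, x⟩ = l x ∧ k' ⟨1, x⟩ = r x ∧ k' ⟨x, 0⟩ = b' x ∧ k' ⟨x, 1⟩ = t' x)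
    (hkk : k '' sqc ∩ k' '' sqc ⊆ l '' Icc 0 1 ∪ r '' Icc 0 1) :
    ∃ F : S1 × Icc (0 : ℝ) 1 → S, IsEmbedding F ∧
      (range fun v => F (v, ⟨0, by norm_num⟩)) = b '' Icc 0 1 ∪ b' '' Icc 0 1 ∧
      (range fun v => F (v, ⟨1, by norm_num⟩)) = t '' Icc 0 1 ∪ t' '' Icc 0 1 := by
  let g : S1 × Icc (0 : ℝ) 1 → ℂ := fun z => ⟨(1 - z.1.1 0) / 2, z.2⟩
  have hg : Continuous g := by
    have : g = fun z => Complex.equivRealProdCLM.symm ((1 - z.1.1 0) / 2, (z.2 : ℝ)) := by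
      ext z
      rfl
    rw [this]
    refine Complex.equivRealProdCLM.symm.continuous.comp (Continuous.prodMk ?_ (by fun_prop))
    have : Continuous fun z : S1 × Icc (0 : ℝ) 1 => z.1.1 0 :=
      (PiLp.continuous_apply 2 _ 0).comp (continuous_subtype_val.comp continuous_fst)
    fun_prop
  have h1c : Continuous fun z : S1 × Icc (0 : ℝ) 1 => z.1.1 1 :=
    (PiLp.continuous_apply 2 _ 1).comp (continuous_subtype_val.comp continuous_fst)
  have hgm : ∀ z, g z ∈ sqc := fun z => by
    have := S1_eq z.1
    refine ⟨⟨?_, ?_⟩, z.2.2⟩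
    · change 0 ≤ (1 - z.1.1 0) / 2
      nlinarith
    · change (1 - z.1.1 0) / 2 ≤ 1
      nlinarith
  have hside : ∀ z : S1 × Icc (0 : ℝ) 1, z.1.1 1 = 0 → k (g z) = k' (g z) := fun z hz => by
    have hs := S1_eq z.1
    rw [hz] at hs
    have : (1 - z.1.1 0) * (1 + z.1.1 0) = 0 := by linarith
    rcases mul_eq_zero.1 this with h | h
    · have : g z = ⟨0, z.2⟩ := by
        simp only [g, Complex.mk.injEq, and_true]; linarith
      rw [this, (e _ z.2.2).1, (e' _ z.2.2).1]
    · have : g z = ⟨1, z.2⟩ := by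
        simp only [g, Complex.mk.injEq, and_true]; linarith
      rw [this, (e _ z.2.2).2.1, (e' _ z.2.2).2.1]
  let F : S1 × Icc (0 : ℝ) 1 → S := fun z => if 0 ≤ z.1.1 1 then k (g z) else k' (g z)
  have up : ∀ z, 0 ≤ z.1.1 1 → F z = k (g z) := fun z hz => if_pos hz
  have lo : ∀ z, z.1.1 1 ≤ 0 → F z = k' (g z) := fun z hz => by
    rcases hz.lt_or_eq with h | h
    · exact if_neg (not_le.2 h)
    · rw [up z h.ge, hside z h]
  have hF : Continuous F := continuous_if_le continuous_const h1c
    (hk.comp hg.continuousOn fun z _ => hgm z) (hk'.comp hg.continuousOn fun z _ => hgm z)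
    fun z hz => hside z hz.symm
  have gg : ∀ z z', g z = g z' → 0 ≤ z.1.1 1 * z'.1.1 1 → z = z' := by
    rintro ⟨v, x⟩ ⟨v', x'⟩ h hs
    have h1 := congrArg Complex.re h
    have h2 := congrArg Complex.im h
    simp only [g] at h1 h2 hs
    have q := S1_eq v
    have q' := S1_eq v'
    have h0 : v.1 0 = v'.1 0 := by linarith
    have h1 : v.1 1 = v'.1 1 := by
      rw [h0] at q
      have : (v.1 1 - v'.1 1) * (v.1 1 + v'.1 1) = 0 := by linarith
      rcases mul_eq_zero.1 this with h | h
      · linarith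
      · have : v.1 1 = - v'.1 1 := by linarith
        rw [this] at hs
        have : v'.1 1 = 0 := by nlinarith
        linarith
    refine Prod.ext (Subtype.ext ?_) (Subtype.ext h2)
    ext i
    fin_cases i
    · exact h0
    · exact h1
  have m0 : ∀ x : Icc (0 : ℝ) 1, (⟨0, x⟩ : ℂ) ∈ sqc := fun x => ⟨⟨le_rfl, zero_le_one⟩, x.2⟩
  have m1 : ∀ x : Icc (0 : ℝ) 1, (⟨1, x⟩ : ℂ) ∈ sqc := fun x => ⟨⟨zero_le_one, le_rfl⟩, x.2⟩
  have mix : ∀ z z', 0 ≤ z.1.1 1 → z'.1.1 1 < 0 → F z ≠ F z' := by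
    intro z z' hz hz' h
    have hq := S1_eq z'.1
    rw [up z hz, lo z' hz'.le] at h
    rcases hkk ⟨⟨_, hgm z, h⟩, ⟨_, hgm z', rfl⟩⟩ with ⟨x, hx, hx'⟩ | ⟨x, hx, hx'⟩
    · rw [← (e' x hx).1] at hx'
      have := congrArg Complex.re (hi' (m0 ⟨x, hx⟩) (hgm z') hx')
      simp only [g] at this
      have : z'.1.1 0 = 1 := by linarith
      rw [this] at hq
      nlinarith
    · rw [← (e' x hx).2.1] at hx'
      have := congrArg Complex.re (hi' (m1 ⟨x, hx⟩) (hgm z') hx')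
      simp only [g] at this
      have : z'.1.1 0 = -1 := by linarith
      rw [this] at hq
      nlinarith
  have hFi : Function.Injective F := by
    intro z z' h
    rcases le_or_gt 0 (z.1.1 1) with hz | hz <;> rcases le_or_gt 0 (z'.1.1 1) with hz' | hz'
    · rw [up z hz, up z' hz'] at h
      exact gg z z' (hi (hgm z) (hgm z') h) (mul_nonneg hz hz')
    · exact absurd h (mix z z' hz hz')
    · exact absurd h.symm (mix z' z hz' hz)
    · rw [lo z hz.le, lo z' hz'.le] at h
      exact gg z z' (hi' (hgm z) (hgm z') h) (mul_nonneg_of_nonpos_of_nonpos hz.le hz'.le)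
  have rng : ∀ (u : Icc (0 : ℝ) 1) (f f' : ℝ → S), (∀ x ∈ Icc (0 : ℝ) 1, k ⟨x, u⟩ = f x) →
      (∀ x ∈ Icc (0 : ℝ) 1, k' ⟨x, u⟩ = f' x) →
      (range fun v => F (v, u)) = f '' Icc 0 1 ∪ f' '' Icc 0 1 := by
    intro u f f' hf hf'
    apply Subset.antisymm
    · rintro _ ⟨v, rfl⟩
      rcases le_total 0 (v.1 1) with h | h
      · simp only [up (v, u) h]
        exact Or.inl ⟨_, (hgm (v, u)).1, (hf _ (hgm (v, u)).1).symm⟩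
      · simp only [lo (v, u) h]
        exact Or.inr ⟨_, (hgm (v, u)).1, (hf' _ (hgm (v, u)).1).symm⟩
    · have pt : ∀ x ∈ Icc (0 : ℝ) 1, ∀ s : ℝ, s ^ 2 = 1 → ∃ v : S1, v.1 0 = 1 - 2 * x ∧
          v.1 1 = s * √(1 - (1 - 2 * x) ^ 2) := by
        intro x hx s hs
        refine ⟨⟨!₂[1 - 2 * x, s * √(1 - (1 - 2 * x) ^ 2)], ?_⟩, rfl, rfl⟩
        rw [mem_sphere_zero_iff_norm, E2_norm]
        have : 0 ≤ 1 - (1 - 2 * x) ^ 2 := by nlinarith [hx.1, hx.2]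
        simp [mul_pow, Real.sq_sqrt this, hs]
      rintro _ (⟨x, hx, rfl⟩ | ⟨x, hx, rfl⟩)
      · obtain ⟨v, h0, h1⟩ := pt x hx 1 (by norm_num)
        have h1' : 0 ≤ v.1 1 := by rw [h1]; positivity
        have : g (v, u) = ⟨x, u⟩ := by
          simp only [g, h0, Complex.mk.injEq, and_true]; ring
        exact ⟨v, by simp only [up (v, u) h1', this, hf x hx]⟩
      · obtain ⟨v, h0, h1⟩ := pt x hx (-1) (by norm_num)
        have h1' : v.1 1 ≤ 0 := by
          rw [h1]
          have := Real.sqrt_nonneg (1 - (1 - 2 * x) ^ 2)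
          linarith
        have : g (v, u) = ⟨x, u⟩ := by
          simp only [g, h0, Complex.mk.injEq, and_true]; ring
        exact ⟨v, by simp only [lo (v, u) h1', this, hf' x hx]⟩
  exact ⟨F, (hF.isClosedEmbedding hFi).isEmbedding, rng _ b b' (fun x hx => (e x hx).2.2.1) fun x hx => (e' x hx).2.2.1,
    rng _ t t' (fun x hx => (e x hx).2.2.2) fun x hx => (e' x hx).2.2.2⟩

/-- The theorem on a metrized surface. -/
theorem annulus_core {S : Type*} [MetricSpace S] [ConnectedSpace S] (hS : Surf S) {c₀ c₁ : C(S1, S)}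
    (h0 : Function.Injective c₀) (h1 : Function.Injective c₁) (hd : Disjoint (range c₀) (range c₁))
    (hh : c₀.Homotopic c₁) (hess : ¬ ∃ p : S, ContinuousMap.Homotopic c₀ (ContinuousMap.const _ p)) :
    ∃ F : S1 × Icc (0 : ℝ) 1 → S, IsEmbedding F ∧
      (range fun v => F (v, ⟨0, by norm_num⟩)) = range c₀ ∧
      (range fun v => F (v, ⟨1, by norm_num⟩)) = range c₁ := by
  obtain ⟨K⟩ := hh
  obtain ⟨H, hH, e0, e1⟩ := hom_of K h0 h1 hd
  obtain ⟨U, w, -, js, cpt, hw, hR⟩ := exists_region hS hH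
  rcases hR with hR | hR
  · obtain ⟨k, hk, hi, him⟩ := disc_param hS
      (⟨hR.op, hR.pre, cpt, hH.jor0, hR.fr, hR.ext, hw, js⟩ : Cell w U (range fun s => H (s, 0)))
    refine absurd (null_of_disc hk hi c₀ ?_) hess
    rw [him, ← e0]
    exact hR.sub
  · obtain ⟨l, r, b, t, b', t', G, G', hQ, hQ', hG, hG', eC, eD, hkk⟩ := annulus_cells hS hR hH.jor0 hH.jor1
      (by rw [e0, e1]; exact hd) js cpt hw
    obtain ⟨k, hk, hi, him, hb⟩ := quad_param hS hQ hG
    obtain ⟨k', hk', hi', him', hb'⟩ := quad_param hS hQ' hG'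
    obtain ⟨F, hF, r0, r1⟩ := glue_annulus hk hi hk' hi' hb hb' (by rw [him, him']; exact hkk)
    exact ⟨F, hF, by rw [r0, eC, e0], by rw [r1, eD, e1]⟩

end Annulus

end

theorem stmt_10 {S : Type*} [TopologicalSpace S] [T2Space S] [SecondCountableTopology S]
    [ConnectedSpace S]
    (hsurf : ∀ x : S, ∃ U : Set S, IsOpen U ∧ x ∈ U ∧
      Nonempty (U ≃ₜ EuclideanSpace ℝ (Fin 2)))
    (c₀ c₁ : Metric.sphere (0 : EuclideanSpace ℝ (Fin 2)) 1 → S)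
    (hc₀cont : Continuous c₀) (hc₀inj : Function.Injective c₀)
    (hc₁cont : Continuous c₁) (hc₁inj : Function.Injective c₁)
    (hdisj : Disjoint (Set.range c₀) (Set.range c₁))
    (hhom : ContinuousMap.Homotopic ⟨c₀, hc₀cont⟩ ⟨c₁, hc₁cont⟩)
    (hess : ¬ ∃ p : S, ContinuousMap.Homotopic ⟨c₀, hc₀cont⟩ (ContinuousMap.const _ p)) :
    ∃ F : Metric.sphere (0 : EuclideanSpace ℝ (Fin 2)) 1 × Set.Icc (0 : ℝ) 1 → S,
      Topology.IsEmbedding F ∧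
      Set.range (fun v => F (v, ⟨0, by norm_num⟩)) = Set.range c₀ ∧
      Set.range (fun v => F (v, ⟨1, by norm_num⟩)) = Set.range c₁ := by
  have hS : Annulus.Surf S := Annulus.surf_of hsurf
  have := Annulus.regular_of hS
  have : TopologicalSpace.MetrizableSpace S := TopologicalSpace.metrizableSpace_of_t3_secondCountable S
  let _ : MetricSpace S := TopologicalSpace.metrizableSpaceMetric S
  exact Annulus.annulus_core hS hc₀inj hc₁inj hdisj hhom hess
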